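/- Let G be an Erdős–Rényi random graph G(n,1/2) on n vertices and let S_G be its sandpile group. Then the probability that S_G is a cyclic group converges as n → ∞, and lim_{n→∞} P(S_G is cyclic) = ∏_{i=1}^∞ ζ(2i+1)^{−1}. -/

import Mathlib

open MeasureTheory Filter

noncomputable section

def edgeInd {n : ℕ} (x : Fin n × Fin n → Bool) (i j : Fin n) : ℤ :=
  if i < j then (if x (i, j) then 1 else 0)
  else if j < i then (if x (j, i) then 1 else 0) else 0

def redLap (n : ℕ) (x : Fin (n + 1) × Fin (n + 1) → Bool) : Matrix (Fin n) (Fin n) ℤ :=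
  Matrix.of fun i j =>
    if i = j then -(∑ k : Fin (n + 1), edgeInd x k i.castSucc)
    else edgeInd x i.castSucc j.castSucc

abbrev cok (n : ℕ) (M : Matrix (Fin n) (Fin n) ℤ) :=
  (Fin n → ℤ) ⧸ LinearMap.range (Matrix.toLin' M)

def graphMeasure (n : ℕ) : Measure (Fin (n + 1) × Fin (n + 1) → Bool) :=
  (PMF.uniformOfFintype (Fin (n + 1) × Fin (n + 1) → Bool)).toMeasure

def zetaReal (s : ℝ) : ℝ := ∑' n : ℕ, ((n : ℝ) + 1) ^ (-s)

/-!
The group `S_G` is cyclic iff for every prime `p` the kernel of the reduced Laplacian modulo `p`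
has dimension (corank) at most one (`isAddCyclic_cok_iff`, with kernels `KerK`). Throughout,
`q ^ 100 ≤ |V| ≤ 2 * q ^ 100`, and primes are treated in three ranges.

*Finitely many fixed primes.* Start with many grounded vertices and unground them one at a time.
By a Schur complement each corank `r` moves to `r - 1`, `r` or `r + 1` according to whether the new
row is orthogonal to the kernel and whether a quadratic form in it vanishes. Exchanging the edges of
random vertices to two grounded vertices `a`, `b` randomises that row and leaves the remaining
matrix unchanged; a Cauchy–Schwarz step over half of the exchanges makes the quadratic characters
linear. They are small unless a solution of the grounded system has small phase, which a union bound
excludes (`SL_numeric`). So a step acts like a product over `p` of the Markov operators `Pi p`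
(`one_step`), whose iterates have a closed form with limit `limP p = ∏ (1 - p ^ -(2 i + 3))`
(`corank_fixed`).

*Primes up to `2 ^ q ^ 31`.* The same chain for one prime shows that the corank is at least two
with probability at most `4 / p ^ 3` plus a tiny error (`corank_two_le`), which is summable.

*Primes beyond `2 ^ q ^ 31`*, all at once (`Pr_large_le`). A determinant has few such prime
divisors, so kernel vectors and solutions with few nonzero entries can be excluded for all of them
simultaneously. For a vertex `a` where some kernel vector is nonzero, corank two forces the
Laplacian with `a` and the last vertex grounded to have a nonzero kernel vector orthogonal to the
row of `a`, and the quadratic form to vanish. Two copies of these conditions sharing half of the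
exchanges give three linear equations, so the squared probability is about `s ^ (-3 / 2)`, where
`s` is the least number of nonzero entries. This beats the number of such primes.

Finally `∏ p, limP p = ∏ i, ζ(2 i + 3)⁻¹` by the Euler product (`tendsto_prod_limP`,
`all_corank`).
-/

set_option linter.unusedSectionVars false

namespace Sandpile
open Finset
open scoped BigOperators Classical

/-! ### Averages and probabilities on finite spaces -/

/-- Probability of an event under the uniform distribution on a finite type. -/
def Pr {α : Type*} [Fintype α] (E : α → Prop) : ℝ := 𝔼 x, if E x then (1 : ℝ) else 0

section basics
variable {α β : Type*} [Fintype α] [Fintype β]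

lemma Pr_def (E : α → Prop) [∀ x, Decidable (E x)] :
    Pr E = 𝔼 x, if E x then (1 : ℝ) else 0 := by
  unfold Pr; exact expect_congr rfl fun x _ => by congr

lemma card_filter_le_of_imp (E : α → Prop) [DecidablePred E] (S : Finset α)
    (h : ∀ x, E x → x ∈ S) : (univ.filter E).card ≤ S.card :=
  card_le_card fun x hx => h x (mem_filter.1 hx).2

lemma Pr_nonneg (E : α → Prop) : 0 ≤ Pr E := by
  unfold Pr; exact expect_nonneg fun x _ => by split_ifs <;> norm_num

lemma avg_mono {f g : α → ℝ} (h : ∀ x, f x ≤ g x) : 𝔼 x, f x ≤ 𝔼 x, g x :=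
  expect_le_expect fun x _ => h x

lemma avg_nonneg {f : α → ℝ} (h : ∀ x, 0 ≤ f x) : 0 ≤ 𝔼 x, f x :=
  expect_nonneg fun x _ => h x

lemma avg_le [Nonempty α] {f : α → ℝ} {c : ℝ} (h : ∀ x, f x ≤ c) : 𝔼 x, f x ≤ c :=
  expect_le univ_nonempty fun x _ => h x

lemma avg_le' {f : α → ℝ} {c : ℝ} (hc : 0 ≤ c) (h : ∀ x, f x ≤ c) : 𝔼 x, f x ≤ c := by
  rcases isEmpty_or_nonempty α with h0 | h0
  · simpa using hc
  · exact avg_le h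

lemma Pr_mono {E F : α → Prop} (h : ∀ x, E x → F x) : Pr E ≤ Pr F := by
  unfold Pr
  refine avg_mono fun x => ?_
  by_cases hE : E x
  · simp [hE, h x hE]
  · simp only [hE, if_false]; split_ifs <;> norm_num

lemma Pr_le_one (E : α → Prop) : Pr E ≤ 1 := by
  unfold Pr; exact avg_le' (by norm_num) fun x => by split_ifs <;> norm_num

lemma Pr_eq_zero {E : α → Prop} (h : ∀ x, ¬ E x) : Pr E = 0 := by simp [Pr, h]

lemma Pr_or (E F : α → Prop) : Pr (fun x => E x ∨ F x) ≤ Pr E + Pr F := by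
  unfold Pr
  rw [← expect_add_distrib]
  refine avg_mono fun x => ?_
  by_cases hE : E x <;> by_cases hF : F x <;> simp [hE, hF]

lemma Pr_compl [Nonempty α] (E : α → Prop) : Pr (fun x => ¬ E x) = 1 - Pr E := by
  have : Pr (fun x => ¬ E x) + Pr E = 1 := by
    unfold Pr
    rw [← expect_add_distrib]
    rw [← Fintype.expect_const (ι := α) (1 : ℝ)]
    refine expect_congr rfl fun x _ => ?_
    by_cases hE : E x <;> simp [hE]
  linarith

/-- Union bound. -/
lemma Pr_exists_le {ι : Type*} (s : Finset ι) (E : ι → α → Prop) :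
    Pr (fun x => ∃ i ∈ s, E i x) ≤ ∑ i ∈ s, Pr (E i) := by
  unfold Pr
  rw [← expect_sum_comm]
  refine avg_mono fun x => ?_
  by_cases h : ∃ i ∈ s, E i x
  · obtain ⟨i, hi, hE⟩ := h
    rw [if_pos ⟨i, hi, hE⟩]
    calc (1 : ℝ) = if E i x then 1 else 0 := by simp [hE]
      _ ≤ _ := single_le_sum (f := fun i => if E i x then (1 : ℝ) else 0)
        (fun j _ => by split_ifs <;> norm_num) hi
  · rw [if_neg h]; exact sum_nonneg fun j _ => by split_ifs <;> norm_num

lemma Pr_exists_le_card {ι : Type*} (s : Finset ι) (E : ι → α → Prop) {c : ℝ}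
    (h : ∀ i ∈ s, Pr (E i) ≤ c) :
    Pr (fun x => ∃ i ∈ s, E i x) ≤ s.card * c := by
  refine (Pr_exists_le s E).trans ?_
  simpa [nsmul_eq_mul] using sum_le_card_nsmul s _ c h

lemma Pr_eq_card (E : α → Prop) [DecidablePred E] :
    Pr E = (univ.filter E).card / Fintype.card α := by
  rw [Pr_def]
  rw [Fintype.expect_eq_sum_div_card]; simp

/-- Markov's inequality. -/
lemma Pr_markov {f : α → ℝ} (hf : ∀ x, 0 ≤ f x) {c : ℝ} (hc : 0 < c) :
    Pr (fun x => c ≤ f x) ≤ (𝔼 x, f x) / c := by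
  rw [le_div_iff₀ hc]
  unfold Pr
  rw [expect_mul]
  refine avg_mono fun x => ?_
  split_ifs with h
  · linarith
  · simpa using hf x

lemma avg_equiv (e : α ≃ β) {M : Type*} [AddCommMonoid M] [Module ℚ≥0 M] (f : β → M) :
    𝔼 x, f (e x) = 𝔼 y, f y := Fintype.expect_equiv e _ _ fun _ => rfl

lemma Pr_equiv (e : α ≃ β) (E : β → Prop) : Pr (fun x => E (e x)) = Pr E := by
  unfold Pr; exact avg_equiv e (fun y => if E y then (1 : ℝ) else 0)

lemma avg_prod {M : Type*} [AddCommMonoid M] [Module ℚ≥0 M] (f : α × β → M) :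
    𝔼 z, f z = 𝔼 x, 𝔼 y, f (x, y) := by
  rw [← Finset.univ_product_univ, expect_product]

lemma Pr_prod (E : α × β → Prop) : Pr E = 𝔼 x, Pr (fun y => E (x, y)) := by
  unfold Pr; rw [avg_prod]

lemma avg_mul_left (c : ℝ) (f : α → ℝ) : 𝔼 x, c * f x = c * 𝔼 x, f x :=
  (mul_expect _ _ _).symm

/-- Bounding an average by the probability of a bad event plus a bound elsewhere. -/
lemma avg_le_Pr_add {f : α → ℝ} {E : α → Prop} {c : ℝ} (hc : 0 ≤ c) (h1 : ∀ x, f x ≤ 1)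
    (h : ∀ x, ¬ E x → f x ≤ c) : 𝔼 x, f x ≤ Pr E + c := by
  rcases isEmpty_or_nonempty α with h0 | h0
  · simpa [Pr] using hc
  unfold Pr
  rw [← Fintype.expect_const (ι := α) c, ← expect_add_distrib]
  refine avg_mono fun x => ?_
  by_cases hE : E x
  · simp [hE]; linarith [h1 x]
  · simp [hE, h x hE]

lemma avg_sq_le (f : α → ℝ) : (𝔼 x, f x) ^ 2 ≤ 𝔼 x, f x ^ 2 := by
  rcases isEmpty_or_nonempty α with h0 | h0
  · simp
  have := expect_mul_sq_le_sq_mul_sq (univ : Finset α) f (fun _ => (1 : ℝ))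
  simpa using this

lemma norm_avg_le (f : α → ℂ) : ‖𝔼 x, f x‖ ≤ 𝔼 x, ‖f x‖ := by
  rw [Fintype.expect_eq_sum_div_card, Fintype.expect_eq_sum_div_card, norm_div]
  simp only [Complex.norm_natCast]
  gcongr
  exact norm_sum_le _ _

lemma norm_avg_sq_le (f : α → ℂ) : ‖𝔼 x, f x‖ ^ 2 ≤ 𝔼 x, ‖f x‖ ^ 2 := by
  calc _ ≤ (𝔼 x, ‖f x‖) ^ 2 := by gcongr; exact norm_avg_le f
    _ ≤ _ := avg_sq_le _

lemma norm_avg_sq_eq (f : α → ℂ) :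
    ((‖𝔼 x, f x‖ ^ 2 : ℝ) : ℂ) = 𝔼 x, 𝔼 y, f x * (starRingEnd ℂ) (f y) := by
  have : (starRingEnd ℂ) (𝔼 x, f x) = 𝔼 x, (starRingEnd ℂ) (f x) := by
    rw [Fintype.expect_eq_sum_div_card, Fintype.expect_eq_sum_div_card, map_div₀, map_sum]
    simp
  rw [← Complex.normSq_eq_norm_sq, ← Complex.mul_conj, this, expect_mul]
  refine expect_congr rfl fun x _ => ?_
  rw [mul_expect]

end basics

section cube
variable {Q : Type*} [Fintype Q] [DecidableEq Q] {B : Type*} [Fintype B]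

/-- Resampling the coordinates in the range of an injection. -/
lemma resample_extend {Q' : Type*} [Fintype Q'] [DecidableEq Q'] {M : Type*} [AddCommMonoid M] [Module ℚ≥0 M]
    (φ : Q' → Q) (hφ : Function.Injective φ) (f : (Q → B) → M) :
    𝔼 x, f x = 𝔼 x : Q → B, 𝔼 y : Q' → B, f (Function.extend φ y x) := by
  rcases isEmpty_or_nonempty (Q → B) with h0 | h0
  · simp
  rcases isEmpty_or_nonempty (Q' → B) with h1 | h1
  · exact absurd ⟨fun q' => (Classical.choice h0) (φ q')⟩ (not_nonempty_iff.2 h1)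
  rw [← avg_prod (fun z : (Q → B) × (Q' → B) => f (Function.extend φ z.2 z.1))]
  let e : ((Q → B) × (Q' → B)) ≃ ((Q → B) × (Q' → B)) :=
    { toFun := fun z => (Function.extend φ z.2 z.1, z.1 ∘ φ)
      invFun := fun z => (Function.extend φ z.2 z.1, z.1 ∘ φ)
      left_inv := by
        rintro ⟨x, y⟩
        refine Prod.ext ?_ ?_
        · funext q
          by_cases hq : ∃ a, φ a = q
          · obtain ⟨a, rfl⟩ := hq
            simp [hφ.extend_apply]
          · simp [Function.extend_apply' _ _ _ hq]
        · funext a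
          simp [hφ.extend_apply]
      right_inv := by
        rintro ⟨x, y⟩
        refine Prod.ext ?_ ?_
        · funext q
          by_cases hq : ∃ a, φ a = q
          · obtain ⟨a, rfl⟩ := hq
            simp [hφ.extend_apply]
          · simp [Function.extend_apply' _ _ _ hq]
        · funext a
          simp [hφ.extend_apply] }
  rw [show (fun z : (Q → B) × (Q' → B) => f (Function.extend φ z.2 z.1)) =
    fun z => (fun z' : (Q → B) × (Q' → B) => f z'.1) (e z) from rfl,
    avg_equiv e (fun z' : (Q → B) × (Q' → B) => f z'.1), avg_prod]
  simp

lemma Pr_resample_extend {Q' : Type*} [Fintype Q'] [DecidableEq Q']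
    (φ : Q' → Q) (hφ : Function.Injective φ) (E : (Q → B) → Prop) :
    Pr E = 𝔼 x : Q → B, Pr (fun y : Q' → B => E (Function.extend φ y x)) := by
  unfold Pr; rw [resample_extend φ hφ]

/-- Marginals: a uniform configuration restricted along an injection is uniform. -/
lemma avg_comp_inj [Nonempty B] {Q' : Type*} [Fintype Q'] [DecidableEq Q'] {M : Type*} [AddCommMonoid M]
    [Module ℚ≥0 M] (φ : Q' → Q) (hφ : Function.Injective φ) (f : (Q' → B) → M) :
    𝔼 x : Q → B, f (x ∘ φ) = 𝔼 y, f y := by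
  rw [resample_extend φ hφ]
  have : ∀ (x : Q → B) (y : Q' → B), Function.extend φ y x ∘ φ = y := by
    intro x y; funext a; simp [hφ.extend_apply]
  simp [this]

lemma Pr_comp_inj [Nonempty B] {Q' : Type*} [Fintype Q'] [DecidableEq Q'] (φ : Q' → Q)
    (hφ : Function.Injective φ) (E : (Q' → B) → Prop) :
    Pr (fun x : Q → B => E (x ∘ φ)) = Pr E := by
  unfold Pr; exact avg_comp_inj φ hφ (fun y => if E y then (1 : ℝ) else 0)

/-- If the coordinates in `S` are determined by the others on the event `E`, then `E` has
probability at most `2 ^ (-|S|)`. -/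
lemma Pr_le_of_agree (S : Finset Q) (E : (Q → Bool) → Prop)
    (h : ∀ x y, E x → E y → (∀ e ∉ S, x e = y e) → x = y) :
    Pr E ≤ (1 / 2 : ℝ) ^ S.card := by
  rw [Pr_eq_card]
  have h1 : (univ.filter E).card ≤ 2 ^ (Fintype.card Q - S.card) := by
    have : Fintype.card ({e // e ∉ S} → Bool) = 2 ^ (Fintype.card Q - S.card) := by
      simp [Fintype.card_subtype_compl]
    rw [← this, ← Finset.card_univ]
    refine card_le_card_of_injOn (fun x e => x e.1) (fun _ _ => mem_coe.2 (mem_univ _)) ?_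
    intro x hx y hy hxy
    simp at hx hy
    exact h x y hx hy fun e he => congrFun hxy ⟨e, he⟩
  have h2 : S.card ≤ Fintype.card Q := card_le_univ S
  rw [div_le_iff₀ (by positivity)]
  calc ((univ.filter E).card : ℝ) ≤ 2 ^ (Fintype.card Q - S.card) := by exact_mod_cast h1
    _ = (1 / 2 : ℝ) ^ S.card * (Fintype.card (Q → Bool) : ℕ) := by
      simp only [Fintype.card_fun, Fintype.card_bool, Nat.cast_pow, Nat.cast_ofNat]
      rw [← Nat.sub_add_cancel h2, pow_add]
      simp
      field_simp

/-- Averages of products over independent coordinates. -/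
lemma avg_prod_pi {𝕜 : Type*} [Field 𝕜] [CharZero 𝕜] (φ : Q → B → 𝕜) :
    𝔼 y : Q → B, ∏ q, φ q (y q) = ∏ q, 𝔼 b, φ q b := by
  simp_rw [Fintype.expect_eq_sum_div_card]
  rw [Finset.prod_div_distrib, Finset.prod_univ_sum]
  simp [Fintype.piFinset_univ]

end cube

/-! ### Character sums and the anticoncentration function -/

/-- The bit `b` as an element of a ring. -/
def bt {R : Type*} [Zero R] [One R] (b : Bool) : R := if b then 1 else 0

@[simp] lemma bt_true {R : Type*} [Zero R] [One R] : (bt true : R) = 1 := rfl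
@[simp] lemma bt_false {R : Type*} [Zero R] [One R] : (bt false : R) = 0 := rfl

/-- Averages over one bit. -/
lemma avg_bool {𝕜 : Type*} [Field 𝕜] [CharZero 𝕜] (f : Bool → 𝕜) :
    𝔼 b, f b = (f false + f true) / 2 := by
  rw [Fintype.expect_eq_sum_div_card]; simp [add_comm]

section char
variable {p : ℕ} [Fact p.Prime]

/-- The square of the distance of `t / p` to the nearest integer. -/
def N2 (t : ZMod p) : ℝ := ((t.valMinAbs : ℝ) / p) ^ 2

lemma p_pos : (0 : ℝ) < p := by exact_mod_cast (Fact.out : p.Prime).pos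

lemma N2_nonneg (t : ZMod p) : 0 ≤ N2 t := sq_nonneg _

@[simp] lemma N2_zero : N2 (0 : ZMod p) = 0 := by simp [N2]

lemma N2_eq_natAbs (t : ZMod p) : N2 t = ((t.valMinAbs.natAbs : ℝ) / p) ^ 2 := by
  unfold N2
  rw [div_pow, div_pow, Nat.cast_natAbs, Int.cast_abs, sq_abs]

lemma abs_valMinAbs_le (t : ZMod p) : |((t.valMinAbs : ℝ) / p)| ≤ 1 / 2 := by
  have h := ZMod.natAbs_valMinAbs_le t
  rw [abs_div, abs_of_pos (p_pos (p := p)), div_le_iff₀ p_pos]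
  have h2 : 2 * t.valMinAbs.natAbs ≤ p := by omega
  have h3 : (2 : ℝ) * |(t.valMinAbs : ℝ)| ≤ p := by
    rw [← Int.cast_abs, ← Nat.cast_natAbs]; exact_mod_cast h2
  linarith

lemma N2_le (t : ZMod p) : N2 t ≤ 1 / 4 := by
  have := abs_valMinAbs_le t
  unfold N2
  rw [← sq_abs]
  nlinarith [abs_nonneg ((t.valMinAbs : ℝ) / p)]

lemma N2_add_weighted (s t : ZMod p) {r : ℝ} (hr : 0 < r) :
    N2 (s + t) ≤ (1 + 1 / r) * N2 s + (1 + r) * N2 t := by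
  rw [N2_eq_natAbs, N2_eq_natAbs s, N2_eq_natAbs t]
  have h := ZMod.natAbs_valMinAbs_add_le s t
  have h1 := (h.trans (Int.natAbs_add_le _ _))
  have h2 : ((s + t).valMinAbs.natAbs : ℝ) ≤ s.valMinAbs.natAbs + t.valMinAbs.natAbs := by
    exact_mod_cast h1
  set x : ℝ := (s.valMinAbs.natAbs : ℝ)
  set y : ℝ := (t.valMinAbs.natAbs : ℝ)
  rw [div_pow, div_pow, div_pow, ← mul_div_assoc, ← mul_div_assoc, ← add_div]
  gcongr
  have h3 : ((s + t).valMinAbs.natAbs : ℝ) ^ 2 ≤ (x + y) ^ 2 := by gcongr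
  refine h3.trans ?_
  have h4 : 2 * x * y ≤ 1 / r * x ^ 2 + r * y ^ 2 := by
    have : 1 / r * x ^ 2 + r * y ^ 2 - 2 * x * y = (x - r * y) ^ 2 / r := by field_simp; ring
    have h5 : 0 ≤ (x - r * y) ^ 2 / r := by positivity
    linarith
  nlinarith

lemma N2_add (s t : ZMod p) : N2 (s + t) ≤ 2 * N2 s + 2 * N2 t := by
  have := N2_add_weighted s t one_pos
  norm_num at this
  exact this

lemma N2_neg (t : ZMod p) : N2 (-t) = N2 t := by
  rw [N2_eq_natAbs, N2_eq_natAbs t, ZMod.natAbs_valMinAbs_neg]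

lemma exists_N2_ge : ∃ h : ZMod p, 1 / 9 ≤ N2 h := by
  have hp := (Fact.out : p.Prime)
  rcases hp.eq_two_or_odd with h2 | h2
  · subst h2
    refine ⟨1, ?_⟩
    have : (1 : ZMod 2).valMinAbs = 1 := rfl
    simp [N2, this]; norm_num
  · refine ⟨((p / 2 : ℕ) : ZMod p), ?_⟩
    have h3 : 3 ≤ p := by have := hp.two_le; omega
    have : (((p / 2 : ℕ) : ZMod p)).valMinAbs = ((p / 2 : ℕ) : ℤ) :=
      ZMod.valMinAbs_natCast_of_le_half le_rfl
    unfold N2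
    rw [this]
    have h4 : (p : ℝ) = 2 * ((p / 2 : ℕ) : ℝ) + 1 := by
      have : p = 2 * (p / 2) + 1 := by omega
      exact_mod_cast this
    have h5 : (1 : ℝ) ≤ ((p / 2 : ℕ) : ℝ) := by
      have : 1 ≤ p / 2 := by omega
      exact_mod_cast this
    have h6 : (1 : ℝ) / 3 ≤ (((p / 2 : ℕ) : ℤ) : ℝ) / p := by
      rw [div_le_div_iff₀ (by norm_num) p_pos]
      rw [Int.cast_natCast]
      linarith
    nlinarith

lemma N2_avg : 1 / 36 ≤ 𝔼 t : ZMod p, N2 t := by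
  obtain ⟨h, hh⟩ := exists_N2_ge (p := p)
  have h1 : ∀ t : ZMod p, N2 h ≤ 2 * N2 (t + h) + 2 * N2 t := by
    intro t
    have := N2_add (t + h) (-t)
    rw [N2_neg] at this
    simpa using this
  have h2 : N2 h ≤ 𝔼 t : ZMod p, (2 * N2 (t + h) + 2 * N2 t) := by
    rw [← Fintype.expect_const (ι := ZMod p) (N2 h)]
    exact avg_mono h1
  rw [expect_add_distrib, avg_mul_left, avg_mul_left] at h2
  have h3 := avg_equiv (Equiv.addRight h) (fun t : ZMod p => N2 t)
  simp at h3
  rw [h3] at h2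
  linarith

/-- The standard additive character of `ZMod p`. -/
def chi (t : ZMod p) : ℂ := ZMod.stdAddChar t

lemma chi_zero : chi (0 : ZMod p) = 1 := AddChar.map_zero_eq_one _
lemma chi_add (s t : ZMod p) : chi (s + t) = chi s * chi t := AddChar.map_add_eq_mul _ _ _
lemma chi_neg (t : ZMod p) : chi (-t) = (starRingEnd ℂ) (chi t) := by
  unfold chi
  rw [AddChar.map_neg_eq_conj]

lemma norm_chi (t : ZMod p) : ‖chi t‖ = 1 := AddChar.norm_apply _ _

lemma chi_sum {ι : Type*} (s : Finset ι) (f : ι → ZMod p) :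
    chi (∑ i ∈ s, f i) = ∏ i ∈ s, chi (f i) := by
  induction s using Finset.induction_on with
  | empty => simp [chi_zero]
  | insert a s ha ih => rw [sum_insert ha, prod_insert ha, chi_add, ih]

lemma chi_eq (t : ZMod p) :
    chi t = Complex.exp (((2 * Real.pi * ((t.valMinAbs : ℝ) / p) : ℝ) : ℂ) * Complex.I) := by
  have : chi t = chi ((t.valMinAbs : ℤ) : ZMod p) := by rw [ZMod.coe_valMinAbs]
  rw [this]
  unfold chi
  rw [ZMod.stdAddChar_coe]
  congr 1
  push_cast
  ring

lemma chi_re (t : ZMod p) : (chi t).re = Real.cos (2 * Real.pi * ((t.valMinAbs : ℝ) / p)) := by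
  rw [chi_eq, Complex.exp_ofReal_mul_I_re]

lemma one_sub_two_sq_exp {x : ℝ} : 1 - x ≤ Real.exp (-x) := by
  have := Real.add_one_le_exp (-x); linarith

lemma half_norm_real (θ : ℝ) (h : |θ| ≤ 1 / 2) :
    ‖(1 + Complex.exp (((2 * Real.pi * θ : ℝ) : ℂ) * Complex.I)) / 2‖ ≤
      Real.exp (-(2 * θ ^ 2)) := by
  have e : (1 + Complex.exp (((2 * Real.pi * θ : ℝ) : ℂ) * Complex.I)) / 2 =
      Complex.exp (((Real.pi * θ : ℝ) : ℂ) * Complex.I) * (Real.cos (Real.pi * θ) : ℝ) := by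
    rw [Complex.ofReal_cos, Complex.cos]
    have : (((2 * Real.pi * θ : ℝ) : ℂ) * Complex.I) =
      ((Real.pi * θ : ℝ) : ℂ) * Complex.I + ((Real.pi * θ : ℝ) : ℂ) * Complex.I := by
      push_cast; ring
    rw [this, Complex.exp_add, mul_div_assoc', mul_add, ← Complex.exp_add, ← Complex.exp_add]
    simp [add_comm]
  rw [e, norm_mul, Complex.norm_exp_ofReal_mul_I, one_mul, Complex.norm_real, Real.norm_eq_abs]
  have hx : |Real.pi * θ| ≤ Real.pi / 2 := by
    rw [abs_mul, abs_of_pos Real.pi_pos]; nlinarith [Real.pi_pos]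
  have hpos : 0 ≤ Real.cos (Real.pi * θ) :=
    Real.cos_nonneg_of_mem_Icc ⟨by linarith [(abs_le.1 hx).1], (abs_le.1 hx).2⟩
  rw [abs_of_nonneg hpos]
  have h2 := Real.cos_le_one_sub_mul_cos_sq (x := Real.pi * θ) (by linarith [Real.pi_pos])
  have h3 : 2 / Real.pi ^ 2 * (Real.pi * θ) ^ 2 = 2 * θ ^ 2 := by
    field_simp
  rw [h3] at h2
  exact h2.trans one_sub_two_sq_exp

lemma half_norm (t : ZMod p) : ‖(1 + chi t) / 2‖ ≤ Real.exp (-(2 * N2 t)) := by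
  rw [chi_eq]
  exact half_norm_real _ (abs_valMinAbs_le t)

lemma avg_chi_mul (a : ZMod p) : 𝔼 t : ZMod p, chi (t * a) = if a = 0 then 1 else 0 := by
  rw [Fintype.expect_eq_sum_div_card]
  unfold chi
  have := AddChar.sum_mulShift a (ZMod.isPrimitive_stdAddChar p)
  rw [this]
  have hp : (p : ℂ) ≠ 0 := by exact_mod_cast (Fact.out : p.Prime).ne_zero
  split_ifs <;> simp [hp, ZMod.card]

/-- The Fourier-analytic concentration function of a coefficient vector. -/
def R {B : Type*} [Fintype B] (u : B → ZMod p) : ℝ :=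
  𝔼 t : ZMod p, Real.exp (-(2 * ∑ j, N2 (t * u j)))

variable {B : Type*} [Fintype B] [DecidableEq B]

lemma R_nonneg (u : B → ZMod p) : 0 ≤ R u := avg_nonneg fun _ => (Real.exp_pos _).le

lemma R_le_one (u : B → ZMod p) : R u ≤ 1 := avg_le fun t => by
  rw [Real.exp_le_one_iff]
  have : 0 ≤ ∑ j, N2 (t * u j) := sum_nonneg fun j _ => N2_nonneg _
  linarith

/-- Averages of characters of linear forms in independent bits. -/
lemma avg_chi_linear (u : B → ZMod p) :
    𝔼 y : B → Bool, chi (∑ j, bt (y j) * u j) = ∏ j, ((1 + chi (u j)) / 2) := by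
  simp_rw [chi_sum]
  rw [avg_prod_pi (fun j b => chi (bt b * u j))]
  refine prod_congr rfl fun j _ => ?_
  rw [avg_bool]; simp [chi_zero]

lemma norm_prod_half_le (u : B → ZMod p) :
    ‖∏ j, ((1 + chi (u j)) / 2)‖ ≤ Real.exp (-(2 * ∑ j, N2 (u j))) := by
  rw [norm_prod, mul_sum, ← sum_neg_distrib, Real.exp_sum]
  exact prod_le_prod (fun _ _ => norm_nonneg _) fun j _ => half_norm _

/-- Littlewood–Offord bound: the probability that a linear form in independent bits takes a
given value is at most `R`. -/
lemma Pr_linear_le (u : B → ZMod p) (c : ZMod p) :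
    Pr (fun y : B → Bool => ∑ j, bt (y j) * u j = c) ≤ R u := by
  have h1 : ((Pr (fun y : B → Bool => ∑ j, bt (y j) * u j = c) : ℝ) : ℂ) =
      𝔼 t : ZMod p, chi (-(t * c)) * ∏ j, ((1 + chi (t * u j)) / 2) := by
    have e1 : ((Pr (fun y : B → Bool => ∑ j, bt (y j) * u j = c) : ℝ) : ℂ) =
      𝔼 y : B → Bool, 𝔼 t : ZMod p, chi (t * (∑ j, bt (y j) * u j - c)) := by
      unfold Pr
      rw [Fintype.expect_eq_sum_div_card, Fintype.expect_eq_sum_div_card]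
      push_cast
      congr 1
      refine sum_congr rfl fun y _ => ?_
      rw [avg_chi_mul]
      by_cases h : ∑ j, bt (y j) * u j = c <;> simp [sub_eq_zero, h]
    rw [e1, expect_comm]
    refine expect_congr rfl fun t _ => ?_
    rw [← avg_chi_linear (fun j => t * u j), mul_expect]
    refine expect_congr rfl fun y _ => ?_
    rw [← chi_add]
    congr 1
    rw [mul_sub, mul_sum, sub_eq_add_neg, add_comm]
    congr 1
    exact sum_congr rfl fun j _ => by ring
  have h2 : Pr (fun y : B → Bool => ∑ j, bt (y j) * u j = c) =
      ‖((Pr (fun y : B → Bool => ∑ j, bt (y j) * u j = c) : ℝ) : ℂ)‖ := by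
    rw [Complex.norm_real, Real.norm_of_nonneg (Pr_nonneg _)]
  rw [h2, h1]
  refine (norm_avg_le _).trans (avg_mono fun t => ?_)
  rw [norm_mul, norm_chi, one_mul]
  exact norm_prod_half_le _

/-- Independent events on the rows of a bit matrix. -/
lemma Pr_rows {A : Type*} [Fintype A] [DecidableEq A] {C : Type*} [Fintype C] (E : A → (B → C) → Prop) :
    Pr (fun y : A × B → C => ∀ i, E i (fun j => y (i, j))) = ∏ i, Pr (E i) := by
  have := Pr_equiv (Equiv.curry A B C) (fun z : A → B → C => ∀ i, E i (z i))
  rw [show (fun y : A × B → C => ∀ i, E i (fun j => y (i, j))) =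
    fun y => (fun z : A → B → C => ∀ i, E i (z i)) (Equiv.curry A B C y) from rfl, this]
  unfold Pr
  rw [← avg_prod_pi]
  refine expect_congr rfl fun y _ => ?_
  by_cases h : ∀ i, E i (y i)
  · simp [h]
  · rw [if_neg h]
    obtain ⟨i, hi⟩ := not_forall.1 h
    exact (prod_eq_zero (mem_univ i) (if_neg hi)).symm

lemma Pr_rows_linear_le {A : Type*} [Fintype A] [DecidableEq A] (u : A → B → ZMod p) (c : A → ZMod p) :
    Pr (fun y : A × B → Bool => ∀ i, ∑ j, bt (y (i, j)) * u i j = c i) ≤ ∏ i, R (u i) := by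
  rw [Pr_rows (fun i (z : B → Bool) => ∑ j, bt (z j) * u i j = c i)]
  exact prod_le_prod (fun _ _ => Pr_nonneg _) fun i _ => Pr_linear_le _ _

end char

/-! ### Level sets of the phase and a Halász-type inequality -/

section
open scoped Pointwise

section kks
variable {p : ℕ} [Fact p.Prime] {B : Type*} [Fintype B] [DecidableEq B]

lemma resample_update {Q C : Type*} [Fintype Q] [DecidableEq Q] [Fintype C] (j : Q) {M : Type*} [AddCommMonoid M]
    [Module ℚ≥0 M] (f : (Q → C) → M) :
    𝔼 x, f x = 𝔼 x : Q → C, 𝔼 c, f (Function.update x j c) := by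
  rw [resample_extend (fun _ : Unit => j) (fun _ _ _ => rfl)]
  refine expect_congr rfl fun x _ => ?_
  refine Fintype.expect_equiv (Equiv.funUnique Unit C)
    (fun y => f (Function.extend (fun _ : Unit => j) y x))
    (fun c => f (Function.update x j c)) fun y => ?_
  congr 1
  funext q
  by_cases hq : q = j
  · subst hq
    have : Function.Injective (fun _ : Unit => q) := fun _ _ _ => rfl
    simpa using this.extend_apply y x ()
  · rw [Function.extend_apply' _ _ _ (by rintro ⟨_, h⟩; exact hq h.symm)]
    simp [hq]

/-- The energy of the dilate `t • u`. -/
def G (u : B → ZMod p) (t : ZMod p) : ℝ := ∑ j, N2 (t * u j)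

lemma G_nonneg (u : B → ZMod p) (t : ZMod p) : 0 ≤ G u t := sum_nonneg fun _ _ => N2_nonneg _

lemma G_add (u : B → ZMod p) (s t : ZMod p) {r : ℝ} (hr : 0 < r) :
    G u (s + t) ≤ (1 + 1 / r) * G u s + (1 + r) * G u t := by
  unfold G
  rw [mul_sum, mul_sum, ← sum_add_distrib]
  refine sum_le_sum fun j _ => ?_
  rw [add_mul]
  exact N2_add_weighted _ _ hr

/-- Level sets of the energy. -/
def lev (u : B → ZMod p) (a : ℝ) : Finset (ZMod p) := univ.filter fun t => G u t ≤ a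

lemma zero_mem_lev (u : B → ZMod p) {a : ℝ} (ha : 0 ≤ a) : (0 : ZMod p) ∈ lev u a := by
  simp only [lev, mem_filter, mem_univ, true_and]
  simp [G, ha]

/-- By Cauchy–Davenport, level sets grow linearly in the square root of the level. -/
lemma lev_growth (u : B → ZMod p) {a : ℝ} (ha : 0 ≤ a) (j : ℕ) :
    min p ((j + 1) * ((lev u a).card - 1) + 1) ≤ (lev u (((j : ℝ) + 1) ^ 2 * a)).card := by
  have hpos : ∀ {a : ℝ}, 0 ≤ a → 1 ≤ (lev u a).card := fun h =>
    Finset.card_pos.2 ⟨0, zero_mem_lev u h⟩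
  induction j with
  | zero =>
    have := hpos ha
    simp only [Nat.cast_zero, zero_add, one_pow, one_mul]
    exact (min_le_right _ _).trans (by omega)
  | succ j ih =>
    have hsub : lev u (((j : ℝ) + 1) ^ 2 * a) + lev u a ⊆ lev u (((j + 1 : ℕ) + 1 : ℝ) ^ 2 * a) := by
      intro z hz
      obtain ⟨s, hs, t, ht, rfl⟩ := Finset.mem_add.1 hz
      simp only [lev, mem_filter, mem_univ, true_and] at hs ht ⊢
      have hj : (0 : ℝ) < (j : ℝ) + 1 := by positivity
      refine (G_add u s t hj).trans ?_
      calc (1 + 1 / ((j : ℝ) + 1)) * G u s + (1 + ((j : ℝ) + 1)) * G u t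
          ≤ (1 + 1 / ((j : ℝ) + 1)) * (((j : ℝ) + 1) ^ 2 * a) + (1 + ((j : ℝ) + 1)) * a := by gcongr
        _ = _ := by push_cast; field_simp; ring
    have hcd := ZMod.cauchy_davenport (p := p) Fact.out
      (s := lev u (((j : ℝ) + 1) ^ 2 * a)) (t := lev u a)
      ⟨0, zero_mem_lev u (by positivity)⟩ ⟨0, zero_mem_lev u ha⟩
    have h1 := hcd.trans (card_le_card hsub)
    refine le_trans ?_ h1
    have := hpos ha
    rw [show (j + 1 + 1) * ((lev u a).card - 1) + 1 =
      ((j + 1) * ((lev u a).card - 1) + 1) + ((lev u a).card - 1) by ring]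
    set c := (lev u a).card
    set X := (j + 1) * (c - 1) + 1
    set Y := (lev u (((j : ℝ) + 1) ^ 2 * a)).card
    omega

lemma G_avg (u : B → ZMod p) :
    ((univ.filter fun j => u j ≠ 0).card : ℝ) / 36 ≤ 𝔼 t, G u t := by
  unfold G
  rw [expect_sum_comm]
  calc ((univ.filter fun j => u j ≠ 0).card : ℝ) / 36
      = ∑ j ∈ univ.filter (fun j => u j ≠ 0), (1 / 36 : ℝ) := by
        rw [sum_const, nsmul_eq_mul]; ring
    _ ≤ ∑ j ∈ univ.filter (fun j => u j ≠ 0), 𝔼 t, N2 (t * u j) := by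
        refine sum_le_sum fun j hj => ?_
        have hj' : u j ≠ 0 := (mem_filter.1 hj).2
        have := avg_equiv (Equiv.mulRight₀ (u j) hj') (fun t => N2 t)
        simp only [Equiv.mulRight₀_apply] at this
        rw [this]
        exact N2_avg
    _ ≤ _ := sum_le_sum_of_subset_of_nonneg (filter_subset _ _) fun j _ _ =>
        avg_nonneg fun t => N2_nonneg _

lemma lev_card_lt (u : B → ZMod p) {a : ℝ}
    (h : a < ((univ.filter fun j => u j ≠ 0).card : ℝ) / 36) : (lev u a).card < p := by
  by_contra hc
  have : lev u a = univ := by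
    rw [← Finset.card_eq_iff_eq_univ, ZMod.card]
    refine le_antisymm ?_ (not_lt.1 hc)
    simpa [ZMod.card] using card_le_univ (lev u a)
  have h2 : 𝔼 t, G u t ≤ a := avg_le fun t => by
    have : t ∈ lev u a := this ▸ mem_univ t
    simpa [lev] using this
  linarith [G_avg u]

lemma lev_card_le (u : B → ZMod p) {a : ℝ} (ha : 0 ≤ a) {k : ℕ} (hk : 1 ≤ k)
    (h : (k : ℝ) ^ 2 * a < ((univ.filter fun j => u j ≠ 0).card : ℝ) / 36) :
    (k : ℝ) * ((lev u a).card - 1) ≤ (lev u ((k : ℝ) ^ 2 * a)).card := by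
  obtain ⟨j, rfl⟩ : ∃ j, k = j + 1 := ⟨k - 1, by omega⟩
  have h1 := lev_growth u ha j
  have h2 := lev_card_lt u h
  have h3 : 1 ≤ (lev u a).card := Finset.card_pos.2 ⟨0, zero_mem_lev u ha⟩
  push_cast at h2
  have h4 : (j + 1) * ((lev u a).card - 1) + 1 ≤ (lev u (((j : ℝ) + 1) ^ 2 * a)).card := by
    rcases min_le_iff.1 h1 with h | h
    · omega
    · exact h
  have h5 : (((j + 1) * ((lev u a).card - 1) + 1 : ℕ) : ℝ) ≤
    (lev u (((j : ℝ) + 1) ^ 2 * a)).card := by exact_mod_cast h4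
  push_cast [Nat.cast_sub h3] at h5 ⊢
  linarith

/-- The concentration function at the coarser scale `k`. -/
def kappa (k : ℕ) (u : B → ZMod p) : ℝ := 𝔼 t, Real.exp (-(G u t / (k : ℝ) ^ 2))

lemma kappa_nonneg (k : ℕ) (u : B → ZMod p) : 0 ≤ kappa k u :=
  avg_nonneg fun _ => (Real.exp_pos _).le

lemma exp_two_lt : Real.exp 2 < 8 := by
  have h := Real.exp_one_lt_d9
  have : Real.exp 2 = Real.exp 1 ^ 2 := by rw [← Real.exp_nat_mul]; norm_num
  rw [this]
  have := Real.exp_pos 1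
  nlinarith

lemma sum_exp_neg_le (J : ℕ) : ∑ n ∈ range J, Real.exp (-(n : ℝ)) ≤ 2 := by
  have h1 : ∀ n : ℕ, Real.exp (-(n : ℝ)) ≤ (1 / 2) ^ n := by
    intro n
    have : Real.exp (-(n : ℝ)) = Real.exp (-1) ^ n := by rw [← Real.exp_nat_mul]; congr 1; ring
    rw [this]
    have h2 : Real.exp (-1) ≤ 1 / 2 := by
      rw [Real.exp_neg, inv_le_comm₀ (Real.exp_pos _) (by norm_num)]
      have := Real.add_one_le_exp 1
      norm_num at this ⊢
      linarith
    exact pow_le_pow_left₀ (Real.exp_pos _).le h2 n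
  calc _ ≤ ∑ n ∈ range J, (1 / 2 : ℝ) ^ n := sum_le_sum fun n _ => h1 n
    _ ≤ 2 := by
      have := geom_sum_eq (show (1 / 2 : ℝ) ≠ 1 by norm_num) J
      rw [this]
      have : (0 : ℝ) ≤ (1 / 2) ^ J := by positivity
      rw [div_le_iff_of_neg (by norm_num)]
      linarith

/-- The comparison of `R` with the coarser concentration function `kappa`, in the spirit of
Kahn, Komlós and Szemerédi. -/
lemma R_le_kappa (u : B → ZMod p) {k J : ℕ} (hk : 1 ≤ k)
    (hJ : 36 * k ^ 2 * J < (univ.filter fun j => u j ≠ 0).card) :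
    R u ≤ 1 / p + 16 / k * kappa k u + Real.exp (-(2 * J)) := by
  have hkp : (0 : ℝ) < k := by exact_mod_cast hk
  have hJ' : (k : ℝ) ^ 2 * J < ((univ.filter fun j => u j ≠ 0).card : ℝ) / 36 := by
    have : ((36 * k ^ 2 * J : ℕ) : ℝ) < ((univ.filter fun j => u j ≠ 0).card : ℝ) := by
      exact_mod_cast hJ
    push_cast at this
    linarith
  -- pointwise comparison with the level sets at integer levels
  have hpt : ∀ t : ZMod p, Real.exp (-(2 * G u t)) ≤ Real.exp (-(2 * J)) +
      Real.exp 2 * ∑ n ∈ range (J + 1), Real.exp (-(2 * n)) * (if G u t ≤ n then 1 else 0) := by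
    intro t
    have hs : 0 ≤ ∑ n ∈ range (J + 1), Real.exp (-(2 * (n : ℝ))) * (if G u t ≤ n then (1 : ℝ) else 0) :=
      sum_nonneg fun n _ => mul_nonneg (Real.exp_pos _).le (by split_ifs <;> norm_num)
    rcases le_or_gt (G u t) J with h | h
    · set n0 := ⌈G u t⌉₊
      have hn0 : n0 ≤ J := Nat.ceil_le.2 h
      have h1 : Real.exp (-(2 * (n0 : ℝ))) ≤
          ∑ n ∈ range (J + 1), Real.exp (-(2 * (n : ℝ))) * (if G u t ≤ n then (1 : ℝ) else 0) := by
        have := single_le_sum (f := fun n : ℕ => Real.exp (-(2 * (n : ℝ))) *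
          (if G u t ≤ n then (1 : ℝ) else 0)) (s := range (J + 1))
          (fun n _ => mul_nonneg (Real.exp_pos _).le (by split_ifs <;> norm_num))
          (mem_range.2 (Nat.lt_succ_of_le hn0))
        simpa [n0, Nat.le_ceil] using this
      have h2 : Real.exp (-(2 * G u t)) ≤ Real.exp 2 * Real.exp (-(2 * (n0 : ℝ))) := by
        rw [← Real.exp_add, Real.exp_le_exp]
        have := Nat.ceil_lt_add_one (G_nonneg u t)
        have : (n0 : ℝ) < G u t + 1 := this
        linarith
      have := mul_le_mul_of_nonneg_left h1 (Real.exp_pos 2).le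
      linarith [Real.exp_pos (-(2 * (J : ℝ)))]
    · have : Real.exp (-(2 * G u t)) ≤ Real.exp (-(2 * J)) := by
        rw [Real.exp_le_exp]; linarith
      have := mul_nonneg (Real.exp_pos 2).le hs
      linarith
  have hp0 : (0 : ℝ) < p := p_pos
  have hR : R u = (∑ t : ZMod p, Real.exp (-(2 * G u t))) / p := by
    unfold R G
    rw [Fintype.expect_eq_sum_div_card, ZMod.card]
  have hκ : kappa k u = (∑ t : ZMod p, Real.exp (-(G u t / (k : ℝ) ^ 2))) / p := by
    unfold kappa
    rw [Fintype.expect_eq_sum_div_card, ZMod.card]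
  have hlev : ∀ n ∈ range (J + 1), ((lev u n).card - 1 : ℝ) ≤
      (lev u ((k : ℝ) ^ 2 * n)).card / k := by
    intro n hn
    rw [le_div_iff₀ hkp, mul_comm]
    refine lev_card_le u (Nat.cast_nonneg n) hk (lt_of_le_of_lt ?_ hJ')
    have : (n : ℝ) ≤ J := by exact_mod_cast Nat.lt_succ_iff.1 (mem_range.1 hn)
    gcongr
  have hsum : ∑ t : ZMod p, Real.exp (-(2 * G u t)) ≤ 1 + p * Real.exp (-(2 * J)) +
      Real.exp 2 * ∑ n ∈ range (J + 1), Real.exp (-(2 * n)) * ((lev u n).card - 1) := by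
    rw [← Finset.add_sum_erase _ _ (mem_univ (0 : ZMod p))]
    have h0 : Real.exp (-(2 * G u 0)) = 1 := by simp [G]
    rw [h0, add_assoc]
    gcongr
    calc _ ≤ ∑ t ∈ univ.erase (0 : ZMod p), (Real.exp (-(2 * J)) +
      Real.exp 2 * ∑ n ∈ range (J + 1), Real.exp (-(2 * n)) * (if G u t ≤ n then 1 else 0)) :=
        sum_le_sum fun t _ => hpt t
      _ ≤ _ := by
        rw [sum_add_distrib, sum_const, card_erase_of_mem (mem_univ _), card_univ, ZMod.card,
          nsmul_eq_mul, ← mul_sum, sum_comm]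
        have hp1 : ((p - 1 : ℕ) : ℝ) ≤ p := by exact_mod_cast Nat.sub_le p 1
        gcongr with n hn
        rw [← mul_sum]
        gcongr
        rw [sum_boole]
        have : (univ.erase (0 : ZMod p)).filter (fun t => G u t ≤ n) = (lev u n).erase 0 := by
          ext t; simp [lev]
        rw [this, card_erase_of_mem (zero_mem_lev u (Nat.cast_nonneg n)), Nat.cast_sub]
        · simp
        · exact Finset.card_pos.2 ⟨0, zero_mem_lev u (Nat.cast_nonneg n)⟩
  have hsum2 : ∑ n ∈ range (J + 1), Real.exp (-(2 * n)) * ((lev u n).card - 1 : ℝ) ≤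
      2 / k * ∑ t : ZMod p, Real.exp (-(G u t / (k : ℝ) ^ 2)) := by
    calc _ ≤ ∑ n ∈ range (J + 1), Real.exp (-(2 * n)) * ((lev u ((k : ℝ) ^ 2 * n)).card / k) :=
          sum_le_sum fun n hn => mul_le_mul_of_nonneg_left (hlev n hn) (Real.exp_pos _).le
      _ = (1 / k) * ∑ t : ZMod p, ∑ n ∈ range (J + 1), Real.exp (-(2 * n)) *
            (if G u t ≤ (k : ℝ) ^ 2 * n then 1 else 0) := by
          rw [sum_comm, mul_sum]
          refine sum_congr rfl fun n _ => ?_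
          rw [← mul_sum, sum_boole]
          simp only [lev]
          ring
      _ ≤ (1 / k) * ∑ t : ZMod p, 2 * Real.exp (-(G u t / (k : ℝ) ^ 2)) := by
          gcongr with t _
          calc _ ≤ ∑ n ∈ range (J + 1), Real.exp (-(G u t / (k : ℝ) ^ 2)) * Real.exp (-(n : ℝ)) := by
                refine sum_le_sum fun n _ => ?_
                split_ifs with h
                · rw [mul_one, ← Real.exp_add, Real.exp_le_exp]
                  have : G u t / (k : ℝ) ^ 2 ≤ n := by
                    rw [div_le_iff₀ (by positivity)]; linarith
                  linarith
                · rw [mul_zero]; positivity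
            _ ≤ _ := by
                rw [← mul_sum, mul_comm]
                have := sum_exp_neg_le (J + 1)
                gcongr
      _ = _ := by rw [← mul_sum]; ring
  rw [hR, div_le_iff₀ hp0]
  have h3 : Real.exp 2 * ∑ n ∈ range (J + 1), Real.exp (-(2 * n)) * ((lev u n).card - 1 : ℝ) ≤
      8 * (2 / k * ∑ t : ZMod p, Real.exp (-(G u t / (k : ℝ) ^ 2))) := by
    refine (mul_le_mul_of_nonneg_left hsum2 (Real.exp_pos 2).le).trans ?_
    have := exp_two_lt
    gcongr
  have h4 : (1 / (p : ℝ) + 16 / k * kappa k u + Real.exp (-(2 * J))) * p =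
      1 + 8 * (2 / k * ∑ t : ZMod p, Real.exp (-(G u t / (k : ℝ) ^ 2))) + p * Real.exp (-(2 * J)) := by
    rw [hκ]; field_simp; ring
  rw [h4]
  linarith

end kks

end

/-! ### Counting vectors by random orthogonality -/

section counting
variable {p : ℕ} [Fact p.Prime] {B : Type*} [Fintype B] [DecidableEq B]

/-- A lazy sign: `±1` with probability `1 / M` each, and `0` otherwise. -/
def lz (p : ℕ) {M : ℕ} (c : Fin M) : ZMod p :=
  if c.1 = 0 then 1 else if c.1 = 1 then -1 else 0

/-- Probability that a lazy sign combination of the entries of `u` vanishes. -/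
def lazyPr (M : ℕ) (u : B → ZMod p) : ℝ :=
  Pr (fun y : B → Fin M => ∑ j, lz p (y j) * u j = 0)

lemma lazyPr_eq (M : ℕ) (u : B → ZMod p) :
    ((lazyPr M u : ℝ) : ℂ) = 𝔼 t : ZMod p, ∏ j, 𝔼 c : Fin M, chi (t * (lz p c * u j)) := by
  have e1 : ((lazyPr M u : ℝ) : ℂ) =
      𝔼 y : B → Fin M, 𝔼 t : ZMod p, chi (t * (∑ j, lz p (y j) * u j)) := by
    unfold lazyPr Pr
    rw [Fintype.expect_eq_sum_div_card, Fintype.expect_eq_sum_div_card]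
    push_cast
    congr 1
    refine sum_congr rfl fun y _ => ?_
    rw [avg_chi_mul]
    by_cases h : ∑ j, lz p (y j) * u j = 0 <;> simp [h]
  rw [e1, expect_comm]
  refine expect_congr rfl fun t _ => ?_
  rw [← avg_prod_pi (fun j c => chi (t * (lz p c * u j)))]
  refine expect_congr rfl fun y _ => ?_
  rw [mul_sum, chi_sum]

lemma avg_lz {M : ℕ} (hM : 2 ≤ M) (s : ZMod p) :
    𝔼 c : Fin M, chi (lz p c * s) = ((1 - 2 / M * (1 - (chi s).re) : ℝ) : ℂ) := by
  obtain ⟨M, rfl⟩ : ∃ m, M = m + 2 := ⟨M - 2, by omega⟩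
  rw [Fintype.expect_eq_sum_div_card, Fin.sum_univ_succ, Fin.sum_univ_succ]
  have h1 : (starRingEnd ℂ) (chi s) = ((2 * (chi s).re : ℝ) : ℂ) - chi s := by
    apply Complex.ext <;> simp; ring
  have h0 : ((M : ℂ) + 2) ≠ 0 := by
    have : ((M : ℂ) + 2) = ((M + 2 : ℕ) : ℂ) := by push_cast; ring
    rw [this]; exact Nat.cast_ne_zero.2 (by omega)
  have h2 : ∀ i : Fin M, lz p i.succ.succ = 0 := by
    intro i; simp [lz]
  simp only [h2]
  simp [lz, chi_zero, chi_neg, h1]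
  field_simp
  ring

lemma exp_le_one_sub {x : ℝ} (h0 : 0 ≤ x) (h : x ≤ 1 / 2) : Real.exp (-(2 * x)) ≤ 1 - x := by
  rw [Real.exp_neg]
  have h1 : 1 + 2 * x ≤ Real.exp (2 * x) := by linarith [Real.add_one_le_exp (2 * x)]
  rw [inv_le_comm₀ (Real.exp_pos _) (by linarith)]
  refine le_trans ?_ h1
  rw [inv_le_iff_one_le_mul₀ (by linarith)]
  nlinarith

lemma lz_factor_ge {k : ℕ} (hk : 1 ≤ k) (s : ZMod p) :
    Real.exp (-(N2 s / (k : ℝ) ^ 2)) ≤ 1 - 2 / ((80 * k ^ 2 : ℕ) : ℝ) * (1 - (chi s).re) := by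
  have hkp : (1 : ℝ) ≤ k := by exact_mod_cast hk
  have hk2 : (1 : ℝ) ≤ (k : ℝ) ^ 2 := by nlinarith
  rw [chi_re]
  set θ : ℝ := (s.valMinAbs : ℝ) / p
  have hN : N2 s = θ ^ 2 := rfl
  have h1 : 1 - Real.cos (2 * Real.pi * θ) ≤ 20 * θ ^ 2 := by
    have := Real.one_sub_sq_div_two_le_cos (x := 2 * Real.pi * θ)
    have hpi : Real.pi ^ 2 ≤ 10 := by
      have := Real.pi_lt_d2; have := Real.pi_pos; nlinarith
    nlinarith [sq_nonneg θ]
  have hx : 0 ≤ N2 s / (2 * (k : ℝ) ^ 2) := div_nonneg (N2_nonneg s) (by positivity)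
  have hx2 : N2 s / (2 * (k : ℝ) ^ 2) ≤ 1 / 2 := by
    rw [div_le_iff₀ (by positivity)]
    have := N2_le s
    nlinarith
  have h2 := exp_le_one_sub hx hx2
  have h3 : 2 * (N2 s / (2 * (k : ℝ) ^ 2)) = N2 s / (k : ℝ) ^ 2 := by field_simp
  rw [h3] at h2
  refine h2.trans ?_
  have h4 : 2 / ((80 * k ^ 2 : ℕ) : ℝ) * (1 - Real.cos (2 * Real.pi * θ)) ≤
      2 / ((80 * k ^ 2 : ℕ) : ℝ) * (20 * θ ^ 2) := by gcongr
  have h5 : 2 / ((80 * k ^ 2 : ℕ) : ℝ) * (20 * θ ^ 2) = N2 s / (2 * (k : ℝ) ^ 2) := by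
    rw [hN]; push_cast; field_simp; ring
  linarith

lemma kappa_le_lazyPr {k : ℕ} (hk : 1 ≤ k) (u : B → ZMod p) :
    kappa k u ≤ lazyPr (80 * k ^ 2) u := by
  have hM : 2 ≤ 80 * k ^ 2 := by nlinarith
  have h1 : lazyPr (80 * k ^ 2) u = 𝔼 t : ZMod p, ∏ j,
      (1 - 2 / ((80 * k ^ 2 : ℕ) : ℝ) * (1 - (chi (t * u j)).re)) := by
    have h := lazyPr_eq (80 * k ^ 2) u
    have h2 : ∀ (t : ZMod p) (j : B), 𝔼 c : Fin (80 * k ^ 2), chi (t * (lz p c * u j)) =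
        ((1 - 2 / ((80 * k ^ 2 : ℕ) : ℝ) * (1 - (chi (t * u j)).re) : ℝ) : ℂ) := by
      intro t j
      rw [← avg_lz hM]
      exact expect_congr rfl fun c _ => by congr 1; ring
    simp_rw [h2] at h
    rw [Fintype.expect_eq_sum_div_card] at h ⊢
    exact_mod_cast h
  rw [h1]
  refine avg_mono fun t => ?_
  unfold G
  rw [sum_div, ← sum_neg_distrib, Real.exp_sum]
  exact prod_le_prod (fun _ _ => (Real.exp_pos _).le) fun j _ => lz_factor_ge hk _

/-- The linear form with coefficients given by the lazy signs `y`. -/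
def lzForm {M : ℕ} (y : B → Fin M) : (B → ZMod p) →ₗ[ZMod p] ZMod p :=
  ∑ j, lz p (y j) • LinearMap.proj j

lemma lzForm_apply {M : ℕ} (y : B → Fin M) (u : B → ZMod p) :
    lzForm y u = ∑ j, lz p (y j) * u j := by
  simp [lzForm]

lemma Pr_lz_eq_le {M : ℕ} (hM : 4 ≤ M) (a : ZMod p) :
    Pr (fun c : Fin M => lz p c = a) ≤ 1 - 2 / M := by
  have hM0 : (0 : ℝ) < M := by exact_mod_cast (by omega : 0 < M)
  have hM4 : (4 : ℝ) ≤ M := by exact_mod_cast hM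
  rw [Pr_eq_card, Fintype.card_fin]
  have key : ∀ S : Finset (Fin M), S.card ≤ M - 2 → (S.card : ℝ) / M ≤ 1 - 2 / M := by
    intro S hS
    have : (S.card : ℝ) ≤ M - 2 := by
      have : ((S.card : ℕ) : ℝ) ≤ ((M - 2 : ℕ) : ℝ) := by exact_mod_cast hS
      rwa [Nat.cast_sub (by omega)] at this
    rw [div_le_iff₀ hM0, sub_mul, div_mul_cancel₀ _ hM0.ne']
    linarith
  have hp1 : (1 : ZMod p) ≠ 0 := one_ne_zero
  let c0 : Fin M := ⟨0, by omega⟩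
  let c1 : Fin M := ⟨1, by omega⟩
  have hc : c0 ≠ c1 := by simp [c0, c1]
  apply key
  by_cases ha : a = 0
  · subst ha
    refine (card_filter_le_of_imp _ (univ \ {c0, c1}) ?_).trans ?_
    · intro c hc
      unfold lz at hc
      simp only [Finset.mem_sdiff, Finset.mem_univ, true_and, Finset.mem_insert, Finset.mem_singleton, not_or]
      refine ⟨?_, ?_⟩
      · rintro rfl; simp [c0] at hc
      · rintro rfl; simp [c1] at hc
    · rw [card_sdiff_of_subset (subset_univ _), card_pair hc]; simp
  · refine (card_filter_le_of_imp _ {c0, c1} ?_).trans ?_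
    · intro c hc
      unfold lz at hc
      simp only [mem_insert, mem_singleton]
      by_contra hcon
      rw [not_or] at hcon
      have h0 : c.1 ≠ 0 := fun h => hcon.1 (Fin.ext h)
      have h1 : c.1 ≠ 1 := fun h => hcon.2 (Fin.ext h)
      rw [if_neg h0, if_neg h1] at hc
      exact ha hc.symm
    · rw [card_pair hc]; omega

lemma finrank_inf_ker_add_one {F E : Type*} [Field F] [AddCommGroup E]
    [Module F E] [FiniteDimensional F E] (W : Submodule F E) (f : E →ₗ[F] F) :
    Module.finrank F W ≤ Module.finrank F ↥(W ⊓ LinearMap.ker f) + 1 := by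
  have h := LinearMap.finrank_range_add_finrank_ker (f.domRestrict W)
  have h1 : Module.finrank F (LinearMap.range (f.domRestrict W)) ≤ 1 := by
    have := Submodule.finrank_le (LinearMap.range (f.domRestrict W))
    simpa using this
  have h2 : Module.finrank F (LinearMap.ker (f.domRestrict W)) =
      Module.finrank F ↥(W ⊓ LinearMap.ker f) := by
    have e : LinearMap.ker (f.domRestrict W) = Submodule.comap W.subtype (LinearMap.ker f) := by
      ext x; simp
    rw [e, ← Submodule.map_comap_subtype]
    exact (Submodule.equivSubtypeMap W _).finrank_eq
  omega

/-- Odlyzko's bound: a lazy sign vector is orthogonal to a given subspace with probability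
exponentially small in its dimension. -/
lemma odlyzko {M : ℕ} (hM : 4 ≤ M) (n : ℕ) : ∀ W : Submodule (ZMod p) (B → ZMod p),
    n ≤ Module.finrank (ZMod p) W →
    Pr (fun y : B → Fin M => ∀ u ∈ W, lzForm y u = 0) ≤ (1 - 2 / (M : ℝ)) ^ n := by
  have hM4 : (4 : ℝ) ≤ M := by exact_mod_cast hM
  have hμ : 0 ≤ 1 - 2 / (M : ℝ) := by
    rw [sub_nonneg, div_le_one (by linarith)]; linarith
  have : Nonempty (Fin M) := ⟨⟨0, by omega⟩⟩
  induction n with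
  | zero => intro W _; simpa using Pr_le_one _
  | succ n ih =>
    intro W hW
    have hne : W ≠ ⊥ := by
      rintro rfl; simp at hW
    obtain ⟨w, hw, hw0⟩ := Submodule.exists_mem_ne_zero_of_ne_bot hne
    obtain ⟨j, hj⟩ := Function.ne_iff.1 hw0
    set W' := W ⊓ LinearMap.ker (LinearMap.proj j : (B → ZMod p) →ₗ[ZMod p] ZMod p)
    have hW' := finrank_inf_ker_add_one W (LinearMap.proj j : (B → ZMod p) →ₗ[ZMod p] ZMod p)
    have hih := ih W' (by simp only [W']; omega)
    have hinv : ∀ (y : B → Fin M) c u, u ∈ W' → lzForm (Function.update y j c) u = lzForm y u := by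
      intro y c u hu
      have hu0 : u j = 0 := hu.2
      rw [lzForm_apply, lzForm_apply]
      refine sum_congr rfl fun i _ => ?_
      by_cases hi : i = j
      · subst hi; simp [hu0]
      · simp [hi]
    calc Pr (fun y : B → Fin M => ∀ u ∈ W, lzForm y u = 0)
        ≤ Pr (fun y : B → Fin M => (∀ u ∈ W', lzForm y u = 0) ∧ lzForm y w = 0) :=
          Pr_mono fun y hy => ⟨fun u hu => hy u hu.1, hy w hw⟩
      _ = 𝔼 y : B → Fin M, (if ∀ u ∈ W', lzForm y u = 0 then 1 else 0) *
            Pr (fun c : Fin M => lzForm (Function.update y j c) w = 0) := by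
          unfold Pr
          rw [resample_update j]
          refine expect_congr rfl fun y _ => ?_
          rw [mul_expect]
          refine expect_congr rfl fun c _ => ?_
          have : (∀ u ∈ W', lzForm (Function.update y j c) u = 0) ↔ ∀ u ∈ W', lzForm y u = 0 :=
            forall₂_congr fun u hu => by rw [hinv y c u hu]
          simp only [this]
          by_cases h1 : ∀ u ∈ W', lzForm y u = 0 <;>
          by_cases h2 : lzForm (Function.update y j c) w = 0 <;> simp [h1, h2]
      _ ≤ 𝔼 y : B → Fin M, (if ∀ u ∈ W', lzForm y u = 0 then 1 else 0) * (1 - 2 / (M : ℝ)) := by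
          refine avg_mono fun y => ?_
          refine mul_le_mul_of_nonneg_left ?_ (by split_ifs <;> norm_num)
          set r := ∑ i ∈ univ.erase j, lz p (y i) * w i
          refine le_trans (Pr_mono (F := fun c : Fin M => lz p c = -r / w j) fun c hc => ?_)
            (Pr_lz_eq_le hM _)
          rw [lzForm_apply, ← Finset.add_sum_erase _ _ (mem_univ j)] at hc
          have : ∑ i ∈ univ.erase j, lz p (Function.update y j c i) * w i = r :=
            sum_congr rfl fun i hi => by rw [Function.update_of_ne (ne_of_mem_erase hi)]
          rw [this, Function.update_self] at hc
          rw [eq_div_iff hj]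
          exact eq_neg_of_add_eq_zero_left hc
      _ = Pr (fun y : B → Fin M => ∀ u ∈ W', lzForm y u = 0) * (1 - 2 / (M : ℝ)) := by
          rw [← expect_mul, Pr_def]
      _ ≤ _ := by rw [pow_succ]; gcongr

lemma card_submodule {E : Type*} [AddCommGroup E] [Module (ZMod p) E] [Fintype E]
    (W : Submodule (ZMod p) E) :
    ((univ.filter fun u => u ∈ W).card : ℝ) = (p : ℝ) ^ Module.finrank (ZMod p) W := by
  have h := Module.card_eq_pow_finrank (K := ZMod p) (V := W)
  rw [ZMod.card] at h
  have h2 : (univ.filter fun u => u ∈ W).card = Fintype.card W := by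
    rw [Fintype.card_subtype]
  rw [h2]
  have h3 : Fintype.card W = p ^ Module.finrank (ZMod p) W := by
    convert h using 1
  exact_mod_cast h3

lemma sum_lazyPr_pow_le {M : ℕ} (hM : 4 ≤ M) (m₀ h : ℕ) :
    ∀ W : Submodule (ZMod p) (B → ZMod p), m₀ + h ≤ Module.finrank (ZMod p) W →
    ∑ u : B → ZMod p, (if u ∈ W then lazyPr M u ^ h else 0) ≤
      (p : ℝ) ^ Module.finrank (ZMod p) W * (1 / p + (1 - 2 / (M : ℝ)) ^ m₀) ^ h := by
  have hM4 : (4 : ℝ) ≤ M := by exact_mod_cast hM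
  have hp0 : (0 : ℝ) < p := p_pos
  have hp1 : (1 : ℝ) ≤ p := by exact_mod_cast (Fact.out : p.Prime).one_le
  have hμ : 0 ≤ 1 - 2 / (M : ℝ) := by
    rw [sub_nonneg, div_le_one (by linarith)]; linarith
  have hμ1 : 1 - 2 / (M : ℝ) ≤ 1 := by
    have : 0 ≤ 2 / (M : ℝ) := by positivity
    linarith
  have : Nonempty (Fin M) := ⟨⟨0, by omega⟩⟩
  set A : ℝ := 1 / p + (1 - 2 / (M : ℝ)) ^ m₀ with hA
  have hA0 : 0 ≤ A := by positivity
  induction h with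
  | zero =>
    intro W hW
    simp only [pow_zero, mul_one]
    rw [sum_boole, card_submodule]
  | succ h ih =>
    intro W hW
    have hodl := odlyzko (p := p) (B := B) hM m₀ W (by omega)
    calc ∑ u : B → ZMod p, (if u ∈ W then lazyPr M u ^ (h + 1) else 0)
        = 𝔼 y : B → Fin M, ∑ u : B → ZMod p,
            (if u ∈ W ⊓ LinearMap.ker (lzForm y) then lazyPr M u ^ h else 0) := by
          rw [expect_sum_comm]
          refine sum_congr rfl fun u _ => ?_
          by_cases hu : u ∈ W
          · rw [if_pos hu, pow_succ]
            have e : lazyPr M u = 𝔼 y : B → Fin M,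
              if ∑ j, lz p (y j) * u j = 0 then (1 : ℝ) else 0 := Pr_def _
            nth_rewrite 2 [e]
            rw [mul_expect]
            refine expect_congr rfl fun y _ => ?_
            simp [hu, lzForm_apply]
          · simp [hu]
      _ ≤ 𝔼 y : B → Fin M, (p : ℝ) ^ Module.finrank (ZMod p) W * A ^ h *
            (1 / p + if (∀ u ∈ W, lzForm y u = 0) then 1 else 0) := by
          refine avg_mono fun y => ?_
          have hd := finrank_inf_ker_add_one W (lzForm (p := p) y)
          refine (ih (W ⊓ LinearMap.ker (lzForm y)) (by omega)).trans ?_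
          rw [mul_assoc, mul_comm (A ^ h), ← mul_assoc]
          refine mul_le_mul_of_nonneg_right ?_ (by positivity)
          by_cases hy : ∀ u ∈ W, lzForm y u = 0
          · rw [if_pos hy]
            have : W ⊓ LinearMap.ker (lzForm y) = W := inf_eq_left.2 fun u hu => hy u hu
            rw [this]
            have : 0 ≤ (p : ℝ) ^ Module.finrank (ZMod p) W * (1 / p) := by positivity
            linarith
          · rw [if_neg hy, add_zero]
            have hlt : W ⊓ LinearMap.ker (lzForm y) < W := by
              refine lt_of_le_of_ne inf_le_left fun h => hy fun u hu => ?_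
              rw [← h] at hu; exact hu.2
            have := Submodule.finrank_lt_finrank_of_lt hlt
            rw [mul_one_div, le_div_iff₀ hp0, ← pow_succ]
            exact pow_le_pow_right₀ hp1 this
      _ = (p : ℝ) ^ Module.finrank (ZMod p) W * A ^ h *
            (1 / p + Pr (fun y : B → Fin M => ∀ u ∈ W, lzForm y u = 0)) := by
          rw [← mul_expect, expect_add_distrib, Fintype.expect_const, Pr_def]
      _ ≤ (p : ℝ) ^ Module.finrank (ZMod p) W * A ^ h * A := by
          rw [hA]; gcongr
      _ = _ := by rw [pow_succ]; ring

lemma sum_kappa_pow_le {k m₀ h : ℕ} (hk : 1 ≤ k) (hm : m₀ + h ≤ Fintype.card B) :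
    ∑ u : B → ZMod p, kappa k u ^ h ≤
      (p : ℝ) ^ Fintype.card B * (1 / p + (1 - 2 / ((80 * k ^ 2 : ℕ) : ℝ)) ^ m₀) ^ h := by
  have h1 := sum_lazyPr_pow_le (p := p) (B := B) (M := 80 * k ^ 2) (by nlinarith) m₀ h ⊤
    (by simpa using hm)
  simp only [Submodule.mem_top, if_true, finrank_top, Module.finrank_fintype_fun_eq_card] at h1
  refine le_trans (sum_le_sum fun u _ => ?_) h1
  exact pow_le_pow_left₀ (kappa_nonneg k u) (kappa_le_lazyPr hk u) h

end counting

/-! ### Random Laplacian rows against a fixed vector -/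

/-- The Laplacian of the graph with edge indicator `x`, applied to a vector `v`. -/
def lap {F : Type*} [CommRing F] {V : Type*} [Fintype V] (x : Sym2 V → Bool) (v : V → F) (i : V) :
    F := ∑ j, bt (x s(i, j)) * (v j - v i)

section SL
variable {p : ℕ} [Fact p.Prime] {W : Type*} [Fintype W] [DecidableEq W]

/-- Rows indexed by `A` are independent once the bits joining them to a disjoint block `B` are
the only randomness. -/
lemma Pr_lap_block {A B : Type*} [Fintype A] [DecidableEq A] [Fintype B] [DecidableEq B]
    (al : A → W) (hal : Function.Injective al) (io : B → W) (hio : Function.Injective io)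
    (hd : ∀ a j, al a ≠ io j) (v τ : W → ZMod p) :
    Pr (fun y : Sym2 W → Bool => ∀ i, lap y v i = τ i) ≤
      ∏ a, R (fun j => v (io j) - v (al a)) := by
  let φ : A × B → Sym2 W := fun z => s(al z.1, io z.2)
  have hφ : Function.Injective φ := by
    rintro ⟨a, j⟩ ⟨a', j'⟩ h
    simp only [φ, Sym2.eq_iff] at h
    rcases h with ⟨h1, h2⟩ | ⟨h1, h2⟩
    · rw [hal h1, hio h2]
    · exact absurd h1 (hd _ _)
  rw [Pr_resample_extend φ hφ]
  refine avg_le fun x => ?_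
  have key : ∀ y : A × B → Bool, ∀ a, lap (Function.extend φ y x) v (al a) =
      ∑ j, bt (y (a, j)) * (v (io j) - v (al a)) +
      ∑ j ∈ univ.filter (fun j => j ∉ Set.range io), bt (x s(al a, j)) * (v j - v (al a)) := by
    intro y a
    unfold lap
    rw [← sum_filter_add_sum_filter_not univ (fun j => j ∈ Set.range io)]
    congr 1
    · rw [show (univ.filter fun j => j ∈ Set.range io) = univ.image io by ext; simp]
      rw [sum_image fun _ _ _ _ h => hio h]
      refine sum_congr rfl fun j _ => ?_
      have : Function.extend φ y x s(al a, io j) = y (a, j) := hφ.extend_apply y x (a, j)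
      rw [this]
    · refine sum_congr rfl fun j hj => ?_
      have hj := (mem_filter.1 hj).2
      rw [Function.extend_apply']
      rintro ⟨⟨a', j'⟩, h⟩
      simp only [φ, Sym2.eq_iff] at h
      rcases h with ⟨h1, h2⟩ | ⟨h1, h2⟩
      · exact hj ⟨j', h2⟩
      · exact hd _ _ h2.symm
  refine le_trans (Pr_mono (F := fun y : A × B → Bool => ∀ a,
    ∑ j, bt (y (a, j)) * (v (io j) - v (al a)) = τ (al a) -
      ∑ j ∈ univ.filter (fun j => j ∉ Set.range io), bt (x s(al a, j)) * (v j - v (al a))) ?_)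
    (Pr_rows_linear_le _ _)
  intro y hy a
  rw [← hy (al a), key y a]; ring

lemma Pr_lap_agree (A : Finset W) (j₀ : W) (hj : j₀ ∉ A) (v τ : W → ZMod p)
    (hv : ∀ i ∈ A, v j₀ ≠ v i) :
    Pr (fun y : Sym2 W → Bool => ∀ i, lap y v i = τ i) ≤ (1 / 2) ^ A.card := by
  have hinj : Set.InjOn (fun i => s(i, j₀)) A := by
    intro i hi i' hi' h
    simp only [Sym2.eq_iff] at h
    rcases h with h | h
    · exact h.1
    · exact absurd (h.1 ▸ hi) hj
  rw [← card_image_of_injOn hinj]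
  refine Pr_le_of_agree _ _ fun x y hx hy hxy => ?_
  funext e
  by_cases he : e ∈ A.image (fun i => s(i, j₀))
  · obtain ⟨i, hi, rfl⟩ := mem_image.1 he
    have h := (hx i).trans (hy i).symm
    unfold lap at h
    rw [← sub_eq_zero, ← sum_sub_distrib, sum_eq_single j₀] at h
    · rw [← sub_mul, mul_eq_zero, or_iff_left (sub_ne_zero.2 (hv i hi)), sub_eq_zero] at h
      revert h
      cases x s(i, j₀) <;> cases y s(i, j₀) <;> simp
    · intro j _ hjj
      rw [hxy, sub_self]
      rw [mem_image]
      rintro ⟨i', hi', h⟩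
      simp only [Sym2.eq_iff] at h
      rcases h with h | h
      · exact hjj h.2.symm
      · exact hj (h.2 ▸ hi)
    · simp
  · exact hxy e he

/-- For a nonconstant vector half of the rows can be decided by independent bits. -/
lemma Pr_lap_nonconst (v τ : W → ZMod p) (hv : ∃ i j, v i ≠ v j) {n : ℕ}
    (hn : 2 * n ≤ Fintype.card W) :
    Pr (fun y : Sym2 W → Bool => ∀ i, lap y v i = τ i) ≤ (1 / 2) ^ n := by
  obtain ⟨i₀, j₀, h⟩ := hv
  have hc := Finset.card_filter_add_card_filter_not (s := (univ : Finset W)) (fun i => v i = v i₀)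
  rw [card_univ] at hc
  have mono : ∀ {a : ℕ}, n ≤ a → ((1 : ℝ) / 2) ^ a ≤ (1 / 2) ^ n := fun h =>
    pow_le_pow_of_le_one (by norm_num) (by norm_num) h
  by_cases hb : n ≤ (univ.filter fun i => v i = v i₀).card
  · refine (Pr_lap_agree _ j₀ ?_ v τ ?_).trans (mono hb)
    · simpa using Ne.symm h
    · intro i hi
      rw [(mem_filter.1 hi).2]; exact Ne.symm h
  · refine (Pr_lap_agree (univ.filter fun i => ¬ v i = v i₀) i₀ (by simp) v τ ?_).trans
      (mono (by omega))
    intro i hi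
    exact Ne.symm (mem_filter.1 hi).2

/-- Few residues are close to `0`. -/
lemma card_small (r : ℕ) :
    (univ.filter fun t : ZMod p => t.valMinAbs.natAbs ≤ r).card ≤ 2 * r + 1 := by
  have : (univ.filter fun t : ZMod p => t.valMinAbs.natAbs ≤ r).card ≤
      (Finset.Icc (-(r : ℤ)) r).card := by
    refine card_le_card_of_injOn ZMod.valMinAbs ?_ ?_
    · intro t ht
      have := (mem_filter.1 ht).2
      simp only [coe_Icc, Set.mem_Icc]
      omega
    · intro a _ b _ h
      exact ZMod.injective_valMinAbs h
  rw [Int.card_Icc] at this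
  omega

lemma exp_neg_four_lt : Real.exp (-4) < 0.02 := by
  have h := Real.exp_one_gt_d9
  have : Real.exp (-4) = (Real.exp 1 ^ 4)⁻¹ := by
    rw [← Real.exp_nat_mul, ← Real.exp_neg]; norm_num
  rw [this, inv_lt_comm₀ (by positivity) (by norm_num)]
  calc (0.02 : ℝ)⁻¹ < 2.7 ^ 4 := by norm_num
    _ ≤ _ := by gcongr; linarith

lemma sum_weight_le : ∑ t : ZMod p, Real.exp (-(400 * N2 t)) ≤ 0.6 * p := by
  have hp2 := (Fact.out : p.Prime).two_le
  have h1 : ∀ t : ZMod p, Real.exp (-(400 * N2 t)) ≤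
      (if t.valMinAbs.natAbs ≤ p / 10 then 1 else 0) + 0.02 := by
    intro t
    split_ifs with h
    · have : Real.exp (-(400 * N2 t)) ≤ 1 := by
        rw [Real.exp_le_one_iff]; nlinarith [N2_nonneg t]
      linarith
    · have h2 : p ≤ 10 * t.valMinAbs.natAbs := by omega
      have h3 : (1 : ℝ) / 10 ≤ (t.valMinAbs.natAbs : ℝ) / p := by
        rw [div_le_div_iff₀ (by norm_num) p_pos]
        exact_mod_cast (by omega : 1 * p ≤ t.valMinAbs.natAbs * 10)
      have h4 : 1 / 100 ≤ N2 t := by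
        rw [N2_eq_natAbs]; nlinarith
      have : Real.exp (-(400 * N2 t)) ≤ Real.exp (-4) := Real.exp_le_exp.2 (by linarith)
      linarith [exp_neg_four_lt]
  refine (sum_le_sum fun t _ => h1 t).trans ?_
  rw [sum_add_distrib, ← sum_filter, sum_const, sum_const, card_univ, ZMod.card, nsmul_eq_mul,
    nsmul_eq_mul]
  have h5 : ((univ.filter fun t : ZMod p => t.valMinAbs.natAbs ≤ p / 10).card : ℝ) ≤
      2 * ((p / 10 : ℕ) : ℝ) + 1 := by exact_mod_cast card_small (p / 10)
  rcases Nat.lt_or_ge p 3 with h3 | h3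
  · have : p = 2 := by omega
    subst this
    have h5' : ((univ.filter fun t : ZMod 2 => t.valMinAbs.natAbs ≤ 2 / 10).card : ℝ) ≤ 1 := by
      simpa using h5
    refine (add_le_add_left (mul_le_mul_of_nonneg_right h5' zero_le_one) _).trans ?_
    norm_num
  · have h6 : ((p / 10 : ℕ) : ℝ) ≤ p / 10 := Nat.cast_div_le
    have h7 : (3 : ℝ) ≤ p := by exact_mod_cast h3
    linarith

section block
variable {B : Type*} [Fintype B] [DecidableEq B]

/-- A block vector is spread out if more than `s` entries differ from every constant. -/
def Spread (s : ℕ) (u : B → ZMod p) : Prop := ∀ c, s < (univ.filter fun j => u j ≠ c).card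

/-- The worst concentration probability of a block over all shifts. -/
def rhoMax (u : B → ZMod p) : ℝ := univ.sup' ⟨(0 : ZMod p), mem_univ _⟩ fun c => R fun j => u j - c

/-- The block factor: the worst concentration probability for spread out blocks, a fixed
larger number for the other blocks. -/
def rB (k s : ℕ) (u : B → ZMod p) : ℝ := if Spread s u then rhoMax u else 1 / p + 17 / k

lemma R_le_rhoMax (u : B → ZMod p) (c : ZMod p) : R (fun j => u j - c) ≤ rhoMax u :=
  le_sup' (fun c => R fun j => u j - c) (mem_univ c)

lemma rhoMax_nonneg (u : B → ZMod p) : 0 ≤ rhoMax u := (R_nonneg _).trans (R_le_rhoMax u 0)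

lemma rB_nonneg (k s : ℕ) (u : B → ZMod p) : 0 ≤ rB k s u := by
  unfold rB; split_ifs
  · exact rhoMax_nonneg u
  · positivity

lemma kappa_le_one (k : ℕ) (u : B → ZMod p) : kappa k u ≤ 1 := avg_le fun t => by
  rw [Real.exp_le_one_iff, neg_nonpos]
  exact div_nonneg (G_nonneg _ _) (by positivity)

lemma Spread.shift {s : ℕ} {u : B → ZMod p} (h : Spread s u) (c : ZMod p) :
    s < (univ.filter fun j => u j - c ≠ 0).card := by
  simpa [sub_ne_zero] using h c

lemma R_spread_le {k J : ℕ} (hk : 1 ≤ k) (hJ : Real.exp (-(2 * J)) ≤ 1 / (p * k))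
    {u : B → ZMod p} (h : Spread (36 * k ^ 2 * J) u) (c : ZMod p) :
    R (fun j => u j - c) ≤ (1 + 1 / k) / p + 16 / k * kappa k (fun j => u j - c) := by
  have h1 := R_le_kappa (fun j => u j - c) hk (h.shift c)
  have hp := p_pos (p := p)
  have hk' : (0 : ℝ) < k := by exact_mod_cast hk
  have : (1 + 1 / (k : ℝ)) / p = 1 / p + 1 / (p * k) := by field_simp
  linarith

lemma rhoMax_le_rstar {k J : ℕ} (hk : 1 ≤ k) (hJ : Real.exp (-(2 * J)) ≤ 1 / (p * k))
    {u : B → ZMod p} (h : Spread (36 * k ^ 2 * J) u) : rhoMax u ≤ 1 / p + 17 / k := by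
  refine sup'_le _ _ fun c _ => ?_
  have h1 := R_spread_le hk hJ h c
  have hp : (1 : ℝ) ≤ p := by exact_mod_cast (Fact.out : p.Prime).one_le
  have hk' : (0 : ℝ) < k := by exact_mod_cast hk
  have h2 : 16 / (k : ℝ) * kappa k (fun j => u j - c) ≤ 16 / k * 1 := by
    gcongr; exact kappa_le_one _ _
  have : (1 + 1 / (k : ℝ)) / p ≤ 1 / p + 1 / k := by
    rw [add_div]; exact add_le_add le_rfl (div_le_self (by positivity) hp)
  have : 17 / (k : ℝ) = 16 / k + 1 / k := by ring
  linarith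

lemma rhoMax_pow_le {l J h : ℕ} (hl : 1 ≤ l)
    (hJ : Real.exp (-(2 * J)) ≤ 1 / (p * (l ^ 2 : ℕ)))
    {u : B → ZMod p} (hs : Spread (36 * (l ^ 2) ^ 2 * J) u) :
    rhoMax u ^ h ≤ ((1 + 1 / l) ^ 2 / p) ^ h +
      ∑ c : ZMod p, (32 / l * kappa (l ^ 2) (fun j => u j - c)) ^ h := by
  obtain ⟨c, -, hc⟩ := exists_mem_eq_sup' (⟨(0 : ZMod p), mem_univ _⟩ : (univ : Finset (ZMod p)).Nonempty)
    (fun c => R fun j => u j - c)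
  have hpp := p_pos (p := p)
  have hl' : (1 : ℝ) ≤ l := by exact_mod_cast hl
  have h1 := R_spread_le (Nat.one_le_pow _ _ hl) hJ hs c
  have hκ := kappa_nonneg (l ^ 2) (fun j => u j - c)
  set κ := kappa (l ^ 2) (fun j => u j - c) with hκd
  have hterm : ∀ c : ZMod p, 0 ≤ (32 / (l : ℝ) * kappa (l ^ 2) (fun j => u j - c)) ^ h := fun c =>
    pow_nonneg (mul_nonneg (by positivity) (kappa_nonneg _ _)) _
  have h2 : (32 / (l : ℝ) * κ) ^ h ≤ ∑ c : ZMod p, (32 / l * kappa (l ^ 2) (fun j => u j - c)) ^ h :=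
    single_le_sum (f := fun c => (32 / (l : ℝ) * kappa (l ^ 2) (fun j => u j - c)) ^ h)
      (fun c _ => hterm c) (mem_univ c)
  have hρ : rhoMax u = R (fun j => u j - c) := hc
  rw [hρ]
  have h0 := R_nonneg (fun j => u j - c)
  push_cast at h1
  by_cases hcase : 16 / (l : ℝ) ^ 2 * κ ≤ (1 + 1 / (l : ℝ) ^ 2) / p / l
  · have : R (fun j => u j - c) ≤ (1 + 1 / l) ^ 2 / p := by
      have e : (1 + 1 / (l : ℝ)) ^ 2 / p - (1 + 1 / (l : ℝ) ^ 2) / p - (1 + 1 / (l : ℝ) ^ 2) / p / l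
          = (1 - 1 / (l : ℝ) ^ 2) / l / p := by field_simp; ring
      have : 0 ≤ (1 - 1 / (l : ℝ) ^ 2) / l / p := by
        have : 1 / (l : ℝ) ^ 2 ≤ 1 := by
          rw [div_le_one (by positivity)]; exact one_le_pow₀ hl'
        have : 0 ≤ 1 - 1 / (l : ℝ) ^ 2 := by linarith
        positivity
      linarith
    have h3 := pow_le_pow_left₀ h0 this h
    have := sum_nonneg fun c (_ : c ∈ univ) => hterm c
    linarith
  · rw [not_le] at hcase
    have : R (fun j => u j - c) ≤ 32 / l * κ := by
      have h4 : (1 + 1 / (l : ℝ) ^ 2) / p < 16 / (l : ℝ) ^ 2 * κ * l := by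
        rwa [div_lt_iff₀ (by linarith)] at hcase
      have h5 : 16 / (l : ℝ) ^ 2 * κ * l = 16 / l * κ := by field_simp
      have h6 : 16 / (l : ℝ) ^ 2 * κ ≤ 16 / l * κ := by
        gcongr; exact le_self_pow₀ hl' (by norm_num)
      have h7 : 32 / (l : ℝ) * κ = 16 / l * κ + 16 / l * κ := by ring
      linarith
    have h3 := pow_le_pow_left₀ h0 this h
    have : 0 ≤ ((1 + 1 / (l : ℝ)) ^ 2 / p) ^ h := by positivity
    linarith

/-- There are few vectors which are not spread out. -/
lemma card_not_spread [Nonempty B] (s : ℕ) :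
    ((univ.filter fun u : B → ZMod p => ¬ Spread s u).card : ℝ) ≤
      p * ((Fintype.card B : ℝ) ^ s * (p : ℝ) ^ s) := by
  let Φ : ZMod p × (Fin s → B) × (Fin s → ZMod p) → (B → ZMod p) := fun z j =>
    if h : ∃ i, z.2.1 i = j then z.2.2 h.choose else z.1
  have hsub : (univ.filter fun u : B → ZMod p => ¬ Spread s u) ⊆ univ.image Φ := by
    intro u hu
    have hu := (mem_filter.1 hu).2
    unfold Spread at hu
    push Not at hu
    obtain ⟨c, hc⟩ := hu
    obtain ⟨f, hf⟩ : ∃ f : Fin s → B, ∀ j, u j ≠ c → ∃ i, f i = j := by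
      let S := univ.filter fun j => u j ≠ c
      have e := S.equivFin
      refine ⟨fun i => if h : i.1 < S.card then (e.symm ⟨i.1, h⟩ : S) else Classical.arbitrary B,
        fun j hj => ?_⟩
      have hj' : j ∈ S := by simpa [S] using hj
      refine ⟨⟨(e ⟨j, hj'⟩).1, lt_of_lt_of_le (e ⟨j, hj'⟩).2 hc⟩, ?_⟩
      simp
    refine mem_image.2 ⟨(c, f, fun i => u (f i)), mem_univ _, ?_⟩
    funext j
    simp only [Φ]
    split_ifs with h
    · rw [h.choose_spec]
    · by_contra hne
      exact h (hf j (Ne.symm hne))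
  have h1 := (card_le_card hsub).trans card_image_le
  rw [card_univ, Fintype.card_prod, Fintype.card_prod, Fintype.card_fun, Fintype.card_fun,
    ZMod.card, Fintype.card_fin] at h1
  exact_mod_cast h1

lemma sum_weight_prod_le (I : Finset B) :
    ∑ u : B → ZMod p, ∏ j, (if j ∈ I then Real.exp (-(400 * N2 (u j))) else 1) ≤
      0.6 ^ I.card * (p : ℝ) ^ Fintype.card B := by
  have h := (Finset.prod_univ_sum (fun _ : B => (univ : Finset (ZMod p)))
    (fun j t => if j ∈ I then Real.exp (-(400 * N2 t)) else (1 : ℝ))).symm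
  rw [Fintype.piFinset_univ] at h
  rw [h]
  have h2 : ∀ j, ∑ t : ZMod p, (if j ∈ I then Real.exp (-(400 * N2 t)) else (1 : ℝ)) ≤
      (if j ∈ I then 0.6 else 1) * p := by
    intro j
    split_ifs with hj
    · exact sum_weight_le
    · simp [ZMod.card]
  refine (prod_le_prod (fun j _ => sum_nonneg fun t _ => by split_ifs <;> positivity)
    fun j _ => h2 j).trans ?_
  rw [prod_mul_distrib, prod_const, card_univ, prod_ite]
  simp

/-- The sum of the block factors, weighted by `exp (-400 N2)` on the coordinates in `I`. -/
lemma block_sum_le [Nonempty B] {l J h : ℕ} (hl : 1 ≤ l)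
    (hJ : Real.exp (-(2 * J)) ≤ 1 / (p * (l ^ 2 : ℕ))) (I : Finset B)
    (hh : 36 * (l ^ 2) ^ 2 * J + 1 + h ≤ Fintype.card B)
    (hκ : (1 - 2 / ((80 * (l ^ 2) ^ 2 : ℕ) : ℝ)) ^ (Fintype.card B - h) ≤ 1 / p)
    (hr : (1 : ℝ) / p + 17 / (l ^ 2 : ℕ) ≤ 0.6) :
    ∑ u : B → ZMod p, rB (l ^ 2) (36 * (l ^ 2) ^ 2 * J) u ^ h *
      ∏ j, (if j ∈ I then Real.exp (-(400 * N2 (u j))) else 1) ≤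
    (p : ℝ) ^ (Fintype.card B - h) * ((1 + 1 / l) ^ (2 * h) * 0.6 ^ I.card + p * (64 / l) ^ h +
      (Fintype.card B : ℝ) ^ (36 * (l ^ 2) ^ 2 * J) * 0.6 ^ h) := by
  set s := 36 * (l ^ 2) ^ 2 * J with hs
  set m := Fintype.card B with hm
  have hpp := p_pos (p := p)
  have hp1 : (1 : ℝ) ≤ p := by exact_mod_cast (Fact.out : p.Prime).one_le
  have hl' : (1 : ℝ) ≤ l := by exact_mod_cast hl
  let w : (B → ZMod p) → ℝ := fun u => ∏ j, (if j ∈ I then Real.exp (-(400 * N2 (u j))) else 1)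
  have hw0 : ∀ u, 0 ≤ w u := fun u => prod_nonneg fun j _ => by split_ifs <;> positivity
  have hw1 : ∀ u, w u ≤ 1 := fun u => prod_le_one (fun j _ => by split_ifs <;> positivity)
    fun j _ => by
      split_ifs
      · rw [Real.exp_le_one_iff]; nlinarith [N2_nonneg (u j)]
      · exact le_rfl
  have hpm : (p : ℝ) ^ m = p ^ (m - h) * p ^ h := by rw [← pow_add]; congr 1; omega
  have hpt : ∀ u : B → ZMod p, rB (l ^ 2) s u ^ h * w u ≤
      ((1 + 1 / l) ^ 2 / p) ^ h * w u +
      ∑ c : ZMod p, (32 / l * kappa (l ^ 2) (fun j => u j - c)) ^ h +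
      (if ¬ Spread s u then (0.6 : ℝ) ^ h else 0) := by
    intro u
    have hterm : 0 ≤ ∑ c : ZMod p, (32 / (l : ℝ) * kappa (l ^ 2) (fun j => u j - c)) ^ h :=
      sum_nonneg fun c _ => pow_nonneg (mul_nonneg (by positivity) (kappa_nonneg _ _)) _
    unfold rB
    by_cases hsp : Spread s u
    · rw [if_pos hsp, if_neg (not_not.2 hsp), add_zero]
      have h1 := rhoMax_pow_le (h := h) hl hJ hsp
      have h2 := mul_le_mul_of_nonneg_right h1 (hw0 u)
      rw [add_mul] at h2
      have h3 : (∑ c : ZMod p, (32 / (l : ℝ) * kappa (l ^ 2) (fun j => u j - c)) ^ h) * w u ≤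
        ∑ c : ZMod p, (32 / (l : ℝ) * kappa (l ^ 2) (fun j => u j - c)) ^ h :=
        mul_le_of_le_one_right hterm (hw1 u)
      linarith
    · rw [if_neg hsp, if_pos hsp]
      have h1 : (1 / (p : ℝ) + 17 / (l ^ 2 : ℕ)) ^ h * w u ≤ 0.6 ^ h * 1 := by
        gcongr; exact hw1 u
      have : 0 ≤ ((1 + 1 / (l : ℝ)) ^ 2 / p) ^ h * w u := mul_nonneg (by positivity) (hw0 u)
      linarith
  refine (sum_le_sum fun u _ => hpt u).trans ?_
  rw [sum_add_distrib, sum_add_distrib, ← mul_sum, mul_add, mul_add]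
  refine add_le_add (add_le_add ?_ ?_) ?_
  · have h1 := sum_weight_prod_le (p := p) I
    calc ((1 + 1 / (l : ℝ)) ^ 2 / p) ^ h * ∑ u, w u
        ≤ ((1 + 1 / (l : ℝ)) ^ 2 / p) ^ h * (0.6 ^ I.card * (p : ℝ) ^ m) := by gcongr
      _ = _ := by rw [hpm, div_pow, ← pow_mul]; field_simp
  · rw [sum_comm]
    have h1 : ∀ c : ZMod p, ∑ u : B → ZMod p, (32 / (l : ℝ) * kappa (l ^ 2) (fun j => u j - c)) ^ h ≤
        (p : ℝ) ^ (m - h) * (64 / l) ^ h := by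
      intro c
      have e0 := (Equiv.subRight (fun _ : B => c)).sum_comp
        (fun u : B → ZMod p => (32 / (l : ℝ) * kappa (l ^ 2) u) ^ h)
      have e1 : ∑ u : B → ZMod p, (32 / (l : ℝ) * kappa (l ^ 2) (fun j => u j - c)) ^ h =
        ∑ u : B → ZMod p, (32 / (l : ℝ) * kappa (l ^ 2) u) ^ h := e0
      rw [e1]
      simp_rw [mul_pow]
      rw [← mul_sum]
      have h2 := sum_kappa_pow_le (p := p) (B := B) (k := l ^ 2) (m₀ := m - h) (h := h)
        (Nat.one_le_pow _ _ hl) (by omega)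
      have h3 : (0 : ℝ) ≤ (1 - 2 / ((80 * (l ^ 2) ^ 2 : ℕ) : ℝ)) := by
        rw [sub_nonneg, div_le_one (by positivity)]
        have : 1 ≤ (l ^ 2) ^ 2 := Nat.one_le_pow _ _ (Nat.one_le_pow _ _ hl)
        exact_mod_cast (by omega : 2 ≤ 80 * (l ^ 2) ^ 2)
      calc _ ≤ (32 / (l : ℝ)) ^ h * ((p : ℝ) ^ m *
            (1 / p + (1 - 2 / ((80 * (l ^ 2) ^ 2 : ℕ) : ℝ)) ^ (m - h)) ^ h) := by gcongr
        _ ≤ (32 / (l : ℝ)) ^ h * ((p : ℝ) ^ m * (1 / p + 1 / p) ^ h) := by gcongr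
        _ = _ := by
          rw [hpm, show (1 : ℝ) / p + 1 / p = 2 / p by ring, div_pow, div_pow, div_pow,
            show (64 : ℝ) = 32 * 2 by norm_num, mul_pow]
          field_simp
    refine (sum_le_sum fun c _ => h1 c).trans ?_
    rw [sum_const, card_univ, ZMod.card, nsmul_eq_mul]
    apply le_of_eq; ring
  · rw [← sum_filter, sum_const, nsmul_eq_mul]
    have h1 := card_not_spread (p := p) (B := B) s
    calc _ ≤ p * ((m : ℝ) ^ s * (p : ℝ) ^ s) * 0.6 ^ h := by gcongr
      _ = (p : ℝ) ^ (s + 1) * ((m : ℝ) ^ s * 0.6 ^ h) := by ring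
      _ ≤ (p : ℝ) ^ (m - h) * ((m : ℝ) ^ s * 0.6 ^ h) := by
        have : s + 1 ≤ m - h := by omega
        gcongr

end block
end SL

/-! ### The union bound over vectors with small phase -/

section SLmain
variable {p : ℕ} [Fact p.Prime] {W : Type*} [Fintype W] [DecidableEq W]
  {Bk B L : Type*} [Fintype Bk] [DecidableEq Bk] [Fintype B] [DecidableEq B] [Fintype L]
  [DecidableEq L]

/-- The restriction of a vector to the `b`-th block. -/
def blk {F : Type*} (e : W ≃ (Bk × B) ⊕ L) (v : W → F) (b : Bk) (j : B) : F :=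
  v (e.symm (Sum.inl (b, j)))

/-- Sums over all vectors of products over blocks factor. -/
lemma sum_blocks {F : Type*} [Fintype F] [DecidableEq F] (e : W ≃ (Bk × B) ⊕ L)
    (f : Bk → (B → F) → ℝ) :
    ∑ v : W → F, ∏ b, f b (blk e v b) =
      (Fintype.card F : ℝ) ^ Fintype.card L * ∏ b, ∑ u : B → F, f b u := by
  let E : (W → F) ≃ (Bk → B → F) × (L → F) :=
    ((Equiv.arrowCongr e (Equiv.refl F)).trans (Equiv.sumArrowEquivProdArrow _ _ _)).trans
      ((Equiv.curry _ _ _).prodCongr (Equiv.refl _))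
  have h1 : ∑ v : W → F, ∏ b, f b (blk e v b) =
      ∑ z : (Bk → B → F) × (L → F), ∏ b, f b (z.1 b) :=
    Fintype.sum_equiv E _ _ fun v => rfl
  rw [h1, Fintype.sum_prod_type]
  simp only [sum_const, card_univ, Fintype.card_fun, nsmul_eq_mul]
  rw [← mul_sum, prod_univ_sum, Fintype.piFinset_univ]
  push_cast
  rfl

lemma prod_le_pow_of_le {ι : Type*} [Fintype ι] {f : ι → ℝ} {r : ℝ} {k : ℕ} (h0 : ∀ i, 0 ≤ f i)
    (h1 : ∀ i, f i ≤ r) (hr : r ≤ 1) (hk : k ≤ Fintype.card ι) : ∏ i, f i ≤ r ^ k := by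
  refine (prod_le_prod (fun i _ => h0 i) fun i _ => h1 i).trans ?_
  rw [prod_const, card_univ]
  rcases Nat.eq_zero_or_pos k with rfl | hk0
  · rcases isEmpty_or_nonempty ι with h | ⟨⟨i⟩⟩
    · simp
    · simpa using pow_le_one₀ ((h0 i).trans (h1 i)) hr
  · have : 0 < Fintype.card ι := by omega
    obtain ⟨i⟩ := Fintype.card_pos_iff.1 this
    exact pow_le_pow_of_le_one ((h0 i).trans (h1 i)) hr hk

/-- Each row outside a fixed block is satisfied with probability at most `rhoMax` of that block. -/
lemma Pr_le_rhoMax [Nonempty B] (e : W ≃ (Bk × B) ⊕ L) {h : ℕ} (v F : W → ZMod p) (b₀ : Bk)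
    (hH : h * Fintype.card Bk + Fintype.card B ≤ Fintype.card W) :
    Pr (fun y : Sym2 W → Bool => ∀ i, lap y v i = F i) ≤
      rhoMax (blk e v b₀) ^ (h * Fintype.card Bk) := by
  have hio : Function.Injective fun j : B => e.symm (Sum.inl (b₀, j)) := by
    intro j j' hjj
    have := Sum.inl_injective (e.symm.injective hjj)
    exact (Prod.mk.inj this).2
  obtain ⟨A, hAmem, hAcard⟩ : ∃ A : Finset W, (∀ a ∈ A, ∀ j, a ≠ e.symm (Sum.inl (b₀, j))) ∧
      Fintype.card W - Fintype.card B = A.card := by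
    refine ⟨(univ.map ⟨_, hio⟩)ᶜ, fun a ha j h => ?_, ?_⟩
    · rw [mem_compl] at ha
      exact ha (by rw [h]; exact mem_map.2 ⟨j, mem_univ _, rfl⟩)
    · rw [card_compl, card_map, card_univ]
  have h1 := Pr_lap_block (A := A) (B := B) (fun a => a.1) Subtype.val_injective
    (fun j : B => e.symm (Sum.inl (b₀, j))) hio (fun a j => hAmem a.1 a.2 j) v F
  have hcardA : h * Fintype.card Bk ≤ Fintype.card A := by
    rw [Fintype.card_coe]; omega
  have hρ1 : rhoMax (blk e v b₀) ≤ 1 := sup'_le _ _ fun c _ => R_le_one _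
  refine h1.trans ?_
  exact prod_le_pow_of_le (fun a => R_nonneg _)
    (fun a => R_le_rhoMax (blk e v b₀) (v a.1)) hρ1 hcardA

/-- The union bound over all nonconstant vectors which are small on `I`: solutions of the
Laplacian equations with arbitrary right hand side (depending on the vector) are unlikely. -/
lemma SL_abstract [Nonempty B] (e : W ≃ (Bk × B) ⊕ L) {l J h n : ℕ} (hl : 1 ≤ l)
    (hJ : Real.exp (-(2 * J)) ≤ 1 / (p * (l ^ 2 : ℕ))) (I : Finset W)
    (hh : 36 * (l ^ 2) ^ 2 * J + 1 + h ≤ Fintype.card B)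
    (hκ : (1 - 2 / ((80 * (l ^ 2) ^ 2 : ℕ) : ℝ)) ^ (Fintype.card B - h) ≤ 1 / p)
    (hr : (1 : ℝ) / p + 17 / (l ^ 2 : ℕ) ≤ 0.6)
    (hH : h * Fintype.card Bk + Fintype.card B ≤ Fintype.card W)
    (hn : 2 * n ≤ Fintype.card W) (τ : (W → ZMod p) → W → ZMod p) (g : ℝ) :
    Pr (fun y : Sym2 W → Bool => ∃ v : W → ZMod p, (∃ i j, v i ≠ v j) ∧
      (∀ i, lap y v i = τ v i) ∧ ∑ i ∈ I, N2 (v i) < g) ≤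
    Real.exp (400 * g) * ((p : ℝ) ^ Fintype.card L * ∏ b, ((p : ℝ) ^ (Fintype.card B - h) *
      ((1 + 1 / l) ^ (2 * h) * 0.6 ^ (univ.filter fun j => e.symm (Sum.inl (b, j)) ∈ I).card +
        p * (64 / l) ^ h + (Fintype.card B : ℝ) ^ (36 * (l ^ 2) ^ 2 * J) * 0.6 ^ h))) +
    (p : ℝ) ^ Fintype.card L * (p * ((Fintype.card B : ℝ) ^ (36 * (l ^ 2) ^ 2 * J) *
      (p : ℝ) ^ (36 * (l ^ 2) ^ 2 * J))) ^ Fintype.card Bk * (1 / 2) ^ n := by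
  set s := 36 * (l ^ 2) ^ 2 * J with hs
  let S : Finset (W → ZMod p) := univ.filter fun v => (∃ i j, v i ≠ v j) ∧ ∑ i ∈ I, N2 (v i) < g
  have hl2 : 1 ≤ l ^ 2 := Nat.one_le_pow _ _ hl
  let Ib : Bk → Finset B := fun b => univ.filter fun j => e.symm (Sum.inl (b, j)) ∈ I
  let wt : Bk → (B → ZMod p) → ℝ := fun b u =>
    ∏ j, (if j ∈ Ib b then Real.exp (-(400 * N2 (u j))) else 1)
  have hwt : ∀ v : W → ZMod p, ∑ i ∈ I, N2 (v i) < g →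
      1 ≤ Real.exp (400 * g) * ∏ b, wt b (blk e v b) := by
    intro v hv
    have h1 : ∏ b, wt b (blk e v b) =
        Real.exp (-(400 * ∑ z : Bk × B, if e.symm (Sum.inl z) ∈ I then
          N2 (v (e.symm (Sum.inl z))) else 0)) := by
      rw [Fintype.sum_prod_type, mul_sum, ← sum_neg_distrib, Real.exp_sum]
      refine prod_congr rfl fun b _ => ?_
      rw [mul_sum, ← sum_neg_distrib, Real.exp_sum]
      refine prod_congr rfl fun j _ => ?_
      by_cases hj : e.symm (Sum.inl (b, j)) ∈ I
      · simp [Ib, hj, blk]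
      · simp [Ib, hj]
    have h2 : (∑ z : Bk × B, if e.symm (Sum.inl z) ∈ I then
          N2 (v (e.symm (Sum.inl z))) else 0) ≤ ∑ i ∈ I, N2 (v i) := by
      rw [← sum_filter, ← sum_image (f := fun i => N2 (v i))
        (g := fun z : Bk × B => e.symm (Sum.inl z))]
      · refine sum_le_sum_of_subset_of_nonneg ?_ fun i _ _ => N2_nonneg _
        intro i hi
        obtain ⟨z, hz, rfl⟩ := mem_image.1 hi
        exact (mem_filter.1 hz).2
      · intro a _ b _ hab
        exact Sum.inl_injective (e.symm.injective hab)
    rw [h1, ← Real.exp_add, Real.one_le_exp_iff]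
    linarith
  have hwt0 : ∀ b u, 0 ≤ wt b u := fun b u => prod_nonneg fun j _ => by split_ifs <;> positivity
  have hpt : ∀ v ∈ S, Pr (fun y : Sym2 W → Bool => ∀ i, lap y v i = τ v i) ≤
      Real.exp (400 * g) * ∏ b, (rB (l ^ 2) s (blk e v b) ^ h * wt b (blk e v b)) +
      (1 / 2) ^ n * ∏ b, (if Spread s (blk e v b) then 0 else 1) := by
    intro v hv
    obtain ⟨hnc, hg⟩ := (mem_filter.1 hv).2
    have hprod0 : 0 ≤ ∏ b, rB (l ^ 2) s (blk e v b) ^ h :=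
      prod_nonneg fun b _ => pow_nonneg (rB_nonneg _ _ _) _
    by_cases hsp : ∃ b, Spread s (blk e v b)
    · have hne : (univ.filter fun b => Spread s (blk e v b)).Nonempty := by
        obtain ⟨b, hb⟩ := hsp; exact ⟨b, by simpa using hb⟩
      obtain ⟨b₀, hb₀, hmin⟩ := exists_min_image _ (fun b => rhoMax (blk e v b)) hne
      have hb₀' := (mem_filter.1 hb₀).2
      have hle : ∀ b, rhoMax (blk e v b₀) ≤ rB (l ^ 2) s (blk e v b) := by
        intro b
        unfold rB
        split_ifs with hb
        · exact hmin b (by simpa using hb)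
        · exact rhoMax_le_rstar hl2 hJ hb₀'
      have h12 := Pr_le_rhoMax e v (τ v) b₀ hH
      have h3 : rhoMax (blk e v b₀) ^ (h * Fintype.card Bk) ≤
          ∏ b, rB (l ^ 2) s (blk e v b) ^ h := by
        rw [pow_mul, ← card_univ, ← prod_const]
        exact prod_le_prod (fun _ _ => pow_nonneg (rhoMax_nonneg _) _) fun b _ =>
          pow_le_pow_left₀ (rhoMax_nonneg _) (hle b) _
      have h4 : 0 ≤ (1 / 2 : ℝ) ^ n * ∏ b, (if Spread s (blk e v b) then 0 else 1) :=
        mul_nonneg (by positivity) (prod_nonneg fun b _ => by split_ifs <;> norm_num)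
      have h5 := hwt v hg
      rw [prod_mul_distrib]
      have h6 := mul_le_mul_of_nonneg_left h5 hprod0
      have h7 := h12.trans h3
      linarith
    · push Not at hsp
      have h1 := Pr_lap_nonconst v (τ v) hnc hn
      have h2 : ∏ b, (if Spread s (blk e v b) then (0 : ℝ) else 1) = 1 :=
        prod_eq_one fun b _ => if_neg (hsp b)
      rw [h2, mul_one]
      have : 0 ≤ Real.exp (400 * g) * ∏ b, (rB (l ^ 2) s (blk e v b) ^ h * wt b (blk e v b)) :=
        mul_nonneg (Real.exp_pos _).le (prod_nonneg fun b _ =>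
          mul_nonneg (pow_nonneg (rB_nonneg _ _ _) _) (hwt0 _ _))
      linarith
  have hstart : Pr (fun y : Sym2 W → Bool => ∃ v : W → ZMod p, (∃ i j, v i ≠ v j) ∧
      (∀ i, lap y v i = τ v i) ∧ ∑ i ∈ I, N2 (v i) < g) ≤
      ∑ v ∈ S, Pr (fun y : Sym2 W → Bool => ∀ i, lap y v i = τ v i) := by
    refine le_trans (Pr_mono ?_) (Pr_exists_le S _)
    rintro y ⟨v, h1, h2, h3⟩
    exact ⟨v, by simp only [S, mem_filter, mem_univ, true_and]; exact ⟨h1, h3⟩, h2⟩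
  refine hstart.trans ((sum_le_sum hpt).trans ?_)
  have hnn : ∀ v : W → ZMod p, 0 ≤
      Real.exp (400 * g) * ∏ b, (rB (l ^ 2) s (blk e v b) ^ h * wt b (blk e v b)) +
      (1 / 2) ^ n * ∏ b, (if Spread s (blk e v b) then 0 else 1) := fun v =>
    add_nonneg (mul_nonneg (Real.exp_pos _).le (prod_nonneg fun b _ =>
      mul_nonneg (pow_nonneg (rB_nonneg _ _ _) _) (hwt0 _ _)))
      (mul_nonneg (by positivity) (prod_nonneg fun b _ => by split_ifs <;> norm_num))
  refine (sum_le_sum_of_subset_of_nonneg (subset_univ S) fun v _ _ => hnn v).trans ?_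
  rw [sum_add_distrib, ← mul_sum, ← mul_sum]
  rw [sum_blocks e (fun b u => rB (l ^ 2) s u ^ h * wt b u),
    sum_blocks e (fun b u => if Spread s u then 0 else 1), ZMod.card]
  refine add_le_add ?_ ?_
  · refine mul_le_mul_of_nonneg_left (mul_le_mul_of_nonneg_left ?_ (by positivity))
      (Real.exp_pos _).le
    refine prod_le_prod (fun b _ => sum_nonneg fun u _ =>
      mul_nonneg (pow_nonneg (rB_nonneg _ _ _) _) (hwt0 _ _)) fun b _ => ?_
    exact block_sum_le hl hJ (Ib b) hh hκ hr
  · rw [mul_comm]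
    refine mul_le_mul_of_nonneg_right (mul_le_mul_of_nonneg_left ?_ (by positivity))
      (by positivity)
    rw [← card_univ (α := Bk), ← prod_const]
    refine prod_le_prod (fun b _ => sum_nonneg fun u _ => by split_ifs <;> norm_num) fun b _ => ?_
    have h1 := card_not_spread (p := p) (B := B) s
    refine le_trans (le_of_eq ?_) h1
    rw [card_filter]
    push_cast
    refine sum_congr rfl fun u _ => ?_
    by_cases hu : Spread s u <;> simp [hu]

end SLmain

/-! ### Numerical form of the union bound -/

lemma point_six_pow_le (k : ℕ) : (0.6 : ℝ) ^ k ≤ Real.exp (-(k / 2)) := by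
  have h1 : (0.6 : ℝ) ≤ Real.exp (-(1 / 2)) := by
    have := Real.exp_one_lt_d9
    have e2 : Real.exp (-(1 / 2)) ^ 2 * Real.exp 1 = 1 := by
      rw [← Real.exp_nat_mul, ← Real.exp_add]; norm_num
    nlinarith [Real.exp_pos (-(1 / 2))]
  calc (0.6 : ℝ) ^ k ≤ Real.exp (-(1 / 2)) ^ k := pow_le_pow_left₀ (by norm_num) h1 k
    _ = Real.exp (-(k / 2)) := by rw [← Real.exp_nat_mul]; congr 1; ring

lemma half_pow_le (k : ℕ) : (1 / 2 : ℝ) ^ k ≤ Real.exp (-(k / 2)) :=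
  (pow_le_pow_left₀ (by norm_num) (by norm_num) k).trans (point_six_pow_le k)

lemma two_pow_le_exp (k : ℕ) : (2 : ℝ) ^ k ≤ Real.exp k := by
  have : (2 : ℝ) ≤ Real.exp 1 := by have := Real.exp_one_gt_d9; linarith
  calc (2 : ℝ) ^ k ≤ Real.exp 1 ^ k := pow_le_pow_left₀ (by norm_num) this k
    _ = Real.exp k := by rw [← Real.exp_nat_mul, mul_one]

lemma natCast_le_exp (q : ℕ) : (q : ℝ) ≤ Real.exp q := by
  have := Real.add_one_le_exp (q : ℝ); linarith

lemma pow_le_exp {x y : ℝ} (hx : 0 ≤ x) (h : x ≤ Real.exp y) (k : ℕ) :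
    x ^ k ≤ Real.exp (k * y) := by
  rw [Real.exp_nat_mul]; exact pow_le_pow_left₀ hx h k

/-- The block factor for the concrete choice of parameters. -/
lemma bracket_le {q p i : ℕ} (hq : 10 ^ 6 ≤ q) (hp : (p : ℝ) ≤ Real.exp ((q : ℝ) ^ 31))
    (hi : i ≤ q ^ 68) :
    (1 + 1 / (q : ℝ)) ^ (2 * (q ^ 68 - 4 * q ^ 36)) * 0.6 ^ i +
      p * (64 / q) ^ (q ^ 68 - 4 * q ^ 36) +
      ((q ^ 68 : ℕ) : ℝ) ^ (36 * (q ^ 2) ^ 2 * q ^ 31) * 0.6 ^ (q ^ 68 - 4 * q ^ 36) ≤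
    Real.exp (3 * (q : ℝ) ^ 67) * 0.6 ^ i := by
  have hq1 : (10 : ℝ) ^ 6 ≤ q := by exact_mod_cast hq
  have hq0 : (0 : ℝ) < q := by linarith
  have hq1' : (1 : ℝ) ≤ q := by linarith
  have hle : 8 * q ^ 36 ≤ q ^ 68 := by
    calc 8 * q ^ 36 ≤ q ^ 32 * q ^ 36 := by
          gcongr
          calc 8 ≤ q := by omega
            _ ≤ q ^ 32 := Nat.le_self_pow (by norm_num) q
      _ = q ^ 68 := by ring
  set h := q ^ 68 - 4 * q ^ 36 with hh
  have hhm : h + 4 * q ^ 36 = q ^ 68 := by omega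
  have h6 : (0 : ℝ) < 0.6 := by norm_num
  -- first term
  have t1 : (1 + 1 / (q : ℝ)) ^ (2 * h) ≤ Real.exp (2 * (q : ℝ) ^ 67) := by
    have h1 : 1 + 1 / (q : ℝ) ≤ Real.exp (1 / q) := by
      have := Real.add_one_le_exp (1 / (q : ℝ)); linarith
    refine (pow_le_exp (by positivity) h1 _).trans (Real.exp_le_exp.2 ?_)
    have h2 : ((2 * h : ℕ) : ℝ) ≤ 2 * (q : ℝ) ^ 68 := by
      exact_mod_cast (by omega : 2 * h ≤ 2 * q ^ 68)
    calc ((2 * h : ℕ) : ℝ) * (1 / q) ≤ 2 * (q : ℝ) ^ 68 * (1 / q) := by gcongr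
      _ = 2 * (q : ℝ) ^ 67 := by field_simp
  have t2 : (64 / (q : ℝ)) ^ h ≤ 0.6 ^ i := by
    have h1 : 64 / (q : ℝ) ≤ 0.6 ^ 2 := by
      rw [div_le_iff₀ hq0]; nlinarith
    refine (pow_le_pow_left₀ (by positivity) h1 h).trans ?_
    rw [← pow_mul]
    exact pow_le_pow_of_le_one h6.le (by norm_num) (by omega)
  have t3 : (0.6 : ℝ) ^ h ≤ Real.exp (4 * (q : ℝ) ^ 36) * 0.6 ^ i := by
    have h1 : (1 : ℝ) ≤ Real.exp (4 * (q : ℝ) ^ 36) * 0.6 ^ (4 * q ^ 36) := by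
      have h2 : (1 : ℝ) ≤ Real.exp 1 * 0.6 := by
        have := Real.exp_one_gt_d9; linarith
      have h3 : Real.exp (4 * (q : ℝ) ^ 36) = Real.exp 1 ^ (4 * q ^ 36) := by
        rw [← Real.exp_nat_mul]; push_cast; ring_nf
      rw [h3, ← mul_pow]
      exact one_le_pow₀ h2
    calc (0.6 : ℝ) ^ h ≤ 0.6 ^ h * (Real.exp (4 * (q : ℝ) ^ 36) * 0.6 ^ (4 * q ^ 36)) :=
          le_mul_of_one_le_right (by positivity) h1
      _ = Real.exp (4 * (q : ℝ) ^ 36) * 0.6 ^ (q ^ 68) := by rw [← hhm, pow_add]; ring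
      _ ≤ Real.exp (4 * (q : ℝ) ^ 36) * 0.6 ^ i := by
          gcongr _ * ?_
          exact pow_le_pow_of_le_one h6.le (by norm_num) hi
  have t4 : ((q ^ 68 : ℕ) : ℝ) ^ (36 * (q ^ 2) ^ 2 * q ^ 31) ≤ Real.exp (2448 * (q : ℝ) ^ 36) := by
    have h1 : ((q ^ 68 : ℕ) : ℝ) ≤ Real.exp (68 * q) := by
      push_cast
      exact (pow_le_exp hq0.le (natCast_le_exp q) 68).trans (by norm_num)
    refine (pow_le_exp (by positivity) h1 _).trans (Real.exp_le_exp.2 ?_)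
    push_cast
    apply le_of_eq; ring
  have t5 : Real.exp ((q : ℝ) ^ 31) ≤ Real.exp (2 * (q : ℝ) ^ 67) := by
    refine Real.exp_le_exp.2 ?_
    have : (q : ℝ) ^ 31 ≤ (q : ℝ) ^ 67 := pow_le_pow_right₀ hq1' (by norm_num)
    nlinarith [pow_pos hq0 67]
  have t6 : Real.exp (2448 * (q : ℝ) ^ 36) * Real.exp (4 * (q : ℝ) ^ 36) ≤
      Real.exp (2 * (q : ℝ) ^ 67) := by
    rw [← Real.exp_add]
    refine Real.exp_le_exp.2 ?_
    have h1 : (q : ℝ) ^ 67 = q ^ 36 * q ^ 31 := by ring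
    have h2 : (q : ℝ) ≤ (q : ℝ) ^ 31 := le_self_pow₀ hq1' (by norm_num)
    rw [h1]
    nlinarith [pow_pos hq0 36]
  have t7 : (3 : ℝ) * Real.exp (2 * (q : ℝ) ^ 67) ≤ Real.exp (3 * (q : ℝ) ^ 67) := by
    have h1 : Real.exp (3 * (q : ℝ) ^ 67) = Real.exp ((q : ℝ) ^ 67) * Real.exp (2 * (q : ℝ) ^ 67) := by
      rw [← Real.exp_add]; ring_nf
    rw [h1]
    gcongr
    have h2 : (q : ℝ) ≤ (q : ℝ) ^ 67 := le_self_pow₀ hq1' (by norm_num)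
    have := Real.add_one_le_exp ((q : ℝ) ^ 67)
    linarith
  have hi0 : (0 : ℝ) < 0.6 ^ i := by positivity
  have a1 := mul_le_mul_of_nonneg_right t1 hi0.le
  have a2 : (p : ℝ) * (64 / q) ^ h ≤ Real.exp (2 * (q : ℝ) ^ 67) * 0.6 ^ i :=
    mul_le_mul (hp.trans t5) t2 (by positivity) (Real.exp_pos _).le
  have a3 : ((q ^ 68 : ℕ) : ℝ) ^ (36 * (q ^ 2) ^ 2 * q ^ 31) * 0.6 ^ h ≤
      Real.exp (2 * (q : ℝ) ^ 67) * 0.6 ^ i := by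
    refine (mul_le_mul t4 t3 (by positivity) (Real.exp_pos _).le).trans ?_
    rw [← mul_assoc]
    exact mul_le_mul_of_nonneg_right t6 hi0.le
  have a4 := mul_le_mul_of_nonneg_right t7 hi0.le
  linarith

set_option maxHeartbeats 1000000 in
/-- Nonconstant solutions of the Laplacian equations modulo a prime `p ≤ 2 ^ q ^ 31` are not
concentrated near `0` on a positive proportion of the vertices. -/
lemma SL_numeric {q p : ℕ} [Fact p.Prime] {W : Type*} [Fintype W] [DecidableEq W]
    (hq : 10 ^ 6 ≤ q) (hp : p ≤ 2 ^ q ^ 31) (hW1 : q ^ 100 ≤ 2 * Fintype.card W)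
    (hW2 : Fintype.card W ≤ 2 * q ^ 100) (I : Finset W) (hI : q ^ 100 ≤ 20 * I.card)
    (τ : (W → ZMod p) → W → ZMod p) :
    Pr (fun y : Sym2 W → Bool => ∃ v : W → ZMod p, (∃ i j, v i ≠ v j) ∧
      (∀ i, lap y v i = τ v i) ∧ ∑ i ∈ I, N2 (v i) < (q : ℝ) ^ 40) ≤
    Real.exp (-((q : ℝ) ^ 100 / 100)) := by
  have hq1 : (10 : ℝ) ^ 6 ≤ q := by exact_mod_cast hq
  have hq0 : (0 : ℝ) < q := by linarith
  have hq1' : (1 : ℝ) ≤ q := by linarith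
  have hqn : 0 < q := by omega
  have hpe : (p : ℝ) ≤ Real.exp ((q : ℝ) ^ 31) := by
    have h1 : (p : ℝ) ≤ 2 ^ q ^ 31 := by exact_mod_cast hp
    have h2 := two_pow_le_exp (q ^ 31)
    push_cast at h2
    exact h1.trans h2
  have hp2 : (2 : ℝ) ≤ p := by exact_mod_cast (Fact.out : p.Prime).two_le
  set w := Fintype.card W with hw
  set m := q ^ 68 with hm
  have hm0 : 0 < m := by positivity
  have hmpos : 8 * q ^ 36 ≤ m := by
    calc 8 * q ^ 36 ≤ q ^ 32 * q ^ 36 := by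
          gcongr
          calc 8 ≤ q := by omega
            _ ≤ q ^ 32 := Nat.le_self_pow (by norm_num) q
      _ = q ^ 68 := by ring
  set h := m - 4 * q ^ 36 with hh
  have hhm : m - h = 4 * q ^ 36 := by omega
  have hhm' : h + 4 * q ^ 36 = m := by omega
  set β := w / m with hβ
  have hdm : m * β + w % m = w := Nat.div_add_mod w m
  have hmod : w % m < m := Nat.mod_lt _ hm0
  have hw100 : q ^ 100 = q ^ 32 * m := by rw [hm]; ring
  have hβ1 : q ^ 32 ≤ 4 * β := by
    by_contra hcon
    have h1 : 4 * (β + 1) ≤ q ^ 32 + 3 := by omega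
    have h2 : w < m * (β + 1) := by rw [mul_add]; omega
    have h3 : 4 * w < m * (q ^ 32 + 3) := by
      calc 4 * w < 4 * (m * (β + 1)) := by omega
        _ = m * (4 * (β + 1)) := by ring
        _ ≤ m * (q ^ 32 + 3) := Nat.mul_le_mul_left _ h1
    have h4 : 2 * (q ^ 32 * m) < m * (q ^ 32 + 3) := by omega
    have h5 : m * q ^ 32 < m * 3 := by nlinarith
    have h6 : q ^ 32 < 3 := Nat.lt_of_mul_lt_mul_left h5
    have : q ≤ q ^ 32 := Nat.le_self_pow (by norm_num) q
    omega
  have hβ2 : β ≤ 2 * q ^ 32 := by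
    have : m * β ≤ m * (2 * q ^ 32) := by
      calc m * β ≤ w := by omega
        _ ≤ 2 * q ^ 100 := hW2
        _ = m * (2 * q ^ 32) := by rw [hm]; ring
    exact Nat.le_of_mul_le_mul_left this hm0
  have e : W ≃ (Fin β × Fin m) ⊕ Fin (w % m) := by
    refine Fintype.equivOfCardEq ?_
    simp only [Fintype.card_sum, Fintype.card_prod, Fintype.card_fin]
    rw [← hw, mul_comm β m]; omega
  have : Nonempty (Fin m) := ⟨⟨0, hm0⟩⟩
  have hqq : (q : ℝ) ≤ (q : ℝ) ^ 31 := le_self_pow₀ hq1' (by norm_num)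
  have main := SL_abstract (p := p) e (l := q) (J := q ^ 31) (h := h) (n := w / 2) hqn
    (by
      rw [Real.exp_neg, ← one_div]
      refine one_div_le_one_div_of_le (by positivity) ?_
      have h1 : ((q ^ 2 : ℕ) : ℝ) ≤ Real.exp ((q : ℝ) ^ 31) := by
        have h2 : ((q ^ 2 : ℕ) : ℝ) ≤ Real.exp (2 * q) := by
          push_cast
          exact (pow_le_exp hq0.le (natCast_le_exp q) 2).trans (by norm_num)
        refine h2.trans (Real.exp_le_exp.2 ?_)
        have : (q : ℝ) ^ 2 ≤ (q : ℝ) ^ 31 := pow_le_pow_right₀ hq1' (by norm_num)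
        nlinarith
      calc (p : ℝ) * ((q ^ 2 : ℕ) : ℝ) ≤ Real.exp ((q : ℝ) ^ 31) * Real.exp ((q : ℝ) ^ 31) := by
            gcongr
        _ = Real.exp (2 * ((q ^ 31 : ℕ) : ℝ)) := by rw [← Real.exp_add]; push_cast; ring_nf)
    I
    (by
      rw [Fintype.card_fin]
      have : 36 * (q ^ 2) ^ 2 * q ^ 31 + 1 ≤ 4 * q ^ 36 := by
        have h1 : 36 * (q ^ 2) ^ 2 * q ^ 31 = 36 * q ^ 35 := by ring
        have h2 : q ^ 36 = q * q ^ 35 := by ring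
        have h3 : 1 ≤ q ^ 35 := Nat.one_le_pow _ _ hqn
        rw [h1, h2]
        nlinarith
      omega)
    (by
      rw [Fintype.card_fin, hhm]
      have h1 : (1 - 2 / ((80 * (q ^ 2) ^ 2 : ℕ) : ℝ)) ≤ Real.exp (-(1 / (40 * (q : ℝ) ^ 4))) := by
        have := Real.add_one_le_exp (-(1 / (40 * (q : ℝ) ^ 4)))
        have h2 : 2 / ((80 * (q ^ 2) ^ 2 : ℕ) : ℝ) = 1 / (40 * (q : ℝ) ^ 4) := by
          push_cast; field_simp; norm_num
        rw [h2]; linarith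
      have h0 : (0 : ℝ) ≤ 1 - 2 / ((80 * (q ^ 2) ^ 2 : ℕ) : ℝ) := by
        rw [sub_nonneg, div_le_one (by positivity)]
        have : 1 ≤ (q ^ 2) ^ 2 := Nat.one_le_pow _ _ (by positivity)
        exact_mod_cast (by omega : 2 ≤ 80 * (q ^ 2) ^ 2)
      refine (pow_le_exp h0 h1 _).trans ?_
      rw [one_div (p : ℝ), ← inv_inv (Real.exp _), ← Real.exp_neg]
      refine inv_anti₀ (by linarith) (hpe.trans (Real.exp_le_exp.2 ?_))
      push_cast
      have h3 : -(4 * (q : ℝ) ^ 36 * -(1 / (40 * (q : ℝ) ^ 4))) = q ^ 31 * (q / 10) := by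
        field_simp; norm_num
      rw [h3]
      exact le_mul_of_one_le_right (by positivity) (by linarith))
    (by
      have h1 : (1 : ℝ) / p ≤ 1 / 2 := one_div_le_one_div_of_le (by norm_num) hp2
      have h2 : (17 : ℝ) / ((q ^ 2 : ℕ) : ℝ) ≤ 0.1 := by
        push_cast
        rw [div_le_iff₀ (by positivity)]
        nlinarith
      linarith)
    (by
      simp only [Fintype.card_fin]
      rw [← hw]
      have h1 : m ≤ 4 * q ^ 36 * β := by
        calc m = q ^ 36 * q ^ 32 := by rw [hm]; ring
          _ ≤ q ^ 36 * (4 * β) := Nat.mul_le_mul_left _ hβ1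
          _ = 4 * q ^ 36 * β := by ring
      have h2 : h * β + 4 * q ^ 36 * β = m * β := by rw [← add_mul, hhm']
      omega)
    (by rw [← hw]; omega) τ ((q : ℝ) ^ 40)
  refine main.trans ?_
  simp only [Fintype.card_fin, hhm]
  clear main
  have hmR : (m : ℝ) = (q : ℝ) ^ 68 := by rw [hm]; push_cast; rfl
  have hβR : (β : ℝ) ≤ 2 * (q : ℝ) ^ 32 := by exact_mod_cast hβ2
  have hLe : (p : ℝ) ^ (w % m) ≤ Real.exp ((q : ℝ) ^ 99) := by
    refine (pow_le_exp (by linarith) hpe _).trans (Real.exp_le_exp.2 ?_)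
    have : ((w % m : ℕ) : ℝ) ≤ (q : ℝ) ^ 68 := by rw [← hmR]; exact_mod_cast hmod.le
    calc ((w % m : ℕ) : ℝ) * (q : ℝ) ^ 31 ≤ (q : ℝ) ^ 68 * (q : ℝ) ^ 31 := by gcongr
      _ = (q : ℝ) ^ 99 := by ring
  have hC : ∀ b : Fin β, ((univ : Finset (Fin m)).filter
      fun j => e.symm (Sum.inl (b, j)) ∈ I).card ≤ m := fun b => by
    simpa using card_filter_le (univ : Finset (Fin m)) (fun j => e.symm (Sum.inl (b, j)) ∈ I)
  have hsumI : I.card ≤ ∑ b : Fin β, ((univ : Finset (Fin m)).filter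
      fun j => e.symm (Sum.inl (b, j)) ∈ I).card + w % m := by
    have h1 : I.card = ∑ z : (Fin β × Fin m) ⊕ Fin (w % m), if e.symm z ∈ I then 1 else 0 := by
      rw [← Equiv.sum_comp e (fun z => if e.symm z ∈ I then 1 else 0)]
      simp
    rw [h1, Fintype.sum_sum_type, Fintype.sum_prod_type]
    refine add_le_add (le_of_eq (sum_congr rfl fun b _ => by rw [card_filter])) ?_
    refine (sum_le_card_nsmul _ _ 1 fun i _ => by split_ifs <;> simp).trans ?_
    simp
  have hq99 : (q : ℝ) ^ 100 = q * (q : ℝ) ^ 99 := by ring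
  have h99 : 0 < (q : ℝ) ^ 99 := by positivity
  have h68 : (q : ℝ) ^ 68 ≤ (q : ℝ) ^ 99 := pow_le_pow_right₀ hq1' (by norm_num)
  have h40 : (q : ℝ) ^ 40 ≤ (q : ℝ) ^ 99 := pow_le_pow_right₀ hq1' (by norm_num)
  have hterm1 : Real.exp (400 * (q : ℝ) ^ 40) * ((p : ℝ) ^ (w % m) * ∏ b : Fin β,
      ((p : ℝ) ^ (4 * q ^ 36) * ((1 + 1 / (q : ℝ)) ^ (2 * h) * 0.6 ^ ((univ : Finset (Fin m)).filter
      fun j => e.symm (Sum.inl (b, j)) ∈ I).card + p * (64 / (q : ℝ)) ^ h +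
      (m : ℝ) ^ (36 * (q ^ 2) ^ 2 * q ^ 31) * 0.6 ^ h))) ≤
      Real.exp (-((q : ℝ) ^ 100 / 50)) := by
    have hb : ∀ b : Fin β, ((p : ℝ) ^ (4 * q ^ 36) * ((1 + 1 / (q : ℝ)) ^ (2 * h) *
        0.6 ^ ((univ : Finset (Fin m)).filter
        fun j => e.symm (Sum.inl (b, j)) ∈ I).card + p * (64 / (q : ℝ)) ^ h +
        (m : ℝ) ^ (36 * (q ^ 2) ^ 2 * q ^ 31) * 0.6 ^ h)) ≤
        Real.exp (7 * (q : ℝ) ^ 67) * Real.exp (-((((univ : Finset (Fin m)).filter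
        fun j => e.symm (Sum.inl (b, j)) ∈ I).card : ℝ) / 2)) := by
      intro b
      have h1 := bracket_le hq hpe (hC b)
      have h2 : (p : ℝ) ^ (4 * q ^ 36) ≤ Real.exp (4 * (q : ℝ) ^ 67) := by
        refine (pow_le_exp (by linarith) hpe _).trans (Real.exp_le_exp.2 (le_of_eq ?_))
        push_cast; ring
      refine (mul_le_mul h2 (h1.trans (mul_le_mul_of_nonneg_left (point_six_pow_le _)
        (Real.exp_pos _).le)) (by positivity) (Real.exp_pos _).le).trans (le_of_eq ?_)
      rw [← mul_assoc, ← Real.exp_add]; ring_nf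
    have hprod := prod_le_prod (s := (univ : Finset (Fin β))) (fun b _ => by positivity)
      (fun b _ => hb b)
    have hE : ∏ b : Fin β, Real.exp (7 * (q : ℝ) ^ 67) * Real.exp (-((((univ : Finset (Fin m)).filter
        fun j => e.symm (Sum.inl (b, j)) ∈ I).card : ℝ) / 2)) =
        Real.exp (β * (7 * (q : ℝ) ^ 67) + ∑ b : Fin β, -((((univ : Finset (Fin m)).filter
        fun j => e.symm (Sum.inl (b, j)) ∈ I).card : ℝ) / 2)) := by
      rw [prod_mul_distrib, prod_const, card_univ, Fintype.card_fin, ← Real.exp_nat_mul,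
        ← Real.exp_sum, ← Real.exp_add]
    rw [hE] at hprod
    refine (mul_le_mul_of_nonneg_left (mul_le_mul hLe hprod
      (prod_nonneg fun b _ => by positivity) (Real.exp_pos _).le) (Real.exp_pos _).le).trans ?_
    rw [← Real.exp_add, ← Real.exp_add]
    refine Real.exp_le_exp.2 ?_
    rw [sum_neg_distrib, ← sum_div, ← Nat.cast_sum]
    have h1 : (β : ℝ) * (7 * (q : ℝ) ^ 67) ≤ 14 * (q : ℝ) ^ 99 := by
      calc (β : ℝ) * (7 * (q : ℝ) ^ 67) ≤ 2 * (q : ℝ) ^ 32 * (7 * (q : ℝ) ^ 67) := by gcongr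
        _ = 14 * (q : ℝ) ^ 99 := by ring
    have h2 : (q : ℝ) ^ 100 ≤ 20 * ((∑ b : Fin β, ((univ : Finset (Fin m)).filter
        fun j => e.symm (Sum.inl (b, j)) ∈ I).card : ℕ) : ℝ) + 20 * (q : ℝ) ^ 68 := by
      rw [← hmR]
      exact_mod_cast (by omega : q ^ 100 ≤ 20 * (∑ b : Fin β, ((univ : Finset (Fin m)).filter
        fun j => e.symm (Sum.inl (b, j)) ∈ I).card) + 20 * m)
    nlinarith
  have hterm2 : (p : ℝ) ^ (w % m) * (p * ((m : ℝ) ^ (36 * (q ^ 2) ^ 2 * q ^ 31) *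
      (p : ℝ) ^ (36 * (q ^ 2) ^ 2 * q ^ 31))) ^ β * (1 / 2) ^ (w / 2) ≤
      Real.exp (-((q : ℝ) ^ 100 / 50)) := by
    have h1 : (m : ℝ) ≤ Real.exp (68 * (q : ℝ) ^ 31) := by
      rw [hmR]
      refine (pow_le_exp hq0.le (natCast_le_exp q) 68).trans (Real.exp_le_exp.2 ?_)
      push_cast; linarith
    have h2 : (p : ℝ) * ((m : ℝ) ^ (36 * (q ^ 2) ^ 2 * q ^ 31) *
      (p : ℝ) ^ (36 * (q ^ 2) ^ 2 * q ^ 31)) ≤ Real.exp (3000 * (q : ℝ) ^ 66) := by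
      rw [← mul_pow]
      have h3 : (m : ℝ) * p ≤ Real.exp (69 * (q : ℝ) ^ 31) := by
        refine (mul_le_mul h1 hpe (by linarith) (Real.exp_pos _).le).trans (le_of_eq ?_)
        rw [← Real.exp_add]; ring_nf
      refine (mul_le_mul hpe (pow_le_exp (by positivity) h3 _) (by positivity)
        (Real.exp_pos _).le).trans ?_
      rw [← Real.exp_add]
      refine Real.exp_le_exp.2 ?_
      have h4 : (q : ℝ) ^ 31 ≤ (q : ℝ) ^ 66 := pow_le_pow_right₀ hq1' (by norm_num)
      push_cast
      have h5 : 36 * ((q : ℝ) ^ 2) ^ 2 * (q : ℝ) ^ 31 * (69 * (q : ℝ) ^ 31) = 2484 * (q : ℝ) ^ 66 := by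
        ring
      rw [h5]; linarith [pow_pos hq0 66]
    have h3 := pow_le_exp (by positivity) h2 β
    refine (mul_le_mul (mul_le_mul hLe h3 (by positivity) (Real.exp_pos _).le) (half_pow_le _)
      (by positivity) (by positivity)).trans ?_
    rw [← Real.exp_add, ← Real.exp_add]
    refine Real.exp_le_exp.2 ?_
    have h4 : (β : ℝ) * (3000 * (q : ℝ) ^ 66) ≤ 6000 * (q : ℝ) ^ 99 := by
      calc (β : ℝ) * (3000 * (q : ℝ) ^ 66) ≤ 2 * (q : ℝ) ^ 32 * (3000 * (q : ℝ) ^ 66) := by gcongr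
        _ = 6000 * (q : ℝ) ^ 98 := by ring
        _ ≤ 6000 * (q : ℝ) ^ 99 := by gcongr <;> first | exact hq1' | norm_num
    have h5 : (q : ℝ) ^ 100 ≤ 4 * ((w / 2 : ℕ) : ℝ) + 2 := by
      exact_mod_cast (by omega : q ^ 100 ≤ 4 * (w / 2) + 2)
    have h6 : 1 ≤ (q : ℝ) ^ 99 := one_le_pow₀ hq1'
    nlinarith
  refine (add_le_add hterm1 hterm2).trans ?_
  have h2 : (2 : ℝ) ≤ Real.exp ((q : ℝ) ^ 100 / 100) := by
    have h3 := Real.add_one_le_exp ((q : ℝ) ^ 100 / 100)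
    have : (q : ℝ) ≤ (q : ℝ) ^ 100 := le_self_pow₀ hq1' (by norm_num)
    linarith
  have h3 : Real.exp (-((q : ℝ) ^ 100 / 100)) =
      Real.exp ((q : ℝ) ^ 100 / 100) * Real.exp (-((q : ℝ) ^ 100 / 50)) := by
    rw [← Real.exp_add]; ring_nf
  rw [h3]
  nlinarith [Real.exp_pos (-((q : ℝ) ^ 100 / 50))]

/-! ### Kernels of reduced Laplacians -/

section ker
variable {F : Type*} [Field F] {V : Type*} [Fintype V] [DecidableEq V]

lemma lap_add (x : Sym2 V → Bool) (u v : V → F) : lap x (u + v) = lap x u + lap x v := by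
  funext i
  simp only [lap, Pi.add_apply, ← sum_add_distrib]
  exact sum_congr rfl fun j _ => by ring

lemma lap_smul (x : Sym2 V → Bool) (c : F) (v : V → F) : lap x (c • v) = c • lap x v := by
  funext i
  simp only [lap, Pi.smul_apply, smul_eq_mul, mul_sum]
  exact sum_congr rfl fun j _ => by ring

lemma lap_zero (x : Sym2 V → Bool) : lap x (0 : V → F) = 0 := by
  funext i; simp [lap]

lemma lap_sub (x : Sym2 V → Bool) (u v : V → F) : lap x (u - v) = lap x u - lap x v := by
  funext i
  simp only [lap, Pi.sub_apply, ← sum_sub_distrib]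
  exact sum_congr rfl fun j _ => by ring

/-- The kernel of the Laplacian with the vertices of `K` grounded. -/
def KerK (F : Type*) [Field F] (x : Sym2 V → Bool) (K : Finset V) : Submodule F (V → F) where
  carrier := {v | (∀ i ∈ K, v i = 0) ∧ ∀ i ∉ K, lap x v i = 0}
  zero_mem' := ⟨fun _ _ => rfl, fun i _ => by rw [lap_zero]; rfl⟩
  add_mem' := by
    rintro u v ⟨h1, h2⟩ ⟨h3, h4⟩
    refine ⟨fun i hi => by simp [h1 i hi, h3 i hi], fun i hi => ?_⟩
    rw [lap_add, Pi.add_apply, h2 i hi, h4 i hi, add_zero]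
  smul_mem' := by
    rintro c v ⟨h1, h2⟩
    refine ⟨fun i hi => by simp [h1 i hi], fun i hi => ?_⟩
    rw [lap_smul, Pi.smul_apply, h2 i hi, smul_zero]

lemma mem_KerK {x : Sym2 V → Bool} {K : Finset V} {v : V → F} :
    v ∈ KerK F x K ↔ (∀ i ∈ K, v i = 0) ∧ ∀ i ∉ K, lap x v i = 0 := Iff.rfl

/-- The Laplacian as a quadratic form. -/
lemma green_form (x : Sym2 V → Bool) (u v : V → F) :
    ∑ i, u i * lap x v i - ∑ i, v i * lap x u i = 0 := by
  have h : ∑ i, u i * lap x v i - ∑ i, v i * lap x u i =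
      ∑ i, ∑ j, bt (x s(i, j)) * (u i * v j) - ∑ i, ∑ j, bt (x s(i, j)) * (v i * u j) := by
    rw [← sum_sub_distrib, ← sum_sub_distrib]
    refine sum_congr rfl fun i _ => ?_
    rw [← sum_sub_distrib]
    unfold lap
    rw [mul_sum, mul_sum, ← sum_sub_distrib]
    exact sum_congr rfl fun j _ => by ring
  rw [h, sub_eq_zero, sum_comm]
  refine sum_congr rfl fun i _ => sum_congr rfl fun j _ => ?_
  rw [Sym2.eq_swap, mul_comm (u j)]

/-- Green's identity: the Laplacian is symmetric. -/
lemma green (x : Sym2 V → Bool) (u v : V → F) :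
    ∑ i, u i * lap x v i = ∑ i, v i * lap x u i := sub_eq_zero.1 (green_form x u v)

/-- The grounded Laplacian equation is solvable when the right hand side is orthogonal to the
kernel. -/
lemma exists_sol (x : Sym2 V → Bool) (K : Finset V) (G : V → F)
    (hG : ∀ u ∈ KerK F x K, ∑ i, u i * G i = 0) :
    ∃ w : V → F, (∀ i ∈ K, w i = 0) ∧ ∀ i ∉ K, lap x w i = G i := by
  let res : (V → F) →ₗ[F] (V → F) :=
    { toFun := fun v i => if i ∈ K then 0 else v i
      map_add' := fun u v => by funext i; by_cases h : i ∈ K <;> simp [h]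
      map_smul' := fun c v => by funext i; by_cases h : i ∈ K <;> simp [h] }
  let Λ : (V → F) →ₗ[F] (V → F) :=
    { toFun := lap x
      map_add' := lap_add x
      map_smul' := lap_smul x }
  have hres : ∀ v i, res v i = if i ∈ K then 0 else v i := fun _ _ => rfl
  have hadj : ∀ u v : V → F, ∑ i, u i * res v i = ∑ i, res u i * v i := fun u v =>
    sum_congr rfl fun i _ => by rw [hres, hres]; split_ifs <;> simp
  by_cases hmem : res G ∈ LinearMap.range (res ∘ₗ Λ ∘ₗ res)
  · obtain ⟨v, hv⟩ := hmem
    refine ⟨res v, fun i hi => by simp [hres, hi], fun i hi => ?_⟩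
    have := congrFun hv i
    simpa [hres, hi, Λ] using this
  · obtain ⟨f, hf, hf2⟩ := Submodule.exists_le_ker_of_notMem hmem
    exfalso
    let u : V → F := fun i => f (Pi.single i 1)
    have hfu : ∀ y, f y = ∑ i, u i * y i := by
      intro y
      conv_lhs => rw [← Finset.univ_sum_single y, map_sum]
      refine sum_congr rfl fun i _ => ?_
      rw [show (Pi.single i (y i) : V → F) = y i • Pi.single i 1 by
        rw [← Pi.single_smul]; simp, map_smul, smul_eq_mul, mul_comm]
    have hker : res u ∈ KerK F x K := by
      refine ⟨fun i hi => by simp [hres, hi], fun i hi => ?_⟩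
      have h1 : f ((res ∘ₗ Λ ∘ₗ res) (Pi.single i 1)) = 0 :=
        hf2 (LinearMap.mem_range_self (res ∘ₗ Λ ∘ₗ res) (Pi.single i 1))
      rw [hfu] at h1
      simp only [LinearMap.comp_apply] at h1
      rw [hadj] at h1
      have h2 : ∑ j, res u j * Λ (res (Pi.single i 1)) j =
          ∑ j, res (Pi.single i 1) j * lap x (res u) j := green x _ _
      rw [h2] at h1
      have h3 : res (Pi.single i 1) = (Pi.single i 1 : V → F) := by
        funext j
        rw [hres]
        by_cases hj : j = i
        · subst hj; simp [hi]
        · simp [hj]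
      rw [h3] at h1
      simpa [Pi.single_apply] using h1
    apply hf
    rw [hfu, hadj]
    exact hG _ hker

/-- Coordinates on which a subspace of dimension at least `d` projects onto everything. -/
lemma exists_info (d : ℕ) : ∀ U : Submodule F (V → F), d ≤ Module.finrank F U →
    ∃ D : Finset V, D.card = d ∧ ∀ f : V → F, ∃ u ∈ U, ∀ i ∈ D, u i = f i := by
  induction d with
  | zero => exact fun U _ => ⟨∅, rfl, fun f => ⟨0, U.zero_mem, by simp⟩⟩
  | succ d ih =>
    intro U hU
    have hne : U ≠ ⊥ := by rintro rfl; simp at hU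
    obtain ⟨u, hu, hu0⟩ := U.exists_mem_ne_zero_of_ne_bot hne
    obtain ⟨j, hj⟩ := Function.ne_iff.1 hu0
    let φ : (V → F) →ₗ[F] F := LinearMap.proj j
    have hfr := finrank_inf_ker_add_one U φ
    obtain ⟨D, hD, hDf⟩ := ih (U ⊓ LinearMap.ker φ) (by omega)
    have hjD : j ∉ D := by
      intro h
      obtain ⟨w, hw, hw2⟩ := hDf (fun _ => 1)
      have h1 : w j = 0 := hw.2
      rw [hw2 j h] at h1
      exact one_ne_zero h1
    refine ⟨insert j D, by rw [card_insert_of_notMem hjD, hD], fun f => ?_⟩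
    obtain ⟨w, hw, hw2⟩ := hDf (fun i => f i - f j / u j * u i)
    refine ⟨w + (f j / u j) • u, U.add_mem hw.1 (U.smul_mem _ hu), fun i hi => ?_⟩
    rcases mem_insert.1 hi with rfl | hi
    · have h1 : w i = 0 := hw.2
      have : u i ≠ 0 := hj
      simp [h1, this]
    · simp [hw2 i hi]

lemma finrank_inf_ker_of_ne {E : Type*} [AddCommGroup E] [Module F E] [FiniteDimensional F E]
    (W : Submodule F E) (f : E →ₗ[F] F) {w : E} (hw : w ∈ W) (hf : f w ≠ 0) :
    Module.finrank F W = Module.finrank F ↥(W ⊓ LinearMap.ker f) + 1 := by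
  refine le_antisymm (finrank_inf_ker_add_one W f) ?_
  refine Submodule.finrank_lt_finrank_of_lt (lt_of_le_of_ne inf_le_left fun h => hf ?_)
  have : w ∈ W ⊓ LinearMap.ker f := by rw [h]; exact hw
  exact this.2

/-- The linear form `v ↦ lap x v a`. -/
def lapForm (F : Type*) [Field F] (x : Sym2 V → Bool) (a : V) : (V → F) →ₗ[F] F where
  toFun := fun v => lap x v a
  map_add' := fun u v => by rw [lap_add]; rfl
  map_smul' := fun c v => by rw [lap_smul]; rfl

lemma lap_single_of_ne (x : Sym2 V → Bool) {a i : V} (h : i ≠ a) :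
    lap x (Pi.single a 1 : V → F) i = bt (x s(i, a)) := by
  simp [lap, Pi.single_apply, h]

/-- Ungrounding a vertex whose row is not orthogonal to the kernel lowers the corank. -/
lemma border_down {x : Sym2 V → Bool} {K : Finset V} {a : V} (ha : a ∈ K)
    (h : ∃ u ∈ KerK F x K, lap x u a ≠ 0) :
    Module.finrank F (KerK F x (K.erase a)) + 1 = Module.finrank F (KerK F x K) := by
  obtain ⟨u, hu, hua⟩ := h
  rw [finrank_inf_ker_of_ne (KerK F x K) (lapForm F x a) hu hua]
  have : KerK F x (K.erase a) = KerK F x K ⊓ LinearMap.ker (lapForm F x a) := by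
    ext v
    constructor
    · intro hv
      have hva : v a = 0 := by
        have h1 := green x u v
        have h2 : ∑ i, u i * lap x v i = 0 := sum_eq_zero fun i _ => by
          by_cases hi : i ∈ K
          · rw [hu.1 i hi, zero_mul]
          · rw [hv.2 i fun h => hi (mem_of_mem_erase h), mul_zero]
        have h3 : ∑ i, v i * lap x u i = v a * lap x u a := by
          refine sum_eq_single a (fun i _ hi => ?_) (by simp)
          by_cases hiK : i ∈ K
          · rw [hv.1 i (mem_erase.2 ⟨hi, hiK⟩), zero_mul]
          · rw [hu.2 i hiK, mul_zero]
        rw [h2, h3] at h1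
        exact (mul_eq_zero.1 h1.symm).resolve_right hua
      refine ⟨⟨fun i hi => ?_, fun i hi => hv.2 i fun h => hi (mem_of_mem_erase h)⟩,
        hv.2 a (notMem_erase a K)⟩
      by_cases hia : i = a
      · rw [hia, hva]
      · exact hv.1 i (mem_erase.2 ⟨hia, hi⟩)
    · rintro ⟨hv, hva⟩
      refine ⟨fun i hi => hv.1 i (mem_of_mem_erase hi), fun i hi => ?_⟩
      by_cases hia : i = a
      · rw [hia]; exact hva
      · exact hv.2 i fun h => hi (mem_erase.2 ⟨hia, h⟩)
  rw [this]

/-- Ungrounding a vertex whose row is orthogonal to the kernel keeps the corank or raises it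
by one, depending on whether the scalar `lap x (e_a - w) a` vanishes. -/
lemma border_up {x : Sym2 V → Bool} {K : Finset V} {a : V} (ha : a ∈ K)
    (h : ∀ u ∈ KerK F x K, lap x u a = 0) {w : V → F} (hw0 : ∀ i ∈ K, w i = 0)
    (hw : ∀ i ∉ K, lap x w i = bt (x s(i, a))) :
    Module.finrank F (KerK F x (K.erase a)) = Module.finrank F (KerK F x K) +
      if lap x (Pi.single a 1 - w) a = 0 then 1 else 0 := by
  set z : V → F := Pi.single a 1 - w with hz
  have hza : z a = 1 := by simp [hz, hw0 a ha]
  have hz0 : ∀ i ∈ K.erase a, z i = 0 := fun i hi => by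
    obtain ⟨h1, h2⟩ := mem_erase.1 hi
    simp [hz, hw0 i h2, h1]
  have hzl : ∀ i ∉ K, lap x z i = 0 := fun i hi => by
    have : i ≠ a := fun h => hi (h ▸ ha)
    rw [hz, lap_sub, Pi.sub_apply, lap_single_of_ne x this, hw i hi, sub_self]
  have hsub : KerK F x K ≤ KerK F x (K.erase a) := fun u hu =>
    ⟨fun i hi => hu.1 i (mem_of_mem_erase hi), fun i hi => by
      by_cases hia : i = a
      · rw [hia]; exact h u hu
      · exact hu.2 i fun h => hi (mem_erase.2 ⟨hia, h⟩)⟩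
  split_ifs with hq
  · have hzm : z ∈ KerK F x (K.erase a) := ⟨hz0, fun i hi => by
      by_cases hia : i = a
      · rw [hia]; exact hq
      · exact hzl i fun h => hi (mem_erase.2 ⟨hia, h⟩)⟩
    rw [finrank_inf_ker_of_ne (KerK F x (K.erase a)) (LinearMap.proj a) hzm
      (by simp [hza])]
    have : KerK F x (K.erase a) ⊓ LinearMap.ker (LinearMap.proj a) = KerK F x K := by
      ext v
      constructor
      · rintro ⟨hv, hva⟩
        refine ⟨fun i hi => ?_, fun i hi => hv.2 i fun h => hi (mem_of_mem_erase h)⟩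
        by_cases hia : i = a
        · rw [hia]; exact hva
        · exact hv.1 i (mem_erase.2 ⟨hia, hi⟩)
      · exact fun hv => ⟨hsub hv, hv.1 a ha⟩
    rw [this]
  · have : KerK F x (K.erase a) = KerK F x K := by
      refine le_antisymm (fun v hv => ?_) hsub
      have hmem : v - v a • z ∈ KerK F x K := by
        refine ⟨fun i hi => ?_, fun i hi => ?_⟩
        · by_cases hia : i = a
          · simp [hia, hza]
          · have hi' := mem_erase.2 ⟨hia, hi⟩
            simp [hv.1 i hi', hz0 i hi']
        · rw [lap_sub, lap_smul, Pi.sub_apply, Pi.smul_apply, hzl i hi,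
            hv.2 i fun h => hi (mem_of_mem_erase h)]; simp
      have h1 := h _ hmem
      rw [lap_sub, lap_smul, Pi.sub_apply, Pi.smul_apply, hv.2 a (notMem_erase a K),
        zero_sub, neg_eq_zero, smul_eq_mul] at h1
      have h2 : v a = 0 := (mul_eq_zero.1 h1).resolve_right hq
      rw [h2, zero_smul, sub_zero] at hmem
      exact hmem
    rw [this, add_zero]

/-- Large coranks are very unlikely, whatever the field. -/
lemma corank_tail (K : Finset V) (d : ℕ) :
    Pr (fun x : Sym2 V → Bool => d ≤ Module.finrank F (KerK F x K)) ≤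
      (Fintype.card V).choose d * (1 / 2) ^ d.choose 2 := by
  have h1 : ∀ D ∈ (univ : Finset V).powersetCard d, Pr (fun x : Sym2 V → Bool =>
      ∀ f : V → F, ∃ u ∈ KerK F x K, ∀ i ∈ D, u i = f i) ≤ (1 / 2) ^ d.choose 2 := by
    intro D hD
    have hcard : (D.offDiag.image (Function.uncurry Sym2.mk)).card = d.choose 2 := by
      rw [Sym2.card_image_offDiag, (mem_powersetCard.1 hD).2]
    rw [← hcard]
    refine Pr_le_of_agree _ _ fun x y hx hy hxy => ?_
    have hagree : ∀ i j, i ∈ D → j ∈ D → i ≠ j → (bt (x s(i, j)) : F) = bt (y s(i, j)) := by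
      intro i j hi hj hij
      obtain ⟨v, hv, hvD⟩ := hx (Pi.single i 1)
      obtain ⟨w, hw, hwD⟩ := hy (Pi.single j 1)
      have e1 : ∑ k, v k * lap y w k = 0 := sum_eq_zero fun k _ => by
        by_cases hk : k ∈ K
        · rw [hv.1 k hk, zero_mul]
        · rw [hw.2 k hk, mul_zero]
      have e2 : ∑ k, w k * lap x v k = 0 := sum_eq_zero fun k _ => by
        by_cases hk : k ∈ K
        · rw [hw.1 k hk, zero_mul]
        · rw [hv.2 k hk, mul_zero]
      rw [green] at e1
      have e3 : ∑ k, ∑ l, w k * ((bt (y s(k, l)) - bt (x s(k, l))) * (v l - v k)) = 0 := by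
        rw [← sub_self (0 : F)]
        nth_rewrite 1 [← e1]
        rw [← e2, ← sum_sub_distrib]
        refine sum_congr rfl fun k _ => ?_
        unfold lap
        rw [← mul_sub, ← sum_sub_distrib, mul_sum]
        exact sum_congr rfl fun l _ => by ring
      have e5 : ∀ k l, w k * ((bt (y s(k, l)) - bt (x s(k, l))) * (v l - v k)) =
          if k = j ∧ l = i then (bt (y s(j, i)) - bt (x s(j, i)) : F) else 0 := by
        intro k l
        by_cases hkl : k = l
        · subst hkl
          have : ¬ (k = j ∧ k = i) := fun h => hij (h.2.symm.trans h.1)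
          simp [this]
        by_cases hD' : k ∈ D ∧ l ∈ D
        · obtain ⟨hk, hl⟩ := hD'
          rw [hwD k hk, hvD l hl, hvD k hk]
          by_cases hkj : k = j
          · subst hkj
            by_cases hli : l = i
            · subst hli; simp [Ne.symm hij]
            · simp [hli, Ne.symm hij]
          · simp [hkj]
        · have hee : x s(k, l) = y s(k, l) := by
            refine hxy _ fun hmem => hD' ?_
            obtain ⟨⟨k', l'⟩, hm, heq⟩ := mem_image.1 hmem
            rw [mem_offDiag] at hm
            rcases Sym2.eq_iff.1 heq with ⟨rfl, rfl⟩ | ⟨rfl, rfl⟩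
            · exact ⟨hm.1, hm.2.1⟩
            · exact ⟨hm.2.1, hm.1⟩
          have hne : ¬ (k = j ∧ l = i) := fun h => hD' ⟨h.1 ▸ hj, h.2 ▸ hi⟩
          simp [hee, hne]
      simp only [e5] at e3
      rw [sum_eq_single j (fun k _ hk => by simp [hk]) (by simp),
        sum_eq_single i (fun l _ hl => by simp [hl]) (by simp)] at e3
      simp only [and_self, if_true] at e3
      rw [Sym2.eq_swap]
      exact (sub_eq_zero.1 e3).symm
    funext e
    by_cases he : e ∈ D.offDiag.image (Function.uncurry Sym2.mk)
    · obtain ⟨⟨i, j⟩, hm, rfl⟩ := mem_image.1 he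
      rw [mem_offDiag] at hm
      have := hagree i j hm.1 hm.2.1 hm.2.2
      change x s(i, j) = y s(i, j)
      rcases hx' : x s(i, j) <;> rcases hy' : y s(i, j) <;> simp [hx', hy'] at this ⊢
    · exact hxy e he
  refine (Pr_mono (F := fun x : Sym2 V → Bool => ∃ D ∈ (univ : Finset V).powersetCard d,
      ∀ f : V → F, ∃ u ∈ KerK F x K, ∀ i ∈ D, u i = f i) fun x hx => ?_).trans ?_
  · obtain ⟨D, hD, hf⟩ := exists_info d _ hx
    exact ⟨D, mem_powersetCard.2 ⟨subset_univ _, hD⟩, hf⟩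
  · refine (Pr_exists_le_card _ _ h1).trans (le_of_eq ?_)
    rw [card_powersetCard, card_univ]

end ker

/-! ### Swapping the edges to two grounded vertices -/

section tools
variable {V : Type*} [Fintype V] [DecidableEq V]

lemma chi_eq_one {p : ℕ} [Fact p.Prime] {t : ZMod p} (h : chi t = 1) : t = 0 := by
  have h1 := avg_chi_mul (p := p) t
  by_contra ht
  rw [if_neg ht] at h1
  have h2 : ∀ k : ℕ, chi ((k : ZMod p) * t) = 1 := by
    intro k
    induction k with
    | zero => simp [chi_zero]
    | succ k ih => rw [Nat.cast_succ, add_mul, one_mul, chi_add, ih, h, one_mul]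
  have h3 : ∀ s : ZMod p, chi (s * t) = 1 := fun s => by
    have := h2 s.val
    rwa [ZMod.natCast_zmod_val] at this
  simp [h3] at h1

/-- Fourier expansion of the orthogonality condition. -/
lemma perp_expand {p : ℕ} [Fact p.Prime] (U : Submodule (ZMod p) (V → ZMod p)) (X : V → ZMod p) :
    (if ∀ u ∈ U, ∑ i, u i * X i = 0 then 1 else 0 : ℂ) =
      𝔼 τ : U, chi (∑ i, (τ : V → ZMod p) i * X i) := by
  let ψ : AddChar U ℂ :=
    { toFun := fun τ => chi (∑ i, (τ : V → ZMod p) i * X i)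
      map_zero_eq_one' := by simp [chi_zero]
      map_add_eq_mul' := fun u v => by
        rw [← chi_add, ← sum_add_distrib]
        congr 1
        exact sum_congr rfl fun i _ => by simp [add_mul] }
  have h : 𝔼 τ, ψ τ = if ψ = 0 then 1 else 0 := AddChar.expect_eq_ite ψ
  refine Eq.trans ?_ h.symm
  congr 1
  refine propext ⟨fun h => ?_, fun h u hu => ?_⟩
  · ext τ
    change chi _ = 1
    rw [h τ τ.2, chi_zero]
  · have := DFunLike.congr_fun h (⟨u, hu⟩ : U)
    exact chi_eq_one this

/-- Resampling a set of coordinates. -/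
lemma resample_piecewise {Q : Type*} [Fintype Q] [DecidableEq Q] {M : Type*} [AddCommMonoid M]
    [Module ℚ≥0 M] (S : Finset Q) (f : (Q → Bool) → M) :
    𝔼 x, f x = 𝔼 x : Q → Bool, 𝔼 y : Q → Bool, f (S.piecewise y x) := by
  rw [resample_extend (Subtype.val : {i // i ∈ S} → Q) Subtype.val_injective]
  refine expect_congr rfl fun x _ => ?_
  rw [← avg_comp_inj (Subtype.val : {i // i ∈ S} → Q) Subtype.val_injective]
  refine expect_congr rfl fun y _ => ?_
  congr 1
  funext i
  by_cases hi : i ∈ S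
  · rw [piecewise_eq_of_mem _ _ _ hi]
    exact Subtype.val_injective.extend_apply (y ∘ Subtype.val) x (⟨i, hi⟩ : {i // i ∈ S})
  · rw [piecewise_eq_of_notMem _ _ _ hi, Function.extend_apply']
    rintro ⟨⟨j, hj⟩, rfl⟩
    exact hi hj

/-- The edges joining a free vertex to one of the two grounded vertices `a`, `b`. -/
def twoEdge (K : Finset V) (a b : V) (hab : a ≠ b) (ha : a ∈ K) (hb : b ∈ K) :
    {i // i ∉ K} × Bool ↪ Sym2 V where
  toFun z := s(z.1.1, if z.2 then b else a)
  inj' := by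
    rintro ⟨⟨i, hi⟩, β⟩ ⟨⟨j, hj⟩, γ⟩ h
    have hc : ∀ β : Bool, (if β then b else a) ∈ K := by rintro (_ | _) <;> simp [ha, hb]
    rcases Sym2.eq_iff.1 h with ⟨h1, h2⟩ | ⟨h1, _⟩
    · have : β = γ := by
        cases β <;> cases γ <;> simp_all
      simp_all
    · exact absurd (by have := hc γ; rwa [← show i = _ from h1] at this) hi

lemma twoEdge_apply {K : Finset V} {a b : V} (hab : a ≠ b) (ha : a ∈ K) (hb : b ∈ K)
    (z : {i // i ∉ K} × Bool) :
    twoEdge K a b hab ha hb z = s(z.1.1, if z.2 then b else a) := rfl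

/-- The permutation of the edges exchanging `s(i, a)` and `s(i, b)` for those free `i` with
`g i = true`. -/
def swapPerm (K : Finset V) (a b : V) (hab : a ≠ b) (ha : a ∈ K) (hb : b ∈ K) (g : V → Bool) :
    Equiv.Perm (Sym2 V) :=
  Equiv.Perm.viaEmbedding
    (Equiv.prodShear (Equiv.refl {i // i ∉ K}) fun i => if g i.1 then Equiv.boolNot else Equiv.refl Bool)
    (twoEdge K a b hab ha hb)

variable {K : Finset V} {a b : V} (hab : a ≠ b) (ha : a ∈ K) (hb : b ∈ K)

lemma swapPerm_a (g : V → Bool) {i : V} (hi : i ∉ K) :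
    swapPerm K a b hab ha hb g s(i, a) = if g i then s(i, b) else s(i, a) := by
  have : s(i, a) = twoEdge K a b hab ha hb (⟨i, hi⟩, false) := by simp [twoEdge_apply]
  rw [this, swapPerm, Equiv.Perm.viaEmbedding_apply]
  cases hg : g i <;> simp [twoEdge_apply, hg]

lemma swapPerm_b (g : V → Bool) {i : V} (hi : i ∉ K) :
    swapPerm K a b hab ha hb g s(i, b) = if g i then s(i, a) else s(i, b) := by
  have : s(i, b) = twoEdge K a b hab ha hb (⟨i, hi⟩, true) := by simp [twoEdge_apply]
  rw [this, swapPerm, Equiv.Perm.viaEmbedding_apply]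
  cases hg : g i <;> simp [twoEdge_apply, hg]

lemma swapPerm_other (g : V → Bool) {e : Sym2 V} (h : ∀ i ∉ K, e ≠ s(i, a) ∧ e ≠ s(i, b)) :
    swapPerm K a b hab ha hb g e = e := by
  refine Equiv.Perm.viaEmbedding_apply_of_notMem _ _ _ ?_
  rintro ⟨⟨⟨i, hi⟩, β⟩, rfl⟩
  cases β
  · exact (h i hi).1 (by simp [twoEdge_apply])
  · exact (h i hi).2 (by simp [twoEdge_apply])

/-- The configuration `x` with the edges `s(i, a)`, `s(i, b)` exchanged for the free `i` with
`g i = true`, and the edge `s(a, b)` set to `ε`. -/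
def act (x : Sym2 V → Bool) (g : V → Bool) (ε : Bool) : Sym2 V → Bool :=
  Function.update (x ∘ swapPerm K a b hab ha hb g) s(a, b) ε

lemma avg_act {M : Type*} [AddCommMonoid M] [Module ℚ≥0 M] (f : (Sym2 V → Bool) → M) :
    𝔼 x, f x = 𝔼 x, 𝔼 g : V → Bool, 𝔼 ε : Bool, f (act hab ha hb x g ε) := by
  have h : ∀ g : V → Bool, 𝔼 x : Sym2 V → Bool, 𝔼 ε : Bool, f (Function.update x s(a, b) ε) =
      𝔼 x, 𝔼 ε : Bool, f (act hab ha hb x g ε) := by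
    intro g
    rw [← avg_equiv (Equiv.arrowCongr (swapPerm K a b hab ha hb g).symm (Equiv.refl Bool))]
    rfl
  calc _ = 𝔼 x : Sym2 V → Bool, 𝔼 ε : Bool, f (Function.update x s(a, b) ε) :=
        resample_update s(a, b) f
    _ = 𝔼 g : V → Bool, 𝔼 x : Sym2 V → Bool, 𝔼 ε : Bool, f (Function.update x s(a, b) ε) :=
        (Fintype.expect_const _).symm
    _ = 𝔼 g : V → Bool, 𝔼 x, 𝔼 ε : Bool, f (act hab ha hb x g ε) :=
        expect_congr rfl fun g _ => h g
    _ = _ := expect_comm _ _ _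

lemma act_ab (x : Sym2 V → Bool) (g : V → Bool) (ε : Bool) :
    act hab ha hb x g ε s(a, b) = ε := Function.update_self _ _ _

lemma edge_ne_ab {i j : V} {K : Finset V} {a b : V} (ha : a ∈ K) (hb : b ∈ K) (hi : i ∉ K) :
    s(i, j) ≠ s(a, b) := by
  intro h
  rcases Sym2.eq_iff.1 h with ⟨h1, _⟩ | ⟨h1, _⟩
  · exact hi (h1 ▸ ha)
  · exact hi (h1 ▸ hb)

lemma act_a (x : Sym2 V → Bool) (g : V → Bool) (ε : Bool) {i : V} (hi : i ∉ K) :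
    act hab ha hb x g ε s(i, a) = if g i then x s(i, b) else x s(i, a) := by
  unfold act
  rw [Function.update_of_ne (edge_ne_ab ha hb hi), Function.comp_apply, swapPerm_a _ _ _ _ hi]
  split_ifs <;> rfl

lemma act_b (x : Sym2 V → Bool) (g : V → Bool) (ε : Bool) {i : V} (hi : i ∉ K) :
    act hab ha hb x g ε s(i, b) = if g i then x s(i, a) else x s(i, b) := by
  unfold act
  rw [Function.update_of_ne (edge_ne_ab ha hb hi), Function.comp_apply, swapPerm_b _ _ _ _ hi]
  split_ifs <;> rfl

lemma act_other (x : Sym2 V → Bool) (g : V → Bool) (ε : Bool) {e : Sym2 V} (he : e ≠ s(a, b))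
    (h : ∀ i ∉ K, e ≠ s(i, a) ∧ e ≠ s(i, b)) :
    act hab ha hb x g ε e = x e := by
  unfold act
  rw [Function.update_of_ne he, Function.comp_apply, swapPerm_other _ _ _ _ h]

lemma act_free (x : Sym2 V → Bool) (g : V → Bool) (ε : Bool) {i j : V} (hi : i ∉ K) (hja : j ≠ a)
    (hjb : j ≠ b) : act hab ha hb x g ε s(i, j) = x s(i, j) := by
  have hia : i ≠ a := fun h => hi (h ▸ ha)
  have hib : i ≠ b := fun h => hi (h ▸ hb)
  refine act_other _ _ _ _ _ _ (edge_ne_ab ha hb hi) fun k hk => ⟨fun h => ?_, fun h => ?_⟩ <;>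
  rcases Sym2.eq_iff.1 h with ⟨h1, h2⟩ | ⟨h1, h2⟩ <;> simp_all

lemma act_ground (x : Sym2 V → Bool) (g : V → Bool) (ε : Bool) {j : V} (hj : j ∈ K)
    (hjb : j ≠ b) : act hab ha hb x g ε s(a, j) = x s(a, j) := by
  refine act_other _ _ _ _ _ _ (fun h => ?_) fun k hk => ⟨fun h => ?_, fun h => ?_⟩
  · rcases Sym2.eq_iff.1 h with ⟨h1, h2⟩ | ⟨h1, h2⟩ <;> simp_all
  · rcases Sym2.eq_iff.1 h with ⟨h1, h2⟩ | ⟨h1, h2⟩ <;> simp_all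
  · rcases Sym2.eq_iff.1 h with ⟨h1, h2⟩ | ⟨h1, h2⟩ <;> simp_all

variable {F : Type*} [Field F]

lemma lap_act_free (x : Sym2 V → Bool) (g : V → Bool) (ε : Bool) {v : V → F}
    (hv : ∀ i ∈ K, v i = 0) {i : V} (hi : i ∉ K) :
    lap (act hab ha hb x g ε) v i = lap x v i := by
  have hmem : b ∈ (univ : Finset V).erase a := mem_erase.2 ⟨hab.symm, mem_univ _⟩
  unfold lap
  rw [← add_sum_erase univ _ (mem_univ a), ← add_sum_erase (univ.erase a) _ hmem,
    ← add_sum_erase univ (fun j => bt (x s(i, j)) * (v j - v i)) (mem_univ a),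
    ← add_sum_erase (univ.erase a) (fun j => bt (x s(i, j)) * (v j - v i)) hmem,
    ← add_assoc, ← add_assoc]
  congr 1
  · rw [act_a hab ha hb _ _ _ hi, act_b hab ha hb _ _ _ hi, hv a ha, hv b hb]
    cases g i <;> simp [add_comm]
  · refine sum_congr rfl fun j hj => ?_
    simp only [mem_erase, mem_univ, and_true] at hj
    rw [act_free hab ha hb _ _ _ hi hj.2 hj.1]

lemma KerK_act (x : Sym2 V → Bool) (g : V → Bool) (ε : Bool) :
    KerK F (act hab ha hb x g ε) K = KerK F x K := by
  ext v
  rw [mem_KerK, mem_KerK]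
  refine and_congr_right fun h => forall₂_congr fun i hi => ?_
  rw [lap_act_free hab ha hb x g ε h hi]

/-- The row of the vertex `a` after the swaps, restricted to the free vertices. -/
def rowX (F : Type*) [Field F] (K : Finset V) (a b : V) (x : Sym2 V → Bool) (g : V → Bool)
    (i : V) : F :=
  if i ∈ K then 0 else bt (x s(i, a)) + bt (g i) * (bt (x s(i, b)) - bt (x s(i, a)))

lemma rowX_eq (x : Sym2 V → Bool) (g : V → Bool) (ε : Bool) {i : V} (hi : i ∉ K) :
    (bt (act hab ha hb x g ε s(i, a)) : F) = rowX F K a b x g i := by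
  rw [act_a hab ha hb _ _ _ hi, rowX, if_neg hi]
  cases g i <;> simp

lemma lap_act_a (x : Sym2 V → Bool) (g : V → Bool) (ε : Bool) {v : V → F}
    (hv : ∀ i ∈ K, v i = 0) :
    lap (act hab ha hb x g ε) v a = ∑ i, v i * rowX F K a b x g i := by
  unfold lap
  refine sum_congr rfl fun i _ => ?_
  rw [hv a ha, sub_zero]
  by_cases hi : i ∈ K
  · rw [hv i hi]; simp
  · rw [Sym2.eq_swap, rowX_eq hab ha hb x g ε hi, mul_comm]

lemma lap_act_single (x : Sym2 V → Bool) (g : V → Bool) (ε : Bool) :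
    lap (act hab ha hb x g ε) (Pi.single a 1 : V → F) a =
      -(∑ i, rowX F K a b x g i) - bt ε - ∑ j ∈ (K.erase a).erase b, bt (x s(a, j)) := by
  have h1 : lap (act hab ha hb x g ε) (Pi.single a 1 : V → F) a =
      -∑ j ∈ univ.erase a, (bt (act hab ha hb x g ε s(a, j)) : F) := by
    unfold lap
    rw [← add_sum_erase univ _ (mem_univ a), ← sum_neg_distrib]
    simp only [sub_self, mul_zero, zero_add]
    refine sum_congr rfl fun j hj => ?_
    simp [(mem_erase.1 hj).1]
  have h2 : (univ : Finset V).erase a = univ.filter (· ∉ K) ∪ K.erase a := by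
    ext j
    by_cases hj : j ∈ K
    · simp [hj]
    · have : j ≠ a := fun h => hj (h ▸ ha)
      simp [hj, this]
  have h3 : Disjoint ((univ : Finset V).filter (· ∉ K)) (K.erase a) := by
    rw [disjoint_left]
    intro j h1 h2
    exact (mem_filter.1 h1).2 (mem_erase.1 h2).2
  have hbm : b ∈ K.erase a := mem_erase.2 ⟨hab.symm, hb⟩
  rw [h1, h2, sum_union h3, ← add_sum_erase (K.erase a) _ hbm, act_ab]
  have h4 : ∑ j ∈ univ.filter (· ∉ K), (bt (act hab ha hb x g ε s(a, j)) : F) =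
      ∑ i, rowX F K a b x g i := by
    rw [sum_filter]
    refine sum_congr rfl fun j _ => ?_
    split_ifs with hj
    · rw [rowX, if_pos (by simpa using hj)]
    · rw [Sym2.eq_swap, rowX_eq hab ha hb x g ε (by simpa using hj)]
  have h5 : ∑ j ∈ (K.erase a).erase b, (bt (act hab ha hb x g ε s(a, j)) : F) =
      ∑ j ∈ (K.erase a).erase b, bt (x s(a, j)) := by
    refine sum_congr rfl fun j hj => ?_
    simp only [mem_erase] at hj
    rw [act_ground hab ha hb _ _ _ hj.2.2 hj.1]
  rw [h4, h5]
  ring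

end tools

/-! ### The effect of ungrounding one vertex on the corank -/

section border
variable {V : Type*} [Fintype V] [DecidableEq V] {F : Type*} [Field F]

/-- Orthogonality to the grounded kernel. -/
def PerpX (x : Sym2 V → Bool) (K : Finset V) (X : V → F) : Prop :=
  ∀ u ∈ KerK F x K, ∑ i, u i * X i = 0

/-- A solution of the grounded Laplacian equation (zero if there is none). -/
def solX (x : Sym2 V → Bool) (K : Finset V) (X : V → F) : V → F :=
  if h : PerpX x K X then (exists_sol x K X h).choose else 0

lemma solX_ground {x : Sym2 V → Bool} {K : Finset V} {X : V → F} (h : PerpX x K X) :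
    ∀ i ∈ K, solX x K X i = 0 := by
  rw [solX, dif_pos h]; exact (exists_sol x K X h).choose_spec.1

lemma solX_free {x : Sym2 V → Bool} {K : Finset V} {X : V → F} (h : PerpX x K X) :
    ∀ i ∉ K, lap x (solX x K X) i = X i := by
  rw [solX, dif_pos h]; exact (exists_sol x K X h).choose_spec.2

/-- The row-dependent part of the Schur complement at the ungrounded vertex with row `X`. -/
def qf (x : Sym2 V → Bool) (K : Finset V) (X : V → F) : F :=
  -(∑ i, X i) - ∑ i, solX x K X i * X i

/-- The number of edges from `a` to grounded vertices other than `b`. -/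
def groundDeg (F : Type*) [Field F] (x : Sym2 V → Bool) (K : Finset V) (a b : V) : F :=
  ∑ j ∈ (K.erase a).erase b, bt (x s(a, j))

lemma sum_mul_lap {x : Sym2 V → Bool} {K : Finset V} {v w X : V → F} (hv : ∀ i ∈ K, v i = 0)
    (hw : ∀ i ∉ K, lap x w i = X i) : ∑ i, v i * lap x w i = ∑ i, v i * X i := by
  refine sum_congr rfl fun i _ => ?_
  by_cases hi : i ∈ K
  · simp [hv i hi]
  · rw [hw i hi]

lemma qf_diff {x : Sym2 V → Bool} {K : Finset V} {X X' w : V → F} (h : PerpX x K X)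
    (h' : PerpX x K X') (hw0 : ∀ i ∈ K, w i = 0) (hw : ∀ i ∉ K, lap x w i = X i - X' i) :
    qf x K X - qf x K X' =
      (-∑ i, (X i - X' i) + ∑ i, w i * (X i - X' i)) - 2 * ∑ i, w i * X i := by
  have hv0 := solX_ground h
  have hv := solX_free h
  have hv0' := solX_ground h'
  have hv' := solX_free h'
  unfold qf
  set v := solX x K X
  set v' := solX x K X'
  have e1 : ∑ i, w i * X i = ∑ i, v i * (X i - X' i) := by
    rw [← sum_mul_lap hw0 hv, green, sum_mul_lap hv0 hw]
  have hd : v - v' - w ∈ KerK F x K := by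
    refine ⟨fun i hi => by simp [hv0 i hi, hv0' i hi, hw0 i hi], fun i hi => ?_⟩
    rw [lap_sub, lap_sub]
    simp [hv i hi, hv' i hi, hw i hi]
  have e2 := h' _ hd
  simp only [Pi.sub_apply, sub_mul, mul_sub, sum_sub_distrib] at *
  linear_combination e1 - e2

variable {K : Finset V} {a b : V} (hab : a ≠ b) (ha : a ∈ K) (hb : b ∈ K)

/-- The corank after ungrounding `a`, as a function of the swapped row. -/
lemma step_eq (f : ℕ → ℝ) (x : Sym2 V → Bool) (g : V → Bool) (ε : Bool) :
    f (Module.finrank F (KerK F (act hab ha hb x g ε) (K.erase a))) =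
      f (Module.finrank F (KerK F x K) - 1) +
      (f (Module.finrank F (KerK F x K)) - f (Module.finrank F (KerK F x K) - 1)) *
        (if PerpX x K (rowX F K a b x g) then 1 else 0) +
      (f (Module.finrank F (KerK F x K) + 1) - f (Module.finrank F (KerK F x K))) *
        (if PerpX x K (rowX F K a b x g) ∧
          qf x K (rowX F K a b x g) - bt ε - groundDeg F x K a b = 0 then 1 else 0) := by
  by_cases h : PerpX x K (rowX F K a b x g)
  · have h1 : ∀ u ∈ KerK F (act hab ha hb x g ε) K, lap (act hab ha hb x g ε) u a = 0 := by
      rw [KerK_act]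
      intro u hu
      rw [lap_act_a hab ha hb x g ε hu.1]
      exact h u hu
    have h2 := border_up ha h1 (solX_ground h) fun i hi => by
      rw [lap_act_free hab ha hb x g ε (solX_ground h) hi, solX_free h i hi,
        rowX_eq hab ha hb x g ε hi]
    have h3 : lap (act hab ha hb x g ε) (Pi.single a 1 - solX x K (rowX F K a b x g)) a =
        qf x K (rowX F K a b x g) - bt ε - groundDeg F x K a b := by
      rw [lap_sub, Pi.sub_apply, lap_act_single, lap_act_a hab ha hb x g ε (solX_ground h)]
      unfold qf groundDeg
      ring
    rw [h2, h3, KerK_act]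
    by_cases hq : qf x K (rowX F K a b x g) - bt ε - groundDeg F x K a b = 0
    · simp [h, hq]
    · simp [h, hq]
  · have h1 : ∃ u ∈ KerK F (act hab ha hb x g ε) K, lap (act hab ha hb x g ε) u a ≠ 0 := by
      unfold PerpX at h
      push Not at h
      obtain ⟨u, hu, hne⟩ := h
      refine ⟨u, by rwa [KerK_act], ?_⟩
      rwa [lap_act_a hab ha hb x g ε hu.1]
    have h2 := border_down ha h1
    rw [KerK_act] at h2
    rw [← h2]
    simp [h]

end border

/-! ### Joint characters for several primes -/

section joint
variable {V : Type*} [Fintype V] [DecidableEq V]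
variable {ι : Type*} [Fintype ι] [DecidableEq ι] {p : ι → ℕ} [∀ i, Fact (p i).Prime]

/-- The constant `c` controls joint characters modulo the primes `p i` by each of the components. -/
def JointC (p : ι → ℕ) [∀ i, Fact (p i).Prime] (c : ℝ) : Prop :=
  ∀ (t : ∀ i, ZMod (p i)) (i₀ : ι), ‖(1 + ∏ i, chi (t i)) / 2‖ ≤ Real.exp (-(c * N2 (t i₀)))

lemma norm_avg_joint {c : ℝ} (hc : JointC p c) (A : ∀ i, ZMod (p i)) (s : ∀ i, V → ZMod (p i))
    (i₀ : ι) : ‖𝔼 g : V → Bool, ∏ i, chi (A i + ∑ j, bt (g j) * s i j)‖ ≤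
      Real.exp (-(c * ∑ j, N2 (s i₀ j))) := by
  obtain ⟨φ, hφ⟩ : ∃ φ : V → Bool → ℂ, φ = fun j β => ∏ i, chi (bt β * s i j) := ⟨_, rfl⟩
  have h1 : ∀ g : V → Bool, ∏ i, chi (A i + ∑ j, bt (g j) * s i j) =
      (∏ i, chi (A i)) * ∏ j, φ j (g j) := by
    intro g
    rw [hφ, Finset.prod_comm, ← prod_mul_distrib]
    exact prod_congr rfl fun i _ => by rw [chi_add, chi_sum]
  simp_rw [h1]
  rw [← mul_expect, norm_mul, avg_prod_pi]
  have h2 : ‖∏ i, chi (A i)‖ = 1 := by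
    rw [norm_prod]; exact prod_eq_one fun i _ => norm_chi _
  rw [h2, one_mul, norm_prod, mul_sum, ← sum_neg_distrib, Real.exp_sum]
  refine prod_le_prod (fun _ _ => norm_nonneg _) fun j _ => ?_
  rw [avg_bool, hφ]
  have := hc (fun i => s i j) i₀
  simpa [chi_zero] using this

lemma prod_expect {β : ι → Type*} [∀ i, Fintype (β i)] (f : ∀ i, β i → ℂ) :
    ∏ i, 𝔼 t : β i, f i t = 𝔼 t : ∀ i, β i, ∏ i, f i (t i) := by
  simp_rw [Fintype.expect_eq_sum_div_card]
  rw [Finset.prod_div_distrib, Finset.prod_univ_sum]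
  simp [Fintype.piFinset_univ, Fintype.card_pi]

variable {K W₁ : Finset V} {a b : V} (hK : Disjoint W₁ K)

lemma rowX_piecewise {p : ℕ} [Fact p.Prime] (hK : Disjoint W₁ K) (x : Sym2 V → Bool)
    (g z : V → Bool) (v : V → ZMod p) :
    ∑ j, v j * rowX (ZMod p) K a b x (W₁.piecewise g z) j =
      (∑ j, v j * rowX (ZMod p) K a b x (W₁.piecewise (fun _ => false) z) j) +
      ∑ j, bt (g j) * (if j ∈ W₁ then v j * (bt (x s(j, b)) - bt (x s(j, a))) else 0) := by
  rw [← sum_add_distrib]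
  refine sum_congr rfl fun j _ => ?_
  unfold rowX
  by_cases h : j ∈ W₁
  · have : j ∉ K := disjoint_left.1 hK h
    simp [h, this]; ring
  · simp [h]

lemma sum_N2_rowX {p : ℕ} [Fact p.Prime] (x : Sym2 V → Bool) (v : V → ZMod p) :
    ∑ j, N2 (if j ∈ W₁ then v j * (bt (x s(j, b)) - bt (x s(j, a))) else 0) =
      ∑ j ∈ W₁ with x s(j, a) ≠ x s(j, b), N2 (v j) := by
  rw [sum_filter, ← sum_filter_add_sum_filter_not univ (· ∈ W₁)]
  have h2 : ∑ j ∈ univ.filter (· ∉ W₁),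
      N2 (if j ∈ W₁ then v j * (bt (x s(j, b)) - bt (x s(j, a))) else 0) = 0 :=
    sum_eq_zero fun j hj => by simp [(mem_filter.1 hj).2]
  rw [h2, add_zero, filter_mem_eq_inter, univ_inter]
  refine sum_congr rfl fun j hj => ?_
  rw [if_pos hj]
  cases x s(j, a) <;> cases x s(j, b) <;> simp [N2_neg]

/-- Characters of the swapped row which are large on the swapped vertices average out. -/
lemma norm_avg_perp_le {c G : ℝ} (hc0 : 0 ≤ c) (hc : JointC p c) (hK : Disjoint W₁ K)
    (x : Sym2 V → Bool) (z : V → Bool) (U : ∀ i, Submodule (ZMod (p i)) (V → ZMod (p i)))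
    (A : ∀ i, ZMod (p i)) (L : ∀ i, V → ZMod (p i)) (i₀ : ι)
    (h : ∀ τ ∈ U i₀, G ≤ ∑ j ∈ W₁ with x s(j, a) ≠ x s(j, b), N2 (τ j + L i₀ j)) :
    ‖𝔼 g : V → Bool, ∏ i, ((if ∀ u ∈ U i, ∑ j, u j *
        rowX (ZMod (p i)) K a b x (W₁.piecewise g z) j = 0 then 1 else 0) *
        chi (A i + ∑ j, L i j * rowX (ZMod (p i)) K a b x (W₁.piecewise g z) j))‖ ≤
      Real.exp (-(c * G)) := by
  have h1 : ∀ g : V → Bool, ∏ i, ((if ∀ u ∈ U i, ∑ j, u j *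
        rowX (ZMod (p i)) K a b x (W₁.piecewise g z) j = 0 then 1 else 0) *
        chi (A i + ∑ j, L i j * rowX (ZMod (p i)) K a b x (W₁.piecewise g z) j)) =
      𝔼 τ : ∀ i, U i, ∏ i, chi (A i + ∑ j, ((τ i : V → ZMod (p i)) j + L i j) *
        rowX (ZMod (p i)) K a b x (W₁.piecewise g z) j) := by
    intro g
    simp_rw [perp_expand, expect_mul]
    rw [prod_expect]
    refine expect_congr rfl fun τ _ => prod_congr rfl fun i _ => ?_
    rw [← chi_add]
    simp_rw [add_mul, sum_add_distrib]
    congr 1; ring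
  simp_rw [h1]
  rw [expect_comm]
  refine (norm_avg_le _).trans (avg_le fun τ => ?_)
  have h4 : ∀ g : V → Bool, ∏ i, chi (A i + ∑ j, ((τ i : V → ZMod (p i)) j + L i j) *
        rowX (ZMod (p i)) K a b x (W₁.piecewise g z) j) = _ := fun g =>
    prod_congr rfl fun i _ => by rw [rowX_piecewise hK x g z, ← add_assoc]
  simp_rw [h4]
  refine (norm_avg_joint hc _ _ i₀).trans ?_
  rw [sum_N2_rowX, Real.exp_le_exp, neg_le_neg_iff]
  exact mul_le_mul_of_nonneg_left (h _ (τ i₀).2) hc0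

/-- The joint orthogonality probability. -/
lemma norm_avg_perp_sub_le {c G : ℝ} (hc0 : 0 ≤ c) (hc : JointC p c) (hK : Disjoint W₁ K)
    (x : Sym2 V → Bool) (z : V → Bool) (U : ∀ i, Submodule (ZMod (p i)) (V → ZMod (p i)))
    (h : ∀ i, ∀ τ ∈ U i, τ ≠ 0 → G ≤ ∑ j ∈ W₁ with x s(j, a) ≠ x s(j, b), N2 (τ j)) :
    ‖(𝔼 g : V → Bool, ∏ i, (if ∀ u ∈ U i, ∑ j, u j *
        rowX (ZMod (p i)) K a b x (W₁.piecewise g z) j = 0 then (1 : ℂ) else 0)) -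
        ∏ i, ((p i : ℂ) ^ Module.finrank (ZMod (p i)) (U i))⁻¹‖ ≤ Real.exp (-(c * G)) := by
  have h1 : ∀ g : V → Bool, ∏ i, (if ∀ u ∈ U i, ∑ j, u j *
        rowX (ZMod (p i)) K a b x (W₁.piecewise g z) j = 0 then (1 : ℂ) else 0) =
      𝔼 τ : ∀ i, U i, ∏ i, chi (∑ j, ((τ i : V → ZMod (p i)) j) *
        rowX (ZMod (p i)) K a b x (W₁.piecewise g z) j) := by
    intro g
    simp_rw [perp_expand]
    rw [prod_expect]
  have h2 : ∏ i, ((p i : ℂ) ^ Module.finrank (ZMod (p i)) (U i))⁻¹ =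
      𝔼 τ : ∀ i, U i, if τ = 0 then (1 : ℂ) else 0 := by
    rw [Fintype.expect_eq_sum_div_card]
    simp only [sum_ite_eq', mem_univ, if_true]
    rw [Fintype.card_pi, prod_inv_distrib, one_div]
    push_cast
    congr 1
    refine prod_congr rfl fun i _ => ?_
    rw [Module.card_eq_pow_finrank (K := ZMod (p i)) (V := U i), ZMod.card]
    push_cast; rfl
  simp_rw [h1]
  rw [h2, expect_comm, ← expect_sub_distrib]
  refine (norm_avg_le _).trans (avg_le fun τ => ?_)
  by_cases hτ : τ = 0
  · subst hτ
    simp [chi_zero, Real.exp_nonneg]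
  · rw [if_neg hτ, sub_zero]
    obtain ⟨i₀, hi⟩ : ∃ i, τ i ≠ 0 := by
      by_contra hcon
      push Not at hcon
      exact hτ (funext hcon)
    have h4 : ∀ g : V → Bool, ∏ i, chi (∑ j, ((τ i : V → ZMod (p i)) j) *
        rowX (ZMod (p i)) K a b x (W₁.piecewise g z) j) = _ := fun g =>
      prod_congr rfl fun i _ => by rw [rowX_piecewise hK x g z]
    simp_rw [h4]
    refine (norm_avg_joint hc _ _ i₀).trans ?_
    rw [sum_N2_rowX, Real.exp_le_exp, neg_le_neg_iff]
    exact mul_le_mul_of_nonneg_left (h i₀ _ (τ i₀).2 fun h => hi (Subtype.ext h)) hc0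

end joint

/-! ### One step of the exposure chain -/

section onestep
variable {V : Type*} [Fintype V] [DecidableEq V]
variable {ι : Type*} [Fintype ι] [DecidableEq ι] {p : ι → ℕ} [∀ i, Fact (p i).Prime]

/-- A term of the Fourier expansion of a function of the new corank; `none` stands for the
constant term, `some θ` for the frequency `θ` of the Schur complement on the event that the row
is orthogonal to the kernel. -/
def Zt {p : ℕ} [Fact p.Prime] (K : Finset V) (a b : V) (x : Sym2 V → Bool) (g : V → Bool)
    (ε : Bool) (o : Option (ZMod p)) : ℂ :=
  o.elim 1 fun θ => (if PerpX x K (rowX (ZMod p) K a b x g) then 1 else 0) *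
    chi (θ * (qf x K (rowX (ZMod p) K a b x g) - bt ε - groundDeg (ZMod p) x K a b))

/-- The value to which the average of `Zt` is close. -/
def zt {p : ℕ} [Fact p.Prime] (K : Finset V) (x : Sym2 V → Bool) (o : Option (ZMod p)) : ℂ :=
  o.elim 1 fun θ => if θ = 0 then ((p : ℂ) ^ Module.finrank (ZMod p) (KerK (ZMod p) x K))⁻¹ else 0

/-- Either the grounded kernel or zero, according to whether orthogonality to it is imposed. -/
def Uo {p : ℕ} [Fact p.Prime] (K : Finset V) (x : Sym2 V → Bool) (o : Option (ZMod p)) :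
    Submodule (ZMod p) (V → ZMod p) := o.elim ⊥ fun _ => KerK (ZMod p) x K

/-- The event that the grounded Laplacian equation with right hand side `G x` has a nonzero
solution that is close to zero on the vertices of `W₁` joined to exactly one of `a`, `b`. -/
def BadSL {p : ℕ} [Fact p.Prime] (K W₁ : Finset V) (a b : V) (G₀ : ℝ)
    (G : (Sym2 V → Bool) → V → ZMod p) (x : Sym2 V → Bool) : Prop :=
  ∃ v : V → ZMod p, v ≠ 0 ∧ (∀ j ∈ K, v j = 0) ∧ (∀ j ∉ K, lap x v j = G x j) ∧
    ∑ j ∈ W₁ with x s(j, a) ≠ x s(j, b), N2 (v j) < G₀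

/-- The admissible right hand sides: they depend only on the edges meeting `K` and vanish
on `W₁`. -/
def AdmSL {p : ℕ} [Fact p.Prime] (K W₁ : Finset V) (G : (Sym2 V → Bool) → V → ZMod p) : Prop :=
  (∀ x y : Sym2 V → Bool, (∀ j, ∀ k ∈ K, x s(j, k) = y s(j, k)) → G x = G y) ∧
    ∀ x, ∀ j ∈ W₁, G x j = 0

variable {K W₁ W₂ : Finset V} {a b : V}

lemma norm_Zt_le {p : ℕ} [Fact p.Prime] (x : Sym2 V → Bool) (g : V → Bool) (ε : Bool)
    (o : Option (ZMod p)) : ‖Zt K a b x g ε o‖ ≤ 1 := by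
  unfold Zt
  cases o with
  | none => simp
  | some θ =>
    simp only [Option.elim, norm_mul, norm_chi, mul_one]
    split_ifs <;> simp

lemma norm_prod_Zt_le (x : Sym2 V → Bool) (g : V → Bool) (ε : Bool)
    (o : ∀ i, Option (ZMod (p i))) : ‖∏ i, Zt K a b x g ε (o i)‖ ≤ 1 := by
  rw [norm_prod]; exact prod_le_one (fun _ _ => norm_nonneg _) fun i _ => norm_Zt_le _ _ _ _

lemma norm_zt_le {p : ℕ} [Fact p.Prime] (x : Sym2 V → Bool)
    (o : Option (ZMod p)) : ‖zt K x o‖ ≤ 1 := by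
  unfold zt
  cases o with
  | none => simp
  | some θ =>
    simp only [Option.elim]
    split_ifs
    · rw [norm_inv, norm_pow, Complex.norm_natCast]
      refine inv_le_one_of_one_le₀ (one_le_pow₀ ?_)
      exact_mod_cast (Fact.out : p.Prime).one_lt.le
    · simp

lemma zt_eq {p : ℕ} [Fact p.Prime] (x : Sym2 V → Bool) {o : Option (ZMod p)}
    (ho : ∀ θ ∈ o, θ = 0) :
    zt K x o = ((p : ℂ) ^ Module.finrank (ZMod p) (Uo K x o))⁻¹ := by
  cases o with
  | none =>
    have : Module.finrank (ZMod p) (Uo K x (none : Option (ZMod p))) = 0 := finrank_bot _ _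
    rw [this]; simp [zt]
  | some θ =>
    obtain rfl := ho θ rfl
    simp only [zt, Option.elim, if_true]; rfl

lemma Zt_eq {p : ℕ} [Fact p.Prime] (x : Sym2 V → Bool) (g : V → Bool) (ε : Bool)
    {o : Option (ZMod p)} (ho : ∀ θ ∈ o, θ = 0) :
    Zt K a b x g ε o = if ∀ u ∈ Uo K x o, ∑ j, u j * rowX (ZMod p) K a b x g j = 0
      then 1 else 0 := by
  cases o with
  | none => simp [Zt, Uo]
  | some θ =>
    obtain rfl := ho θ rfl
    simp only [Zt, Option.elim, zero_mul, chi_zero, mul_one, PerpX]; congr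

lemma Uo_le {p : ℕ} [Fact p.Prime] (x : Sym2 V → Bool) (o : Option (ZMod p)) :
    Uo K x o ≤ KerK (ZMod p) x K := by
  cases o with
  | none => simp [Uo]
  | some θ => simp [Uo]

/-- All frequencies of the Schur complements vanish. -/
lemma onestep_case3 {c G₀ η : ℝ} (hc0 : 0 ≤ c) (hc : JointC p c) (hK : Disjoint W₁ K)
    (hη : Real.exp (-(c * G₀)) ≤ η)
    (hSL : ∀ i, Pr (BadSL (p := p i) K W₁ a b G₀ fun _ => 0) ≤ η)
    (o : ∀ i, Option (ZMod (p i))) (ho : ∀ i, ∀ θ ∈ o i, θ = 0) :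
    𝔼 x : Sym2 V → Bool, ‖(𝔼 g : V → Bool, 𝔼 ε : Bool, ∏ i, Zt K a b x g ε (o i)) -
      ∏ i, zt K x (o i)‖ ≤ 2 * (Fintype.card ι * η) + η := by
  have h1 : ∀ x : Sym2 V → Bool, ¬ (∃ i ∈ univ, BadSL (p := p i) K W₁ a b G₀ (fun _ => 0) x) →
      ‖(𝔼 g : V → Bool, 𝔼 ε : Bool, ∏ i, Zt K a b x g ε (o i)) - ∏ i, zt K x (o i)‖ ≤ η := by
    intro x hx
    simp_rw [fun g ε i => Zt_eq (a := a) (b := b) (K := K) x g ε (ho i), fun i => zt_eq (K := K) x (ho i)]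
    simp only [Fintype.expect_const]
    rw [resample_piecewise W₁, ← Fintype.expect_const (ι := V → Bool)
      (∏ i, ((p i : ℂ) ^ Module.finrank (ZMod (p i)) (Uo K x (o i)))⁻¹), ← expect_sub_distrib]
    refine (norm_avg_le _).trans (avg_le fun z => ?_)
    refine (norm_avg_perp_sub_le hc0 hc hK x z (fun i => Uo K x (o i)) (G := G₀) ?_).trans hη
    intro i τ hτ hne
    by_contra hlt
    exact hx ⟨i, mem_univ _, τ, hne, (Uo_le x _ hτ).1, (Uo_le x _ hτ).2, not_le.1 hlt⟩
  have h2 : ∀ x : Sym2 V → Bool,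
      ‖(𝔼 g : V → Bool, 𝔼 ε : Bool, ∏ i, Zt K a b x g ε (o i)) - ∏ i, zt K x (o i)‖ ≤ 2 := by
    intro x
    refine (norm_sub_le _ _).trans ?_
    have e1 : ‖𝔼 g : V → Bool, 𝔼 ε : Bool, ∏ i, Zt K a b x g ε (o i)‖ ≤ 1 :=
      (norm_avg_le _).trans (avg_le fun g => (norm_avg_le _).trans (avg_le fun ε =>
        norm_prod_Zt_le x g ε o))
    have e2 : ‖∏ i, zt K x (o i)‖ ≤ 1 := by
      rw [norm_prod]; exact prod_le_one (fun _ _ => norm_nonneg _) fun i _ => norm_zt_le _ _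
    linarith
  have hη0 : 0 ≤ η := (Real.exp_pos _).le.trans hη
  have h3 := avg_le_Pr_add (f := fun x : Sym2 V → Bool =>
    ‖(𝔼 g : V → Bool, 𝔼 ε : Bool, ∏ i, Zt K a b x g ε (o i)) - ∏ i, zt K x (o i)‖ / 2)
    (c := η / 2) (by positivity) (fun x => by have := h2 x; linarith)
    (fun x hx => by have := h1 x hx; linarith)
  rw [← expect_div] at h3
  have h4 := Pr_exists_le_card (univ : Finset ι)
    (fun i x => BadSL (p := p i) K W₁ a b G₀ (fun _ => 0) x) (fun i _ => hSL i)
  rw [card_univ] at h4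
  linarith

/-- Only the frequency at the prime `2` is nonzero: the edge `s(a, b)` averages it out. -/
lemma onestep_case2 (o : ∀ i, Option (ZMod (p i))) (i₀ : ι) (h2 : p i₀ = 2) {θ₀ : ZMod (p i₀)}
    (h0 : o i₀ = some θ₀) (hθ : θ₀ ≠ 0) (ho : ∀ i ≠ i₀, ∀ θ ∈ o i, θ = 0)
    (x : Sym2 V → Bool) (g : V → Bool) :
    𝔼 ε : Bool, ∏ i, Zt K a b x g ε (o i) = 0 := by
  have e1 : ∀ ε, ∏ i, Zt K a b x g ε (o i) =
      Zt K a b x g ε (o i₀) * ∏ i ∈ univ.erase i₀, Zt K a b x g false (o i) := by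
    intro ε
    rw [← mul_prod_erase univ _ (mem_univ i₀)]
    congr 1
    refine prod_congr rfl fun i hi => ?_
    rw [Zt_eq x g ε (ho i (mem_erase.1 hi).1), Zt_eq x g false (ho i (mem_erase.1 hi).1)]
  have e2 : chi (-θ₀) = -1 := by
    have e3 : chi (-θ₀) * chi (-θ₀) = 1 := by
      rw [← chi_add]
      have : -θ₀ + -θ₀ = 0 := by
        have h22 : ((2 : ℕ) : ZMod (p i₀)) = 0 := by
          rw [ZMod.natCast_eq_zero_iff, h2]
        push_cast at h22
        linear_combination (-θ₀) * h22
      rw [this, chi_zero]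
    rcases mul_self_eq_one_iff.1 e3 with h | h
    · exact absurd (chi_eq_one h) (neg_ne_zero.2 hθ)
    · exact h
  simp_rw [e1]
  rw [← expect_mul, avg_bool, h0]
  have e3 : Zt K a b x g true (some θ₀) = -Zt K a b x g false (some θ₀) := by
    simp only [Zt, Option.elim, bt_true, bt_false]
    rw [show θ₀ * (qf x K (rowX (ZMod (p i₀)) K a b x g) - 1 - groundDeg (ZMod (p i₀)) x K a b) =
      θ₀ * (qf x K (rowX (ZMod (p i₀)) K a b x g) - 0 - groundDeg (ZMod (p i₀)) x K a b) + (-θ₀) by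
        ring, chi_add, e2]
    ring
  rw [e3]; simp

end onestep

/-! ### Cauchy–Schwarz over half of the swaps -/

section onestep
variable {V : Type*} [Fintype V] [DecidableEq V]
variable {ι : Type*} [Fintype ι] [DecidableEq ι] {p : ι → ℕ} [∀ i, Fact (p i).Prime]
variable {K W₁ W₂ : Finset V} {a b : V}

/-- The difference of two swapped rows which agree on `W₁`. -/
def diffF (F : Type*) [Field F] (K W₁ : Finset V) (a b : V) (z z' : V → Bool)
    (x : Sym2 V → Bool) (j : V) : F :=
  if j ∈ K ∨ j ∈ W₁ then 0 else (bt (z j) - bt (z' j)) * (bt (x s(j, b)) - bt (x s(j, a)))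

lemma rowX_diff {F : Type*} [Field F] (x : Sym2 V → Bool) (g z z' : V → Bool) (j : V) :
    rowX F K a b x (W₁.piecewise g z) j - rowX F K a b x (W₁.piecewise g z') j =
      diffF F K W₁ a b z z' x j := by
  unfold rowX diffF
  by_cases h : j ∈ K
  · simp [h]
  · by_cases h' : j ∈ W₁
    · simp [h, h']
    · simp [h, h']; ring

lemma PerpX.sub {F : Type*} [Field F] {x : Sym2 V → Bool} {X Y : V → F} (hX : PerpX x K X)
    (hY : PerpX x K Y) : PerpX x K (fun j => X j - Y j) := by
  intro u hu
  have h1 := hX u hu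
  have h2 := hY u hu
  simp only [mul_sub, sum_sub_distrib, h1, h2, sub_zero]

/-- The product of a Fourier term with the conjugate of the term for another value of the swaps
outside `W₁` is linear in the row. -/
lemma Zt_mul_conj {p : ℕ} [Fact p.Prime] (x : Sym2 V → Bool) (z z' : V → Bool) (ε : Bool)
    (o : Option (ZMod p)) (hF : o ≠ none → PerpX x K (diffF (ZMod p) K W₁ a b z z' x))
    (g : V → Bool) :
    Zt K a b x (W₁.piecewise g z) ε o * (starRingEnd ℂ) (Zt K a b x (W₁.piecewise g z') ε o) =
      (if ∀ u ∈ Uo K x o, ∑ j, u j * rowX (ZMod p) K a b x (W₁.piecewise g z) j = 0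
        then 1 else 0) *
      chi (o.elim 0 (fun θ => θ * (-∑ j, diffF (ZMod p) K W₁ a b z z' x j +
          ∑ j, solX x K (diffF (ZMod p) K W₁ a b z z' x) j * diffF (ZMod p) K W₁ a b z z' x j)) +
        ∑ j, o.elim 0 (fun θ => -(2 * θ) * solX x K (diffF (ZMod p) K W₁ a b z z' x) j) *
          rowX (ZMod p) K a b x (W₁.piecewise g z) j) := by
  cases o with
  | none => simp [Zt, Uo, chi_zero]
  | some θ =>
    have hF' := hF (by simp)
    set X := rowX (ZMod p) K a b x (W₁.piecewise g z) with hX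
    set X' := rowX (ZMod p) K a b x (W₁.piecewise g z') with hX'
    set D := diffF (ZMod p) K W₁ a b z z' x with hD
    have hd : ∀ j, X j - X' j = D j := fun j => rowX_diff x g z z' j
    have hiff : (∀ u ∈ Uo K x (some θ), ∑ j, u j * X j = 0) ↔ PerpX x K X := Iff.rfl
    simp only [Zt, Option.elim, ← hX, ← hX']
    by_cases h : PerpX x K X
    · have h' : PerpX x K X' := by
        have := h.sub hF'
        have e : (fun j => X j - D j) = X' := by funext j; rw [← hd j]; ring
        rwa [e] at this
      have hq := qf_diff h h' (solX_ground hF') (fun i hi => by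
        rw [solX_free hF' i hi, hd])
      simp only [hd] at hq
      rw [if_pos h, if_pos h', if_pos (hiff.2 h), one_mul, one_mul, one_mul, ← chi_neg, ← chi_add]
      congr 1
      have e2 : ∑ j, -(2 * θ) * solX x K D j * X j = -(2 * θ) * ∑ j, solX x K D j * X j := by
        rw [mul_sum]; exact sum_congr rfl fun j _ => by ring
      rw [e2]
      linear_combination θ * hq
    · rw [if_neg h, if_neg (fun h2 => h (hiff.1 h2))]; simp

lemma Zt_mul_conj_zero {p : ℕ} [Fact p.Prime] (x : Sym2 V → Bool) (z z' : V → Bool) (ε : Bool)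
    {o : Option (ZMod p)} (ho : o ≠ none)
    (hF : ¬ PerpX x K (diffF (ZMod p) K W₁ a b z z' x)) (g : V → Bool) :
    Zt K a b x (W₁.piecewise g z) ε o * (starRingEnd ℂ) (Zt K a b x (W₁.piecewise g z') ε o) =
      0 := by
  cases o with
  | none => simp at ho
  | some θ =>
    simp only [Zt, Option.elim]
    by_cases h : PerpX x K (rowX (ZMod p) K a b x (W₁.piecewise g z))
    · by_cases h' : PerpX x K (rowX (ZMod p) K a b x (W₁.piecewise g z'))
      · exfalso; apply hF
        have := h.sub h'
        simpa only [rowX_diff] using this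
      · rw [if_neg h']; simp
    · rw [if_neg h]; simp

/-- The key decoupled estimate. -/
lemma decoupled_le {c G₀ : ℝ} (hc0 : 0 ≤ c) (hc : JointC p c) (hK : Disjoint W₁ K)
    (o : ∀ i, Option (ZMod (p i))) (i₀ : ι) (h2 : p i₀ ≠ 2) {θ₀ : ZMod (p i₀)}
    (h0 : o i₀ = some θ₀) (hθ : θ₀ ≠ 0) (x : Sym2 V → Bool) (z z' : V → Bool) (ε : Bool)
    (hne : ∃ j, j ∉ K ∧ j ∉ W₁ ∧ z j ≠ z' j ∧ x s(j, a) ≠ x s(j, b))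
    (hgood : ¬ BadSL K W₁ a b G₀
      (fun x j => -(2 * θ₀) * diffF (ZMod (p i₀)) K W₁ a b z z' x j) x) :
    ‖𝔼 g : V → Bool, (∏ i, Zt K a b x (W₁.piecewise g z) ε (o i)) *
      (starRingEnd ℂ) (∏ i, Zt K a b x (W₁.piecewise g z') ε (o i))‖ ≤
      Real.exp (-(c * G₀)) := by
  simp_rw [map_prod, ← prod_mul_distrib]
  by_cases hF : ∀ i, o i ≠ none → PerpX x K (diffF (ZMod (p i)) K W₁ a b z z' x)
  · simp_rw [fun g i => Zt_mul_conj x z z' ε (o i) (hF i) g]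
    refine norm_avg_perp_le hc0 hc hK x z (fun i => Uo K x (o i)) _
      (fun i j => (o i).elim 0 (fun θ =>
        -(2 * θ) * solX x K (diffF (ZMod (p i)) K W₁ a b z z' x) j)) i₀ ?_
    intro τ hτ
    by_contra hlt
    have hF0 := hF i₀ (by simp [h0])
    have hτ' := Uo_le x _ hτ
    refine hgood ⟨fun j => τ j + -(2 * θ₀) * solX x K (diffF (ZMod (p i₀)) K W₁ a b z z' x) j,
      ?_, ?_, ?_, ?_⟩
    · intro hzero
      obtain ⟨j, hj1, hj2, hj3, hj4⟩ := hne
      have e1 : lap x (fun j => τ j + -(2 * θ₀) *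
          solX x K (diffF (ZMod (p i₀)) K W₁ a b z z' x) j) j = 0 := by
        rw [hzero, lap_zero]; rfl
      have e2 : (fun j => τ j + -(2 * θ₀) * solX x K (diffF (ZMod (p i₀)) K W₁ a b z z' x) j) =
          τ + (-(2 * θ₀)) • solX x K (diffF (ZMod (p i₀)) K W₁ a b z z' x) := rfl
      rw [e2, lap_add, lap_smul, Pi.add_apply, Pi.smul_apply, hτ'.2 j hj1, solX_free hF0 j hj1,
        zero_add, smul_eq_mul] at e1
      have e3 : (2 : ZMod (p i₀)) ≠ 0 := by
        intro h
        have : ((2 : ℕ) : ZMod (p i₀)) = 0 := by exact_mod_cast h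
        rw [ZMod.natCast_eq_zero_iff] at this
        exact h2 ((Nat.prime_dvd_prime_iff_eq (Fact.out) Nat.prime_two).1 this)
      have e4 : diffF (ZMod (p i₀)) K W₁ a b z z' x j ≠ 0 := by
        unfold diffF
        rw [if_neg (by tauto)]
        revert hj3 hj4
        cases z j <;> cases z' j <;> cases x s(j, a) <;> cases x s(j, b) <;> simp
      exact mul_ne_zero (neg_ne_zero.2 (mul_ne_zero e3 hθ)) e4 e1
    · intro j hj
      simp [hτ'.1 j hj, solX_ground hF0 j hj]
    · intro j hj
      have e2 : (fun j => τ j + -(2 * θ₀) * solX x K (diffF (ZMod (p i₀)) K W₁ a b z z' x) j) =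
          τ + (-(2 * θ₀)) • solX x K (diffF (ZMod (p i₀)) K W₁ a b z z' x) := rfl
      rw [e2, lap_add, lap_smul, Pi.add_apply, Pi.smul_apply, hτ'.2 j hj, solX_free hF0 j hj,
        zero_add, smul_eq_mul]
    · rw [not_le, h0] at hlt
      exact hlt
  · push Not at hF
    obtain ⟨i, hi, hP⟩ := hF
    have : ∀ g : V → Bool, ∏ i, Zt K a b x (W₁.piecewise g z) ε (o i) *
        (starRingEnd ℂ) (Zt K a b x (W₁.piecewise g z') ε (o i)) = 0 := fun g =>
      prod_eq_zero (mem_univ i) (Zt_mul_conj_zero x z z' ε hi hP g)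
    simp only [this, expect_const_zero, norm_zero]
    exact (Real.exp_pos _).le

end onestep

/-! ### Characters without a quadratic part -/

/-- Decoupling by the Cauchy–Schwarz inequality in the coordinates outside `S`. -/
lemma cs_decouple {V : Type*} [Fintype V] [DecidableEq V] (S : Finset V) (H : (V → Bool) → ℂ) :
    ‖𝔼 g, H g‖ ^ 2 ≤ 𝔼 z : V → Bool, 𝔼 z' : V → Bool,
      ‖𝔼 g : V → Bool, H (S.piecewise g z) * (starRingEnd ℂ) (H (S.piecewise g z'))‖ := by
  rw [resample_piecewise S H, expect_comm]
  refine (norm_avg_sq_le _).trans ?_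
  have h1 : ((𝔼 g : V → Bool, ‖𝔼 z : V → Bool, H (S.piecewise g z)‖ ^ 2 : ℝ) : ℂ) =
      𝔼 z : V → Bool, 𝔼 z' : V → Bool, 𝔼 g : V → Bool,
        H (S.piecewise g z) * (starRingEnd ℂ) (H (S.piecewise g z')) := by
    rw [Fintype.expect_eq_sum_div_card]
    push_cast
    have : ∀ g : V → Bool, ((‖𝔼 z : V → Bool, H (S.piecewise g z)‖ : ℝ) : ℂ) ^ 2 =
        𝔼 z : V → Bool, 𝔼 z' : V → Bool,
          H (S.piecewise g z) * (starRingEnd ℂ) (H (S.piecewise g z')) := by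
      intro g
      have := norm_avg_sq_eq (fun z : V → Bool => H (S.piecewise g z))
      push_cast at this
      exact this
    simp_rw [this]
    have e := Fintype.expect_eq_sum_div_card (fun g : V → Bool => 𝔼 z : V → Bool, 𝔼 z' : V → Bool,
          H (S.piecewise g z) * (starRingEnd ℂ) (H (S.piecewise g z')))
    rw [← e, expect_comm]
    exact expect_congr rfl fun z _ => expect_comm _ _ _
  have h2 : (𝔼 g : V → Bool, ‖𝔼 z : V → Bool, H (S.piecewise g z)‖ ^ 2 : ℝ) ≤
      ‖((𝔼 g : V → Bool, ‖𝔼 z : V → Bool, H (S.piecewise g z)‖ ^ 2 : ℝ) : ℂ)‖ := by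
    rw [Complex.norm_real]; exact le_abs_self _
  refine h2.trans ?_
  rw [h1]
  exact (norm_avg_le _).trans (avg_mono fun z => norm_avg_le _)

section onestep
variable {V : Type*} [Fintype V] [DecidableEq V]
variable {ι : Type*} [Fintype ι] [DecidableEq ι] {p : ι → ℕ} [∀ i, Fact (p i).Prime]
variable {K W₁ : Finset V} {a b : V}

lemma admSL_diffF {p : ℕ} [Fact p.Prime] (ha : a ∈ K) (hb : b ∈ K) (c : ZMod p)
    (z z' : V → Bool) :
    AdmSL K W₁ (fun x j => c * diffF (ZMod p) K W₁ a b z z' x j) := by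
  refine ⟨fun x y h => ?_, fun x j hj => ?_⟩
  · funext j
    simp only [diffF, h j a ha, h j b hb]
  · simp [diffF, hj]

/-- Some frequency of a Schur complement at an odd prime is nonzero. -/
lemma onestep_case1 {c G₀ η : ℝ} (hc0 : 0 ≤ c) (hc : JointC p c) (hK : Disjoint W₁ K)
    (ha : a ∈ K) (hb : b ∈ K)
    (hη : Real.exp (-(c * G₀)) ≤ η)
    (hSL : ∀ i G, AdmSL K W₁ G → Pr (BadSL (p := p i) K W₁ a b G₀ G) ≤ η)
    (hT : 𝔼 z : V → Bool, 𝔼 z' : V → Bool, Pr (fun x : Sym2 V → Bool =>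
      ¬ ∃ j, j ∉ K ∧ j ∉ W₁ ∧ z j ≠ z' j ∧ x s(j, a) ≠ x s(j, b)) ≤ η)
    (o : ∀ i, Option (ZMod (p i))) (i₀ : ι) (h2 : p i₀ ≠ 2) {θ₀ : ZMod (p i₀)}
    (h0 : o i₀ = some θ₀) (hθ : θ₀ ≠ 0) :
    𝔼 x : Sym2 V → Bool, ‖𝔼 g : V → Bool, 𝔼 ε : Bool, ∏ i, Zt K a b x g ε (o i)‖ ≤
      Real.sqrt (3 * η) := by
  have hη0 : 0 ≤ η := (Real.exp_pos _).le.trans hη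
  refine Real.le_sqrt_of_sq_le ?_
  refine (avg_sq_le _).trans ?_
  have h1 : ∀ x : Sym2 V → Bool,
      ‖𝔼 g : V → Bool, 𝔼 ε : Bool, ∏ i, Zt K a b x g ε (o i)‖ ^ 2 ≤
        𝔼 ε : Bool, 𝔼 z : V → Bool, 𝔼 z' : V → Bool,
          ‖𝔼 g : V → Bool, (∏ i, Zt K a b x (W₁.piecewise g z) ε (o i)) *
            (starRingEnd ℂ) (∏ i, Zt K a b x (W₁.piecewise g z') ε (o i))‖ := by
    intro x
    rw [expect_comm]
    exact (norm_avg_sq_le _).trans (avg_mono fun ε =>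
      cs_decouple W₁ (fun g => ∏ i, Zt K a b x g ε (o i)))
  refine (avg_mono h1).trans ?_
  rw [expect_comm]
  refine avg_le fun ε => ?_
  rw [expect_comm]
  have h3 : ∀ z : V → Bool, 𝔼 x : Sym2 V → Bool, 𝔼 z' : V → Bool,
          ‖𝔼 g : V → Bool, (∏ i, Zt K a b x (W₁.piecewise g z) ε (o i)) *
            (starRingEnd ℂ) (∏ i, Zt K a b x (W₁.piecewise g z') ε (o i))‖ ≤
      (𝔼 z' : V → Bool, Pr (fun x : Sym2 V → Bool =>
        ¬ ∃ j, j ∉ K ∧ j ∉ W₁ ∧ z j ≠ z' j ∧ x s(j, a) ≠ x s(j, b))) + (2 * η) := by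
    intro z
    rw [expect_comm, ← Fintype.expect_const (ι := V → Bool) (2 * η), ← expect_add_distrib]
    refine avg_mono fun z' => ?_
    have h4 := avg_le_Pr_add (f := fun x : Sym2 V → Bool =>
        ‖𝔼 g : V → Bool, (∏ i, Zt K a b x (W₁.piecewise g z) ε (o i)) *
            (starRingEnd ℂ) (∏ i, Zt K a b x (W₁.piecewise g z') ε (o i))‖)
      (E := fun x => (¬ ∃ j, j ∉ K ∧ j ∉ W₁ ∧ z j ≠ z' j ∧ x s(j, a) ≠ x s(j, b)) ∨
        BadSL K W₁ a b G₀ (fun x j => -(2 * θ₀) * diffF (ZMod (p i₀)) K W₁ a b z z' x j) x)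
      (c := η) hη0 ?_ ?_
    · have h5 := Pr_or (fun x : Sym2 V → Bool =>
          ¬ ∃ j, j ∉ K ∧ j ∉ W₁ ∧ z j ≠ z' j ∧ x s(j, a) ≠ x s(j, b))
        (BadSL K W₁ a b G₀ (fun x j => -(2 * θ₀) * diffF (ZMod (p i₀)) K W₁ a b z z' x j))
      have h6 := hSL i₀ _ (admSL_diffF (W₁ := W₁) ha hb (-(2 * θ₀)) z z')
      linarith
    · intro x
      refine (norm_avg_le _).trans (avg_le fun g => ?_)
      rw [norm_mul, RCLike.norm_conj]
      exact mul_le_one₀ (norm_prod_Zt_le _ _ _ _) (norm_nonneg _) (norm_prod_Zt_le _ _ _ _)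
    · intro x hx
      rw [not_or, not_not] at hx
      exact (decoupled_le hc0 hc hK o i₀ h2 h0 hθ x z z' ε hx.1 hx.2).trans hη
  refine (avg_mono h3).trans ?_
  rw [expect_add_distrib, Fintype.expect_const]
  linarith

end onestep

/-! ### The one-step transition estimate -/

section onestep
variable {V : Type*} [Fintype V] [DecidableEq V]
variable {ι : Type*} [Fintype ι] [DecidableEq ι] {p : ι → ℕ} [∀ i, Fact (p i).Prime]
variable {K W₁ : Finset V} {a b : V}

/-- The Fourier coefficients of a function of the new corank, given the old corank `r`. -/
def cf (p : ℕ) [Fact p.Prime] (f : ℕ → ℝ) (r : ℕ) (o : Option (ZMod p)) : ℝ :=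
  o.elim (f (r - 1)) fun θ => (if θ = 0 then f r - f (r - 1) else 0) + (f (r + 1) - f r) / p

/-- An upper bound for the absolute values of the coefficients `cf`. -/
def cb (p : ℕ) [Fact p.Prime] (o : Option (ZMod p)) : ℝ :=
  o.elim 1 fun θ => (if θ = 0 then 1 else 0) + 1 / p

/-- The transition operator of the limiting Markov chain of coranks modulo `p`. -/
def Pi (p : ℕ) (f : ℕ → ℝ) (r : ℕ) : ℝ :=
  f (r - 1) + (f r - f (r - 1)) * ((p : ℝ) ^ r)⁻¹ + (f (r + 1) - f r) * ((p : ℝ) ^ (r + 1))⁻¹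

lemma cb_nonneg {p : ℕ} [Fact p.Prime] (o : Option (ZMod p)) : 0 ≤ cb p o := by
  cases o with
  | none => simp [cb]
  | some θ => simp only [cb, Option.elim]; split_ifs <;> positivity

lemma sum_cb {p : ℕ} [Fact p.Prime] : ∑ o, cb p o = 3 := by
  have hp : (p : ℝ) ≠ 0 := by exact_mod_cast (Fact.out : p.Prime).ne_zero
  rw [Fintype.sum_option]
  simp only [cb, Option.elim, sum_add_distrib, sum_ite_eq', mem_univ, if_true]
  simp [hp]; norm_num

lemma abs_cf_le {p : ℕ} [Fact p.Prime] {f : ℕ → ℝ} (h0 : ∀ r, 0 ≤ f r) (h1 : ∀ r, f r ≤ 1)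
    (r : ℕ) (o : Option (ZMod p)) : |cf p f r o| ≤ cb p o := by
  have hd : ∀ s t, |f s - f t| ≤ 1 := fun s t => by
    rw [abs_le]; constructor <;> linarith [h0 s, h1 s, h0 t, h1 t]
  cases o with
  | none => simp only [cf, cb, Option.elim]; rw [abs_le]; constructor <;> linarith [h0 (r - 1), h1 (r - 1)]
  | some θ =>
    simp only [cf, cb, Option.elim]
    refine (abs_add_le _ _).trans (add_le_add ?_ ?_)
    · split_ifs
      · exact hd _ _
      · simp
    · rw [abs_div, Nat.abs_cast]; gcongr; exact hd _ _

lemma sum_cf_zt {p : ℕ} [Fact p.Prime] (f : ℕ → ℝ) (x : Sym2 V → Bool) :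
    ∑ o : Option (ZMod p), (cf p f (Module.finrank (ZMod p) (KerK (ZMod p) x K)) o : ℂ) * zt K x o =
      (Pi p f (Module.finrank (ZMod p) (KerK (ZMod p) x K)) : ℂ) := by
  rw [Fintype.sum_option]
  simp only [cf, zt, Option.elim, mul_ite, mul_zero, sum_ite_eq', mem_univ, if_true, Pi]
  push_cast
  rw [pow_succ, mul_inv]
  ring

lemma sum_cf_Zt {p : ℕ} [Fact p.Prime] (hab : a ≠ b) (ha : a ∈ K) (hb : b ∈ K) (f : ℕ → ℝ)
    (x : Sym2 V → Bool) (g : V → Bool) (ε : Bool) :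
    ∑ o : Option (ZMod p), (cf p f (Module.finrank (ZMod p) (KerK (ZMod p) x K)) o : ℂ) *
        Zt K a b x g ε o =
      (f (Module.finrank (ZMod p) (KerK (ZMod p) (act hab ha hb x g ε) (K.erase a))) : ℂ) := by
  rw [step_eq hab ha hb f x g ε, Fintype.sum_option]
  set q := qf x K (rowX (ZMod p) K a b x g) - bt ε - groundDeg (ZMod p) x K a b with hq
  set r := Module.finrank (ZMod p) (KerK (ZMod p) x K)
  have h := avg_chi_mul (p := p) q
  rw [Fintype.expect_eq_sum_div_card, ZMod.card] at h
  simp only [cf, Zt, Option.elim, ← hq]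
  push_cast
  by_cases hP : PerpX x K (rowX (ZMod p) K a b x g)
  · simp only [hP, if_true, true_and, one_mul, mul_one, add_mul, sum_add_distrib, ← mul_sum]
    have e1 : ∑ θ : ZMod p, ((if θ = 0 then ((f r : ℂ) - f (r - 1)) else 0) * chi (θ * q)) =
        f r - f (r - 1) := by simp [chi_zero]
    have e2 : ∑ θ : ZMod p, chi (θ * q) = (p : ℂ) * if q = 0 then 1 else 0 := by
      rw [← h]
      have : (p : ℂ) ≠ 0 := by exact_mod_cast (Fact.out : p.Prime).ne_zero
      rw [mul_div_cancel₀ _ this]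
    rw [e2]
    have : (p : ℂ) ≠ 0 := by exact_mod_cast (Fact.out : p.Prime).ne_zero
    have e3 : ∀ θ : ZMod p, (((if θ = 0 then (f r - f (r - 1)) else 0 : ℝ)) : ℂ) =
      if θ = 0 then ((f r : ℂ) - f (r - 1)) else 0 := fun θ => by split_ifs <;> push_cast <;> rfl
    simp only [apply_ite Complex.ofReal, Complex.ofReal_one, Complex.ofReal_zero] at *
    push_cast
    rw [e1]
    field_simp
    ring
  · simp [hP]

/-- **One step of the chain.** Ungrounding one vertex acts on the joint law of the coranks like
the product of the transition operators. -/
theorem one_step {c G₀ η : ℝ} (hc0 : 0 ≤ c) (hc : JointC p c) (hp : Function.Injective p)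
    (hK : Disjoint W₁ K) (hab : a ≠ b) (ha : a ∈ K) (hb : b ∈ K)
    (hη : Real.exp (-(c * G₀)) ≤ η)
    (hSL : ∀ i G, AdmSL K W₁ G → Pr (BadSL (p := p i) K W₁ a b G₀ G) ≤ η)
    (hT : 𝔼 z : V → Bool, 𝔼 z' : V → Bool, Pr (fun x : Sym2 V → Bool =>
      ¬ ∃ j, j ∉ K ∧ j ∉ W₁ ∧ z j ≠ z' j ∧ x s(j, a) ≠ x s(j, b)) ≤ η)
    (f : ι → ℕ → ℝ) (h0 : ∀ i r, 0 ≤ f i r) (h1 : ∀ i r, f i r ≤ 1) :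
    |(𝔼 x : Sym2 V → Bool,
        ∏ i, f i (Module.finrank (ZMod (p i)) (KerK (ZMod (p i)) x (K.erase a)))) -
      𝔼 x : Sym2 V → Bool,
        ∏ i, Pi (p i) (f i) (Module.finrank (ZMod (p i)) (KerK (ZMod (p i)) x K))| ≤
      3 ^ Fintype.card ι * (2 * (Fintype.card ι * η) + η + Real.sqrt (3 * η)) := by
  have hη0 : 0 ≤ η := (Real.exp_pos _).le.trans hη
  set δ := 2 * (Fintype.card ι * η) + η + Real.sqrt (3 * η) with hδ
  -- every nontrivial Fourier term is small on average
  have key : ∀ o : ∀ i, Option (ZMod (p i)),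
      𝔼 x : Sym2 V → Bool, ‖(𝔼 g : V → Bool, 𝔼 ε : Bool, ∏ i, Zt K a b x g ε (o i)) -
        ∏ i, zt K x (o i)‖ ≤ δ := by
    intro o
    have hs := Real.sqrt_nonneg (3 * η)
    have hc' : 0 ≤ 2 * (Fintype.card ι * η) + η := by positivity
    by_cases hz : ∀ i, ∀ θ ∈ o i, θ = 0
    · refine (onestep_case3 hc0 hc hK hη (fun i => hSL i _ ⟨fun _ _ _ => rfl, fun _ _ _ => rfl⟩)
        o hz).trans ?_
      linarith
    · push Not at hz
      obtain ⟨i₁, θ₁, ho₁, hθ₁⟩ := hz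
      have hzero : ∀ x : Sym2 V → Bool, ∏ i, zt K x (o i) = 0 := fun x =>
        prod_eq_zero (mem_univ i₁) (by rw [Option.mem_def.1 ho₁]; simp [zt, hθ₁])
      simp only [hzero, sub_zero]
      by_cases hodd : ∃ i, p i ≠ 2 ∧ ∃ θ ∈ o i, θ ≠ 0
      · obtain ⟨i₀, h2, θ₀, ho, hθ⟩ := hodd
        refine (onestep_case1 hc0 hc hK ha hb hη hSL hT o i₀ h2 ho hθ).trans ?_
        linarith
      · push Not at hodd
        have h2 : p i₁ = 2 := by
          by_contra h
          exact hθ₁ (hodd i₁ h θ₁ ho₁)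
        have := fun x g => onestep_case2 (K := K) (a := a) (b := b) o i₁ h2 ho₁ hθ₁
          (fun i hi θ hθ => hodd i (fun h => hi (hp (h.trans h2.symm))) θ hθ) x g
        simp only [this, expect_const_zero, norm_zero]
        linarith
  set r : (Sym2 V → Bool) → ∀ i, ℕ := fun x i =>
    Module.finrank (ZMod (p i)) (KerK (ZMod (p i)) x K) with hr
  have e1 : ((𝔼 x : Sym2 V → Bool,
        ∏ i, f i (Module.finrank (ZMod (p i)) (KerK (ZMod (p i)) x (K.erase a))) : ℝ) : ℂ) =
      𝔼 x : Sym2 V → Bool, ∑ o : ∀ i, Option (ZMod (p i)), (∏ i, (cf (p i) (f i) (r x i) (o i) : ℂ)) *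
        𝔼 g : V → Bool, 𝔼 ε : Bool, ∏ i, Zt K a b x g ε (o i) := by
    rw [avg_act hab ha hb]
    rw [Fintype.expect_eq_sum_div_card, Fintype.expect_eq_sum_div_card]
    push_cast
    congr 1
    refine sum_congr rfl fun x _ => ?_
    have c2 : ∀ g : V → Bool, 𝔼 ε : Bool, ∏ i, (f i (Module.finrank (ZMod (p i))
        (KerK (ZMod (p i)) (act hab ha hb x g ε) (K.erase a))) : ℂ) =
        𝔼 ε : Bool, ∑ o : ∀ i, Option (ZMod (p i)), (∏ i, (cf (p i) (f i) (r x i) (o i) : ℂ)) *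
          ∏ i, Zt K a b x g ε (o i) := by
      intro g
      refine expect_congr rfl fun ε _ => ?_
      simp_rw [← sum_cf_Zt hab ha hb]
      rw [Finset.prod_univ_sum]
      simp only [Fintype.piFinset_univ, prod_mul_distrib]
      rfl
    simp_rw [c2, mul_expect]
    rw [← expect_sum_comm]
    exact expect_congr rfl fun g _ => by rw [← expect_sum_comm]
  have e2 : ((𝔼 x : Sym2 V → Bool, ∏ i, Pi (p i) (f i) (r x i) : ℝ) : ℂ) =
      𝔼 x : Sym2 V → Bool, ∑ o : ∀ i, Option (ZMod (p i)), (∏ i, (cf (p i) (f i) (r x i) (o i) : ℂ)) *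
        ∏ i, zt K x (o i) := by
    rw [Fintype.expect_eq_sum_div_card, Fintype.expect_eq_sum_div_card]
    push_cast
    congr 1
    refine sum_congr rfl fun x _ => ?_
    simp only [hr]
    simp_rw [← sum_cf_zt]
    rw [Finset.prod_univ_sum]
    simp only [Fintype.piFinset_univ, prod_mul_distrib]
  rw [← Real.norm_eq_abs, ← Complex.norm_real]
  push_cast only [Complex.ofReal_sub]
  rw [e1, e2, ← expect_sub_distrib]
  simp_rw [← sum_sub_distrib, ← mul_sub]
  refine (norm_avg_le _).trans ?_
  have h3 : ∀ x : Sym2 V → Bool, ‖∑ o : ∀ i, Option (ZMod (p i)),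
      (∏ i, (cf (p i) (f i) (r x i) (o i) : ℂ)) *
        ((𝔼 g : V → Bool, 𝔼 ε : Bool, ∏ i, Zt K a b x g ε (o i)) - ∏ i, zt K x (o i))‖ ≤
      ∑ o : ∀ i, Option (ZMod (p i)), (∏ i, cb (p i) (o i)) *
        ‖(𝔼 g : V → Bool, 𝔼 ε : Bool, ∏ i, Zt K a b x g ε (o i)) - ∏ i, zt K x (o i)‖ := by
    intro x
    refine (norm_sum_le _ _).trans (sum_le_sum fun o _ => ?_)
    rw [norm_mul, norm_prod]
    refine mul_le_mul_of_nonneg_right ?_ (norm_nonneg _)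
    refine prod_le_prod (fun _ _ => norm_nonneg _) fun i _ => ?_
    rw [Complex.norm_real, Real.norm_eq_abs]
    exact abs_cf_le (h0 i) (h1 i) _ _
  refine (avg_mono h3).trans ?_
  rw [expect_sum_comm]
  simp_rw [← mul_expect]
  calc _ ≤ ∑ o : ∀ i, Option (ZMod (p i)), (∏ i, cb (p i) (o i)) * δ :=
        sum_le_sum fun o _ => mul_le_mul_of_nonneg_left (key o) (prod_nonneg fun i _ => cb_nonneg _)
    _ = (∏ i, ∑ o, cb (p i) o) * δ := by
        rw [← sum_mul, Finset.prod_univ_sum, Fintype.piFinset_univ]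
    _ = _ := by simp only [sum_cb, prod_const, card_univ]

end onestep

/-! ### Verification of the hypotheses of the one-step estimate -/

/-- Exponential moment of the number of disagreements along disjoint pairs of coordinates. -/
lemma avg_disagree {Q Θ : Type*} [Fintype Q] [DecidableEq Q] [Fintype Θ] [DecidableEq Θ]
    (e e' : Θ → Q) (he : Function.Injective e) (hd : ∀ t t', e t ≠ e' t') (s : ℝ) :
    𝔼 x : Q → Bool, ∏ t, (if x (e t) ≠ x (e' t) then s else 1) =
      ((1 + s) / 2) ^ Fintype.card Θ := by
  rw [resample_extend e he]
  obtain ⟨ψ, hψ⟩ : ∃ ψ : (Q → Bool) → Θ → Bool → ℝ,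
    ψ = fun x t β => if β ≠ x (e' t) then s else (1 : ℝ) := ⟨_, rfl⟩
  have h1 : ∀ (x : Q → Bool) (y : Θ → Bool),
      ∏ t, (if Function.extend e y x (e t) ≠ Function.extend e y x (e' t) then s else 1) =
        ∏ t, ψ x t (y t) := by
    intro x y
    rw [hψ]
    refine prod_congr rfl fun t _ => ?_
    rw [he.extend_apply, Function.extend_apply' _ _ _ (by rintro ⟨t', h⟩; exact hd _ _ h)]
  simp_rw [h1, avg_prod_pi]
  have h2 : ∀ (x : Q → Bool) (t : Θ), 𝔼 β : Bool, ψ x t β = (1 + s) / 2 := by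
    intro x t
    rw [avg_bool, hψ]
    rcases hx : x (e' t) with _ | _ <;> simp [hx, add_comm]
  simp only [h2, prod_const, card_univ, Fintype.expect_const]

section verify
variable {V : Type*} [Fintype V] [DecidableEq V] {K W₁ : Finset V} {a b : V}

lemma avg_disagree_star (S : Finset V) (hab : a ≠ b) (ha : a ∉ S) (hb : b ∉ S) (s : ℝ) :
    𝔼 x : Sym2 V → Bool, ∏ j ∈ S, (if x s(j, a) ≠ x s(j, b) then s else 1) =
      ((1 + s) / 2) ^ S.card := by
  have h := avg_disagree (Q := Sym2 V) (Θ := {j // j ∈ S}) (fun j => s(j.1, a)) (fun j => s(j.1, b))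
    (fun i j h => by
      rcases Sym2.eq_iff.1 h with ⟨h1, _⟩ | ⟨h1, _⟩
      · exact Subtype.ext h1
      · exact absurd (h1 ▸ i.2) ha) (fun i j h => by
      rcases Sym2.eq_iff.1 h with ⟨_, h1⟩ | ⟨h1, _⟩
      · exact hab h1
      · exact hb (h1 ▸ i.2)) s
  rw [Fintype.card_coe] at h
  rw [← h]
  refine expect_congr rfl fun x _ => ?_
  rw [← prod_coe_sort S]

/-- Lower tail of the number of vertices of `S` joined to exactly one of `a`, `b`. -/
lemma Pr_few_disagree (S : Finset V) (hab : a ≠ b) (ha : a ∉ S) (hb : b ∉ S) (m : ℕ) :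
    Pr (fun x : Sym2 V → Bool => (S.filter fun j => x s(j, a) ≠ x s(j, b)).card < m) ≤
      3 ^ m * (2 / 3) ^ S.card := by
  have h := avg_disagree_star S hab ha hb (1 / 3)
  have h1 := Pr_markov (f := fun x : Sym2 V → Bool =>
    ∏ j ∈ S, (if x s(j, a) ≠ x s(j, b) then (1 / 3 : ℝ) else 1))
    (fun x => prod_nonneg fun j _ => by split_ifs <;> norm_num) (c := (1 / 3) ^ m) (by positivity)
  rw [h] at h1
  refine (Pr_mono fun x hx => ?_).trans (h1.trans (le_of_eq ?_))
  · rw [prod_ite, prod_const, prod_const_one, mul_one]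
    exact pow_le_pow_of_le_one (by norm_num) (by norm_num) hx.le
  · rw [one_div, inv_pow, div_inv_eq_mul, mul_comm]; norm_num

lemma hT_bound (hab : a ≠ b) (ha : a ∈ K) (hb : b ∈ K) {m : ℕ}
    (hm : m ≤ (univ.filter fun j => j ∉ K ∧ j ∉ W₁).card) :
    𝔼 z : V → Bool, 𝔼 z' : V → Bool, Pr (fun x : Sym2 V → Bool =>
      ¬ ∃ j, j ∉ K ∧ j ∉ W₁ ∧ z j ≠ z' j ∧ x s(j, a) ≠ x s(j, b)) ≤ (3 / 4) ^ m := by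
  set S := univ.filter fun j => j ∉ K ∧ j ∉ W₁ with hS
  rw [expect_comm]
  refine avg_le fun z' => ?_
  have h1 : ∀ x : Sym2 V → Bool, (𝔼 z : V → Bool, if ¬ ∃ j, j ∉ K ∧ j ∉ W₁ ∧ z j ≠ z' j ∧
      x s(j, a) ≠ x s(j, b) then (1 : ℝ) else 0) =
      ∏ j ∈ S, (if x s(j, a) ≠ x s(j, b) then (1 / 2) else 1) := by
    intro x
    obtain ⟨ψ, hψ⟩ : ∃ ψ : V → Bool → ℝ, ψ = fun j β =>
      if j ∈ S ∧ β ≠ z' j ∧ x s(j, a) ≠ x s(j, b) then (0 : ℝ) else 1 := ⟨_, rfl⟩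
    have h2 : ∀ z : V → Bool, (if ¬ ∃ j, j ∉ K ∧ j ∉ W₁ ∧ z j ≠ z' j ∧
      x s(j, a) ≠ x s(j, b) then (1 : ℝ) else 0) =
        ∏ j, ψ j (z j) := by
      intro z
      rw [hψ]
      by_cases h : ¬ ∃ j, j ∉ K ∧ j ∉ W₁ ∧ z j ≠ z' j ∧ x s(j, a) ≠ x s(j, b)
      · rw [if_pos h]
        symm; refine prod_eq_one fun j _ => if_neg fun hj => h ?_
        exact ⟨j, (mem_filter.1 hj.1).2.1, (mem_filter.1 hj.1).2.2, hj.2.1, hj.2.2⟩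
      · rw [if_neg h]
        rw [not_not] at h
        obtain ⟨j, h1, h2, h3, h4⟩ := h
        symm; refine prod_eq_zero (mem_univ j) (if_pos ⟨?_, h3, h4⟩)
        simp [hS, h1, h2]
    rw [expect_congr rfl fun z _ => h2 z, avg_prod_pi]
    rw [← prod_subset (subset_univ S)]
    · refine prod_congr rfl fun j hj => ?_
      rw [avg_bool, hψ]
      by_cases h : x s(j, a) = x s(j, b)
      · simp [h]
      · rcases hz : z' j with _ | _ <;> simp [h, hj, hz]
    · intro j _ hj
      simp [hψ, hj]
  simp only [Pr_def]
  rw [expect_comm, expect_congr rfl fun x _ => h1 x]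
  rw [avg_disagree_star S hab (by simp [hS, ha]) (by simp [hS, hb])]
  refine (le_of_eq (by norm_num)).trans (pow_le_pow_of_le_one (by norm_num) (by norm_num) hm)

lemma N2_ge_of_ne {p : ℕ} [Fact p.Prime] {t : ZMod p} (ht : t ≠ 0) : 1 / (p : ℝ) ^ 2 ≤ N2 t := by
  rw [N2_eq_natAbs, div_pow]
  gcongr
  have : 1 ≤ t.valMinAbs.natAbs := Nat.one_le_iff_ne_zero.2 (by simpa using ht)
  have h2 : (1 : ℝ) ≤ t.valMinAbs.natAbs := by exact_mod_cast this
  exact one_le_pow₀ h2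

lemma BadSL_bound {q p : ℕ} [Fact p.Prime] (hq : 10 ^ 6 ≤ q) (hp : p ≤ 2 ^ q ^ 31)
    (hV1 : q ^ 100 ≤ Fintype.card V) (hV2 : Fintype.card V ≤ 2 * q ^ 100)
    (hKc : K.card ≤ 3 * q ^ 20) (hab : a ≠ b) (ha : a ∈ K) (hb : b ∈ K) (hK : Disjoint W₁ K)
    (G : (Sym2 V → Bool) → V → ZMod p) (hG : AdmSL K W₁ G) :
    Pr (BadSL K W₁ a b ((q : ℝ) ^ 40) G) ≤
      3 ^ (q ^ 100 / 20 + 1) * (2 / 3) ^ W₁.card + Real.exp (-((q : ℝ) ^ 100 / 100)) := by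
  have hqpos : 0 < q := by omega
  set φ : Sym2 {j // j ∉ K} → Sym2 V := Sym2.map Subtype.val with hφdef
  have hφ : Function.Injective φ := Sym2.map.injective Subtype.val_injective
  -- edges meeting the ground set are not resampled
  have hnr : ∀ j, ∀ k ∈ K, ¬ ∃ e, φ e = s(j, k) := by
    rintro j k hk ⟨e, he⟩
    have : k ∈ φ e := he ▸ Sym2.mem_mk_right j k
    obtain ⟨w, -, hw⟩ := Sym2.mem_map.1 this
    exact w.2 (hw ▸ hk)
  have hext : ∀ (x : Sym2 V → Bool) (y : Sym2 {j // j ∉ K} → Bool) (j : V), ∀ k ∈ K,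
      Function.extend φ y x s(j, k) = x s(j, k) := fun x y j k hk =>
    Function.extend_apply' _ _ _ (hnr j k hk)
  set T : (Sym2 V → Bool) → Finset V := fun x => W₁.filter fun j => x s(j, a) ≠ x s(j, b) with hT
  have hTe : ∀ (x : Sym2 V → Bool) (y : Sym2 {j // j ∉ K} → Bool),
      T (Function.extend φ y x) = T x := by
    intro x y
    simp only [hT, hext x y _ a ha, hext x y _ b hb]
  have h0 : Pr (fun x : Sym2 V → Bool => (T x).card < q ^ 100 / 20 + 1) ≤
      3 ^ (q ^ 100 / 20 + 1) * (2 / 3) ^ W₁.card :=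
    Pr_few_disagree W₁ hab (fun h => disjoint_left.1 hK h ha) (fun h => disjoint_left.1 hK h hb) _
  rw [Pr_resample_extend φ hφ]
  refine le_trans ?_ (add_le_add h0 le_rfl)
  refine avg_le_Pr_add (Real.exp_pos _).le (fun x => Pr_le_one _) ?_
  intro x hx
  rw [not_lt] at hx
  have hTc : q ^ 100 ≤ 20 * (T x).card := by omega
  have hcardW : Fintype.card {j // j ∉ K} = Fintype.card V - K.card := by
    rw [Fintype.card_subtype_compl]; simp
  have hpow : 6 * q ^ 20 ≤ q ^ 100 := by
    calc 6 * q ^ 20 ≤ q ^ 80 * q ^ 20 := by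
          gcongr
          calc 6 ≤ q := by omega
            _ = q ^ 1 := (pow_one q).symm
            _ ≤ q ^ 80 := Nat.pow_le_pow_right hqpos (by norm_num)
      _ = q ^ 100 := by rw [← pow_add]
  set I : Finset {j // j ∉ K} := (T x).subtype (fun j => j ∉ K) with hI
  have hTK : ∀ j ∈ T x, j ∉ K := fun j hj => disjoint_left.1 hK (mem_filter.1 hj).1
  have hIc : I.card = (T x).card := by
    rw [hI, card_subtype, filter_true_of_mem hTK]
  have hsumI : ∀ v : V → ZMod p, ∑ i ∈ I, N2 (v i) = ∑ j ∈ T x, N2 (v j) := fun v =>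
    sum_subtype_of_mem (fun j => N2 (v j)) hTK
  set cdeg : V → ZMod p := fun i => ∑ k ∈ K, bt (x s(i, k)) with hcdeg
  refine le_trans (Pr_mono ?_) (SL_numeric hq hp (by rw [hcardW]; omega) (by rw [hcardW]; omega) I
    (by rw [hIc]; exact hTc) (fun v i => G x i + cdeg i * v i))
  rintro y ⟨v, hv0, hvK, hvL, hvs⟩
  have hlap : ∀ i : {j // j ∉ K}, lap y (fun j => v j.1) i = G x i + cdeg i * v i := by
    intro i
    have h1 := hvL i i.2
    rw [hG.1 _ x (fun j k hk => hext x y j k hk)] at h1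
    rw [← h1]
    unfold lap
    rw [← sum_add_sum_compl K, hcdeg, sum_mul]
    have e1 : ∑ j ∈ K, bt (Function.extend φ y x s(i.1, j)) * (v j - v i) =
        -∑ k ∈ K, bt (x s(i.1, k)) * v i := by
      rw [← sum_neg_distrib]
      exact sum_congr rfl fun k hk => by rw [hext x y _ k hk, hvK k hk]; ring
    have e2 : ∑ j ∈ Kᶜ, bt (Function.extend φ y x s(i.1, j)) * (v j - v i) =
        ∑ j : {j // j ∉ K}, bt (y s(i, j)) * (v j - v i) := by
      rw [sum_subtype Kᶜ (fun j => by simp : ∀ j, j ∈ Kᶜ ↔ j ∉ K)]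
      refine sum_congr rfl fun j _ => ?_
      have : s(i.1, j.1) = φ s(i, j) := rfl
      rw [this, hφ.extend_apply]
    rw [e1, e2]; ring
  have hvs' : ∑ i ∈ I, N2 (v i) < (q : ℝ) ^ 40 := by
    rw [hsumI]
    have := hvs
    change ∑ j ∈ T (Function.extend φ y x), N2 (v j) < _ at this
    rwa [hTe] at this
  refine ⟨fun j => v j.1, ?_, hlap, hvs'⟩
  by_contra hconst
  push Not at hconst
  obtain ⟨j₀, hj₀⟩ : ∃ j, v j ≠ 0 := by
    by_contra h; push Not at h; exact hv0 (funext h)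
  have hj₀K : j₀ ∉ K := fun h => hj₀ (hvK _ h)
  have hv1 : ∀ j ∉ K, v j = v j₀ := fun j hj => hconst ⟨j, hj⟩ ⟨j₀, hj₀K⟩
  have hcardpos : 0 < (T x).card := by
    have : 0 < q ^ 100 := by positivity
    omega
  by_cases hpK : p ≤ K.card
  · -- all entries are equal to a nonzero residue modulo a small prime
    rw [hsumI, sum_congr rfl (fun j hj => by rw [hv1 j (hTK j hj)]), sum_const, nsmul_eq_mul] at hvs'
    have h1 := N2_ge_of_ne hj₀
    have hp0 : (0 : ℝ) < p := p_pos
    have hp3 : (p : ℝ) ≤ 3 * q ^ 20 := by exact_mod_cast hpK.trans hKc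
    have h2 : (q : ℝ) ^ 100 ≤ 20 * (T x).card := by exact_mod_cast hTc
    have h3 : (p : ℝ) ^ 2 ≤ 9 * q ^ 40 := by nlinarith [hp3, hp0]
    have hq0 : (0 : ℝ) < q := by exact_mod_cast hqpos
    have h4 : (180 : ℝ) * q ^ 80 ≤ q ^ 100 := by
      have : (180 : ℝ) ≤ q ^ 20 := by
        have : (180 : ℕ) ≤ q ^ 20 := by
          calc 180 ≤ q := by omega
            _ = q ^ 1 := (pow_one q).symm
            _ ≤ q ^ 20 := Nat.pow_le_pow_right hqpos (by norm_num)
        exact_mod_cast this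
      calc (180 : ℝ) * (q : ℝ) ^ 80 ≤ (q : ℝ) ^ 20 * (q : ℝ) ^ 80 := by gcongr
        _ = (q : ℝ) ^ 100 := by ring
    have h5 : ((T x).card : ℝ) * (1 / (p : ℝ) ^ 2) < q ^ 40 :=
      lt_of_le_of_lt (by gcongr) hvs'
    rw [mul_one_div, div_lt_iff₀ (by positivity)] at h5
    have h6 : (q : ℝ) ^ 40 * p ^ 2 ≤ q ^ 40 * (9 * q ^ 40) := by gcongr
    nlinarith [h6, h5, h4, h2]
  · -- the degree into the ground set is invertible modulo a larger prime
    push Not at hpK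
    obtain ⟨i, hi⟩ := card_pos.1 hcardpos
    have hiK := hTK i hi
    have h1 := hlap ⟨i, hiK⟩
    have h2 : lap y (fun j : {j // j ∉ K} => v j.1) ⟨i, hiK⟩ = 0 := by
      unfold lap
      exact sum_eq_zero fun j _ => by
        simp only [hv1 j.1 j.2, hv1 i hiK, sub_self, mul_zero]
    rw [h2, hG.2 x i (mem_filter.1 hi).1, zero_add] at h1
    have h3 : cdeg i = ((K.filter fun k => x s(i, k)).card : ZMod p) := by
      simp only [hcdeg, bt]
      rw [sum_boole]
    rcases mul_eq_zero.1 h1.symm with h | h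
    · rw [h3, ZMod.natCast_eq_zero_iff] at h
      have h4 : (K.filter fun k => x s(i, k)).card ≤ K.card := card_filter_le _ _
      have h5 : 0 < (K.filter fun k => x s(i, k)).card := by
        rw [card_pos]
        have h6 := (mem_filter.1 hi).2
        rcases hxa : x s(i, a) with _ | _
        · refine ⟨b, mem_filter.2 ⟨hb, ?_⟩⟩
          rw [hxa] at h6
          simpa using h6.symm
        · exact ⟨a, mem_filter.2 ⟨ha, hxa⟩⟩
      exact absurd (Nat.le_of_dvd h5 h) (by omega)
    · exact hj₀ (by rw [← hv1 i hiK]; exact h)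

end verify

/-! ### The exposure chain -/

lemma pow_le_exp_mul {x y : ℝ} (hx : 0 ≤ x) (h : x ≤ Real.exp y) (n : ℕ) :
    x ^ n ≤ Real.exp (n * y) := by
  rw [Real.exp_nat_mul]; gcongr

lemma numeric_tail (M : ℕ) (hM : 10 ^ 6 ≤ M) {w : ℕ} (hw : M / 3 + 1 ≤ w) :
    (3 : ℝ) ^ (M / 20 + 1) * (2 / 3) ^ w ≤ Real.exp (-((M : ℝ) / 100)) := by
  have h1 : (3 : ℝ) ≤ Real.exp 2 := by linarith [Real.add_one_le_exp 2]
  have h2 : (2 / 3 : ℝ) ≤ Real.exp (-(1 / 3)) := by linarith [Real.add_one_le_exp (-(1 / 3 : ℝ))]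
  have h3 := pow_le_exp_mul (by norm_num) h1 (M / 20 + 1)
  have h4 := pow_le_exp_mul (by norm_num) h2 w
  refine (mul_le_mul h3 h4 (by positivity) (Real.exp_pos _).le).trans ?_
  rw [← Real.exp_add]
  refine Real.exp_le_exp.2 ?_
  have h5 : ((M / 20 + 1 : ℕ) : ℝ) ≤ M / 20 + 1 := by
    push_cast; gcongr; exact Nat.cast_div_le
  have h6 : (M : ℝ) / 3 ≤ w := by
    have : M ≤ 3 * w := by omega
    have : (M : ℝ) ≤ 3 * w := by exact_mod_cast this
    linarith
  have h7 : (10 : ℝ) ^ 6 ≤ M := by exact_mod_cast hM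
  linarith

section chain
variable {V : Type*} [Fintype V] [DecidableEq V]
variable {ι : Type*} [Fintype ι] [DecidableEq ι] {p : ι → ℕ} [∀ i, Fact (p i).Prime]
variable {a b : V}

/-- The error of one step of the chain, for the scale `q` and the character constant `c`. -/
def stepErr (m : ℕ) (c : ℝ) (q : ℕ) : ℝ :=
  3 ^ m * (2 * (m * Real.exp (-(c * (q : ℝ) ^ 40))) + Real.exp (-(c * (q : ℝ) ^ 40)) +
    Real.sqrt (3 * Real.exp (-(c * (q : ℝ) ^ 40))))

lemma stepErr_nonneg (m : ℕ) (c : ℝ) (q : ℕ) : 0 ≤ stepErr m c q := by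
  unfold stepErr; positivity

theorem step_numeric {q : ℕ} {c : ℝ} (hc0 : 0 ≤ c) (hc2 : c ≤ 2) (hc : JointC p c)
    (hpi : Function.Injective p) (hq : 10 ^ 6 ≤ q) (hp : ∀ i, p i ≤ 2 ^ q ^ 31)
    (hV1 : q ^ 100 ≤ Fintype.card V) (hV2 : Fintype.card V ≤ 2 * q ^ 100)
    (K : Finset V) (hKc : K.card ≤ 3 * q ^ 20) (hab : a ≠ b) (ha : a ∈ K) (hb : b ∈ K)
    (f : ι → ℕ → ℝ) (h0 : ∀ i r, 0 ≤ f i r) (h1 : ∀ i r, f i r ≤ 1) :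
    |(𝔼 x : Sym2 V → Bool,
        ∏ i, f i (Module.finrank (ZMod (p i)) (KerK (ZMod (p i)) x (K.erase a)))) -
      𝔼 x : Sym2 V → Bool,
        ∏ i, Pi (p i) (f i) (Module.finrank (ZMod (p i)) (KerK (ZMod (p i)) x K))| ≤
      stepErr (Fintype.card ι) c q := by
  have hqpos : 0 < q := by omega
  have hM6 : 10 ^ 6 ≤ q ^ 100 := hq.trans (Nat.le_self_pow (by norm_num) q)
  have hpow : 6 * q ^ 20 ≤ q ^ 100 / 10 := by
    rw [Nat.le_div_iff_mul_le (by norm_num)]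
    calc 6 * q ^ 20 * 10 = 60 * q ^ 20 := by ring
      _ ≤ q ^ 80 * q ^ 20 := by
          gcongr
          exact le_trans (by omega : 60 ≤ q) (Nat.le_self_pow (by norm_num) q)
      _ = q ^ 100 := by rw [← pow_add]
  obtain ⟨W₁, hW₁, hW₁c⟩ := exists_subset_card_eq (s := Kᶜ) (n := q ^ 100 / 3 + 1) (by
    rw [card_compl]; omega)
  have hK : Disjoint W₁ K := disjoint_left.2 fun j hj => mem_compl.1 (hW₁ hj)
  have hq1 : (10 : ℝ) ^ 6 ≤ q := by exact_mod_cast hq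
  have hbig : 2 * Real.exp (-((q : ℝ) ^ 100 / 100)) ≤ Real.exp (-(c * (q : ℝ) ^ 40)) := by
    have h2 : (2 : ℝ) ≤ Real.exp 1 := by linarith [Real.add_one_le_exp 1]
    refine (mul_le_mul_of_nonneg_right h2 (Real.exp_pos _).le).trans ?_
    rw [← Real.exp_add]
    refine Real.exp_le_exp.2 ?_
    have h3 : (1000 : ℝ) * q ^ 40 ≤ q ^ 100 := by
      calc (1000 : ℝ) * (q : ℝ) ^ 40 ≤ (q : ℝ) ^ 60 * (q : ℝ) ^ 40 := by
            gcongr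
            calc (1000 : ℝ) ≤ q := by linarith
              _ ≤ (q : ℝ) ^ 60 := le_self_pow₀ (by linarith) (by norm_num)
        _ = (q : ℝ) ^ 100 := by ring
    have h4 : (1 : ℝ) ≤ (q : ℝ) ^ 40 := one_le_pow₀ (by linarith)
    nlinarith
  have hexp0 := Real.exp_pos (-((q : ℝ) ^ 100 / 100))
  refine one_step (W₁ := W₁) (G₀ := (q : ℝ) ^ 40) hc0 hc hpi hK hab ha hb le_rfl ?_ ?_ f h0 h1
  · intro i G hG
    refine (BadSL_bound hq (hp i) hV1 hV2 hKc hab ha hb hK G hG).trans ?_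
    have := numeric_tail (q ^ 100) hM6 (w := W₁.card) (by omega)
    push_cast at this
    linarith
  · refine (hT_bound (m := q ^ 100 / 20 + 1) hab ha hb ?_).trans ?_
    · have : (univ.filter fun j => j ∉ K ∧ j ∉ W₁) = (K ∪ W₁)ᶜ := by ext j; simp
      rw [this, card_compl, card_union_of_disjoint hK.symm]; omega
    · have h2 : (3 / 4 : ℝ) ≤ Real.exp (-(1 / 4)) := by
        linarith [Real.add_one_le_exp (-(1 / 4 : ℝ))]
      refine (pow_le_exp_mul (by norm_num) h2 _).trans ?_
      have h3 : Real.exp (((q ^ 100 / 20 + 1 : ℕ) : ℝ) * (-(1 / 4))) ≤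
          Real.exp (-((q : ℝ) ^ 100 / 100)) := by
        refine Real.exp_le_exp.2 ?_
        have h6 : (q : ℝ) ^ 100 / 20 ≤ ((q ^ 100 / 20 + 1 : ℕ) : ℝ) := by
          have : q ^ 100 ≤ 20 * (q ^ 100 / 20 + 1) := by omega
          have : (q : ℝ) ^ 100 ≤ 20 * ((q ^ 100 / 20 + 1 : ℕ) : ℝ) := by exact_mod_cast this
          linarith
        have : (0 : ℝ) ≤ (q : ℝ) ^ 100 := by positivity
        linarith
      linarith

lemma Pi_mem {p : ℕ} (hp : p.Prime) {f : ℕ → ℝ} (h0 : ∀ r, 0 ≤ f r) (h1 : ∀ r, f r ≤ 1) (r : ℕ) :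
    0 ≤ Pi p f r ∧ Pi p f r ≤ 1 := by
  have hp1 : (1 : ℝ) ≤ p := by exact_mod_cast hp.one_lt.le
  set A := ((p : ℝ) ^ r)⁻¹
  set B := ((p : ℝ) ^ (r + 1))⁻¹
  have hA1 : A ≤ 1 := inv_le_one_of_one_le₀ (one_le_pow₀ hp1)
  have hBA : B ≤ A := by
    apply inv_anti₀ (by positivity)
    exact pow_le_pow_right₀ hp1 (by omega)
  have hB0 : 0 ≤ B := by positivity
  have e : Pi p f r = f (r - 1) * (1 - A) + f r * (A - B) + f (r + 1) * B := by
    simp only [Pi]; ring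
  rw [e]
  have n1 := h0 (r - 1); have n2 := h0 r; have n3 := h0 (r + 1)
  have m1 := h1 (r - 1); have m2 := h1 r; have m3 := h1 (r + 1)
  have hA : 0 ≤ 1 - A := by linarith
  have hAB : 0 ≤ A - B := by linarith
  constructor
  · positivity
  · nlinarith [mul_le_mul_of_nonneg_right m1 hA, mul_le_mul_of_nonneg_right m2 hAB,
      mul_le_mul_of_nonneg_right m3 hB0]

lemma Pi_iter_mem {p : ℕ} (hp : p.Prime) {f : ℕ → ℝ} (h0 : ∀ r, 0 ≤ f r) (h1 : ∀ r, f r ≤ 1)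
    (k r : ℕ) : 0 ≤ (Pi p)^[k] f r ∧ (Pi p)^[k] f r ≤ 1 := by
  induction k generalizing f with
  | zero => exact ⟨h0 r, h1 r⟩
  | succ k ih =>
    rw [Function.iterate_succ_apply]
    exact ih (fun r => (Pi_mem hp h0 h1 r).1) (fun r => (Pi_mem hp h0 h1 r).2)

/-- Iterating the one-step estimate along the vertices of `L`. -/
theorem chain_numeric {q : ℕ} {c : ℝ} (hc0 : 0 ≤ c) (hc2 : c ≤ 2) (hc : JointC p c)
    (hpi : Function.Injective p) (hq : 10 ^ 6 ≤ q) (hp : ∀ i, p i ≤ 2 ^ q ^ 31)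
    (hV1 : q ^ 100 ≤ Fintype.card V) (hV2 : Fintype.card V ≤ 2 * q ^ 100)
    (L : Finset V) (hL : L.card ≤ 2 * q ^ 20) (hb : b ∉ L)
    (f : ι → ℕ → ℝ) (h0 : ∀ i r, 0 ≤ f i r) (h1 : ∀ i r, f i r ≤ 1) :
    |(𝔼 x : Sym2 V → Bool,
        ∏ i, f i (Module.finrank (ZMod (p i)) (KerK (ZMod (p i)) x {b}))) -
      𝔼 x : Sym2 V → Bool,
        ∏ i, (Pi (p i))^[L.card] (f i)
          (Module.finrank (ZMod (p i)) (KerK (ZMod (p i)) x (insert b L)))| ≤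
      L.card * stepErr (Fintype.card ι) c q := by
  induction L using Finset.induction_on with
  | empty => simp; exact sub_self _
  | insert a L haL ih =>
    rw [card_insert_of_notMem haL] at hL ⊢
    have hbL : b ∉ L := fun h => hb (mem_insert_of_mem h)
    have hab : a ≠ b := fun h => hb (h ▸ mem_insert_self _ _)
    have ih' := ih (by omega) hbL
    have hq1 : 1 ≤ q ^ 20 := Nat.one_le_pow _ _ (by omega)
    have hs := step_numeric hc0 hc2 hc hpi hq hp hV1 hV2 (insert b (insert a L))
      (by
        have := card_insert_le b (insert a L)
        rw [card_insert_of_notMem haL] at this; omega)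
      hab (by simp) (by simp) (fun i => (Pi (p i))^[L.card] (f i))
      (fun i r => (Pi_iter_mem Fact.out (h0 i) (h1 i) _ r).1)
      (fun i r => (Pi_iter_mem Fact.out (h0 i) (h1 i) _ r).2)
    have he : (insert b (insert a L)).erase a = insert b L := by
      rw [Finset.insert_comm, erase_insert]
      simp [hab, haL]
    rw [he] at hs
    simp_rw [Function.iterate_succ_apply']
    have := abs_sub_le _ _ _ |>.trans (add_le_add ih' hs)
    refine this.trans (le_of_eq ?_)
    push_cast; ring

end chain

/-! ### The limiting chain of coranks in closed form -/

/-- `oddProd t s` is the product of `1 - t ^ i` over the odd `i ≤ s`. -/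
def oddProd (t : ℝ) : ℕ → ℝ
  | 0 => 1
  | s + 1 => if Even s then oddProd t s * (1 - t ^ (s + 1)) else oddProd t s

/-- The probability that the chain started at `r` is at `0` or `1` after `k - 1` steps, up to the
factor `1 - t`; here `t = 1 / p`. -/
def gk (t : ℝ) (k r : ℕ) : ℝ :=
  if r ≤ k then (∏ i ∈ range r, (1 - t ^ (k - r + i + 1))) * oddProd t (k - r) else 0

lemma oddProd_rec (t : ℝ) (s : ℕ) :
    oddProd t (s + 2) = (1 - t) * oddProd t (s + 1) + t * (1 - t ^ (s + 1)) * oddProd t s := by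
  rw [show oddProd t (s + 2) = if Even (s + 1) then oddProd t (s + 1) * (1 - t ^ (s + 2))
    else oddProd t (s + 1) from rfl,
    show oddProd t (s + 1) = if Even s then oddProd t s * (1 - t ^ (s + 1)) else oddProd t s from rfl]
  by_cases h : Even s
  · simp only [h, Nat.even_add_one, not_true, if_true, if_false]; ring
  · simp only [h, Nat.even_add_one, not_false_iff, if_true, if_false]; ring

lemma Pi_gk (p k r : ℕ) :
    Pi p (gk (p : ℝ)⁻¹ k) r = gk (p : ℝ)⁻¹ (k + 1) r := by
  simp only [Pi, ← inv_pow]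
  set t := (p : ℝ)⁻¹
  rcases lt_trichotomy r (k + 1) with h | h | h
  · obtain ⟨s, rfl⟩ : ∃ s, k = s + r := ⟨k - r, by omega⟩
    -- the factors common to all terms
    have e1 : gk t (s + r + 1) r =
        (∏ i ∈ range r, (1 - t ^ (s + i + 2))) * oddProd t (s + 1) := by
      rw [gk, if_pos (by omega), show s + r + 1 - r = s + 1 by omega]
      congr 1; exact prod_congr rfl fun i _ => by congr 2; omega
    have e2 : gk t (s + r) r = (∏ i ∈ range r, (1 - t ^ (s + i + 1))) * oddProd t s := by
      rw [gk, if_pos (by omega), show s + r - r = s by omega]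
    have e3 : gk t (s + r) (r + 1) =
        if s = 0 then 0 else (∏ i ∈ range (r + 1), (1 - t ^ (s + i))) * oddProd t (s - 1) := by
      rw [gk]
      by_cases hs : s = 0
      · rw [if_neg (by omega), if_pos hs]
      · rw [if_pos (by omega), if_neg hs, show s + r - (r + 1) = s - 1 by omega]
        congr 1; exact prod_congr rfl fun i _ => by congr 2; omega
    cases r with
    | zero =>
      rw [e1, e2, e3]
      cases s with
      | zero => simp [oddProd]; ring
      | succ s => simp [oddProd_rec]; ring
    | succ r =>
      have e4 : gk t (s + (r + 1)) (r + 1 - 1) =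
          (∏ i ∈ range r, (1 - t ^ (s + i + 2))) * oddProd t (s + 1) := by
        rw [gk, if_pos (by omega), show s + (r + 1) - (r + 1 - 1) = s + 1 by omega]
        congr 1; exact prod_congr (by simp) fun i _ => by congr 2; omega
      rw [e1, e2, e3, e4]
      have p1 : ∏ i ∈ range (r + 1), (1 - t ^ (s + i + 1)) =
          (∏ i ∈ range r, (1 - t ^ (s + i + 2))) * (1 - t ^ (s + 1)) := by
        rw [prod_range_succ']
        congr 1
      have p2 : ∏ i ∈ range (r + 1 + 1), (1 - t ^ (s + i)) =
          (∏ i ∈ range r, (1 - t ^ (s + i + 2))) * (1 - t ^ (s + 1)) * (1 - t ^ s) := by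
        rw [prod_range_succ', prod_range_succ']
        congr 1
      rw [p1, p2, prod_range_succ]
      generalize ∏ i ∈ range r, (1 - t ^ (s + i + 2)) = A
      cases s with
      | zero => simp [oddProd]; ring
      | succ s =>
        rw [oddProd_rec, if_neg (by omega), Nat.add_sub_cancel]; ring
  · subst h
    simp only [gk, Nat.add_sub_cancel, le_refl, if_true, Nat.sub_self, zero_add]
    rw [if_neg (by omega), if_neg (by omega), prod_range_succ]
    ring
  · simp only [gk]
    rw [if_neg (by omega), if_neg (by omega), if_neg (by omega), if_neg (by omega)]
    ring

/-- The probability that the chain started at `r` is at `0` or `1` after `k` steps. -/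
lemma Pi_iter_eq {p : ℕ} (hp : p.Prime) (k : ℕ) :
    (Pi p)^[k] (fun r => if r ≤ 1 then (1 : ℝ) else 0) =
      fun r => gk (p : ℝ)⁻¹ (k + 1) r / (1 - (p : ℝ)⁻¹) := by
  have hp1 : (p : ℝ)⁻¹ < 1 := inv_lt_one_of_one_lt₀ (by exact_mod_cast hp.one_lt)
  have h1 : 1 - (p : ℝ)⁻¹ ≠ 0 := by linarith
  induction k with
  | zero =>
    funext r
    simp only [Function.iterate_zero, id, gk]
    rcases r with _ | _ | r
    · simp [oddProd, h1]
    · simp [oddProd, h1]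
    · simp
  | succ k ih =>
    rw [Function.iterate_succ_apply', ih]
    funext r
    rw [← Pi_gk p (k + 1) r]
    simp only [Pi]
    field_simp

lemma one_sub_sum_le_prod {ι : Type*} (s : Finset ι) (a : ι → ℝ) (h0 : ∀ i ∈ s, 0 ≤ a i)
    (h1 : ∀ i ∈ s, a i ≤ 1) : 1 - ∑ i ∈ s, a i ≤ ∏ i ∈ s, (1 - a i) := by
  induction s using Finset.induction_on with
  | empty => simp
  | insert j s hj ih =>
    rw [sum_insert hj, prod_insert hj]
    have ih' := ih (fun i hi => h0 i (mem_insert_of_mem hi)) fun i hi => h1 i (mem_insert_of_mem hi)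
    have a0 := h0 j (mem_insert_self _ _)
    have a1 := h1 j (mem_insert_self _ _)
    have s0 : 0 ≤ ∑ i ∈ s, a i := sum_nonneg fun i hi => h0 i (mem_insert_of_mem hi)
    nlinarith [mul_le_mul_of_nonneg_left ih' (by linarith : 0 ≤ 1 - a j)]

lemma sum_pow_tail_le {t : ℝ} (h0 : 0 ≤ t) (h1 : t ≤ 1 / 2) (s r : ℕ) :
    ∑ i ∈ range r, t ^ (s + i) ≤ 2 * t ^ s * (1 - t ^ r) := by
  induction r with
  | zero => simp
  | succ r ih =>
    rw [sum_range_succ, pow_add, pow_succ]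
    have : 0 ≤ t ^ s * t ^ r := by positivity
    nlinarith

lemma gk_tail_prod {t : ℝ} (h0 : 0 ≤ t) (h1 : t ≤ 1 / 2) (s r : ℕ) :
    1 - 2 * t ^ (s + 1) ≤ ∏ i ∈ range r, (1 - t ^ (s + i + 1)) ∧
      0 ≤ ∏ i ∈ range r, (1 - t ^ (s + i + 1)) ∧ ∏ i ∈ range r, (1 - t ^ (s + i + 1)) ≤ 1 := by
  have hp : ∀ j, 0 ≤ t ^ j ∧ t ^ j ≤ 1 := fun j => ⟨by positivity, pow_le_one₀ h0 (by linarith)⟩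
  refine ⟨?_, prod_nonneg fun i _ => by linarith [(hp (s + i + 1)).2],
    prod_le_one (fun i _ => by linarith [(hp (s + i + 1)).2]) fun i _ => by linarith [(hp (s + i + 1)).1]⟩
  refine le_trans ?_ (one_sub_sum_le_prod _ _ (fun i _ => (hp _).1) fun i _ => (hp _).2)
  have := sum_pow_tail_le h0 h1 (s + 1) r
  simp_rw [show ∀ i, s + i + 1 = s + 1 + i by intro i; ring]
  nlinarith [(hp (s + 1)).1, (hp r).1, mul_nonneg (hp (s + 1)).1 (hp r).1]

lemma oddProd_even (t : ℝ) (j : ℕ) :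
    oddProd t (2 * j + 1) = (1 - t) * ∏ i ∈ range j, (1 - t ^ (2 * i + 3)) ∧
      oddProd t (2 * j + 2) = (1 - t) * ∏ i ∈ range j, (1 - t ^ (2 * i + 3)) := by
  have h : ∀ j, oddProd t (2 * j + 2) = oddProd t (2 * j + 1) := fun j => by
    rw [oddProd, if_neg (by rw [Nat.even_add_one]; simp)]
  rw [h]
  refine ⟨?_, ?_⟩ <;>
  · induction j with
    | zero => simp [oddProd]
    | succ j ih =>
      rw [show 2 * (j + 1) + 1 = (2 * j + 2) + 1 by ring, oddProd, if_pos (by simp [Nat.even_add]),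
        h, ih, prod_range_succ, mul_assoc]

lemma oddProd_eq (t : ℝ) {s : ℕ} (hs : 1 ≤ s) :
    oddProd t s = (1 - t) * ∏ i ∈ range ((s - 1) / 2), (1 - t ^ (2 * i + 3)) := by
  obtain ⟨j, rfl | rfl⟩ : ∃ j, s = 2 * j + 1 ∨ s = 2 * j + 2 := ⟨(s - 1) / 2, by omega⟩
  · rw [(oddProd_even t j).1, show (2 * j + 1 - 1) / 2 = j by omega]
  · rw [(oddProd_even t j).2, show (2 * j + 2 - 1) / 2 = j by omega]

lemma prime_inv_le {p : ℕ} (hp : p.Prime) : 0 ≤ (p : ℝ)⁻¹ ∧ (p : ℝ)⁻¹ ≤ 1 / 2 := by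
  refine ⟨by positivity, ?_⟩
  rw [one_div]
  exact inv_anti₀ (by norm_num) (by exact_mod_cast hp.two_le)

lemma Pi_iter_form {p : ℕ} (hp : p.Prime) {k r : ℕ} (h : r ≤ k) :
    (Pi p)^[k] (fun r => if r ≤ 1 then (1 : ℝ) else 0) r =
      (∏ i ∈ range r, (1 - (p : ℝ)⁻¹ ^ (k + 1 - r + i + 1))) *
        ∏ i ∈ range ((k - r) / 2), (1 - (p : ℝ)⁻¹ ^ (2 * i + 3)) := by
  have h1 : 1 - (p : ℝ)⁻¹ ≠ 0 := by linarith [(prime_inv_le hp).2]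
  rw [Pi_iter_eq hp]
  simp only []
  rw [gk, if_pos (by omega), oddProd_eq _ (by omega),
    show (k + 1 - r - 1) / 2 = (k - r) / 2 by omega]
  rw [div_eq_iff h1]; ring

/-- A uniform lower bound, of the order of the correct `1 - p ^ (-3)`. -/
lemma Pi_iter_ge {p : ℕ} (hp : p.Prime) {k r : ℕ} (h : r + 1 ≤ k) :
    1 - 4 * (p : ℝ)⁻¹ ^ 3 ≤ (Pi p)^[k] (fun r => if r ≤ 1 then (1 : ℝ) else 0) r := by
  rw [Pi_iter_form hp (by omega)]
  obtain ⟨h0, h1⟩ := prime_inv_le hp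
  set t := (p : ℝ)⁻¹
  obtain ⟨a1, a2, a3⟩ := gk_tail_prod h0 h1 (k + 1 - r) r
  set A := ∏ i ∈ range r, (1 - t ^ (k + 1 - r + i + 1))
  have hA : 1 - 2 * t ^ 3 ≤ A := by
    have : t ^ (k + 1 - r + 1) ≤ t ^ 3 := pow_le_pow_of_le_one h0 (by linarith) (by omega)
    linarith
  have hp' : ∀ j, 0 ≤ t ^ j ∧ t ^ j ≤ 1 := fun j => ⟨by positivity, pow_le_one₀ h0 (by linarith)⟩
  set m := (k - r) / 2
  have hB : 1 - 2 * t ^ 3 ≤ ∏ i ∈ range m, (1 - t ^ (2 * i + 3)) := by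
    refine le_trans ?_ (one_sub_sum_le_prod _ _ (fun i _ => (hp' _).1) fun i _ => (hp' _).2)
    have h2 : ∑ i ∈ range m, t ^ (2 * i + 3) ≤ ∑ i ∈ range m, t ^ (3 + i) :=
      sum_le_sum fun i _ => pow_le_pow_of_le_one h0 (by linarith) (by omega)
    have h3 := sum_pow_tail_le h0 h1 3 m
    nlinarith [mul_nonneg (hp' 3).1 (hp' m).1]
  have hB1 : ∏ i ∈ range m, (1 - t ^ (2 * i + 3)) ≤ 1 :=
    prod_le_one (fun i _ => by linarith [(hp' (2 * i + 3)).2]) fun i _ => by linarith [(hp' (2 * i + 3)).1]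
  nlinarith

/-- The limiting probability that the corank modulo `p` is at most one. -/
def limP (p : ℕ) : ℝ := ∏' i : ℕ, (1 - (p : ℝ)⁻¹ ^ (2 * i + 3))

lemma multipliable_limP {p : ℕ} (hp : p.Prime) :
    Multipliable fun i : ℕ => (1 - (p : ℝ)⁻¹ ^ (2 * i + 3)) := by
  obtain ⟨h0, h1⟩ := prime_inv_le hp
  have : Multipliable fun i : ℕ => (1 + -((p : ℝ)⁻¹ ^ (2 * i + 3))) := by
    refine multipliable_one_add_of_summable ?_
    simp only [norm_neg, norm_pow]
    have : ‖(p : ℝ)⁻¹‖ < 1 := by rw [Real.norm_of_nonneg h0]; linarith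
    have h2 := summable_geometric_of_lt_one (norm_nonneg _) this
    exact h2.comp_injective (i := fun i : ℕ => 2 * i + 3) (fun a b h => by simpa using h)
  simpa [sub_eq_add_neg] using this

lemma tendsto_limP {p : ℕ} (hp : p.Prime) :
    Tendsto (fun m => ∏ i ∈ range m, (1 - (p : ℝ)⁻¹ ^ (2 * i + 3))) atTop (nhds (limP p)) :=
  (multipliable_limP hp).hasProd.tendsto_prod_nat

lemma Pi_iter_tendsto {p : ℕ} (hp : p.Prime) {ε : ℝ} (hε : 0 < ε) :
    ∃ s₀ : ℕ, ∀ k r : ℕ, r + s₀ ≤ k →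
      |(Pi p)^[k] (fun r => if r ≤ 1 then (1 : ℝ) else 0) r - limP p| ≤ ε := by
  obtain ⟨h0, h1⟩ := prime_inv_le hp
  have t1 := (Metric.tendsto_atTop.1 (tendsto_limP hp)) (ε / 2) (by positivity)
  have t2 := (Metric.tendsto_atTop.1 (tendsto_pow_atTop_nhds_zero_of_lt_one h0
    (by linarith : (p : ℝ)⁻¹ < 1))) (ε / 4) (by positivity)
  obtain ⟨s1, hs1⟩ := t1
  obtain ⟨s2, hs2⟩ := t2
  refine ⟨2 * s1 + s2, fun k r h => ?_⟩
  rw [Pi_iter_form hp (by omega)]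
  have b1 := hs1 ((k - r) / 2) (by omega)
  have b2 := hs2 (k + 1 - r + 1) (by omega)
  obtain ⟨a1, a2, a3⟩ := gk_tail_prod h0 h1 (k + 1 - r) r
  set t := (p : ℝ)⁻¹
  rw [Real.dist_eq] at b1 b2
  set A := ∏ i ∈ range r, (1 - t ^ (k + 1 - r + i + 1))
  have hp' : ∀ j, 0 ≤ t ^ j ∧ t ^ j ≤ 1 := fun j => ⟨by positivity, pow_le_one₀ h0 (by linarith)⟩
  set B := ∏ i ∈ range ((k - r) / 2), (1 - t ^ (2 * i + 3)) with hB
  have hB1 : B ≤ 1 :=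
    prod_le_one (fun i _ => by linarith [(hp' (2 * i + 3)).2]) fun i _ => by linarith [(hp' (2 * i + 3)).1]
  have hB0 : 0 ≤ B := prod_nonneg (fun i _ => by linarith [(hp' (2 * i + 3)).2])
  rw [abs_lt] at b1 b2
  rw [abs_le]
  constructor <;> nlinarith

lemma limP_mem {p : ℕ} (hp : p.Prime) : 0 ≤ limP p ∧ limP p ≤ 1 := by
  obtain ⟨h0, h1⟩ := prime_inv_le hp
  have hp' : ∀ j, 0 ≤ (p : ℝ)⁻¹ ^ j ∧ (p : ℝ)⁻¹ ^ j ≤ 1 :=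
    fun j => ⟨by positivity, pow_le_one₀ h0 (by linarith)⟩
  constructor
  · exact ge_of_tendsto' (tendsto_limP hp) fun m => prod_nonneg fun i _ => by linarith [(hp' (2 * i + 3)).2]
  · exact le_of_tendsto' (tendsto_limP hp) fun m =>
      prod_le_one (fun i _ => by linarith [(hp' (2 * i + 3)).2]) fun i _ => by linarith [(hp' (2 * i + 3)).1]

/-! ### Coranks modulo primes of moderate size -/

section primes
variable {ι : Type*} [Fintype ι] [DecidableEq ι] {p : ι → ℕ} [∀ i, Fact (p i).Prime]

lemma chi_nat_mul {p : ℕ} [Fact p.Prime] (k : ℕ) (t : ZMod p) :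
    chi ((k : ZMod p) * t) = chi t ^ k := by
  induction k with
  | zero => simp [chi_zero]
  | succ k ih => rw [Nat.cast_succ, add_mul, one_mul, chi_add, ih, pow_succ]

lemma prod_chi_eq_one (hp : Function.Injective p) {t : ∀ i, ZMod (p i)}
    (h : ∏ i, chi (t i) = 1) (i₀ : ι) : t i₀ = 0 := by
  set Q := ∏ i ∈ univ.erase i₀, p i with hQ
  have h1 : ∏ i, chi ((Q : ZMod (p i)) * t i) = 1 := by
    simp_rw [chi_nat_mul]
    rw [Finset.prod_pow, h, one_pow]
  rw [← mul_prod_erase univ _ (mem_univ i₀), prod_eq_one, mul_one] at h1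
  · have h2 := chi_eq_one h1
    rcases mul_eq_zero.1 h2 with h3 | h3
    · exfalso
      rw [ZMod.natCast_eq_zero_iff, hQ, (Fact.out : (p i₀).Prime).prime.dvd_finsetProd_iff] at h3
      obtain ⟨j, hj, hd⟩ := h3
      exact (mem_erase.1 hj).1 (hp ((Nat.prime_dvd_prime_iff_eq Fact.out Fact.out).1 hd).symm)
    · exact h3
  · intro i hi
    have : ((Q : ℕ) : ZMod (p i)) = 0 := by
      rw [ZMod.natCast_eq_zero_iff]; exact dvd_prod_of_mem _ hi
    rw [this, zero_mul, chi_zero]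

lemma half_norm_lt_one {z : ℂ} (hz : ‖z‖ = 1) (h1 : z ≠ 1) : ‖(1 + z) / 2‖ < 1 := by
  rw [norm_div, Complex.norm_ofNat, div_lt_one (by norm_num)]
  have h2 : ¬ SameRay ℝ (1 : ℂ) z := fun h => h1 ((h.norm_eq_iff.1 (by simp [hz])).symm)
  have := norm_add_lt_of_not_sameRay h2
  rw [hz, norm_one] at this; linarith

/-- For a fixed finite family of distinct primes some positive constant is admissible. -/
lemma exists_jointC (hp : Function.Injective p) : ∃ c : ℝ, 0 < c ∧ c ≤ 2 ∧ JointC p c := by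
  -- the finitely many norms below one are bounded away from one
  obtain ⟨δ, hδ, hδ1⟩ : ∃ δ : ℝ, 0 < δ ∧ ∀ t : ∀ i, ZMod (p i), (∏ i, chi (t i)) ≠ 1 →
      ‖(1 + ∏ i, chi (t i)) / 2‖ ≤ 1 - δ := by
    let s : Finset (∀ i, ZMod (p i)) := univ.filter fun t => (∏ i, chi (t i)) ≠ 1
    rcases s.eq_empty_or_nonempty with h | h
    · refine ⟨1, one_pos, fun t ht => ?_⟩
      have : t ∈ s := mem_filter.2 ⟨mem_univ _, ht⟩
      simp [h] at this
    · obtain ⟨t₀, ht₀, hm⟩ := exists_max_image s (fun t => ‖(1 + ∏ i, chi (t i)) / 2‖) h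
      have := half_norm_lt_one (z := ∏ i, chi (t₀ i)) (by simp [norm_prod, norm_chi])
        (mem_filter.1 ht₀).2
      refine ⟨1 - ‖(1 + ∏ i, chi (t₀ i)) / 2‖, by linarith, fun t ht => ?_⟩
      have := hm t (mem_filter.2 ⟨mem_univ _, ht⟩)
      linarith
  refine ⟨min δ 2, by positivity, min_le_right _ _, fun t i₀ => ?_⟩
  by_cases h : ∏ i, chi (t i) = 1
  · rw [prod_chi_eq_one hp h i₀, h]; norm_num
  · refine (hδ1 t h).trans ?_
    have h2 := Real.add_one_le_exp (-(min δ 2 * N2 (t i₀)))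
    have h3 := N2_le (t i₀)
    have h4 := N2_nonneg (t i₀)
    have h5 : min δ 2 ≤ δ := min_le_left _ _
    have h6 : 0 < min δ 2 := by positivity
    nlinarith

lemma jointC_unit {p : ℕ} [Fact p.Prime] : JointC (fun _ : Unit => p) 2 := by
  intro t i₀
  simpa using half_norm (t i₀)

end primes

/-- The bound for the probability of a huge corank. -/
lemma corank_huge {V : Type*} [Fintype V] [DecidableEq V] {F : Type*} [Field F] {q : ℕ}
    (hq : 10 ^ 6 ≤ q) (hV2 : Fintype.card V ≤ 2 * q ^ 100) (K : Finset V) :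
    Pr (fun x : Sym2 V → Bool => q ^ 20 ≤ Module.finrank F (KerK F x K)) ≤
      (1 / 2 : ℝ) ^ q ^ 32 := by
  refine (corank_tail K (q ^ 20)).trans ?_
  have h1 : (Fintype.card V).choose (q ^ 20) ≤ 2 ^ ((1 + q * 100) * q ^ 20) := by
    calc _ ≤ (Fintype.card V) ^ q ^ 20 := Nat.choose_le_pow _ _
      _ ≤ (2 * (2 ^ q) ^ 100) ^ q ^ 20 := by
          refine Nat.pow_le_pow_left (hV2.trans ?_) _
          gcongr; exact Nat.lt_two_pow_self.le
      _ = _ := by rw [← pow_mul, ← pow_succ', ← pow_mul]; congr 2; ring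
  have h2 : (1 + q * 100) * q ^ 20 + q ^ 32 ≤ (q ^ 20).choose 2 := by
    rw [Nat.choose_two_right, Nat.le_div_iff_mul_le (by norm_num)]
    obtain ⟨u, hu⟩ : ∃ u, q ^ 20 = u + 1 := ⟨q ^ 20 - 1, by
      have : 0 < q ^ 20 := by positivity
      omega⟩
    have h3 : (1 + q * 100) * 2 + q ^ 12 * 2 + 1 ≤ q ^ 20 := by
      have a1 : q ^ 12 * q ^ 8 = q ^ 20 := by rw [← pow_add]
      have a2 : q * q ^ 11 = q ^ 12 := by rw [← pow_succ']
      have a3 : 1 ≤ q ^ 11 := Nat.one_le_pow _ _ (by omega)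
      have a4 : 10 ^ 6 ≤ q ^ 8 := hq.trans (Nat.le_self_pow (by norm_num) q)
      have a5 : q ≤ q ^ 12 := Nat.le_self_pow (by norm_num) q
      have a6 : q ^ 12 * 10 ^ 6 ≤ q ^ 12 * q ^ 8 := Nat.mul_le_mul_left _ a4
      omega
    calc ((1 + q * 100) * q ^ 20 + q ^ 32) * 2
        = q ^ 20 * ((1 + q * 100) * 2 + q ^ 12 * 2) := by ring
      _ ≤ q ^ 20 * (q ^ 20 - 1) := by gcongr; omega
  calc ((Fintype.card V).choose (q ^ 20) : ℝ) * (1 / 2) ^ (q ^ 20).choose 2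
      ≤ (2 ^ ((1 + q * 100) * q ^ 20) : ℝ) * (1 / 2) ^ ((1 + q * 100) * q ^ 20 + q ^ 32) := by
        refine mul_le_mul (by exact_mod_cast h1) ?_ (by positivity) (by positivity)
        exact pow_le_pow_of_le_one (by norm_num) (by norm_num) h2
    _ = (1 / 2 : ℝ) ^ q ^ 32 := by
        rw [pow_add, ← mul_assoc, ← mul_pow]; norm_num

lemma tendsto_pow_exp {c : ℝ} (hc : 0 < c) :
    Tendsto (fun q : ℕ => (q : ℝ) ^ 20 * Real.exp (-(c * (q : ℝ) ^ 40))) atTop (nhds 0) := by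
  have h1 := Real.tendsto_pow_mul_exp_neg_atTop_nhds_zero 20
  have h2 : Tendsto (fun q : ℕ => c * (q : ℝ)) atTop atTop :=
    tendsto_natCast_atTop_atTop.const_mul_atTop hc
  have h3 := (h1.comp h2).const_mul ((c ^ 20)⁻¹)
  rw [mul_zero] at h3
  refine squeeze_zero (fun q => by positivity) (fun q => ?_) h3
  simp only [Function.comp]
  rw [mul_pow, mul_assoc, ← mul_assoc, inv_mul_cancel₀ (by positivity), one_mul]
  gcongr
  exact_mod_cast Nat.le_self_pow (by norm_num) q

lemma tendsto_stepErr (m : ℕ) {c : ℝ} (hc : 0 < c) :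
    Tendsto (fun q : ℕ => ((2 * q ^ 20 : ℕ) : ℝ) * stepErr m c q) atTop (nhds 0) := by
  have h1 := tendsto_pow_exp hc
  have h2 := tendsto_pow_exp (half_pos hc)
  have h3 := (h1.const_mul (2 * 3 ^ m * (2 * m + 1) : ℝ)).add (h2.const_mul (2 * 3 ^ m * Real.sqrt 3 : ℝ))
  simp only [mul_zero, add_zero] at h3
  refine h3.congr fun q => ?_
  unfold stepErr
  rw [Real.sqrt_mul (by norm_num), Real.sqrt_eq_rpow (Real.exp _), ← Real.exp_mul,
    show -(c * (q : ℝ) ^ 40) * (1 / 2) = -(c / 2 * (q : ℝ) ^ 40) by ring]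
  push_cast; ring

section moderate
variable {V : Type*} [Fintype V] [DecidableEq V]

lemma exists_chain {q : ℕ} (hq : 10 ^ 6 ≤ q) (hV1 : q ^ 100 ≤ Fintype.card V) (b : V) :
    ∃ L : Finset V, L.card = 2 * q ^ 20 ∧ b ∉ L := by
  obtain ⟨L, hL, hc⟩ := exists_subset_card_eq (s := univ.erase b) (n := 2 * q ^ 20) (by
    rw [card_erase_of_mem (mem_univ _), card_univ]
    have : 3 * q ^ 20 ≤ q ^ 100 := by
      calc 3 * q ^ 20 ≤ q ^ 80 * q ^ 20 := by
            gcongr; exact le_trans (by omega : 3 ≤ q) (Nat.le_self_pow (by norm_num) q)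
        _ = q ^ 100 := by rw [← pow_add]
    have : 0 < q ^ 20 := by positivity
    omega)
  exact ⟨L, hc, fun h => by simpa using hL h⟩

/-- The probability that the corank modulo a prime of moderate size is at least two. -/
theorem corank_two_le {q : ℕ} (hq : 10 ^ 6 ≤ q) (hV1 : q ^ 100 ≤ Fintype.card V)
    (hV2 : Fintype.card V ≤ 2 * q ^ 100) (b : V) {p : ℕ} [Fact p.Prime] (hp : p ≤ 2 ^ q ^ 31) :
    Pr (fun x : Sym2 V → Bool => 2 ≤ Module.finrank (ZMod p) (KerK (ZMod p) x {b})) ≤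
      4 * (p : ℝ)⁻¹ ^ 3 + ((1 / 2 : ℝ) ^ q ^ 32 + ((2 * q ^ 20 : ℕ) : ℝ) * stepErr 1 2 q) := by
  obtain ⟨L, hLc, hbL⟩ := exists_chain hq hV1 b
  have hpp : p.Prime := Fact.out
  have key := chain_numeric (p := fun _ : Unit => p) (by norm_num) le_rfl jointC_unit
    (fun _ _ _ => rfl) hq (fun _ => hp) hV1 hV2 L hLc.le hbL
    (fun _ r => if r ≤ 1 then (1 : ℝ) else 0) (fun _ r => by split_ifs <;> norm_num)
    (fun _ r => by split_ifs <;> norm_num)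
  simp only [univ_unique, prod_singleton, Fintype.card_unit, hLc] at key
  set A := 𝔼 x : Sym2 V → Bool,
    if Module.finrank (ZMod p) (KerK (ZMod p) x {b}) ≤ 1 then (1 : ℝ) else 0
  have h1 : Pr (fun x : Sym2 V → Bool => 2 ≤ Module.finrank (ZMod p) (KerK (ZMod p) x {b})) =
      1 - A := by
    rw [show A = Pr (fun x : Sym2 V → Bool => Module.finrank (ZMod p) (KerK (ZMod p) x {b}) ≤ 1)
      from (Pr_def _).symm, ← Pr_compl]
    congr 1; funext x; simp [Nat.lt_iff_add_one_le]
  set T := Pr (fun x : Sym2 V → Bool =>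
    q ^ 20 ≤ Module.finrank (ZMod p) (KerK (ZMod p) x (insert b L))) with hT
  have hT1 : T ≤ (1 / 2 : ℝ) ^ q ^ 32 := corank_huge hq hV2 _
  have h2 : 1 - 𝔼 x : Sym2 V → Bool, (Pi p)^[2 * q ^ 20] (fun r => if r ≤ 1 then (1 : ℝ) else 0)
      (Module.finrank (ZMod p) (KerK (ZMod p) x (insert b L))) ≤ T + 4 * (p : ℝ)⁻¹ ^ 3 := by
    obtain ⟨o, ho⟩ : ∃ o : ℝ, o = 1 := ⟨1, rfl⟩
    nth_rewrite 1 [← ho]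
    rw [← Fintype.expect_const (ι := Sym2 V → Bool) o, ← expect_sub_distrib, ho]
    have hm := fun r => Pi_iter_mem hpp (f := fun r => if r ≤ 1 then (1 : ℝ) else 0)
      (fun r => by split_ifs <;> norm_num) (fun r => by split_ifs <;> norm_num) (2 * q ^ 20) r
    refine avg_le_Pr_add (by positivity) (fun x => by linarith [(hm (Module.finrank (ZMod p) (KerK (ZMod p) x (insert b L)))).1]) fun x hx => ?_
    have : 0 < q ^ 20 := by positivity
    have := Pi_iter_ge hpp (k := 2 * q ^ 20)
      (r := Module.finrank (ZMod p) (KerK (ZMod p) x (insert b L))) (by omega)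
    linarith
  rw [h1]
  have := (abs_le.1 key).1
  linarith

end moderate

lemma abs_prod_sub_prod_le {ι : Type*} (s : Finset ι) (f g : ι → ℝ)
    (hf : ∀ i ∈ s, 0 ≤ f i ∧ f i ≤ 1) (hg : ∀ i ∈ s, 0 ≤ g i ∧ g i ≤ 1) :
    |∏ i ∈ s, f i - ∏ i ∈ s, g i| ≤ ∑ i ∈ s, |f i - g i| := by
  induction s using Finset.induction_on with
  | empty => simp
  | insert j s hj ih =>
    rw [prod_insert hj, prod_insert hj, sum_insert hj]
    have ih' := ih (fun i hi => hf i (mem_insert_of_mem hi)) fun i hi => hg i (mem_insert_of_mem hi)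
    obtain ⟨a0, a1⟩ := hf j (mem_insert_self _ _)
    have b0 : 0 ≤ ∏ i ∈ s, g i := prod_nonneg fun i hi => (hg i (mem_insert_of_mem hi)).1
    have b1 : ∏ i ∈ s, g i ≤ 1 := prod_le_one (fun i hi => (hg i (mem_insert_of_mem hi)).1)
      fun i hi => (hg i (mem_insert_of_mem hi)).2
    calc |f j * ∏ i ∈ s, f i - g j * ∏ i ∈ s, g i|
        = |f j * (∏ i ∈ s, f i - ∏ i ∈ s, g i) + (f j - g j) * ∏ i ∈ s, g i| := by congr 1; ring
      _ ≤ |f j * (∏ i ∈ s, f i - ∏ i ∈ s, g i)| + |(f j - g j) * ∏ i ∈ s, g i| := abs_add_le _ _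
      _ ≤ |f j - g j| + ∑ i ∈ s, |f i - g i| := by
          rw [abs_mul, abs_mul, abs_of_nonneg a0, abs_of_nonneg b0]
          nlinarith [abs_nonneg (f j - g j), abs_nonneg (∏ i ∈ s, f i - ∏ i ∈ s, g i)]

/-- For finitely many fixed primes the events `corank ≤ 1` are asymptotically independent, with
the probabilities `limP`. -/
theorem corank_fixed {ι : Type*} [Fintype ι] [DecidableEq ι] {p : ι → ℕ} [∀ i, Fact (p i).Prime]
    (hpi : Function.Injective p) {ε : ℝ} (hε : 0 < ε) :
    ∀ᶠ q : ℕ in atTop, ∀ (V : Type) [Fintype V] [DecidableEq V], q ^ 100 ≤ Fintype.card V →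
      Fintype.card V ≤ 2 * q ^ 100 → ∀ b : V,
      |Pr (fun x : Sym2 V → Bool =>
          ∀ i, Module.finrank (ZMod (p i)) (KerK (ZMod (p i)) x {b}) ≤ 1) - ∏ i, limP (p i)| ≤ ε := by
  obtain ⟨c, hc0, hc2, hc⟩ := exists_jointC hpi
  set m := Fintype.card ι
  have hm0 : (0 : ℝ) < m + 1 := by positivity
  set δ : ℝ := ε / 4 / (m + 1) with hδ
  have hδ0 : 0 < δ := by positivity
  have hmδ : m * δ ≤ ε / 4 := by
    rw [hδ, mul_div_assoc', div_le_iff₀ hm0]; nlinarith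
  choose s₀ hs₀ using fun i => Pi_iter_tendsto (Fact.out : (p i).Prime) hδ0
  have e1 : ∀ᶠ q : ℕ in atTop, ((2 * q ^ 20 : ℕ) : ℝ) * stepErr m c q < ε / 4 :=
    (tendsto_stepErr m hc0).eventually (gt_mem_nhds (by positivity))
  have e2 : ∀ᶠ q : ℕ in atTop, (m : ℝ) * (1 / 2 : ℝ) ^ q < ε / 4 := by
    have := (tendsto_pow_atTop_nhds_zero_of_lt_one (r := (1 / 2 : ℝ)) (by norm_num)
      (by norm_num)).const_mul (m : ℝ)
    rw [mul_zero] at this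
    exact this.eventually (gt_mem_nhds (by positivity))
  filter_upwards [e1, e2, eventually_ge_atTop (10 ^ 6), eventually_ge_atTop (univ.sup s₀),
    eventually_ge_atTop (univ.sup p)] with q h1 h2 hq hs hpq V _ _ hV1 hV2 b
  have hpb : ∀ i, p i ≤ 2 ^ q ^ 31 := fun i => by
    calc p i ≤ univ.sup p := le_sup (f := p) (mem_univ i)
      _ ≤ q := hpq
      _ ≤ q ^ 31 := Nat.le_self_pow (by norm_num) q
      _ ≤ _ := Nat.lt_two_pow_self.le
  obtain ⟨L, hLc, hbL⟩ := exists_chain hq hV1 b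
  have key := chain_numeric hc0.le hc2 hc hpi hq hpb hV1 hV2 L hLc.le hbL
    (fun _ r => if r ≤ 1 then (1 : ℝ) else 0) (fun _ r => by split_ifs <;> norm_num)
    (fun _ r => by split_ifs <;> norm_num)
  rw [hLc] at key
  have hA : (𝔼 x : Sym2 V → Bool, ∏ i,
      if Module.finrank (ZMod (p i)) (KerK (ZMod (p i)) x {b}) ≤ 1 then (1 : ℝ) else 0) =
      Pr (fun x : Sym2 V → Bool =>
          ∀ i, Module.finrank (ZMod (p i)) (KerK (ZMod (p i)) x {b}) ≤ 1) := by
    unfold Pr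
    refine expect_congr rfl fun x _ => ?_
    rw [Finset.prod_ite_zero]
    simp
  rw [hA] at key
  have hm := fun i r => Pi_iter_mem (Fact.out : (p i).Prime) (f := fun r => if r ≤ 1 then (1 : ℝ) else 0)
      (fun r => by split_ifs <;> norm_num) (fun r => by split_ifs <;> norm_num) (2 * q ^ 20) r
  have hB : |(𝔼 x : Sym2 V → Bool,
        ∏ i, (Pi (p i))^[2 * q ^ 20] (fun r => if r ≤ 1 then (1 : ℝ) else 0)
          (Module.finrank (ZMod (p i)) (KerK (ZMod (p i)) x (insert b L)))) - ∏ i, limP (p i)| ≤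
      ε / 2 := by
    rw [← Fintype.expect_const (ι := Sym2 V → Bool) (∏ i, limP (p i)), ← expect_sub_distrib]
    refine (abs_expect_le _ _).trans ?_
    have hT : Pr (fun x : Sym2 V → Bool => ∃ i ∈ (univ : Finset ι),
        q ^ 20 ≤ Module.finrank (ZMod (p i)) (KerK (ZMod (p i)) x (insert b L))) ≤ ε / 4 := by
      refine (Pr_exists_le_card _ _ fun i _ => corank_huge hq hV2 _).trans ?_
      refine le_trans ?_ h2.le
      gcongr ?_ * ?_
      · exact le_of_eq rfl
      · exact pow_le_pow_of_le_one (by norm_num) (by norm_num) (Nat.le_self_pow (by norm_num) q)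
    refine le_trans (avg_le_Pr_add (c := ε / 4) (E := fun x : Sym2 V → Bool => ∃ i ∈ (univ : Finset ι),
        q ^ 20 ≤ Module.finrank (ZMod (p i)) (KerK (ZMod (p i)) x (insert b L)))
        (by positivity) (fun x => ?_) fun x hx => ?_) (by linarith)
    · have a1 : 0 ≤ ∏ i, limP (p i) := prod_nonneg fun i _ => (limP_mem Fact.out).1
      have a2 : ∏ i, limP (p i) ≤ 1 :=
        prod_le_one (fun i _ => (limP_mem Fact.out).1) fun i _ => (limP_mem Fact.out).2
      have a3 := prod_nonneg (s := univ) fun i _ =>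
        (hm i (Module.finrank (ZMod (p i)) (KerK (ZMod (p i)) x (insert b L)))).1
      have a4 := prod_le_one (s := univ) (fun i _ =>
        (hm i (Module.finrank (ZMod (p i)) (KerK (ZMod (p i)) x (insert b L)))).1) (fun i _ =>
        (hm i (Module.finrank (ZMod (p i)) (KerK (ZMod (p i)) x (insert b L)))).2)
      rw [abs_le]; constructor <;> linarith
    · have h3 : ∀ i, |(Pi (p i))^[2 * q ^ 20] (fun r => if r ≤ 1 then (1 : ℝ) else 0)
          (Module.finrank (ZMod (p i)) (KerK (ZMod (p i)) x (insert b L))) - limP (p i)| ≤ δ := by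
        intro i
        apply hs₀
        have b1 : s₀ i ≤ q := (le_sup (f := s₀) (mem_univ i)).trans hs
        have b2 : q ≤ q ^ 20 := Nat.le_self_pow (by norm_num) q
        have b3 : ¬ q ^ 20 ≤ Module.finrank (ZMod (p i)) (KerK (ZMod (p i)) x (insert b L)) :=
          fun h => hx ⟨i, mem_univ _, h⟩
        omega
      refine (abs_prod_sub_prod_le univ _ _ (fun i _ => hm i _) fun i _ => limP_mem Fact.out).trans ?_
      refine (sum_le_card_nsmul univ _ δ fun i _ => h3 i).trans ?_
      rw [nsmul_eq_mul]; exact hmδ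
  have := abs_sub_le _ _ _ |>.trans (add_le_add key hB)
  linarith

/-! ### Killing a low-dimensional space by random rows -/

/-- If each active random functional is nonzero on every vector outside `ker φ` with probability at
least `1/2`, then it is unlikely that some `v ∈ Z` outside `ker φ` is killed by all of them: the
potential `4 ^ dim Z` drops by the factor `5/8` on average at every active step. -/
lemma fib {F E : Type*} [Field F] [AddCommGroup E] [Module F E] [FiniteDimensional F E]
    (φ : E →ₗ[F] F) : ∀ (h : ℕ) (ρ : Fin h → Bool → E →ₗ[F] F) (act : Fin h → Prop) [DecidablePred act]
    (_ : ∀ j, act j → ∀ z, φ z ≠ 0 → Pr (fun β => ρ j β z = 0) ≤ 1 / 2) (Z : Submodule F E),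
    Pr (fun g : Fin h → Bool => ∃ v ∈ Z, φ v ≠ 0 ∧ ∀ j, ρ j (g j) v = 0) ≤
      4 ^ Module.finrank F Z * ∏ j, (if act j then (5 / 8 : ℝ) else 1) := by
  intro h
  induction h with
  | zero =>
    intro ρ act _ _ Z
    refine (Pr_le_one _).trans ?_
    simpa using one_le_pow₀ (by norm_num : (1 : ℝ) ≤ 4)
  | succ h ih =>
    intro ρ act _ hρ Z
    by_cases hZ : ∃ z ∈ Z, φ z ≠ 0
    swap
    · rw [Pr_eq_zero]
      · exact mul_nonneg (by positivity) (prod_nonneg fun j _ => by split_ifs <;> norm_num)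
      · rintro g ⟨v, hv, hv0, -⟩; exact hZ ⟨v, hv, hv0⟩
    obtain ⟨z, hz, hz0⟩ := hZ
    set P : ℝ := ∏ j : Fin h, (if act j.succ then (5 / 8 : ℝ) else 1) with hP
    have hP0 : 0 ≤ P := prod_nonneg fun j _ => by split_ifs <;> norm_num
    set d := Module.finrank F Z with hd
    -- one step: condition on the first functional
    have h1 : ∀ β : Bool, Pr (fun g : Fin h → Bool => ∃ v ∈ Z, φ v ≠ 0 ∧
        ∀ j, ρ j ((Fin.cons β g : Fin (h + 1) → Bool) j) v = 0) ≤
        (4 ^ d * P) * (if ρ 0 β z = 0 then 1 else 1 / 4) := by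
      intro β
      have h2 := ih (fun j => ρ j.succ) (fun j => act j.succ) (fun j => hρ j.succ)
        (Z ⊓ LinearMap.ker (ρ 0 β))
      refine (Pr_mono ?_).trans (h2.trans ?_)
      · rintro g ⟨v, hv, hv0, hvr⟩
        refine ⟨v, ⟨hv, by simpa using hvr 0⟩, hv0, fun j => by simpa using hvr j.succ⟩
      · have h3 : (4 : ℝ) ^ Module.finrank F (Z ⊓ LinearMap.ker (ρ 0 β) : Submodule F E) ≤
            4 ^ d * (if ρ 0 β z = 0 then 1 else 1 / 4) := by
          split_ifs with hb
          · rw [mul_one]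
            exact pow_le_pow_right₀ (by norm_num) (Submodule.finrank_mono inf_le_left)
          · have : Module.finrank F (Z ⊓ LinearMap.ker (ρ 0 β) : Submodule F E) < d := by
              refine Submodule.finrank_lt_finrank_of_lt (lt_of_le_of_ne inf_le_left fun h => ?_)
              rw [← h] at hz
              exact hb hz.2
            have h4 := pow_le_pow_right₀ (by norm_num : (1 : ℝ) ≤ 4) (Nat.succ_le_of_lt this)
            rw [pow_succ] at h4
            linarith
        calc _ ≤ (4 ^ d * (if ρ 0 β z = 0 then 1 else 1 / 4)) * P := by gcongr
          _ = _ := by ring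
    have h5 : Pr (fun g : Fin (h + 1) → Bool => ∃ v ∈ Z, φ v ≠ 0 ∧ ∀ j, ρ j (g j) v = 0) =
        𝔼 β : Bool, Pr (fun g : Fin h → Bool => ∃ v ∈ Z, φ v ≠ 0 ∧
          ∀ j, ρ j ((Fin.cons β g : Fin (h + 1) → Bool) j) v = 0) := by
      rw [← Pr_equiv (Fin.consEquiv fun _ => Bool), Pr_prod]
      rfl
    rw [h5]
    refine (avg_mono h1).trans ?_
    rw [avg_mul_left, Fin.prod_univ_succ, ← hP]
    have h6 : 𝔼 β : Bool, (if ρ 0 β z = 0 then (1 : ℝ) else 1 / 4) ≤ if act 0 then 5 / 8 else 1 := by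
      split_ifs with ha
      · have h7 := hρ 0 ha z hz0
        rw [Pr_def, avg_bool] at h7
        rw [avg_bool]
        split_ifs at h7 ⊢ <;> linarith
      · exact avg_le fun β => by split_ifs <;> norm_num
    calc _ ≤ (4 ^ d * P) * (if act 0 then 5 / 8 else 1) := by gcongr
      _ = _ := by ring

section swap
variable {W : Type*} [Fintype W] [DecidableEq W]

/-- The permutation of the vertices exchanging the two members of each pair `j` with
`g j = true`. -/
def pairPerm {h : ℕ} (ρ : Fin h × Bool ↪ W) (g : Fin h → Bool) : Equiv.Perm W :=
  Equiv.Perm.viaEmbedding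
    (Equiv.prodShear (Equiv.refl (Fin h)) fun j => if g j then Equiv.boolNot else Equiv.refl Bool) ρ

lemma pairPerm_apply {h : ℕ} (ρ : Fin h × Bool ↪ W) (g : Fin h → Bool) (j : Fin h) :
    pairPerm ρ g (ρ (j, false)) = ρ (j, g j) := by
  rw [pairPerm, Equiv.Perm.viaEmbedding_apply]
  cases hg : g j <;> simp [hg]

lemma pairPerm_other {h : ℕ} (ρ : Fin h × Bool ↪ W) (g : Fin h → Bool) {i : W}
    (hi : ∀ z, ρ z ≠ i) : pairPerm ρ g i = i :=
  Equiv.Perm.viaEmbedding_apply_of_notMem _ _ _ (by rintro ⟨z, hz⟩; exact hi z hz)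

/-- The edges at the vertex `c`. -/
def starEmb (c : W) : W ↪ Sym2 W := ⟨fun k => s(c, k), fun _ _ h => Sym2.congr_right.1 h⟩

/-- The configuration with the edges from `c` to the two members of each pair `j` with `g j = true`
exchanged. -/
def starAct {h : ℕ} (ρ : Fin h × Bool ↪ W) (c : W) (y : Sym2 W → Bool) (g : Fin h → Bool) :
    Sym2 W → Bool := y ∘ (pairPerm ρ g).viaEmbedding (starEmb c)

lemma starAct_star {h : ℕ} (ρ : Fin h × Bool ↪ W) (c : W) (y : Sym2 W → Bool) (g : Fin h → Bool)
    (k : W) : starAct ρ c y g s(c, k) = y s(c, pairPerm ρ g k) := by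
  have : s(c, k) = starEmb c k := rfl
  rw [starAct, Function.comp_apply, this, Equiv.Perm.viaEmbedding_apply]
  rfl

lemma starAct_other {h : ℕ} (ρ : Fin h × Bool ↪ W) (c : W) (y : Sym2 W → Bool) (g : Fin h → Bool)
    {i k : W} (hi : i ≠ c) (hk : k ≠ c) : starAct ρ c y g s(i, k) = y s(i, k) := by
  rw [starAct, Function.comp_apply, Equiv.Perm.viaEmbedding_apply_of_notMem]
  rintro ⟨z, hz⟩
  rcases Sym2.eq_iff.1 (show s(c, z) = s(i, k) from hz) with ⟨h1, _⟩ | ⟨h1, _⟩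
  · exact hi h1.symm
  · exact hk h1.symm

/-- Edges at an unpaired vertex other than `c` are not affected by `starAct`. -/
lemma starAct_of_fixed {h : ℕ} (ρ : Fin h × Bool ↪ W) (c : W) (y : Sym2 W → Bool)
    (g : Fin h → Bool) {i : W} (hi : i ≠ c) (hf : ∀ z, ρ z ≠ i) (k : W) :
    starAct ρ c y g s(i, k) = y s(i, k) := by
  by_cases hk : k = c
  · rw [hk, Sym2.eq_swap, starAct_star, pairPerm_other ρ g hf]
  · exact starAct_other ρ c y g hi hk

lemma Pr_starAct {h : ℕ} (ρ : Fin h × Bool ↪ W) (c : W) (E : (Sym2 W → Bool) → Prop) :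
    Pr E = 𝔼 y, Pr fun g => E (starAct ρ c y g) := by
  have h1 : ∀ g : Fin h → Bool, Pr E = Pr fun y => E (starAct ρ c y g) := fun g => by
    rw [← Pr_equiv (Equiv.arrowCongr ((pairPerm ρ g).viaEmbedding (starEmb c)).symm
      (Equiv.refl Bool))]
    rfl
  calc Pr E = 𝔼 _g : Fin h → Bool, Pr E := (Fintype.expect_const _).symm
    _ = 𝔼 g, Pr fun y => E (starAct ρ c y g) := expect_congr rfl fun g _ => h1 g
    _ = _ := by unfold Pr; rw [expect_comm]

/-- For a fixed configuration, the rows of the paired vertices, randomised by exchanging the edges to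
`c`, are unlikely to kill a vector of `Z` that does not vanish at `c`. -/
lemma fib_star {F : Type*} [Field F] {h : ℕ} (ρ : Fin h × Bool ↪ W) {c : W} (hc : ∀ z, ρ z ≠ c)
    (y : Sym2 W → Bool) (Z : Submodule F (W → F)) :
    Pr (fun g : Fin h → Bool => ∃ v ∈ Z, v c ≠ 0 ∧
      ∀ j, ∑ i, bt (starAct ρ c y g s(i, ρ (j, false))) * v i = 0) ≤
      4 ^ Module.finrank F Z *
        ∏ j, (if y s(c, ρ (j, false)) ≠ y s(c, ρ (j, true)) then (5 / 8 : ℝ) else 1) := by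
  let row : Fin h → Bool → (W → F) →ₗ[F] F := fun j β =>
    ∑ i, (bt (y (if i = c then s(c, ρ (j, β)) else s(i, ρ (j, false)))) : F) • LinearMap.proj i
  have hrow : ∀ j β v, row j β v =
      ∑ i, bt (y (if i = c then s(c, ρ (j, β)) else s(i, ρ (j, false)))) * v i := by
    intro j β v; simp [row]
  refine le_trans (Pr_mono ?_) (fib (LinearMap.proj c : (W → F) →ₗ[F] F) h row
    (fun j => y s(c, ρ (j, false)) ≠ y s(c, ρ (j, true))) ?_ Z)
  · rintro g ⟨v, hv, hvc, hr⟩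
    refine ⟨v, hv, hvc, fun j => ?_⟩
    rw [hrow, ← hr j]
    refine sum_congr rfl fun i _ => ?_
    split_ifs with hi
    · rw [hi, starAct_star, pairPerm_apply]
    · rw [starAct_other _ _ _ _ hi (hc _)]
  · intro j hj z hz
    have hsplit : ∀ β, row j β z = bt (y s(c, ρ (j, β))) * z c +
        ∑ i ∈ univ.erase c, bt (y s(i, ρ (j, false))) * z i := by
      intro β
      rw [hrow, ← add_sum_erase _ _ (mem_univ c), if_pos rfl]
      congr 1
      exact sum_congr rfl fun i hi => by rw [if_neg (ne_of_mem_erase hi)]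
    have hz' : z c ≠ 0 := hz
    rw [Pr_def, avg_bool]
    have hne : ¬ (row j false z = 0 ∧ row j true z = 0) := by
      rintro ⟨h1, h2⟩
      rw [hsplit] at h1 h2
      have h3 := h1.trans h2.symm
      have h4 := add_right_cancel h3
      have h5 := mul_right_cancel₀ hz' h4
      cases h6 : y s(c, ρ (j, false)) <;> cases h7 : y s(c, ρ (j, true)) <;>
        simp [h6, h7] at h5 hj
    split_ifs <;> first | exact absurd ⟨‹_›, ‹_›⟩ hne | norm_num

/-- Average of the bound of `fib_star`. -/
lemma avg_star {h : ℕ} (ρ : Fin h × Bool ↪ W) (c : W) :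
    𝔼 y : Sym2 W → Bool,
      ∏ j, (if y s(c, ρ (j, false)) ≠ y s(c, ρ (j, true)) then (5 / 8 : ℝ) else 1) =
      (13 / 16) ^ h := by
  rw [avg_disagree (fun j : Fin h => s(c, ρ (j, false))) (fun j : Fin h => s(c, ρ (j, true)))]
  · rw [Fintype.card_fin]; norm_num
  · intro i j hij
    simpa using ρ.injective (Sym2.congr_right.1 hij)
  · intro i j hij
    simpa using ρ.injective (Sym2.congr_right.1 hij)

end swap

/-! ### Large primes dividing a determinant -/

section det
variable {W : Type*} [Fintype W] [DecidableEq W]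

/-- The kernel of an integer matrix modulo `p`. -/
def kerMod (A : Matrix W W ℤ) (p : ℕ) : Submodule (ZMod p) (W → ZMod p) :=
  LinearMap.ker (Matrix.toLin' (A.map (Int.cast : ℤ → ZMod p)))

lemma mem_kerMod (A : Matrix W W ℤ) (p : ℕ) (v : W → ZMod p) :
    v ∈ kerMod A p ↔ (A.map (Int.cast : ℤ → ZMod p)).mulVec v = 0 := by
  rw [kerMod, LinearMap.mem_ker, Matrix.toLin'_apply]

/-- After an integral base change of determinant prime to `p`, as many columns of the matrix as its
corank modulo `p` are divisible by `p`. -/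
lemma pow_corank_dvd_det (A : Matrix W W ℤ) (p : ℕ) [Fact p.Prime] :
    (p : ℤ) ^ Module.finrank (ZMod p) (kerMod A p) ∣ A.det := by
  obtain ⟨Q, hQ⟩ := Submodule.exists_isCompl (kerMod A p)
  set d := Module.finrank (ZMod p) (kerMod A p)
  set b0 := ((Module.finBasis (ZMod p) (kerMod A p)).prod (Module.finBasis (ZMod p) Q)).map
    (Submodule.prodEquivOfIsCompl _ _ hQ)
  have e : (Fin d ⊕ Fin (Module.finrank (ZMod p) Q)) ≃ W := by
    refine Fintype.equivOfCardEq ?_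
    rw [← Module.finrank_eq_card_basis b0, Module.finrank_pi]
  set b := b0.reindex e
  set P' : Matrix W W (ZMod p) := (Pi.basisFun (ZMod p) W).toMatrix b with hP'
  have hP'u : IsUnit P'.det := by
    have := (Pi.basisFun (ZMod p) W).invertibleToMatrix b
    exact Matrix.isUnit_det_of_invertible P'
  set P : Matrix W W ℤ := P'.map (fun t => (t.val : ℤ)) with hP
  have hPP : P.map (Int.cast : ℤ → ZMod p) = P' := by
    ext i j; simp [hP]
  have hcop : IsCoprime ((p : ℤ) ^ d) P.det := by
    refine IsCoprime.pow_left ?_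
    rw [(Nat.prime_iff_prime_int.1 (Fact.out : p.Prime)).coprime_iff_not_dvd]
    intro h
    have h1 : ((P.det : ℤ) : ZMod p) = 0 := (ZMod.intCast_zmod_eq_zero_iff_dvd _ _).2 h
    have h2 : ((P.det : ℤ) : ZMod p) = P'.det := by
      rw [← hPP]
      exact (Int.castRingHom (ZMod p)).map_det P
    rw [h2] at h1
    rw [h1] at hP'u
    exact not_isUnit_zero hP'u
  refine hcop.dvd_of_dvd_mul_right ?_
  rw [← Matrix.det_mul]
  have hcol : ∀ j : Fin d, ∀ i, (p : ℤ) ∣ (A * P) i (e (Sum.inl j)) := by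
    intro j i
    rw [← ZMod.intCast_zmod_eq_zero_iff_dvd]
    have hb : b (e (Sum.inl j)) ∈ kerMod A p := by
      simp [b, b0]
    rw [mem_kerMod] at hb
    have h3 := congrFun hb i
    rw [Matrix.mulVec, dotProduct] at h3
    simp only [Matrix.mul_apply, Int.cast_sum, Int.cast_mul]
    rw [← show _ = (0 : ZMod p) from h3]
    refine sum_congr rfl fun k _ => ?_
    rw [Matrix.map_apply]
    congr 1
    have := congrFun (congrFun hPP k) (e (Sum.inl j))
    rw [Matrix.map_apply] at this
    rw [this, hP', Module.Basis.toMatrix_apply]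
    simp
  choose f hf using hcol
  set dg : W → ℤ := fun w => Sum.elim (fun _ => (p : ℤ)) (fun _ => 1) (e.symm w) with hdg
  have hfac : A * P = Matrix.of (fun i w => Sum.elim (fun j => f j i) (fun _ => (A * P) i w)
      (e.symm w)) * Matrix.diagonal dg := by
    ext i w
    rw [Matrix.mul_diagonal, Matrix.of_apply, hdg]
    obtain ⟨z, rfl⟩ := e.surjective w
    rcases z with j | j
    · simp only [Equiv.symm_apply_apply, Sum.elim_inl]
      rw [hf j i, mul_comm]
    · simp
  rw [hfac, Matrix.det_mul, Matrix.det_diagonal]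
  refine Dvd.dvd.mul_left (dvd_of_eq ?_) _
  rw [← e.prod_comp]
  simp [hdg]

lemma card_primes_le {T k : ℕ} (hT : 2 ≤ T) {m : ℤ} (hm : m ≠ 0) (hb : |m| ≤ ((T ^ k : ℕ) : ℤ))
    (s : Finset ℕ) (hs : ∀ p ∈ s, p.Prime ∧ T ≤ p ∧ (p : ℤ) ∣ m) : s.card ≤ k := by
  have h1 : (∏ p ∈ s, p) ∣ m.natAbs := by
    refine Finset.prod_primes_dvd _ (fun p hp => (hs p hp).1.prime) fun p hp => ?_
    exact Int.natCast_dvd.1 (hs p hp).2.2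
  have h2 : T ^ s.card ≤ ∏ p ∈ s, p := by
    rw [← prod_const]
    exact prod_le_prod' fun p hp => (hs p hp).2.1
  have h3 := Nat.le_of_dvd (Int.natAbs_pos.2 hm) h1
  have h4 : m.natAbs ≤ T ^ k := by
    zify; exact_mod_cast hb
  exact (Nat.pow_le_pow_iff_right (by omega)).1 (h2.trans (h3.trans h4))

lemma corank_le {T k : ℕ} (hT : 2 ≤ T) (A : Matrix W W ℤ) (hm : A.det ≠ 0)
    (hb : |A.det| ≤ ((T ^ k : ℕ) : ℤ)) (p : ℕ) [Fact p.Prime] (hp : T ≤ p) :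
    Module.finrank (ZMod p) (kerMod A p) ≤ k := by
  have h1 : p ^ Module.finrank (ZMod p) (kerMod A p) ∣ A.det.natAbs := by
    have := pow_corank_dvd_det A p
    rw [← Nat.cast_pow] at this
    exact Int.natCast_dvd.1 this
  have h3 := Nat.le_of_dvd (Int.natAbs_pos.2 hm) h1
  have h4 : A.det.natAbs ≤ T ^ k := by
    zify; exact_mod_cast hb
  exact (Nat.pow_le_pow_iff_right (by omega)).1
    ((Nat.pow_le_pow_left hp _).trans (h3.trans h4))

lemma abs_det_le {M : ℕ} (A : Matrix W W ℤ) (hM : Fintype.card W ≤ M)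
    (hA : ∀ i j, |A i j| ≤ M) : |A.det| ≤ (M : ℤ) ^ (2 * M) := by
  have h := Matrix.det_le (A := A) (abv := AbsoluteValue.abs) (x := (M : ℤ)) (fun i j => hA i j)
  refine (show |A.det| ≤ _ from h).trans ?_
  rcases Nat.eq_zero_or_pos M with h0 | h0
  · have : Fintype.card W = 0 := by omega
    simp [h0, this]
  have h1 : (Nat.factorial (Fintype.card W) : ℤ) ≤ (M : ℤ) ^ M := by
    have h2 := Nat.factorial_le_pow (Fintype.card W)
    have h3 : Nat.factorial (Fintype.card W) ≤ M ^ M :=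
      h2.trans ((Nat.pow_le_pow_left hM _).trans (Nat.pow_le_pow_right h0 hM))
    exact_mod_cast h3
  have h4 : (M : ℤ) ^ Fintype.card W ≤ (M : ℤ) ^ M := by
    exact pow_le_pow_right₀ (by exact_mod_cast h0) hM
  rw [nsmul_eq_mul, two_mul, pow_add]
  exact mul_le_mul h1 h4 (by positivity) (by positivity)

lemma abs_cramer_le {M : ℕ} (A : Matrix W W ℤ) (hM : Fintype.card W ≤ M)
    (hA : ∀ i j, |A i j| ≤ M) (F : W → ℤ) (hF : ∀ i, |F i| ≤ M) (i : W) :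
    |A.cramer F i| ≤ (M : ℤ) ^ (2 * M) := by
  rw [Matrix.cramer_apply]
  refine abs_det_le _ hM fun a b => ?_
  rw [Matrix.updateCol_apply]
  split_ifs
  exacts [hF a, hA a b]

end det

/-! ### Kernel vectors vanishing on many vertices, for all large primes at once -/

section conn

/-- Two disjoint families of bits are nowhere simultaneously set with probability `(3/4) ^ n`. -/
lemma avg_both {Q Θ : Type*} [Fintype Q] [DecidableEq Q] [Fintype Θ] [DecidableEq Θ]
    (e e' : Θ → Q) (he : Function.Injective e) (he' : Function.Injective e')
    (hd : ∀ t t', e t ≠ e' t') :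
    𝔼 x : Q → Bool, ∏ t, (if x (e t) ∧ x (e' t) then (0 : ℝ) else 1) =
      (3 / 4) ^ Fintype.card Θ := by
  rw [resample_extend e he]
  obtain ⟨ψ, hψ⟩ : ∃ ψ : (Q → Bool) → Θ → Bool → ℝ,
    ψ = fun (x : Q → Bool) (t : Θ) (β : Bool) => if β ∧ x (e' t) then (0 : ℝ) else 1 := ⟨_, rfl⟩
  have h1 : ∀ (x : Q → Bool) (y : Θ → Bool),
      ∏ t, (if Function.extend e y x (e t) ∧ Function.extend e y x (e' t) then (0 : ℝ) else 1) =
        ∏ t, ψ x t (y t) := by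
    intro x y
    rw [hψ]
    refine prod_congr rfl fun t _ => ?_
    rw [he.extend_apply, Function.extend_apply' _ _ _ (by rintro ⟨t', h⟩; exact hd _ _ h)]
  simp_rw [h1, avg_prod_pi]
  obtain ⟨φ, hφ⟩ : ∃ φ : Θ → Bool → ℝ, φ = fun _ β => if β then 1 / 2 else (1 : ℝ) := ⟨_, rfl⟩
  have h2 : ∀ (x : Q → Bool), ∏ t, 𝔼 β : Bool, ψ x t β = ∏ t, φ t ((x ∘ e') t) := by
    intro x
    refine prod_congr rfl fun t _ => ?_
    rw [avg_bool, hψ, hφ]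
    rcases hx : x (e' t) with _ | _ <;> simp [hx]
  rw [expect_congr rfl fun x _ => h2 x, avg_comp_inj e' he' (fun z => ∏ t, φ t (z t)), avg_prod_pi]
  rw [hφ]
  simp only [avg_bool, prod_const, card_univ]
  norm_num

variable {W : Type*} [Fintype W] [DecidableEq W]

/-- Any two vertices have a common neighbour. -/
def Conn (y : Sym2 W → Bool) : Prop := ∀ i j, i ≠ j → ∃ k, y s(i, k) ∧ y s(j, k)

lemma Pr_not_Conn : Pr (fun y : Sym2 W → Bool => ¬ Conn y) ≤
    (Fintype.card W : ℝ) ^ 2 * (3 / 4) ^ (Fintype.card W - 2) := by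
  have h1 : ∀ z ∈ (univ : Finset (W × W)), Pr (fun y : Sym2 W → Bool =>
      z.1 ≠ z.2 ∧ ∀ k, ¬ (y s(z.1, k) ∧ y s(z.2, k))) ≤ (3 / 4 : ℝ) ^ (Fintype.card W - 2) := by
    rintro ⟨i, j⟩ -
    by_cases hij : i = j
    · rw [Pr_eq_zero]
      · positivity
      · rintro y ⟨h, -⟩; exact h hij
    have h2 := avg_both (Q := Sym2 W) (Θ := {k // k ∈ ({i, j} : Finset W)ᶜ})
      (fun k => s(i, k.1)) (fun k => s(j, k.1))
      (fun a b h => Subtype.ext (Sym2.congr_right.1 h))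
      (fun a b h => Subtype.ext (Sym2.congr_right.1 h))
      (fun a b h => by
        have ha := a.2
        have hb := b.2
        simp only [mem_compl, mem_insert, mem_singleton, not_or] at ha hb
        rcases Sym2.eq_iff.1 h with ⟨h1, _⟩ | ⟨h1, _⟩
        · exact hij h1
        · exact hb.1 h1.symm)
    rw [Fintype.card_coe, card_compl, card_pair hij] at h2
    rw [← h2]
    unfold Pr
    refine avg_mono fun y => ?_
    split_ifs with h
    · rw [prod_eq_one]
      exact fun k _ => if_neg (h.2 k.1)
    · exact prod_nonneg fun k _ => by split_ifs <;> norm_num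
  refine (Pr_mono ?_).trans ((Pr_exists_le_card univ _ h1).trans (le_of_eq ?_))
  · intro y hy
    unfold Conn at hy
    push Not at hy
    obtain ⟨i, j, hij, h⟩ := hy
    exact ⟨(i, j), mem_univ _, hij, fun k hk => h k hk.1 (by simpa using hk.2)⟩
  · simp [sq]

end conn

section kill
variable {W : Type*} [Fintype W] [DecidableEq W]

/-- The Laplacian with offsets `c` restricted to `C`, completed by the identity outside `C`. -/
def matA (C : Finset W) (c : W → ℕ) (y : Sym2 W → Bool) : Matrix W W ℤ :=
  Matrix.of fun i j => if i ∈ C then (if j ∈ C then bt (y s(i, j)) else 0) -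
    (if i = j then ((∑ k, bt (y s(i, k)) : ℤ) + c i) else 0) else if i = j then 1 else 0

lemma bt_cast {R : Type*} [Ring R] (b : Bool) : ((bt b : ℤ) : R) = bt b := by cases b <;> simp

lemma matA_mulVec {R : Type*} [CommRing R] (C : Finset W) (c : W → ℕ) (y : Sym2 W → Bool)
    (v : W → R) (hv : ∀ i ∉ C, v i = 0) (i : W) :
    ((matA C c y).map (Int.cast : ℤ → R)).mulVec v i =
      if i ∈ C then lap y v i - c i * v i else 0 := by
  rw [Matrix.mulVec, dotProduct]
  by_cases hi : i ∈ C
  · rw [if_pos hi]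
    have h1 : ∀ j, ((matA C c y).map (Int.cast : ℤ → R)) i j * v j = bt (y s(i, j)) * v j -
        (if i = j then (∑ k, bt (y s(i, k)) + c i) * v i else 0) := by
      intro j
      rw [Matrix.map_apply, matA, Matrix.of_apply, if_pos hi]
      by_cases hj : j ∈ C
      · by_cases hij : i = j
        · subst hij; simp [hi, bt_cast]; ring
        · simp [hj, hij, bt_cast]
      · simp [hv j hj, show i ≠ j from fun h => hj (h ▸ hi)]
    rw [sum_congr rfl fun j _ => h1 j, sum_sub_distrib, sum_ite_eq, if_pos (mem_univ _)]
    unfold lap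
    simp only [mul_sub, sum_sub_distrib, ← sum_mul]
    ring
  · rw [if_neg hi]
    refine sum_eq_zero fun j _ => ?_
    by_cases hij : i = j
    · subst hij; rw [hv i hi, mul_zero]
    · simp [matA, hi, hij]

lemma matA_abs {N : ℕ} (C : Finset W) (c : W → ℕ) (y : Sym2 W → Bool) (hW : Fintype.card W ≤ N)
    (hN : 1 ≤ N) (hc : ∀ i, c i ≤ N) (i j : W) : |matA C c y i j| ≤ ((2 * N : ℕ) : ℤ) := by
  have hb : ∀ b : Bool, (0 : ℤ) ≤ bt b ∧ (bt b : ℤ) ≤ 1 := by rintro (_ | _) <;> simp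
  have h1 : (∑ k, bt (y s(i, k)) : ℤ) ≤ N := by
    calc _ ≤ ∑ _k : W, (1 : ℤ) := sum_le_sum fun k _ => (hb _).2
      _ ≤ N := by simpa using hW
  have h2 : (0 : ℤ) ≤ ∑ k, bt (y s(i, k)) := sum_nonneg fun k _ => (hb _).1
  have h3 : (c i : ℤ) ≤ N := by exact_mod_cast hc i
  have h4 := hb (y s(i, j))
  have h5 : (1 : ℤ) ≤ N := by exact_mod_cast hN
  have h6 : ((2 * N : ℕ) : ℤ) = 2 * N := by push_cast; ring
  -- the loop bit at `i` is also counted in the degree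
  have h7 : i = j → (bt (y s(i, j)) : ℤ) ≤ ∑ k, bt (y s(i, k)) := fun _ =>
    single_le_sum (f := fun k => (bt (y s(i, k)) : ℤ)) (fun k _ => (hb _).1) (mem_univ j)
  rw [matA, Matrix.of_apply, abs_le, h6]
  split_ifs with a1 a2 a3 a4 a5
  · have := h7 a3; constructor <;> omega
  all_goals constructor <;> omega

lemma matA_det_ne_zero (C : Finset W) (hC : C ≠ univ) (c : W → ℕ) (y : Sym2 W → Bool)
    (hy : Conn y) : (matA C c y).det ≠ 0 := by
  rw [Ne, ← Matrix.exists_mulVec_eq_zero_iff]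
  rintro ⟨v, hv0, hv⟩
  have hoff : ∀ i ∉ C, v i = 0 := by
    intro i hi
    have h1 := congrFun hv i
    rw [Matrix.mulVec, dotProduct, sum_eq_single i] at h1
    · simpa [matA, hi] using h1
    · intro j _ hj; simp [matA, hi, hj.symm]
    · simp
  have hid : (matA C c y).map (Int.cast : ℤ → ℤ) = matA C c y := by ext; simp
  have hlap : ∀ i ∈ C, lap y v i = c i * v i := by
    intro i hi
    have h1 := matA_mulVec C c y v hoff i
    rw [hid, hv, if_pos hi] at h1
    exact (sub_eq_zero.1 h1.symm)
  have h2 : 2 * ∑ i, v i * lap y v i = -∑ i, ∑ j, bt (y s(i, j)) * (v i - v j) ^ 2 := by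
    have h3 : ∑ i, v i * lap y v i = ∑ i, ∑ j, bt (y s(i, j)) * (v i * (v j - v i)) := by
      refine sum_congr rfl fun i _ => ?_
      rw [lap, mul_sum]
      exact sum_congr rfl fun j _ => by ring
    have h4 : ∑ i, v i * lap y v i = ∑ i, ∑ j, bt (y s(i, j)) * (v j * (v i - v j)) := by
      rw [h3, sum_comm]
      exact sum_congr rfl fun i _ => sum_congr rfl fun j _ => by rw [Sym2.eq_swap]
    rw [two_mul]
    nth_rewrite 1 [h3]
    rw [h4, ← sum_add_distrib, ← sum_neg_distrib]
    refine sum_congr rfl fun i _ => ?_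
    rw [← sum_add_distrib, ← sum_neg_distrib]
    exact sum_congr rfl fun j _ => by ring
  have h5 : 0 ≤ ∑ i, v i * lap y v i := by
    refine sum_nonneg fun i _ => ?_
    by_cases hi : i ∈ C
    · rw [hlap i hi, show v i * (c i * v i) = c i * (v i * v i) by ring]
      exact mul_nonneg (by positivity) (mul_self_nonneg _)
    · rw [hoff i hi, zero_mul]
  have hnn : ∀ i j, 0 ≤ (bt (y s(i, j)) : ℤ) * (v i - v j) ^ 2 := fun i j =>
    mul_nonneg (by cases y s(i, j) <;> simp) (sq_nonneg _)
  have h6 : ∑ i, ∑ j, bt (y s(i, j)) * (v i - v j) ^ 2 = 0 :=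
    le_antisymm (by linarith) (sum_nonneg fun i _ => sum_nonneg fun j _ => hnn i j)
  have h7 : ∀ i j, y s(i, j) → v i = v j := by
    intro i j hij
    have h8 := (sum_eq_zero_iff_of_nonneg (fun i _ => sum_nonneg fun j _ => hnn i j)).1 h6 i
      (mem_univ _)
    have h9 := (sum_eq_zero_iff_of_nonneg (fun j _ => hnn i j)).1 h8 j (mem_univ _)
    rw [show y s(i, j) = true from hij, bt_true, one_mul] at h9
    exact sub_eq_zero.1 (pow_eq_zero_iff (two_ne_zero) |>.1 h9)
  obtain ⟨r, hr⟩ : ∃ r, r ∉ C := by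
    by_contra h; push Not at h; exact hC (eq_univ_iff_forall.2 h)
  apply hv0
  funext i
  by_cases hir : i = r
  · rw [hir]; exact hoff r hr
  · obtain ⟨k, h1, h2⟩ := hy i r hir
    rw [h7 i k h1, ← h7 r k h2]; exact hoff r hr

lemma matA_starAct {h : ℕ} (ρ : Fin h × Bool ↪ W) (C : Finset W) (hρ : ∀ z, ρ z ∉ C) (c : W → ℕ)
    (c₀ : W) (y : Sym2 W → Bool) (g : Fin h → Bool) :
    matA C c (starAct ρ c₀ y g) = matA C c y := by
  have hfix : ∀ j ∈ C, ∀ z, ρ z ≠ j := fun j hj z hz => hρ z (hz ▸ hj)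
  ext i j
  rw [matA, matA, Matrix.of_apply, Matrix.of_apply]
  by_cases hi : i ∈ C
  swap
  · rw [if_neg hi, if_neg hi]
  rw [if_pos hi, if_pos hi]
  have h1 : j ∈ C → starAct ρ c₀ y g s(i, j) = y s(i, j) := by
    intro hj
    by_cases hi0 : i = c₀
    · rw [hi0, starAct_star, pairPerm_other ρ g (hfix j hj)]
    · exact starAct_of_fixed ρ c₀ y g hi0 (hfix i hi) j
  have h2 : (∑ k, bt (starAct ρ c₀ y g s(i, k)) : ℤ) = ∑ k, bt (y s(i, k)) := by
    by_cases hi0 : i = c₀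
    · rw [hi0]
      simp only [starAct_star]
      exact Equiv.sum_comp (pairPerm ρ g) fun k => (bt (y s(c₀, k)) : ℤ)
    · exact sum_congr rfl fun k _ => by rw [starAct_of_fixed ρ c₀ y g hi0 (hfix i hi) k]
  rw [h2]
  by_cases hj : j ∈ C
  · rw [h1 hj]
  · simp [hj]

lemma finrank_comap_span_le {F : Type*} [Field F] (f : (W → F) →ₗ[F] (W → F)) (w : W → F) :
    Module.finrank F ((Submodule.span F {w}).comap f) ≤ 1 + Module.finrank F (LinearMap.ker f) := by
  set S := (Submodule.span F {w}).comap f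
  have h1 := LinearMap.finrank_range_add_finrank_ker (f.domRestrict S)
  have h2 : Module.finrank F (LinearMap.range (f.domRestrict S)) ≤ 1 := by
    refine (Submodule.finrank_mono (t := Submodule.span F {w}) ?_).trans
      ((finrank_span_le_card {w}).trans (by simp))
    rintro _ ⟨v, rfl⟩
    exact v.2
  have h3 : Module.finrank F (LinearMap.ker (f.domRestrict S)) ≤
      Module.finrank F (LinearMap.ker f) := by
    rw [← Submodule.finrank_map_subtype_eq]
    refine Submodule.finrank_mono ?_
    rintro _ ⟨v, hv, rfl⟩
    exact hv
  omega

end kill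

/-! ### Two rounds of random rows -/

section kill
variable {W : Type*} [Fintype W] [DecidableEq W]

/-- There are a prime `p ≥ T` and a nonzero vector modulo `p` supported on `C` whose image under the
Laplacian with offsets `c` is a multiple of `F` on `C` and vanishes outside `C`. -/
def Killed (T : ℕ) (C : Finset W) (c : W → ℕ) (F : W → ℤ) (y : Sym2 W → Bool) : Prop :=
  ∃ p : ℕ, p.Prime ∧ T ≤ p ∧ ∃ (v : W → ZMod p) (β : ZMod p), v ≠ 0 ∧ (∀ i ∉ C, v i = 0) ∧
    (∀ i ∈ C, lap y v i = c i * v i + β * F i) ∧ ∀ i ∉ C, lap y v i = 0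

/-- The part of `F` living on `C`. -/
def onC (C : Finset W) (F : W → ℤ) (i : W) : ℤ := if i ∈ C then F i else 0

/-- The integral solution `u` of `A u = det A • F` on `C`. -/
def solU (C : Finset W) (c : W → ℕ) (F : W → ℤ) (y : Sym2 W → Bool) : W → ℤ :=
  (matA C c y).cramer (onC C F)

/-- The value of the row of `r` on `solU`. -/
def rowD (C : Finset W) (c : W → ℕ) (F : W → ℤ) (y : Sym2 W → Bool) (r : W) : ℤ :=
  ∑ i, bt (y s(i, r)) * solU C c F y i

/-- The integer all of whose large prime divisors have to be considered separately. -/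
def badM {h : ℕ} (ρ : Fin h × Bool ↪ W) (C : Finset W) (c : W → ℕ) (F : W → ℤ)
    (y : Sym2 W → Bool) : ℤ :=
  (matA C c y).det * if ∑ j, rowD C c F y (ρ (j, false)) ^ 2 = 0 then 1
    else ∑ j, rowD C c F y (ρ (j, false)) ^ 2

/-- Rows of the first family rarely all annihilate `solU`. -/
lemma kill_stage1 {h : ℕ} (ρ : Fin h × Bool ↪ W) (C : Finset W) (hρ : ∀ z, ρ z ∉ C) (c : W → ℕ)
    (F : W → ℤ) {c₀ : W} (hc₀ : c₀ ∈ C) :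
    Pr (fun y : Sym2 W → Bool => solU C c F y c₀ ≠ 0 ∧ ∀ j, rowD C c F y (ρ (j, false)) = 0) ≤
      4 * (13 / 16) ^ h := by
  rw [Pr_starAct ρ c₀, ← avg_star ρ c₀, ← avg_mul_left]
  refine avg_mono fun y => ?_
  have h1 := fib_star (F := ℚ) ρ (c := c₀) (fun z hz => hρ z (hz ▸ hc₀)) y
    (Submodule.span ℚ {fun i => (solU C c F y i : ℚ)})
  refine (Pr_mono ?_).trans (h1.trans ?_)
  · rintro g ⟨hu, hr⟩
    rw [solU, matA_starAct ρ C hρ c c₀ y g] at hu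
    refine ⟨_, Submodule.mem_span_singleton_self _, by exact_mod_cast hu, fun j => ?_⟩
    have h2 := hr j
    rw [rowD, solU, matA_starAct ρ C hρ c c₀ y g] at h2
    have h3 := congrArg (Int.cast : ℤ → ℚ) h2
    push_cast at h3
    rw [← h3]
    exact sum_congr rfl fun i _ => by rw [bt_cast]; rfl
  · refine mul_le_mul_of_nonneg_right ?_ (prod_nonneg fun j _ => by split_ifs <;> norm_num)
    refine (pow_le_pow_right₀ (by norm_num) ((finrank_span_le_card _).trans (?_ : _ ≤ 1))).trans
      (by norm_num)
    simp

lemma abs_matA_det_le {T k N : ℕ} (hW : Fintype.card W ≤ N) (hN : 1 ≤ N)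
    (hB : (2 * N) ^ (15 * N) ≤ T ^ k) {C : Finset W} {c : W → ℕ} (hc : ∀ i, c i ≤ N)
    (y : Sym2 W → Bool) : |(matA C c y).det| ≤ ((T ^ k : ℕ) : ℤ) := by
  have h1 := abs_det_le (M := 2 * N) (matA C c y) (by omega) (matA_abs C c y hW hN hc)
  refine h1.trans ?_
  have : (2 * N) ^ (2 * (2 * N)) ≤ T ^ k :=
    (Nat.pow_le_pow_right (by omega) (by omega)).trans hB
  exact_mod_cast this

lemma abs_badM_le {T k N : ℕ} (hW : Fintype.card W ≤ N) (hN : 1 ≤ N)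
    (hB : (2 * N) ^ (15 * N) ≤ T ^ k) {C : Finset W} {c : W → ℕ} (hc : ∀ i, c i ≤ N)
    {F : W → ℤ} (hF : ∀ i, |F i| ≤ 1) {h : ℕ} (ρ : Fin h × Bool ↪ W)
    (y : Sym2 W → Bool) : |badM ρ C c F y| ≤ ((T ^ k : ℕ) : ℤ) := by
  set M : ℤ := ((2 * N : ℕ) : ℤ) with hM
  have hM2 : (2 : ℤ) ≤ M := by rw [hM]; push_cast; omega
  have h1 : |(matA C c y).det| ≤ M ^ (4 * N) := by
    have := abs_det_le (M := 2 * N) (matA C c y) (by omega) (matA_abs C c y hW hN hc)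
    rwa [show 2 * (2 * N) = 4 * N by ring] at this
  have h2 : ∀ i, |solU C c F y i| ≤ M ^ (4 * N) := fun i => by
    have := abs_cramer_le (M := 2 * N) (matA C c y) (by omega) (matA_abs C c y hW hN hc) (onC C F)
      (fun i => by
        unfold onC; split_ifs
        · exact (hF i).trans (by linarith)
        · simp) i
    rwa [show 2 * (2 * N) = 4 * N by ring] at this
  have h3 : ∀ r, |rowD C c F y r| ≤ M ^ (4 * N + 1) := fun r => by
    refine (abs_sum_le_sum_abs _ _).trans ?_
    calc _ ≤ ∑ _i : W, M ^ (4 * N) := by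
          refine sum_le_sum fun i _ => ?_
          rw [abs_mul]
          calc _ ≤ 1 * M ^ (4 * N) := by
                refine mul_le_mul ?_ (h2 i) (abs_nonneg _) zero_le_one
                cases y s(i, r) <;> simp
            _ = _ := one_mul _
      _ = (Fintype.card W : ℤ) * M ^ (4 * N) := by simp
      _ ≤ M * M ^ (4 * N) := by
          refine mul_le_mul_of_nonneg_right ?_ (by positivity)
          rw [hM]; push_cast; omega
      _ = _ := by ring
  have hh : (h : ℤ) ≤ M := by
    have := Fintype.card_le_of_embedding ρ
    simp only [Fintype.card_prod, Fintype.card_fin, Fintype.card_bool] at this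
    rw [hM]; push_cast; omega
  have h4 : |∑ j, rowD C c F y (ρ (j, false)) ^ 2| ≤ M ^ (8 * N + 3) := by
    refine (abs_sum_le_sum_abs _ _).trans ?_
    calc _ ≤ ∑ _j : Fin h, (M ^ (4 * N + 1)) ^ 2 := by
          refine sum_le_sum fun i _ => ?_
          rw [abs_pow]
          exact pow_le_pow_left₀ (abs_nonneg _) (h3 _) 2
      _ = (h : ℤ) * (M ^ (4 * N + 1)) ^ 2 := by simp
      _ ≤ M * (M ^ (4 * N + 1)) ^ 2 := mul_le_mul_of_nonneg_right hh (by positivity)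
      _ = _ := by ring
  have h5 : |if ∑ j, rowD C c F y (ρ (j, false)) ^ 2 = 0 then (1 : ℤ)
      else ∑ j, rowD C c F y (ρ (j, false)) ^ 2| ≤ M ^ (8 * N + 3) := by
    split_ifs
    · rw [abs_one]; exact one_le_pow₀ (by linarith)
    · exact h4
  have h6 : M ^ (15 * N) ≤ ((T ^ k : ℕ) : ℤ) := by rw [hM]; exact_mod_cast hB
  rw [badM, abs_mul]
  calc _ ≤ M ^ (4 * N) * M ^ (8 * N + 3) := mul_le_mul h1 h5 (abs_nonneg _) (by positivity)
    _ = M ^ (12 * N + 3) := by ring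
    _ ≤ M ^ (15 * N) := pow_le_pow_right₀ (by linarith) (by omega)
    _ ≤ _ := h6

/-- For the boundedly many primes dividing `badM`, the solution space has bounded dimension and is
killed by the rows of the second family. -/
lemma kill_stage2 {T k N : ℕ} (hW : Fintype.card W ≤ N) (hN : 1 ≤ N)
    (hB : (2 * N) ^ (15 * N) ≤ T ^ k) {C : Finset W} {c : W → ℕ} (hc : ∀ i, c i ≤ N)
    (hT : 2 ≤ T) {F : W → ℤ} (hF : ∀ i, |F i| ≤ 1) {h : ℕ} (ρ ρ' : Fin h × Bool ↪ W)
    (hρ : ∀ z, ρ z ∉ C) (hρ' : ∀ z, ρ' z ∉ C) (hd : ∀ z z', ρ z ≠ ρ' z') {c₀ : W} (hc₀ : c₀ ∈ C) :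
    Pr (fun y : Sym2 W → Bool => (badM ρ C c F y ≠ 0 ∧ (matA C c y).det ≠ 0) ∧
      ∃ p : ℕ, (p.Prime ∧ T ≤ p ∧ (p : ℤ) ∣ badM ρ C c F y) ∧ ∃ v : W → ZMod p,
      (∃ β : ZMod p, ((matA C c y).map (Int.cast : ℤ → ZMod p)).mulVec v =
        fun i => β * (onC C F i : ZMod p)) ∧ v c₀ ≠ 0 ∧
        ∀ j, ∑ i, bt (y s(i, ρ' (j, false))) * v i = 0) ≤
      k * (4 ^ (1 + k) * (13 / 16) ^ h) := by
  rw [Pr_starAct ρ' c₀, ← avg_star ρ' c₀, ← avg_mul_left, ← avg_mul_left]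
  refine avg_mono fun y => ?_
  have hA : ∀ g, matA C c (starAct ρ' c₀ y g) = matA C c y := matA_starAct ρ' C hρ' c c₀ y
  have hM : ∀ g, badM ρ C c F (starAct ρ' c₀ y g) = badM ρ C c F y := by
    intro g
    have h1 : ∀ j, rowD C c F (starAct ρ' c₀ y g) (ρ (j, false)) = rowD C c F y (ρ (j, false)) := by
      intro j
      unfold rowD solU
      rw [hA g]
      refine sum_congr rfl fun i _ => ?_
      rw [Sym2.eq_swap, starAct_of_fixed ρ' c₀ y g (fun h => hρ _ (h ▸ hc₀))
        (fun z hz => hd _ _ hz.symm)]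
    unfold badM
    rw [hA g]
    simp only [h1]
  simp only [hA, hM]
  set P : ℝ := ∏ j, (if y s(c₀, ρ' (j, false)) ≠ y s(c₀, ρ' (j, true)) then (5 / 8 : ℝ) else 1)
  have hP : 0 ≤ P := prod_nonneg fun j _ => by split_ifs <;> norm_num
  by_cases h0 : badM ρ C c F y ≠ 0 ∧ (matA C c y).det ≠ 0
  swap
  · rw [Pr_eq_zero fun g hg => h0 hg.1]; positivity
  set S : Finset ℕ := ((range ((badM ρ C c F y).natAbs + 1)).filter fun p =>
    p.Prime ∧ T ≤ p ∧ (p : ℤ) ∣ badM ρ C c F y) with hS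
  have hSk : S.card ≤ k := card_primes_le hT h0.1 (abs_badM_le hW hN hB hc hF ρ y) S
    fun p hp => (mem_filter.1 hp).2
  have h1 : ∀ p ∈ S, Pr (fun g : Fin h → Bool => ∃ v : W → ZMod p,
      (∃ β : ZMod p, ((matA C c y).map (Int.cast : ℤ → ZMod p)).mulVec v =
        fun i => β * (onC C F i : ZMod p)) ∧ v c₀ ≠ 0 ∧
        ∀ j, ∑ i, bt (starAct ρ' c₀ y g s(i, ρ' (j, false))) * v i = 0) ≤ 4 ^ (1 + k) * P := by
    intro p hp
    have : Fact p.Prime := ⟨(mem_filter.1 hp).2.1⟩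
    have h2 := fib_star (F := ZMod p) ρ' (c := c₀) (fun z hz => hρ' z (hz ▸ hc₀)) y
      ((Submodule.span (ZMod p) {fun i => (onC C F i : ZMod p)}).comap
        (Matrix.toLin' ((matA C c y).map (Int.cast : ℤ → ZMod p))))
    refine (Pr_mono ?_).trans (h2.trans ?_)
    · rintro g ⟨v, ⟨β, hv⟩, hv0, hr⟩
      refine ⟨v, ?_, hv0, hr⟩
      rw [Submodule.mem_comap, Matrix.toLin'_apply, hv]
      exact Submodule.mem_span_singleton.2 ⟨β, by ext; simp⟩
    · refine mul_le_mul_of_nonneg_right (pow_le_pow_right₀ (by norm_num) ?_) hP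
      refine (finrank_comap_span_le _ _).trans (Nat.add_le_add_left ?_ 1)
      exact corank_le hT _ h0.2 (abs_matA_det_le hW hN hB hc y) p (mem_filter.1 hp).2.2.1
  refine (Pr_mono ?_).trans ((Pr_exists_le_card S _ h1).trans ?_)
  · rintro g ⟨-, p, hp, hv⟩
    refine ⟨p, mem_filter.2 ⟨mem_range.2 ?_, hp⟩, hv⟩
    exact Nat.lt_succ_of_le (Nat.le_of_dvd (Int.natAbs_pos.2 h0.1) (Int.natCast_dvd.1 hp.2.2))
  · exact mul_le_mul_of_nonneg_right (by exact_mod_cast hSk) (by positivity)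

lemma kill {T k N : ℕ} (hW : Fintype.card W ≤ N) (hN : 1 ≤ N)
    (hB : (2 * N) ^ (15 * N) ≤ T ^ k) {C : Finset W} {c : W → ℕ} (hc : ∀ i, c i ≤ N)
    (hT : 2 ≤ T) {F : W → ℤ} (hF : ∀ i, |F i| ≤ 1) {h : ℕ} (hC : C ≠ univ)
    (ρ ρ' : Fin h × Bool ↪ W)
    (hρ : ∀ z, ρ z ∉ C) (hρ' : ∀ z, ρ' z ∉ C) (hd : ∀ z z', ρ z ≠ ρ' z') :
    Pr (fun y : Sym2 W → Bool => Conn y ∧ Killed T C c F y) ≤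
      N * ((4 + k * 4 ^ (1 + k)) * (13 / 16) ^ h) := by
  have hCN : (C.card : ℝ) ≤ N := by exact_mod_cast (card_le_univ C).trans hW
  have h1 := Pr_exists_le_card C _ fun c₀ hc₀ => kill_stage1 ρ C hρ c F (c₀ := c₀) hc₀
  have h2 := Pr_exists_le_card C _ fun c₀ hc₀ =>
    kill_stage2 hW hN hB hc hT hF ρ ρ' hρ hρ' hd (c₀ := c₀) hc₀
  calc _ ≤ _ := Pr_mono (F := fun y => (∃ c₀ ∈ C, _) ∨ (∃ c₀ ∈ C, _)) ?_
    _ ≤ _ := (Pr_or _ _).trans (add_le_add h1 h2)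
    _ = C.card * ((4 + k * 4 ^ (1 + k)) * (13 / 16) ^ h) := by ring
    _ ≤ _ := by gcongr
  rintro y ⟨hy, p, hp, hTp, v, β, hv0, hvC, hvL, hvR⟩
  have : Fact p.Prime := ⟨hp⟩
  rw [or_iff_not_imp_left]
  intro hs1
  have hdet : (matA C c y).det ≠ 0 := matA_det_ne_zero C hC c y hy
  set A : Matrix W W (ZMod p) := (matA C c y).map (Int.cast : ℤ → ZMod p) with hA
  have hAv : A.mulVec v = fun i => β * (onC C F i : ZMod p) := by
    funext i
    rw [hA, matA_mulVec C c y v hvC]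
    split_ifs with hi
    · rw [hvL i hi, onC, if_pos hi]; ring
    · rw [onC, if_neg hi]; simp
  have hrow : ∀ r ∉ C, ∑ i, bt (y s(i, r)) * v i = 0 := by
    intro r hr
    rw [← hvR r hr, lap]
    exact sum_congr rfl fun i _ => by rw [hvC r hr, sub_zero, Sym2.eq_swap]
  have hM0 : badM ρ C c F y ≠ 0 := by
    unfold badM
    split_ifs with h
    · simpa using hdet
    · exact mul_ne_zero hdet h
  have hpM : (p : ℤ) ∣ badM ρ C c F y := by
    by_cases hpd : (p : ℤ) ∣ (matA C c y).det
    · exact Dvd.dvd.mul_right hpd _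
    have hd0 : (((matA C c y).det : ℤ) : ZMod p) ≠ 0 := fun h =>
      hpd ((ZMod.intCast_zmod_eq_zero_iff_dvd _ _).1 h)
    have hcr : ∀ i, (((matA C c y).det : ℤ) : ZMod p) * v i = β * (solU C c F y i : ZMod p) := by
      intro i
      have e1 : A.adjugate.mulVec (A.mulVec v) = A.det • v := by
        rw [Matrix.mulVec_mulVec, Matrix.adjugate_mul, Matrix.smul_mulVec, Matrix.one_mulVec]
      have e2 : A.det = (((matA C c y).det : ℤ) : ZMod p) :=
        ((Int.castRingHom (ZMod p)).map_det (matA C c y)).symm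
      have e3 : A.adjugate = (matA C c y).adjugate.map (Int.cast : ℤ → ZMod p) :=
        ((Int.castRingHom (ZMod p)).map_adjugate (matA C c y)).symm
      have e4 := congrFun e1 i
      rw [Pi.smul_apply, smul_eq_mul, e2] at e4
      rw [← e4, hAv, e3, solU, Matrix.cramer_eq_adjugate_mulVec, Matrix.mulVec, Matrix.mulVec,
        dotProduct, dotProduct]
      push_cast
      rw [mul_sum]
      exact sum_congr rfl fun j _ => by rw [Matrix.map_apply]; ring
    obtain ⟨i, hi⟩ : ∃ i, v i ≠ 0 := by
      by_contra h; push Not at h; exact hv0 (funext h)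
    have hprod : β * (solU C c F y i : ZMod p) ≠ 0 := by
      rw [← hcr]; exact mul_ne_zero hd0 hi
    have hβ : β ≠ 0 := left_ne_zero_of_mul hprod
    have hui : solU C c F y i ≠ 0 := fun h => hprod (by rw [h]; simp)
    have hiC : i ∈ C := by
      by_contra h; exact hi (hvC i h)
    have hDp : ∀ r ∉ C, (p : ℤ) ∣ rowD C c F y r := by
      intro r hr
      rw [← ZMod.intCast_zmod_eq_zero_iff_dvd]
      have e1 : β * ((rowD C c F y r : ℤ) : ZMod p) =
          (((matA C c y).det : ℤ) : ZMod p) * ∑ i, bt (y s(i, r)) * v i := by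
        rw [rowD]
        simp only [Int.cast_sum, Int.cast_mul]
        rw [mul_sum, mul_sum]
        refine sum_congr rfl fun j _ => ?_
        rw [bt_cast, mul_left_comm, ← hcr]; ring
      rw [hrow r hr, mul_zero] at e1
      exact (mul_eq_zero.1 e1).resolve_left hβ
    have hsum : ∑ j, rowD C c F y (ρ (j, false)) ^ 2 ≠ 0 := by
      intro h
      refine hs1 ⟨i, hiC, hui, fun j => ?_⟩
      have := (sum_eq_zero_iff_of_nonneg (fun j _ => sq_nonneg _)).1 h j (mem_univ _)
      exact pow_eq_zero_iff two_ne_zero |>.1 this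
    rw [badM, if_neg hsum]
    exact Dvd.dvd.mul_left (dvd_sum fun j _ => Dvd.dvd.pow (hDp _ (hρ _)) two_ne_zero) _
  obtain ⟨i, hi⟩ : ∃ i, v i ≠ 0 := by
    by_contra h; push Not at h; exact hv0 (funext h)
  exact ⟨i, by by_contra h; exact hi (hvC i h), ⟨hM0, hdet⟩, p, ⟨hp, hTp, hpM⟩, v, ⟨β, hAv⟩, hi,
    fun j => hrow _ (hρ' _)⟩
end kill

/-! ### Solutions with few nonzero entries -/

section sparse
variable {W : Type*} [Fintype W] [DecidableEq W]

/-- There are a prime `p ≥ T` and a nonzero vector modulo `p` with fewer than `s` nonzero entries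
on `I` whose image under the Laplacian with offsets `c` is a multiple of `F`. -/
def SparseSol (T : ℕ) (I : Finset W) (s : ℕ) (c : W → ℕ) (F : W → ℤ) (y : Sym2 W → Bool) : Prop :=
  ∃ p : ℕ, p.Prime ∧ T ≤ p ∧ ∃ (v : W → ZMod p) (β : ZMod p), v ≠ 0 ∧
    (∀ i, lap y v i = c i * v i + β * F i) ∧ (I.filter fun i => v i ≠ 0).card < s

lemma card_small_subsets (I : Finset W) (s : ℕ) {N : ℕ} (hN : 2 ≤ N) (hI : I.card ≤ N) :
    (I.powerset.filter fun S => S.card < s).card ≤ N ^ s := by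
  have h1 : (I.powerset.filter fun S => S.card < s) ⊆ (range s).biUnion fun j => I.powersetCard j := by
    intro S hS
    rw [mem_filter, mem_powerset] at hS
    exact mem_biUnion.2 ⟨S.card, mem_range.2 hS.2, mem_powersetCard.2 ⟨hS.1, rfl⟩⟩
  refine (card_le_card h1).trans (card_biUnion_le.trans ?_)
  refine (sum_le_sum (g := fun j => N ^ j) fun j _ => ?_).trans
    (Nat.geomSum_lt hN fun j hj => mem_range.1 hj).le
  rw [card_powersetCard]
  exact (Nat.choose_le_pow _ _).trans (Nat.pow_le_pow_left hI _)

lemma kill2 {T k N : ℕ} (hW : Fintype.card W ≤ N) (hN : 2 ≤ N)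
    (hB : (2 * N) ^ (15 * N) ≤ T ^ k) {c : W → ℕ} (hc : ∀ i, c i ≤ N) (hT : 2 ≤ T)
    {F : W → ℤ} (hF : ∀ i, |F i| ≤ 1) {h s : ℕ} (hh : 1 ≤ h) (I : Finset W)
    (hFI : ∀ i ∈ I, F i = 0) (hI : 4 * h + s ≤ I.card) :
    Pr (fun y : Sym2 W → Bool => Conn y ∧ SparseSol T I s c F y) ≤
      (N : ℝ) ^ s * (N * ((4 + k * 4 ^ (1 + k)) * (13 / 16) ^ h)) := by
  have h1 : ∀ S ∈ I.powerset.filter fun S => S.card < s,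
      Pr (fun y : Sym2 W → Bool => Conn y ∧ Killed T (univ \ (I \ S)) c F y) ≤
        N * ((4 + k * 4 ^ (1 + k)) * (13 / 16) ^ h) := by
    intro S hS
    rw [mem_filter, mem_powerset] at hS
    have hc4 : 4 * h ≤ (I \ S).card := by
      rw [card_sdiff_of_subset hS.1]; omega
    obtain ⟨e⟩ : Nonempty ((Fin h × Bool) ⊕ (Fin h × Bool) ↪ {i // i ∈ I \ S}) := by
      refine Function.Embedding.nonempty_of_card_le ?_
      simp only [Fintype.card_sum, Fintype.card_prod, Fintype.card_fin, Fintype.card_bool,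
        Fintype.card_coe]
      omega
    refine kill hW (by omega) hB hc hT hF (C := univ \ (I \ S)) (h := h) ?_
      (Function.Embedding.inl.trans (e.trans (Function.Embedding.subtype _)))
      (Function.Embedding.inr.trans (e.trans (Function.Embedding.subtype _))) ?_ ?_ ?_
    · intro hu
      obtain ⟨i, hi⟩ : (I \ S).Nonempty := card_pos.1 (by omega)
      have := hu ▸ mem_univ i
      exact (Finset.mem_sdiff.1 this).2 hi
    · intro z hz
      exact (Finset.mem_sdiff.1 hz).2 (e (Sum.inl z)).2
    · intro z hz
      exact (Finset.mem_sdiff.1 hz).2 (e (Sum.inr z)).2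
    · intro z z' hz
      have := e.injective (Subtype.ext hz)
      cases this
  refine (Pr_mono ?_).trans ((Pr_exists_le_card _ _ h1).trans ?_)
  · rintro y ⟨hy, p, hp, hTp, v, β, hv0, hvL, hvs⟩
    refine ⟨I.filter fun i => v i ≠ 0, mem_filter.2 ⟨mem_powerset.2 (filter_subset _ _), hvs⟩, hy,
      p, hp, hTp, v, β, hv0, ?_, fun i _ => hvL i, ?_⟩
    · intro i hi
      by_contra h0
      refine hi (Finset.mem_sdiff.2 ⟨mem_univ _, fun h2 => ?_⟩)
      rw [Finset.mem_sdiff, Finset.mem_filter] at h2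
      exact h2.2 ⟨h2.1, h0⟩
    · intro i hi
      have h2 : i ∈ I \ I.filter fun i => v i ≠ 0 := by
        by_contra h3; exact hi (Finset.mem_sdiff.2 ⟨mem_univ _, h3⟩)
      rw [Finset.mem_sdiff, mem_filter, not_and, not_not] at h2
      rw [hvL, h2.2 h2.1, hFI i h2.1]
      simp
  · refine mul_le_mul_of_nonneg_right ?_ (by positivity)
    exact_mod_cast card_small_subsets I s hN ((card_le_univ I).trans hW)

/-- The event of `SparseSol` for the vectors vanishing on a ground set `K`, where the data `I` and
`F` may depend on the graph. -/
def SparseV {V : Type*} [Fintype V] [DecidableEq V] (T : ℕ) (K : Finset V)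
    (I : (Sym2 V → Bool) → Finset V) (s : ℕ)
    (F : (Sym2 V → Bool) → V → ℤ) (x : Sym2 V → Bool) : Prop :=
  ∃ p : ℕ, p.Prime ∧ T ≤ p ∧ ∃ (v : V → ZMod p) (β : ZMod p), v ≠ 0 ∧ (∀ i ∈ K, v i = 0) ∧
    (∀ i ∉ K, lap x v i = β * F x i) ∧ ((I x).filter fun i => v i ≠ 0).card < s

variable {V : Type*} [Fintype V] [DecidableEq V]

/-- `I` and `F` only depend on the edges meeting `K`. -/
lemma sparseV_le {T k N : ℕ} (hV : Fintype.card V ≤ N) (hN : 2 ≤ N)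
    (hB : (2 * N) ^ (15 * N) ≤ T ^ k) (hT : 2 ≤ T) {K : Finset V}
    {I : (Sym2 V → Bool) → Finset V} {F : (Sym2 V → Bool) → V → ℤ}
    (hdep : ∀ x x' : Sym2 V → Bool, (∀ j, ∀ k ∈ K, x s(j, k) = x' s(j, k)) → I x = I x' ∧ F x = F x')
    (hIK : ∀ x, ∀ i ∈ I x, i ∉ K) (hFI : ∀ x, ∀ i ∈ I x, F x i = 0) (hF : ∀ x i, |F x i| ≤ 1)
    {h s : ℕ} (hh : 1 ≤ h) :
    Pr (SparseV T K I s F) ≤ Pr (fun x => (I x).card < 4 * h + s) +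
      ((N : ℝ) ^ 2 * (3 / 4) ^ (Fintype.card V - K.card - 2) +
      (N : ℝ) ^ s * (N * ((4 + k * 4 ^ (1 + k)) * (13 / 16) ^ h))) := by
  set φ : Sym2 {j // j ∉ K} → Sym2 V := Sym2.map Subtype.val with hφdef
  have hφ : Function.Injective φ := Sym2.map.injective Subtype.val_injective
  have hext : ∀ (x : Sym2 V → Bool) (y : Sym2 {j // j ∉ K} → Bool) (j : V), ∀ k ∈ K,
      Function.extend φ y x s(j, k) = x s(j, k) := fun x y j k hk =>
    Function.extend_apply' _ _ _ (by
      rintro ⟨e, he⟩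
      have : k ∈ φ e := he ▸ Sym2.mem_mk_right j k
      obtain ⟨w, -, hw⟩ := Sym2.mem_map.1 this
      exact w.2 (hw ▸ hk))
  rw [Pr_resample_extend φ hφ]
  refine avg_le_Pr_add (by positivity) (fun x => Pr_le_one _) ?_
  intro x hx
  rw [not_lt] at hx
  have hcardW : Fintype.card {j // j ∉ K} = Fintype.card V - K.card := by
    rw [Fintype.card_subtype_compl]; simp
  set J : Finset {j // j ∉ K} := (I x).subtype (fun j => j ∉ K) with hJ
  have hJc : J.card = (I x).card := by
    rw [hJ, card_subtype, filter_true_of_mem (hIK x)]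
  have h1 := Pr_not_Conn (W := {j // j ∉ K})
  have h2 := kill2 (W := {j // j ∉ K}) (T := T) (k := k) (N := N) (s := s) (h := h)
    (by rw [hcardW]; omega) hN hB (c := fun i => ∑ k ∈ K, if x s(i.1, k) then 1 else 0)
    (fun i => by
      refine le_trans ?_ ((card_le_univ K).trans hV)
      rw [card_eq_sum_ones]
      exact sum_le_sum fun k _ => by split_ifs <;> simp) hT (F := fun i => F x i.1)
    (fun i => hF x i) hh J (fun i hi => hFI x i (mem_subtype.1 hi)) (by rw [hJc]; exact hx)
  refine (Pr_mono (F := fun y => ¬ Conn y ∨ (Conn y ∧ SparseSol T J s _ _ y)) ?_).trans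
    ((Pr_or _ _).trans (add_le_add (h1.trans ?_) h2))
  · rintro y ⟨p, hp, hTp, v, β, hv0, hvK, hvL, hvs⟩
    rw [or_iff_not_imp_left, not_not]
    intro hy
    obtain ⟨hIe, hFe⟩ := hdep _ x (fun j k hk => hext x y j k hk)
    refine ⟨hy, p, hp, hTp, fun j => v j.1, β, ?_, fun i => ?_, ?_⟩
    · intro h0
      refine hv0 (funext fun j => ?_)
      by_cases hj : j ∈ K
      · exact hvK j hj
      · exact congrFun h0 ⟨j, hj⟩
    · have h3 := hvL i i.2
      rw [hFe] at h3
      rw [← h3]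
      unfold lap
      rw [← sum_add_sum_compl K, Nat.cast_sum, sum_mul]
      have e1 : ∑ j ∈ K, bt (Function.extend φ y x s(i.1, j)) * (v j - v i) =
          -∑ k ∈ K, ((if x s(i.1, k) then 1 else 0 : ℕ) : ZMod p) * v i := by
        rw [← sum_neg_distrib]
        refine sum_congr rfl fun k hk => ?_
        rw [hext x y _ k hk, hvK k hk]
        rcases x s(i.1, k) <;> simp
      have e2 : ∑ j ∈ Kᶜ, bt (Function.extend φ y x s(i.1, j)) * (v j - v i) =
          ∑ j : {j // j ∉ K}, bt (y s(i, j)) * (v j - v i) := by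
        rw [sum_subtype Kᶜ (fun j => by simp : ∀ j, j ∈ Kᶜ ↔ j ∉ K)]
        refine sum_congr rfl fun j _ => ?_
        have : s(i.1, j.1) = φ s(i, j) := rfl
        rw [this, hφ.extend_apply]
      rw [e1, e2]; ring
    · rw [hIe] at hvs
      refine lt_of_le_of_lt ?_ hvs
      rw [← card_map (Function.Embedding.subtype fun j => j ∉ K)]
      refine card_le_card fun j hj => ?_
      obtain ⟨i, hi, rfl⟩ := mem_map.1 hj
      rw [mem_filter] at hi
      exact mem_filter.2 ⟨mem_subtype.1 hi.1, hi.2⟩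
  · rw [hcardW]
    gcongr
    omega

end sparse

/-! ### Numerical estimates for sparse solutions -/

lemma kill_hB {q : ℕ} (hq : 10 ^ 6 ≤ q) :
    (2 * (2 * q ^ 100)) ^ (15 * (2 * q ^ 100)) ≤ (2 ^ q ^ 31) ^ q ^ 71 := by
  have h1 : 2 * (2 * q ^ 100) ≤ 2 ^ (101 * q) := by
    calc 2 * (2 * q ^ 100) = 2 ^ 2 * q ^ 100 := by ring
      _ ≤ 2 ^ q * (2 ^ q) ^ 100 := by
          gcongr
          · norm_num
          · omega
          · exact Nat.lt_two_pow_self.le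
      _ = _ := by rw [← pow_mul, ← pow_add]; congr 1; ring
  calc _ ≤ (2 ^ (101 * q)) ^ (15 * (2 * q ^ 100)) := Nat.pow_le_pow_left h1 _
    _ = 2 ^ (3030 * q ^ 101) := by rw [← pow_mul]; congr 1; ring
    _ ≤ 2 ^ (q * q ^ 101) := by gcongr <;> omega
    _ = _ := by rw [← pow_mul]; congr 1; ring

lemma exp_small {x y : ℝ} (hx : 1 ≤ x) (hy : x ^ 98 ≤ y) : Real.exp (-y) ≤ 4 / x ^ 196 := by
  have hp : (0 : ℝ) < x ^ 98 := by positivity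
  have h1 : x ^ 98 / 2 ≤ Real.exp (x ^ 98 / 2) := by linarith [Real.add_one_le_exp (x ^ 98 / 2)]
  have h2 : (x ^ 98 / 2) ^ 2 ≤ Real.exp (x ^ 98) := by
    calc _ ≤ Real.exp (x ^ 98 / 2) ^ 2 := by gcongr
      _ = _ := by rw [← Real.exp_nat_mul]; congr 1; push_cast; ring
  rw [Real.exp_neg, ← one_div]
  calc 1 / Real.exp y ≤ 1 / (x ^ 98 / 2) ^ 2 :=
        one_div_le_one_div_of_le (by positivity) (h2.trans (Real.exp_le_exp.2 hy))
    _ = _ := by field_simp; ring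

lemma card_le_exp {q : ℕ} (hq : 10 ^ 6 ≤ q) : ((2 * q ^ 100 : ℕ) : ℝ) ≤ Real.exp (101 * q) := by
  have hqr : (10 ^ 6 : ℝ) ≤ q := by exact_mod_cast hq
  have e1 : (q : ℝ) ≤ Real.exp q := by linarith [Real.add_one_le_exp (q : ℝ)]
  have e2 := pow_le_exp_mul (by positivity) e1 100
  push_cast at e2 ⊢
  calc 2 * (q : ℝ) ^ 100 ≤ Real.exp q * Real.exp (100 * q) := by
        gcongr
        linarith
    _ = _ := by rw [← Real.exp_add]; congr 1; ring

lemma conn_numeric {q n : ℕ} (hq : 10 ^ 6 ≤ q) (hn : q ^ 100 ≤ n + 4) :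
    ((2 * q ^ 100 : ℕ) : ℝ) ^ 2 * (3 / 4) ^ n ≤ 4 / (q : ℝ) ^ 196 := by
  have hqr : (10 ^ 6 : ℝ) ≤ q := by exact_mod_cast hq
  have hq1 : (1 : ℝ) ≤ q := by linarith
  have hbigr : (10 ^ 12 : ℝ) * (q : ℝ) ^ 98 ≤ (q : ℝ) ^ 100 := by
    rw [show (q : ℝ) ^ 100 = q * q * (q : ℝ) ^ 98 by ring]; gcongr; nlinarith
  have h98 : (q : ℝ) ≤ (q : ℝ) ^ 98 := by
    calc (q : ℝ) = (q : ℝ) ^ 1 := (pow_one _).symm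
      _ ≤ _ := pow_le_pow_right₀ hq1 (by norm_num)
  have e1 := pow_le_exp_mul (by positivity) (card_le_exp hq) 2
  have e2 := pow_le_exp_mul (x := 3 / 4) (y := -(1 / 4)) (by norm_num)
    (by linarith [Real.add_one_le_exp (-(1 / 4) : ℝ)]) n
  have e3 : (q : ℝ) ^ 100 ≤ (n : ℝ) + 4 := by exact_mod_cast hn
  refine (mul_le_mul e1 e2 (by positivity) (Real.exp_pos _).le).trans ?_
  rw [← Real.exp_add]
  refine (Real.exp_le_exp.2 (?_ : _ ≤ -(q : ℝ) ^ 98)).trans (exp_small hq1 le_rfl)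
  push_cast
  linarith

lemma sparse_numeric {V : Type*} [Fintype V] [DecidableEq V] {q : ℕ} (hq : 10 ^ 6 ≤ q)
    (hV1 : q ^ 100 ≤ Fintype.card V) (hV2 : Fintype.card V ≤ 2 * q ^ 100)
    {K : Finset V} (hK : K.card ≤ 2)
    {I : (Sym2 V → Bool) → Finset V} {F : (Sym2 V → Bool) → V → ℤ}
    (hdep : ∀ x x' : Sym2 V → Bool, (∀ j, ∀ k ∈ K, x s(j, k) = x' s(j, k)) → I x = I x' ∧ F x = F x')
    (hIK : ∀ x, ∀ i ∈ I x, i ∉ K) (hFI : ∀ x, ∀ i ∈ I x, F x i = 0) (hF : ∀ x i, |F x i| ≤ 1)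
    (hI : Pr (fun x => (I x).card < q ^ 100 / 20 + 1) ≤ Real.exp (-((q : ℝ) ^ 100 / 100))) :
    Pr (SparseV (2 ^ q ^ 31) K I (q ^ 98) F) ≤ 12 / (q : ℝ) ^ 196 := by
  have hq0 : 0 < q := by omega
  have hqr : (10 ^ 6 : ℝ) ≤ q := by exact_mod_cast hq
  have hq1 : (1 : ℝ) ≤ q := by linarith
  have e100 : q ^ 100 = q * q * q ^ 98 := by ring
  have hp98 : 0 < q ^ 98 := by positivity
  have hbig : 10 ^ 12 * q ^ 98 ≤ q ^ 100 := by
    rw [e100]; gcongr; nlinarith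
  have hN : 2 ≤ 2 * q ^ 100 := by omega
  have hbigr : (10 ^ 12 : ℝ) * (q : ℝ) ^ 98 ≤ (q : ℝ) ^ 100 := by exact_mod_cast hbig
  have hbigs : (10 ^ 6 : ℝ) * (q : ℝ) ^ 99 ≤ (q : ℝ) ^ 100 := by
    have : (q : ℝ) ^ 100 = q * (q : ℝ) ^ 99 := by ring
    rw [this]; gcongr
  have hb99 : (q : ℝ) ^ 98 * 10 ^ 6 ≤ (q : ℝ) ^ 99 := by
    have : (q : ℝ) ^ 99 = (q : ℝ) ^ 98 * q := by ring
    rw [this]; gcongr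
  have h98 : (q : ℝ) ≤ (q : ℝ) ^ 98 := by
    calc (q : ℝ) = (q : ℝ) ^ 1 := (pow_one _).symm
      _ ≤ _ := pow_le_pow_right₀ hq1 (by norm_num)
  have h71 : (q : ℝ) ^ 71 ≤ (q : ℝ) ^ 98 := pow_le_pow_right₀ hq1 (by norm_num)
  have h := sparseV_le (T := 2 ^ q ^ 31) (k := q ^ 71) (N := 2 * q ^ 100) hV2 hN
    (kill_hB hq) (by
      calc 2 = 2 ^ 1 := rfl
        _ ≤ 2 ^ q ^ 31 := Nat.pow_le_pow_right (by norm_num) (Nat.one_le_pow _ _ hq0))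
    hdep hIK hFI hF (h := q ^ 100 / 100) (s := q ^ 98) (by omega)
  have hNe := card_le_exp hq
  have t1 : Pr (fun x => (I x).card < 4 * (q ^ 100 / 100) + q ^ 98) ≤ 4 / (q : ℝ) ^ 196 := by
    refine (Pr_mono fun x hx => lt_of_lt_of_le hx ?_).trans (hI.trans (exp_small hq1 ?_))
    · omega
    · linarith
  have t2 : ((2 * q ^ 100 : ℕ) : ℝ) ^ 2 * (3 / 4) ^ (Fintype.card V - K.card - 2) ≤
      4 / (q : ℝ) ^ 196 := conn_numeric hq (by omega)
  have t3 : ((2 * q ^ 100 : ℕ) : ℝ) ^ q ^ 98 * (((2 * q ^ 100 : ℕ) : ℝ) *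
      ((4 + (q ^ 71 : ℕ) * 4 ^ (1 + q ^ 71)) * (13 / 16) ^ (q ^ 100 / 100))) ≤
      4 / (q : ℝ) ^ 196 := by
    have e1 := pow_le_exp_mul (by positivity) hNe (q ^ 98)
    have e2 := pow_le_exp_mul (x := 13 / 16) (y := -(3 / 16)) (by norm_num)
      (by linarith [Real.add_one_le_exp (-(3 / 16) : ℝ)]) (q ^ 100 / 100)
    have e4 : (q : ℝ) ^ 100 / 100 - 1 ≤ ((q ^ 100 / 100 : ℕ) : ℝ) := by
      have : q ^ 100 ≤ (q ^ 100 / 100) * 100 + 100 := by omega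
      have : (q : ℝ) ^ 100 ≤ ((q ^ 100 / 100 : ℕ) : ℝ) * 100 + 100 := by exact_mod_cast this
      linarith
    have e3 : (4 + (q ^ 71 : ℕ) * 4 ^ (1 + q ^ 71) : ℝ) ≤ Real.exp (7 * (q : ℝ) ^ 71 + 7) := by
      have a1 := pow_le_exp_mul (x := 4) (y := 3) (by norm_num)
        (by linarith [Real.add_one_le_exp (3 : ℝ)]) (1 + q ^ 71)
      have a2 : ((q ^ 71 : ℕ) : ℝ) + 1 ≤ Real.exp ((q ^ 71 : ℕ) : ℝ) := Real.add_one_le_exp _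
      have a3 : (1 : ℝ) ≤ 4 ^ (q ^ 71) := one_le_pow₀ (by norm_num)
      calc (4 + (q ^ 71 : ℕ) * 4 ^ (1 + q ^ 71) : ℝ) ≤ (((q ^ 71 : ℕ) : ℝ) + 1) * 4 ^ (1 + q ^ 71) := by
            rw [pow_add]; linarith
        _ ≤ Real.exp ((q ^ 71 : ℕ) : ℝ) * Real.exp (((1 + q ^ 71 : ℕ) : ℝ) * 3) := by gcongr
        _ ≤ _ := by
            rw [← Real.exp_add]
            refine Real.exp_le_exp.2 ?_
            push_cast
            have : (0 : ℝ) ≤ (q : ℝ) ^ 71 := by positivity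
            linarith
    refine (mul_le_mul e1 (mul_le_mul hNe (mul_le_mul e3 e2 (by positivity) (Real.exp_pos _).le)
      (by positivity) (Real.exp_pos _).le) (by positivity) (Real.exp_pos _).le).trans ?_
    rw [← Real.exp_add, ← Real.exp_add, ← Real.exp_add]
    refine (Real.exp_le_exp.2 (?_ : _ ≤ -(q : ℝ) ^ 98)).trans (exp_small hq1 le_rfl)
    have e5 : ((q ^ 98 : ℕ) : ℝ) * (101 * q) = 101 * (q : ℝ) ^ 99 := by push_cast; ring
    rw [e5]
    linarith
  calc _ ≤ _ := h
    _ ≤ 4 / (q : ℝ) ^ 196 + (4 / (q : ℝ) ^ 196 + 4 / (q : ℝ) ^ 196) :=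
        add_le_add t1 (add_le_add t2 t3)
    _ = _ := by ring

/-! ### Small-ball estimates in one and two dimensions -/

section halasz
variable {p : ℕ} [Fact p.Prime]

lemma gauss_sum {h : ℝ} (hh : 0 < h) :
    𝔼 τ : ZMod p, Real.exp (-(2 * (h * N2 τ))) ≤ 1 / p + 4 / Real.sqrt h := by
  have hp : (0 : ℝ) < p := p_pos
  set t : ℝ := Real.sqrt h / p with ht
  have ht0 : 0 < t := by positivity
  set r : ℝ := Real.exp (-t) with hr
  have hr0 : 0 < r := Real.exp_pos _
  have hr1 : r < 1 := by rw [hr, Real.exp_lt_one_iff]; linarith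
  have h1 : ∀ τ : ZMod p, Real.exp (-(2 * (h * N2 τ))) ≤ 2 * r ^ τ.valMinAbs.natAbs := by
    intro τ
    set a := τ.valMinAbs.natAbs
    have e1 : h * N2 τ = (t * a) ^ 2 := by
      rw [N2_eq_natAbs, ht, mul_pow, div_pow, div_pow, Real.sq_sqrt hh.le]; ring
    have e2 : (2 : ℝ) * r ^ a = 2 * Real.exp (-(t * a)) := by
      rw [hr, ← Real.exp_nat_mul]; ring_nf
    have e3 : Real.exp (1 / 8) ≤ 2 := by
      have := Real.exp_one_lt_d9
      have e4 : Real.exp (1 / 8) ^ 8 = Real.exp 1 := by rw [← Real.exp_nat_mul]; norm_num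
      by_contra hc
      rw [not_le] at hc
      have : (2 : ℝ) ^ 8 < Real.exp (1 / 8) ^ 8 := by gcongr
      linarith
    rw [e1, e2]
    calc _ ≤ Real.exp (1 / 8 + -(t * a)) := Real.exp_le_exp.2 (by nlinarith [sq_nonneg (t * a - 1 / 4)])
      _ ≤ _ := by rw [Real.exp_add]; gcongr
  have h2 : ∑ τ ∈ (univ : Finset (ZMod p)).erase 0, r ^ τ.valMinAbs.natAbs ≤
      ∑ n ∈ range p, 2 * r ^ (n + 1) := by
    have hm : ∀ τ ∈ (univ : Finset (ZMod p)).erase 0, τ.valMinAbs.natAbs - 1 ∈ range p := by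
      intro τ _
      have := ZMod.natAbs_valMinAbs_le τ
      have : 0 < p := (Fact.out : p.Prime).pos
      rw [mem_range]; omega
    rw [← sum_fiberwise_of_maps_to hm]
    refine sum_le_sum fun n _ => ?_
    have hpos : ∀ τ ∈ (univ : Finset (ZMod p)).erase 0, 1 ≤ τ.valMinAbs.natAbs := by
      intro τ hτ
      exact Nat.one_le_iff_ne_zero.2 (by simpa using hτ)
    rw [sum_congr rfl (g := fun _ => r ^ (n + 1)) (fun τ hτ => by
      rw [mem_filter] at hτ
      have := hpos τ hτ.1
      congr 1; omega), sum_const, nsmul_eq_mul]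
    refine mul_le_mul_of_nonneg_right ?_ (by positivity)
    have : (((univ : Finset (ZMod p)).erase 0).filter
        fun τ => τ.valMinAbs.natAbs - 1 = n).card ≤ ({(n + 1 : ℤ), -(n + 1 : ℤ)} : Finset ℤ).card := by
      refine card_le_card_of_injOn ZMod.valMinAbs ?_ (fun a _ b _ h => ZMod.injective_valMinAbs h)
      intro τ hτ
      rw [mem_coe, mem_filter] at hτ
      have := hpos τ hτ.1
      simp only [coe_insert, coe_singleton, Set.mem_insert_iff, Set.mem_singleton_iff]
      omega
    exact_mod_cast this.trans card_le_two
  have h3 : ∑ n ∈ range p, 2 * r ^ (n + 1) ≤ 2 / t := by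
    have e1 : ∑ n ∈ range p, 2 * r ^ (n + 1) = 2 * r * ∑ n ∈ range p, r ^ n := by
      rw [mul_sum]; exact sum_congr rfl fun n _ => by ring
    have e2 : ∑ n ∈ range p, r ^ n ≤ (1 - r)⁻¹ := by
      rw [← tsum_geometric_of_lt_one hr0.le hr1]
      exact (summable_geometric_of_lt_one hr0.le hr1).sum_le_tsum _ fun _ _ => by positivity
    have e3 : t * r ≤ 1 - r := by
      have a1 : (1 + t) * r ≤ Real.exp t * r := by
        gcongr; linarith [Real.add_one_le_exp t]
      rw [hr, ← Real.exp_add, add_neg_cancel, Real.exp_zero] at a1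
      rw [← hr] at a1; linarith
    rw [e1]
    calc _ ≤ 2 * r * (1 - r)⁻¹ := by gcongr
      _ ≤ 2 / t := by
          rw [← div_eq_mul_inv, div_le_div_iff₀ (by linarith) ht0]; linarith
  rw [Fintype.expect_eq_sum_div_card, ZMod.card, ← add_sum_erase _ _ (mem_univ (0 : ZMod p))]
  have h4 : ∑ τ ∈ (univ : Finset (ZMod p)).erase 0, Real.exp (-(2 * (h * N2 τ))) ≤ 4 / t := by
    calc _ ≤ ∑ τ ∈ (univ : Finset (ZMod p)).erase 0, 2 * r ^ τ.valMinAbs.natAbs :=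
          sum_le_sum fun τ _ => h1 τ
      _ ≤ 2 * (2 / t) := by rw [← mul_sum]; gcongr; exact h2.trans h3
      _ = _ := by ring
  have h5 : 4 / t = 4 / Real.sqrt h * p := by rw [ht]; field_simp
  rw [h5] at h4
  have h6 : Real.exp (-(2 * (h * N2 (0 : ZMod p)))) = 1 := by simp
  rw [h6, add_div]
  exact add_le_add le_rfl ((div_le_iff₀ hp).2 h4)

/-- Convexity of the exponential. -/
lemma exp_sum_le_avg {κ : Type*} (S : Finset κ) (hS : S.Nonempty) (f : κ → ℝ) :
    Real.exp (-(2 * ∑ j ∈ S, f j)) ≤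
      (S.card : ℝ)⁻¹ * ∑ j ∈ S, Real.exp (-(2 * (S.card * f j))) := by
  have hc : (0 : ℝ) < S.card := by exact_mod_cast hS.card_pos
  have h := convexOn_exp.map_sum_le (t := S) (w := fun _ => (S.card : ℝ)⁻¹)
    (p := fun j => -(2 * (S.card * f j))) (fun _ _ => by positivity)
    (by rw [sum_const, nsmul_eq_mul, mul_inv_cancel₀ hc.ne']) (fun _ _ => Set.mem_univ _)
  simp only [smul_eq_mul] at h
  rw [← mul_sum, ← mul_sum] at h
  refine le_trans (le_of_eq ?_) h
  congr 1
  rw [sum_neg_distrib, ← mul_sum, ← mul_sum]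
  field_simp

variable {B : Type*} [Fintype B] [DecidableEq B]

/-- The one-dimensional Littlewood–Offord bound. -/
lemma R_le_of_support (u : B → ZMod p) {s : ℕ} (hs : 0 < s)
    (hu : s ≤ (univ.filter fun j => u j ≠ 0).card) : R u ≤ 1 / p + 4 / Real.sqrt s := by
  obtain ⟨S, hSs, hSc⟩ := exists_subset_card_eq hu
  have hne : S.Nonempty := card_pos.1 (by omega)
  have hS0 : (S.card : ℝ) ≠ 0 := by exact_mod_cast (card_pos.2 hne).ne'
  unfold R
  calc _ ≤ 𝔼 t : ZMod p, (S.card : ℝ)⁻¹ * ∑ j ∈ S, Real.exp (-(2 * (S.card * N2 (t * u j)))) := by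
        refine avg_mono fun t => le_trans (Real.exp_le_exp.2 ?_) (exp_sum_le_avg S hne _)
        have := sum_le_univ_sum_of_nonneg (s := S) (f := fun j => N2 (t * u j)) fun j => N2_nonneg _
        linarith
    _ = (S.card : ℝ)⁻¹ * ∑ j ∈ S, 𝔼 t : ZMod p, Real.exp (-(2 * (S.card * N2 t))) := by
        rw [avg_mul_left, expect_sum_comm]
        congr 1
        refine sum_congr rfl fun j hj => ?_
        exact avg_equiv (Equiv.mulRight₀ (u j) (mem_filter.1 (hSs hj)).2)
          (fun t => Real.exp (-(2 * (S.card * N2 t))))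
    _ ≤ (S.card : ℝ)⁻¹ * ∑ j ∈ S, (1 / p + 4 / Real.sqrt s) := by
        gcongr
        rw [hSc]
        exact gauss_sum (by exact_mod_cast hs)
    _ = _ := by rw [sum_const, nsmul_eq_mul, inv_mul_cancel_left₀ hS0]

/-- Two vectors all of whose nontrivial combinations have large support admit many disjoint pairs of
coordinates on which they are linearly independent. -/
lemma exists_pairs (u w : B → ZMod p) (h : ℕ) : ∀ A : Finset B,
    (∀ α β : ZMod p, (α, β) ≠ 0 → 2 * h ≤ (A.filter fun i => α * u i + β * w i ≠ 0).card) →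
    ∃ P : Finset (B × B), P ⊆ A ×ˢ A ∧ P.card = h ∧
      (∀ z ∈ P, u z.1 * w z.2 - u z.2 * w z.1 ≠ 0) ∧
      ∀ f : B → ℝ, (∀ i, 0 ≤ f i) → ∑ z ∈ P, (f z.1 + f z.2) ≤ ∑ i ∈ A, f i := by
  induction h with
  | zero => exact fun A _ => ⟨∅, by simp, by simp, by simp, fun f hf => by
      simpa using sum_nonneg fun i _ => hf i⟩
  | succ h ih =>
    intro A hA
    obtain ⟨i, hi⟩ : (A.filter fun i => (1 : ZMod p) * u i + 0 * w i ≠ 0).Nonempty :=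
      card_pos.1 (by have := hA 1 0 (by simp); omega)
    rw [mem_filter] at hi
    have hui : u i ≠ 0 := by simpa using hi.2
    obtain ⟨j, hj⟩ : (A.filter fun j => -w i * u j + u i * w j ≠ 0).Nonempty :=
      card_pos.1 (by have := hA (-w i) (u i) (by simp [hui]); omega)
    rw [mem_filter] at hj
    have hdet : u i * w j - u j * w i ≠ 0 := fun h0 => hj.2 (by rw [← h0]; ring)
    have hij : i ≠ j := by rintro rfl; exact hdet (by ring)
    obtain ⟨P, hP, hPc, hPd, hPf⟩ := ih ((A.erase i).erase j) (by
      intro α β hαβ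
      have h1 := hA α β hαβ
      rw [filter_erase, filter_erase]
      have h2 := pred_card_le_card_erase (s := (A.filter fun i => α * u i + β * w i ≠ 0)) (a := i)
      have h3 := pred_card_le_card_erase
        (s := (A.filter fun i => α * u i + β * w i ≠ 0).erase i) (a := j)
      omega)
    have hnot : (i, j) ∉ P := fun h0 => by
      have := hP h0
      simp at this
    refine ⟨insert (i, j) P, ?_, by rw [card_insert_of_notMem hnot, hPc], ?_, ?_⟩
    · refine insert_subset (mem_product.2 ⟨hi.1, hj.1⟩) (hP.trans (product_subset_product ?_ ?_)) <;>
        exact (erase_subset _ _).trans (erase_subset _ _)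
    · intro z hz
      rcases mem_insert.1 hz with rfl | hz
      · exact hdet
      · exact hPd z hz
    · intro f hf
      rw [sum_insert hnot]
      have h1 := hPf f hf
      rw [← add_sum_erase A f hi.1, ← add_sum_erase (A.erase i) f (mem_erase.2 ⟨hij.symm, hj.1⟩)]
      linarith

/-- The two-dimensional Littlewood–Offord bound. -/
lemma Pr_linear_two_le (u w : B → ZMod p) {h : ℕ} (hh : 0 < h)
    (hA : ∀ α β : ZMod p, (α, β) ≠ 0 → 2 * h ≤ (univ.filter fun i => α * u i + β * w i ≠ 0).card)
    (c c' : ZMod p) :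
    Pr (fun y : B → Bool => ∑ j, bt (y j) * u j = c ∧ ∑ j, bt (y j) * w j = c') ≤
      (1 / p + 4 / Real.sqrt h) ^ 2 := by
  obtain ⟨P, -, hPc, hPd, hPf⟩ := exists_pairs u w h univ hA
  have hne : P.Nonempty := card_pos.1 (by omega)
  have h0 : ((Pr (fun y : B → Bool => ∑ j, bt (y j) * u j = c ∧ ∑ j, bt (y j) * w j = c') : ℝ) : ℂ) =
      𝔼 y : B → Bool, 𝔼 α : ZMod p, 𝔼 β : ZMod p, chi (α * (∑ j, bt (y j) * u j - c)) *
        chi (β * (∑ j, bt (y j) * w j - c')) := by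
    unfold Pr
    rw [Fintype.expect_eq_sum_div_card, Fintype.expect_eq_sum_div_card]
    push_cast
    congr 1
    refine sum_congr rfl fun y _ => ?_
    simp only [← mul_expect, ← expect_mul]
    rw [avg_chi_mul, avg_chi_mul]
    by_cases h1 : ∑ j, bt (y j) * u j = c <;> by_cases h2 : ∑ j, bt (y j) * w j = c' <;>
      simp [sub_eq_zero, h1, h2]
  have h1 : ((Pr (fun y : B → Bool => ∑ j, bt (y j) * u j = c ∧ ∑ j, bt (y j) * w j = c') : ℝ) : ℂ) =
      𝔼 α : ZMod p, 𝔼 β : ZMod p, chi (-(α * c + β * c')) *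
        ∏ j, ((1 + chi (α * u j + β * w j)) / 2) := by
    rw [h0, expect_comm]
    refine expect_congr rfl fun α _ => ?_
    rw [expect_comm]
    refine expect_congr rfl fun β _ => ?_
    rw [← avg_chi_linear (fun j => α * u j + β * w j), mul_expect]
    refine expect_congr rfl fun y _ => ?_
    rw [← chi_add, ← chi_add]
    congr 1
    have : ∑ j, bt (y j) * (α * u j + β * w j) =
        α * ∑ j, bt (y j) * u j + β * ∑ j, bt (y j) * w j := by
      rw [mul_sum, mul_sum, ← sum_add_distrib]
      exact sum_congr rfl fun j _ => by ring
    rw [this]; ring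
  have h2 : ∀ z ∈ P, 𝔼 α : ZMod p, 𝔼 β : ZMod p, Real.exp (-(2 * (h *
      (N2 (α * u z.1 + β * w z.1) + N2 (α * u z.2 + β * w z.2))))) =
      (𝔼 τ : ZMod p, Real.exp (-(2 * (h * N2 τ)))) ^ 2 := by
    intro z hz
    have hd := hPd z hz
    have hinj : Function.Injective (fun x : ZMod p × ZMod p =>
        ((x.1 * u z.1 + x.2 * w z.1, x.1 * u z.2 + x.2 * w z.2) : ZMod p × ZMod p)) := by
      rintro ⟨a, b⟩ ⟨a', b'⟩ hab
      simp only [Prod.mk.injEq] at hab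
      obtain ⟨e1, e2⟩ := hab
      have e3 : (a - a') * (u z.1 * w z.2 - u z.2 * w z.1) = 0 := by
        linear_combination w z.2 * e1 - w z.1 * e2
      have e4 : (b - b') * (u z.1 * w z.2 - u z.2 * w z.1) = 0 := by
        linear_combination u z.1 * e2 - u z.2 * e1
      rw [Prod.mk.injEq]
      exact ⟨sub_eq_zero.1 ((mul_eq_zero.1 e3).resolve_right hd),
        sub_eq_zero.1 ((mul_eq_zero.1 e4).resolve_right hd)⟩
    have e1 := avg_equiv (Equiv.ofBijective _ (Finite.injective_iff_bijective.1 hinj))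
      (fun x : ZMod p × ZMod p => Real.exp (-(2 * (h * (N2 x.1 + N2 x.2)))))
    simp only [Equiv.ofBijective_apply] at e1
    rw [avg_prod, avg_prod] at e1
    rw [e1, sq, expect_mul]
    refine expect_congr rfl fun α _ => ?_
    rw [mul_expect]
    refine expect_congr rfl fun β _ => ?_
    rw [← Real.exp_add]; congr 1; ring
  have hPc0 : (P.card : ℝ) ≠ 0 := by exact_mod_cast (card_pos.2 hne).ne'
  have hnorm : Pr (fun y : B → Bool => ∑ j, bt (y j) * u j = c ∧ ∑ j, bt (y j) * w j = c') =
      ‖((Pr (fun y : B → Bool => ∑ j, bt (y j) * u j = c ∧ ∑ j, bt (y j) * w j = c') : ℝ) : ℂ)‖ := by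
    rw [Complex.norm_real, Real.norm_of_nonneg (Pr_nonneg _)]
  rw [hnorm, h1]
  calc _ ≤ 𝔼 α : ZMod p, 𝔼 β : ZMod p, (P.card : ℝ)⁻¹ * ∑ z ∈ P, Real.exp (-(2 * (h *
      (N2 (α * u z.1 + β * w z.1) + N2 (α * u z.2 + β * w z.2))))) := by
        refine (norm_avg_le _).trans (avg_mono fun α => (norm_avg_le _).trans (avg_mono fun β => ?_))
        rw [norm_mul, norm_chi, one_mul]
        refine (norm_prod_half_le _).trans ?_
        have := exp_sum_le_avg P hne fun z =>
          N2 (α * u z.1 + β * w z.1) + N2 (α * u z.2 + β * w z.2)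
        rw [hPc] at this
        rw [hPc]
        refine le_trans (Real.exp_le_exp.2 ?_) this
        have := hPf (fun i => N2 (α * u i + β * w i)) fun i => N2_nonneg _
        linarith
    _ = (P.card : ℝ)⁻¹ * ∑ z ∈ P, (𝔼 τ : ZMod p, Real.exp (-(2 * (h * N2 τ)))) ^ 2 := by
        rw [← sum_congr rfl h2, ← expect_sum_comm, ← avg_mul_left]
        refine expect_congr rfl fun α _ => ?_
        rw [avg_mul_left, expect_sum_comm]
    _ = (𝔼 τ : ZMod p, Real.exp (-(2 * (h * N2 τ)))) ^ 2 := by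
        rw [sum_const, nsmul_eq_mul, inv_mul_cancel_left₀ hPc0]
    _ ≤ _ := pow_le_pow_left₀ (avg_nonneg fun τ => (Real.exp_pos _).le)
        (gauss_sum (by exact_mod_cast hh)) 2

end halasz

/-! ### Two swapped configurations at a large prime -/

section large
variable {V : Type*} [Fintype V] [DecidableEq V] {K W₁ : Finset V} {a b : V}

/-- The free vertices of `W` joined to exactly one of `a` and `b`. -/
def swapSet (K W : Finset V) (a b : V) (x : Sym2 V → Bool) : Finset V :=
  univ.filter fun j => j ∉ K ∧ j ∈ W ∧ x s(j, a) ≠ x s(j, b)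

/-- The integral version of `diffF`. -/
def diffZ (K W₁ : Finset V) (a b : V) (z z' : V → Bool) (x : Sym2 V → Bool) (j : V) : ℤ :=
  if j ∈ K ∨ j ∈ W₁ then 0 else (bt (z j) - bt (z' j)) * (bt (x s(j, b)) - bt (x s(j, a)))

lemma diffZ_cast {F : Type*} [Field F] (z z' : V → Bool) (x : Sym2 V → Bool) (j : V) :
    ((diffZ K W₁ a b z z' x j : ℤ) : F) = diffF F K W₁ a b z z' x j := by
  unfold diffZ diffF
  split_ifs
  · simp
  · cases z j <;> cases z' j <;> cases x s(j, b) <;> cases x s(j, a) <;> simp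

/-- Adding the vertex `a` to the free vertices raises the corank, expressed through the row `a`
after the swaps `g` and with value `ε` of the edge `ab`. -/
def UpEv (F : Type*) [Field F] (K : Finset V) (a b : V) (x : Sym2 V → Bool) (ε : Bool)
    (g : V → Bool) : Prop :=
  PerpX x K (rowX F K a b x g) ∧ qf x K (rowX F K a b x g) - bt ε - groundDeg F x K a b = 0

lemma upEv_of_kernel {F : Type*} [Field F] (hab : a ≠ b) (ha : a ∈ K) (hb : b ∈ K)
    (x : Sym2 V → Bool) (g : V → Bool) (ε : Bool) {v : V → F}
    (hv : v ∈ KerK F (act hab ha hb x g ε) (K.erase a)) (hva : v a ≠ 0)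
    (h2 : 2 ≤ Module.finrank F (KerK F (act hab ha hb x g ε) (K.erase a))) :
    KerK F x K ≠ ⊥ ∧ UpEv F K a b x ε g := by
  have hperp : ∀ u ∈ KerK F x K, lap (act hab ha hb x g ε) u a = 0 := by
    intro u hu
    rw [← KerK_act hab ha hb x g ε] at hu
    have h := green (act hab ha hb x g ε) u v
    rw [Finset.sum_eq_zero, Finset.sum_eq_single a] at h
    · exact (mul_eq_zero.1 h.symm).resolve_left hva
    · intro i _ hia
      by_cases hi : i ∈ K
      · rw [hv.1 i (mem_erase.2 ⟨hia, hi⟩), zero_mul]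
      · rw [hu.2 i hi, mul_zero]
    · simp
    · intro i _
      by_cases hi : i ∈ K
      · rw [hu.1 i hi, zero_mul]
      · rw [hv.2 i fun h => hi (mem_of_mem_erase h), mul_zero]
  have hX : PerpX x K (rowX F K a b x g) := fun u hu => by
    rw [← lap_act_a hab ha hb x g ε hu.1]; exact hperp u hu
  have hlt : KerK F x K < KerK F (act hab ha hb x g ε) (K.erase a) := by
    refine lt_of_le_of_ne (fun u hu => ⟨fun i hi => hu.1 i (mem_of_mem_erase hi), fun i hi => ?_⟩) ?_
    · by_cases hia : i = a
      · rw [hia]; exact hperp u hu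
      · have hiK : i ∉ K := fun h => hi (mem_erase.2 ⟨hia, h⟩)
        rw [lap_act_free hab ha hb x g ε hu.1 hiK]; exact hu.2 i hiK
    · intro h
      rw [← h] at hv
      exact hva (hv.1 a ha)
  have hr := Submodule.finrank_lt_finrank_of_lt hlt
  have h1 := step_eq (F := F) hab ha hb
    (fun n => if Module.finrank F (KerK F x K) + 1 ≤ n then (1 : ℝ) else 0) x g ε
  have h3 := step_eq (F := F) hab ha hb (fun n => (n : ℝ)) x g ε
  have hq : UpEv F K a b x ε g := by
    by_contra hq
    have e : ¬ (Module.finrank F (KerK F x K) + 1 ≤ Module.finrank F (KerK F x K) - 1) := by omega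
    have e' : ¬ (Module.finrank F (KerK F x K) + 1 ≤ Module.finrank F (KerK F x K)) := by omega
    unfold UpEv at hq
    simp only [if_pos (Nat.succ_le_of_lt hr), if_neg e, if_neg e', if_neg hq] at h1
    norm_num at h1
  refine ⟨fun h0 => ?_, hq⟩
  unfold UpEv at hq
  rw [if_pos hX, if_pos hq, h0, finrank_bot] at h3
  have : (2 : ℝ) ≤ (Module.finrank F (KerK F (act hab ha hb x g ε) (K.erase a)) : ℝ) := by
    exact_mod_cast h2
  norm_num at h3
  have h3' : Module.finrank F (KerK F (act hab ha hb x g ε) (K.erase a)) = 1 := by exact_mod_cast h3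
  omega

lemma sum_rowX_piecewise {F : Type*} [Field F] (x : Sym2 V → Bool) (z : V → Bool) (v : V → F) :
    ∃ c : F, ∀ g : V → Bool, ∑ j, v j * rowX F K a b x (W₁.piecewise g z) j =
      ∑ j, bt (g j) * (if j ∉ K ∧ j ∈ W₁ then v j * (bt (x s(j, b)) - bt (x s(j, a))) else 0) + c := by
  refine ⟨∑ j, v j * (if j ∈ K then 0 else bt (x s(j, a)) + (if j ∈ W₁ then 0 else
    bt (z j) * (bt (x s(j, b)) - bt (x s(j, a))))), fun g => ?_⟩
  rw [← sum_add_distrib]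
  refine sum_congr rfl fun j _ => ?_
  unfold rowX
  by_cases hK : j ∈ K
  · simp [hK]
  · by_cases hW : j ∈ W₁
    · simp [hK, hW]; ring
    · simp [hK, hW]

lemma support_swap {F : Type*} [Field F] (W : Finset V) (x : Sym2 V → Bool) (v : V → F) (j : V)
    [Decidable (j ∉ K ∧ j ∈ W)] :
    (if j ∉ K ∧ j ∈ W then v j * (bt (x s(j, b)) - bt (x s(j, a))) else 0) ≠ 0 ↔
      j ∈ swapSet K W a b x ∧ v j ≠ 0 := by
  simp only [mem_filter, mem_univ, true_and, swapSet]
  by_cases hK : j ∉ K ∧ j ∈ W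
  · rw [if_pos hK]
    cases x s(j, a) <;> cases x s(j, b) <;> simp [hK.1, hK.2]
  · rw [if_neg hK]; simp; tauto

/-- Two rows that differ only outside `W₁` both raise the corank with small probability. -/
lemma Pr_up_pair {p : ℕ} [Fact p.Prime] (h2 : p ≠ 2) {T s h : ℕ} (hT : T ≤ p) (hh : 0 < h)
    (hs : 2 * h ≤ s) (x : Sym2 V → Bool) (z z' : V → Bool) (ε : Bool)
    {u : V → ZMod p} (hu : u ∈ KerK (ZMod p) x K) (hu0 : u ≠ 0)
    (hF : ∃ j, j ∉ K ∧ j ∉ W₁ ∧ z j ≠ z' j ∧ x s(j, a) ≠ x s(j, b))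
    (hgood : ¬ SparseV T K (swapSet K W₁ a b) s (diffZ K W₁ a b z z') x) :
    Pr (fun g => UpEv (ZMod p) K a b x ε (W₁.piecewise g z) ∧
      UpEv (ZMod p) K a b x ε (W₁.piecewise g z')) ≤ (1 / p + 4 / √h) ^ 2 := by
  set F := diffF (ZMod p) K W₁ a b z z' x with hFdef
  by_cases hP : PerpX x K F
  swap
  · refine le_trans (le_of_eq ?_) (by positivity : (0 : ℝ) ≤ _)
    refine Pr_eq_zero fun g hg => hP ?_
    have := hg.1.1.sub hg.2.1
    simpa only [rowX_diff] using this
  have hw0 := solX_ground hP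
  have hw := solX_free hP
  set w := solX x K F
  obtain ⟨j, hjK, hjW, hzj, hxj⟩ := hF
  have hFj : F j ≠ 0 := by
    rw [hFdef, diffF, if_neg (by tauto)]
    revert hzj hxj
    cases z j <;> cases z' j <;> cases x s(j, b) <;> cases x s(j, a) <;> simp
  have h20 : (2 : ZMod p) ≠ 0 := by
    intro h0
    have : (p : ℕ) ∣ 2 := (ZMod.natCast_eq_zero_iff 2 p).1 (by exact_mod_cast h0)
    exact h2 ((Nat.prime_dvd_prime_iff_eq Fact.out Nat.prime_two).1 this)
  obtain ⟨c, hc⟩ := sum_rowX_piecewise (K := K) (W₁ := W₁) (a := a) (b := b) x z u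
  obtain ⟨c', hc'⟩ := sum_rowX_piecewise (K := K) (W₁ := W₁) (a := a) (b := b) x z w
  refine (Pr_mono ?_).trans (Pr_linear_two_le
    (fun j => if j ∉ K ∧ j ∈ W₁ then u j * (bt (x s(j, b)) - bt (x s(j, a))) else 0)
    (fun j => if j ∉ K ∧ j ∈ W₁ then w j * (bt (x s(j, b)) - bt (x s(j, a))) else 0) hh ?_
    (-c) ((-∑ i, F i + ∑ i, w i * F i) / 2 - c'))
  · rintro g ⟨⟨hX, hq⟩, ⟨hX', hq'⟩⟩
    have e1 := hX u hu
    rw [hc] at e1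
    have e2 := qf_diff hX hX' hw0 (fun i hi => by rw [rowX_diff]; exact hw i hi)
    simp only [rowX_diff] at e2
    rw [hc'] at e2
    refine ⟨by linear_combination e1, ?_⟩
    rw [eq_sub_iff_add_eq, eq_div_iff h20]
    linear_combination hq' - hq + e2
  · intro α β hαβ
    refine hs.trans ?_
    by_contra hlt
    rw [not_le] at hlt
    have hL : ∀ i, lap x (fun i => α * u i + β * w i) i = α * lap x u i + β * lap x w i := by
      intro i
      unfold lap
      rw [mul_sum, mul_sum, ← sum_add_distrib]
      exact sum_congr rfl fun _ _ => by ring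
    refine hgood ⟨p, Fact.out, hT, fun i => α * u i + β * w i, β, ?_, ?_, ?_, ?_⟩
    · intro h0
      have h3 := hL j
      rw [hu.2 j hjK, hw j hjK, h0] at h3
      have hβ : β = 0 := by
        have : β * F j = 0 := by simpa [lap] using h3.symm
        exact (mul_eq_zero.1 this).resolve_right hFj
      obtain ⟨i, hi⟩ := Function.ne_iff.1 hu0
      have h4 := congrFun h0 i
      simp only [hβ, zero_mul, add_zero, Pi.zero_apply] at h4
      exact hαβ (by rw [hβ, (mul_eq_zero.1 h4).resolve_right hi]; rfl)
    · intro i hi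
      simp [hu.1 i hi, hw0 i hi]
    · intro i hi
      rw [diffZ_cast]
      rw [hL, hu.2 i hi, hw i hi, mul_zero, zero_add]
    · refine lt_of_eq_of_lt ?_ hlt
      congr 1
      ext j
      simp only [mem_filter, mem_univ, true_and]
      rw [← support_swap (K := K) (a := a) (b := b) W₁ x fun i => α * u i + β * w i]
      split_ifs
      · rw [show α * (u j * (bt (x s(j, b)) - bt (x s(j, a)))) +
          β * (w j * (bt (x s(j, b)) - bt (x s(j, a)))) =
          (α * u j + β * w j) * (bt (x s(j, b)) - bt (x s(j, a))) by ring]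
      · simp

lemma Pr_sq_le_pair (S : Finset V) (E : (V → Bool) → Prop) :
    Pr E ^ 2 ≤ 𝔼 z : V → Bool, 𝔼 z' : V → Bool,
      Pr (fun g => E (S.piecewise g z) ∧ E (S.piecewise g z')) := by
  have h : Pr E = 𝔼 g : V → Bool, Pr (fun z => E (S.piecewise g z)) := by
    unfold Pr
    rw [resample_piecewise S, expect_comm]
  rw [h]
  refine (avg_sq_le _).trans (le_of_eq ?_)
  unfold Pr
  rw [expect_congr rfl fun z _ => expect_comm univ univ _, expect_comm]
  refine expect_congr rfl fun g _ => ?_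
  rw [sq, expect_mul_expect, expect_comm]
  refine expect_congr rfl fun z _ => expect_congr rfl fun z' _ => ?_
  split_ifs <;> simp_all

/-- The bad event for a pair of rows: the rows agree, or some combination of kernel vectors is
sparse. -/
def PairBad (T s : ℕ) (K W₁ : Finset V) (a b : V) (x : Sym2 V → Bool) (z z' : V → Bool) : Prop :=
  SparseV T K (swapSet K W₁ a b) s (diffZ K W₁ a b z z') x ∨
    ¬ ∃ j, j ∉ K ∧ j ∉ W₁ ∧ z j ≠ z' j ∧ x s(j, a) ≠ x s(j, b)

lemma Pr_up_sq_le {p : ℕ} [Fact p.Prime] (h2 : p ≠ 2) {T s h : ℕ} (hT : T ≤ p) (hh : 0 < h)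
    (hs : 2 * h ≤ s) (x : Sym2 V → Bool) (ε : Bool) (hker : KerK (ZMod p) x K ≠ ⊥)
    (hgood : ¬ SparseV T K (swapSet K W₁ᶜ a b) s 0 x) :
    Pr (UpEv (ZMod p) K a b x ε) ^ 2 ≤ (1 / p + 4 / √h) ^ 3 +
      𝔼 z : V → Bool, Pr (PairBad T s K W₁ a b x z) := by
  obtain ⟨u, hu, hu0⟩ := (Submodule.ne_bot_iff _).1 hker
  set κ : ℝ := 1 / p + 4 / √h
  have hκ : 0 ≤ κ := by positivity
  have hsupp : s ≤ ((swapSet K W₁ᶜ a b x).filter fun j => u j ≠ 0).card := by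
    by_contra hlt
    exact hgood ⟨p, Fact.out, hT, u, 0, hu0, hu.1, fun i hi => by rw [hu.2 i hi]; simp, not_le.1 hlt⟩
  have hL : ∀ z, Pr (fun z' : V → Bool => ∑ j, u j * diffF (ZMod p) K W₁ a b z z' x j = 0) ≤ κ := by
    intro z
    have h1 := R_le_of_support (s := h) (fun j => if j ∉ K ∧ j ∈ W₁ᶜ then
      u j * (bt (x s(j, b)) - bt (x s(j, a))) else 0) hh (by
        refine le_trans (by omega : h ≤ s) (hsupp.trans (card_le_card fun j hj => ?_))
        rw [mem_filter] at hj ⊢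
        exact ⟨mem_univ _, (support_swap _ _ _ _).2 hj⟩)
    refine (Pr_mono ?_).trans ((Pr_linear_le _ (∑ j, bt (z j) * (if j ∉ K ∧ j ∈ W₁ᶜ then
      u j * (bt (x s(j, b)) - bt (x s(j, a))) else 0))).trans h1)
    intro z' hz'
    rw [← sub_eq_zero, ← sum_sub_distrib, ← neg_eq_zero, ← sum_neg_distrib]
    refine Eq.trans ?_ hz'
    refine sum_congr rfl fun j _ => ?_
    unfold diffF
    by_cases hK : j ∈ K
    · simp [hK]
    · by_cases hW : j ∈ W₁
      · simp [hW]
      · simp [hK, hW]; ring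
  refine (Pr_sq_le_pair W₁ _).trans ?_
  have h3 : ∀ z z' : V → Bool, Pr (fun g => UpEv (ZMod p) K a b x ε (W₁.piecewise g z) ∧
      UpEv (ZMod p) K a b x ε (W₁.piecewise g z')) ≤
      κ ^ 2 * (if ∑ j, u j * diffF (ZMod p) K W₁ a b z z' x j = 0 then 1 else 0) +
        (if PairBad T s K W₁ a b x z z' then 1 else 0) := by
    intro z z'
    by_cases hP : ∑ j, u j * diffF (ZMod p) K W₁ a b z z' x j = 0
    · by_cases hB : PairBad T s K W₁ a b x z z'
      · rw [if_pos hB]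
        refine (Pr_le_one _).trans ?_
        split_ifs <;> nlinarith [sq_nonneg κ]
      · rw [if_pos hP, if_neg hB, mul_one, add_zero]
        unfold PairBad at hB
        rw [not_or, not_not] at hB
        exact Pr_up_pair h2 hT hh hs x z z' ε hu hu0 hB.2 hB.1
    · rw [if_neg hP, mul_zero, zero_add]
      refine le_trans (le_of_eq (Pr_eq_zero fun g hg => hP ?_)) (by split_ifs <;> norm_num)
      have := hg.1.1.sub hg.2.1 u hu
      simpa only [rowX_diff] using this
  have hz : ∀ z : V → Bool, 𝔼 z' : V → Bool, Pr (fun g => UpEv (ZMod p) K a b x ε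
      (W₁.piecewise g z) ∧ UpEv (ZMod p) K a b x ε (W₁.piecewise g z')) ≤
      κ ^ 3 + Pr (PairBad T s K W₁ a b x z) := by
    intro z
    refine (avg_mono (h3 z)).trans ?_
    rw [expect_add_distrib, avg_mul_left]
    refine add_le_add ?_ le_rfl
    rw [show κ ^ 3 = κ ^ 2 * κ by ring]
    refine mul_le_mul_of_nonneg_left ?_ (by positivity)
    rw [← Pr_def]; exact hL z
  refine (avg_mono hz).trans ?_
  rw [expect_add_distrib, expect_const univ_nonempty]

end large

/-! ### Large primes have corank at most one -/

section large
variable {V : Type*} [Fintype V] [DecidableEq V] {a b : V}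

/-- Some prime `p ≥ T` has corank at least two for the Laplacian grounded at `b`, with a kernel
vector not vanishing at `a`. -/
def LargeBadAt (T : ℕ) (b a : V) (x : Sym2 V → Bool) : Prop :=
  ∃ p : ℕ, ∃ _ : Fact p.Prime, T ≤ p ∧ 2 ≤ Module.finrank (ZMod p) (KerK (ZMod p) x {b}) ∧
    ∃ v ∈ KerK (ZMod p) x {b}, v a ≠ 0

/-- On a well-connected graph the reduced determinant bounds the number of relevant primes; each
contributes by `Pr_up_sq_le`. The square root is linearized with a parameter `δ`. -/
lemma Pr_largeBadAt_le (hab : a ≠ b) {K : Finset V} (hK : K = {a, b}) (W₁ : Finset V)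
    {T k N s h : ℕ} (hV : Fintype.card V ≤ N) (hN : 1 ≤ N) (hB : (2 * N) ^ (15 * N) ≤ T ^ k)
    (hT : 3 ≤ T) (hh : 0 < h) (hs : 2 * h ≤ s) {δ : ℝ} (hδ : 0 < δ) :
    Pr (LargeBadAt T b a) ≤ (Pr (fun x : Sym2 V → Bool => ¬ Conn x) +
      Pr (SparseV T K (swapSet K W₁ᶜ a b) s 0)) +
      k * (δ / 2 + ((1 / (T : ℝ) + 4 / √h) ^ 3 +
        𝔼 x, 𝔼 z : V → Bool, Pr (PairBad T s K W₁ a b x z)) / (2 * δ)) := by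
  have ha : a ∈ K := by simp [hK]
  have hb : b ∈ K := by simp [hK]
  have hKe : K.erase a = {b} := by
    rw [hK]; ext j; simp only [mem_erase, mem_insert, mem_singleton]
    constructor
    · tauto
    · rintro rfl; exact ⟨hab.symm, Or.inr rfl⟩
  set B : (Sym2 V → Bool) → ℝ := fun x => 𝔼 z : V → Bool, Pr (PairBad T s K W₁ a b x z) with hBdef
  have hB0 : ∀ x, 0 ≤ B x := fun x => avg_nonneg fun z => Pr_nonneg _
  set κ : ℝ := 1 / (T : ℝ) + 4 / √h
  have hκ : 0 ≤ κ := by positivity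
  have hpt : ∀ x : Sym2 V → Bool, 𝔼 g : V → Bool, 𝔼 ε : Bool,
      (if LargeBadAt T b a (act hab ha hb x g ε) then (1 : ℝ) else 0) ≤
      (if ¬ Conn x ∨ SparseV T K (swapSet K W₁ᶜ a b) s 0 x then 1 else 0) +
        k * (δ / 2 + (κ ^ 3 + B x) / (2 * δ)) := by
    intro x
    have hr : 0 ≤ k * (δ / 2 + (κ ^ 3 + B x) / (2 * δ)) := by
      have := hB0 x
      positivity
    split_ifs with hx
    · refine (avg_le (c := 1) fun g => avg_le fun ε => ?_).trans (by linarith)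
      split_ifs <;> norm_num
    rw [not_or, not_not] at hx
    rw [zero_add, expect_comm]
    refine avg_le fun ε => ?_
    set D := (matA Kᶜ (fun _ => 0) x).det with hD
    have hD0 : D ≠ 0 := matA_det_ne_zero _ (fun h => by
      have := h ▸ mem_univ a
      exact (mem_compl.1 this) ha) _ x hx.1
    have hDk := abs_matA_det_le (C := Kᶜ) (c := fun _ => 0) hV hN hB (fun _ => Nat.zero_le _) x
    set Ps := D.natAbs.primeFactors.filter (T ≤ ·) with hPs
    have hPk : Ps.card ≤ k := by
      refine card_primes_le (by omega) hD0 hDk Ps fun p hp => ?_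
      rw [hPs, mem_filter, Nat.mem_primeFactors] at hp
      exact ⟨hp.1.1, hp.2, Int.natCast_dvd.2 hp.1.2.1⟩
    rw [← Pr_def]
    refine (Pr_mono (F := fun g => ∃ p ∈ Ps, ∃ _ : Fact p.Prime, KerK (ZMod p) x K ≠ ⊥ ∧
      UpEv (ZMod p) K a b x ε g) ?_).trans ((Pr_exists_le_card Ps _
        (c := δ / 2 + (κ ^ 3 + B x) / (2 * δ)) ?_).trans ?_)
    · rintro g ⟨p, hp, hTp, h2, v, hv, hva⟩
      have h1 := upEv_of_kernel (F := ZMod p) hab ha hb x g ε (v := v) (by rw [hKe]; exact hv) hva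
        (by rw [hKe]; exact h2)
      refine ⟨p, ?_, hp, h1⟩
      rw [hPs, mem_filter, Nat.mem_primeFactors]
      refine ⟨⟨hp.out, ?_, Int.natAbs_ne_zero.2 hD0⟩, hTp⟩
      rw [← Int.natCast_dvd]
      obtain ⟨u, hu, hu0⟩ := (Submodule.ne_bot_iff _).1 h1.1
      have hdet : ((matA Kᶜ (fun _ => 0) x).map (Int.cast : ℤ → ZMod p)).det = 0 :=
        Matrix.exists_mulVec_eq_zero_iff.1 ⟨u, hu0, funext fun i => by
          rw [matA_mulVec Kᶜ _ x u (fun i hi => hu.1 i (by simpa using hi))]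
          split_ifs with hi
          · rw [hu.2 i (mem_compl.1 hi)]; simp
          · rfl⟩
      rw [← ZMod.intCast_zmod_eq_zero_iff_dvd] <;> try exact ⟨hp.out.ne_zero⟩
      rw [hD, ← hdet]
      exact (Int.castRingHom (ZMod p)).map_det _
    · intro p hp
      rw [hPs, mem_filter, Nat.mem_primeFactors] at hp
      by_cases hker : ∃ _ : Fact p.Prime, KerK (ZMod p) x K ≠ ⊥
      · obtain ⟨hF, hker⟩ := hker
        have h1 := Pr_up_sq_le (p := p) (by omega) hp.2 hh hs x ε hker hx.2
        have h2 : (1 / (p : ℝ) + 4 / √h) ^ 3 ≤ κ ^ 3 := by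
          have : (1 / (p : ℝ)) ≤ 1 / T :=
            one_div_le_one_div_of_le (by exact_mod_cast (by omega : 0 < T)) (by exact_mod_cast hp.2)
          exact pow_le_pow_left₀ (by positivity) (add_le_add this le_rfl) 3
        have h3 : Pr (fun g => ∃ _ : Fact p.Prime, KerK (ZMod p) x K ≠ ⊥ ∧
            UpEv (ZMod p) K a b x ε g) ≤ Pr (UpEv (ZMod p) K a b x ε) :=
          Pr_mono fun g hg => by obtain ⟨_, _, h⟩ := hg; exact h
        refine h3.trans ?_
        set P := Pr (UpEv (ZMod p) K a b x ε)
        have h4 : P ^ 2 ≤ κ ^ 3 + B x := h1.trans (add_le_add h2 le_rfl)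
        have h5 : P ≤ δ / 2 + P ^ 2 / (2 * δ) := by
          rw [div_add_div _ _ (by norm_num) (by positivity), le_div_iff₀ (by positivity)]
          nlinarith [sq_nonneg (P - δ)]
        refine h5.trans ?_
        gcongr
      · refine le_trans (le_of_eq (Pr_eq_zero fun g hg => hker ?_)) ?_
        · obtain ⟨hF, h, _⟩ := hg
          exact ⟨hF, h⟩
        · have := hB0 x
          positivity
    · refine mul_le_mul_of_nonneg_right (by exact_mod_cast hPk) ?_
      have := hB0 x
      positivity
  calc Pr (LargeBadAt T b a) = 𝔼 x, 𝔼 g : V → Bool, 𝔼 ε : Bool,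
        (if LargeBadAt T b a (act hab ha hb x g ε) then (1 : ℝ) else 0) := by
          unfold Pr
          exact avg_act hab ha hb fun x => if LargeBadAt T b a x then (1 : ℝ) else 0
    _ ≤ _ := avg_mono hpt
    _ = Pr (fun x => ¬ Conn x ∨ SparseV T K (swapSet K W₁ᶜ a b) s 0 x) +
        k * (δ / 2 + (κ ^ 3 + 𝔼 x, B x) / (2 * δ)) := by
          rw [expect_add_distrib, ← Pr_def, avg_mul_left, expect_add_distrib,
            expect_const univ_nonempty, ← expect_div, expect_add_distrib,
            expect_const univ_nonempty]
    _ ≤ _ := add_le_add (Pr_or _ _) le_rfl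

lemma sparse_swapSet {q : ℕ} (hq : 10 ^ 6 ≤ q) (hV1 : q ^ 100 ≤ Fintype.card V)
    (hV2 : Fintype.card V ≤ 2 * q ^ 100) (hab : a ≠ b) (W : Finset V)
    (hW : q ^ 100 / 3 + 1 ≤ (W \ {a, b}).card) (F : (Sym2 V → Bool) → V → ℤ)
    (hdep : ∀ x x' : Sym2 V → Bool, (∀ j, ∀ k ∈ ({a, b} : Finset V), x s(j, k) = x' s(j, k)) →
      F x = F x') (hFW : ∀ x, ∀ i ∈ W, F x i = 0) (hF : ∀ x i, |F x i| ≤ 1) :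
    Pr (SparseV (2 ^ q ^ 31) {a, b} (swapSet {a, b} W a b) (q ^ 98) F) ≤ 12 / (q : ℝ) ^ 196 := by
  refine sparse_numeric hq hV1 hV2 card_le_two (fun x x' h => ⟨?_, hdep x x' h⟩) ?_ ?_ hF ?_
  · unfold swapSet
    refine filter_congr fun j _ => ?_
    rw [h j a (by simp), h j b (by simp)]
  · intro x i hi
    exact (mem_filter.1 hi).2.1
  · intro x i hi
    exact hFW x i (mem_filter.1 hi).2.2.1
  · have h1 : q ^ 1 ≤ q ^ 100 := Nat.pow_le_pow_right (by omega) (by norm_num)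
    rw [pow_one] at h1
    have h2 := numeric_tail (q ^ 100) (by omega) hW
    have h3 := Pr_few_disagree (W \ {a, b}) hab (by simp) (by simp) (q ^ 100 / 20 + 1)
    refine (Pr_mono fun x hx => ?_).trans (h3.trans (by push_cast at h2; exact h2))
    refine lt_of_le_of_lt (card_le_card fun j hj => ?_) hx
    rw [mem_filter, Finset.mem_sdiff] at hj
    exact mem_filter.2 ⟨mem_univ _, hj.1.2, hj.1.1, hj.2⟩

lemma Pr_pairBad_le {q : ℕ} (hq : 10 ^ 6 ≤ q) (hV1 : q ^ 100 ≤ Fintype.card V)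
    (hV2 : Fintype.card V ≤ 2 * q ^ 100) (hab : a ≠ b) (W : Finset V)
    (hW : q ^ 100 / 3 + 1 ≤ (W \ {a, b}).card) (hW' : q ^ 100 / 3 + 1 ≤ (Wᶜ \ {a, b}).card) :
    𝔼 x, 𝔼 z : V → Bool, Pr (PairBad (2 ^ q ^ 31) (q ^ 98) {a, b} W a b x z) ≤
      16 / (q : ℝ) ^ 196 := by
  have hqr : (10 ^ 6 : ℝ) ≤ q := by exact_mod_cast hq
  have e1 : 𝔼 x, 𝔼 z : V → Bool, Pr (PairBad (2 ^ q ^ 31) (q ^ 98) {a, b} W a b x z) =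
      𝔼 z : V → Bool, 𝔼 z' : V → Bool, Pr (fun x => PairBad (2 ^ q ^ 31) (q ^ 98) {a, b} W a b x z z') := by
    unfold Pr
    rw [expect_comm]
    exact expect_congr rfl fun z _ => expect_comm _ _ _
  have e2 := hT_bound (K := {a, b}) (W₁ := W) hab (by simp) (by simp) (m := q ^ 100 / 3 + 1)
    (hW'.trans (card_le_card fun j hj => by
      rw [Finset.mem_sdiff, mem_compl] at hj
      exact mem_filter.2 ⟨mem_univ _, hj.2, hj.1⟩))
  have e3 : (3 / 4 : ℝ) ^ (q ^ 100 / 3 + 1) ≤ 4 / (q : ℝ) ^ 196 := by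
    refine (pow_le_exp_mul (x := 3 / 4) (y := -(1 / 4)) (by norm_num)
      (by linarith [Real.add_one_le_exp (-(1 / 4) : ℝ)]) (q ^ 100 / 3 + 1)).trans ?_
    rw [mul_neg]
    refine exp_small (by linarith) ?_
    have h1 : q ^ 98 * 12 ≤ q ^ 100 := by
      rw [show q ^ 100 = q ^ 98 * (q * q) by ring]; gcongr; nlinarith
    have h2 : q ^ 98 * 4 ≤ q ^ 100 / 3 + 1 := by omega
    have : (q : ℝ) ^ 98 * 4 ≤ ((q ^ 100 / 3 + 1 : ℕ) : ℝ) := by exact_mod_cast h2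
    linarith
  rw [e1]
  calc _ ≤ 𝔼 z : V → Bool, 𝔼 z' : V → Bool, (12 / (q : ℝ) ^ 196 + Pr (fun x : Sym2 V → Bool =>
        ¬ ∃ j, j ∉ ({a, b} : Finset V) ∧ j ∉ W ∧ z j ≠ z' j ∧ x s(j, a) ≠ x s(j, b))) := by
        refine avg_mono fun z => avg_mono fun z' => (Pr_or _ _).trans (add_le_add ?_ le_rfl)
        refine sparse_swapSet hq hV1 hV2 hab W hW _ (fun x x' h => ?_) ?_ ?_
        · funext j
          rw [diffZ, diffZ, h j a (by simp), h j b (by simp)]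
        · intro x i hi
          simp [diffZ, hi]
        · intro x i
          unfold diffZ
          split_ifs
          · simp
          · cases z i <;> cases z' i <;> cases x s(i, b) <;> cases x s(i, a) <;> simp
    _ = 12 / (q : ℝ) ^ 196 + 𝔼 z : V → Bool, 𝔼 z' : V → Bool, Pr (fun x : Sym2 V → Bool =>
        ¬ ∃ j, j ∉ ({a, b} : Finset V) ∧ j ∉ W ∧ z j ≠ z' j ∧ x s(j, a) ≠ x s(j, b)) := by
        rw [expect_congr rfl fun z _ => (expect_add_distrib _ _ _), expect_add_distrib]
        simp only [expect_const univ_nonempty]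
    _ ≤ 12 / (q : ℝ) ^ 196 + 4 / (q : ℝ) ^ 196 := add_le_add le_rfl (e2.trans e3)
    _ = _ := by ring

lemma Pr_largeBadAt_numeric {q : ℕ} (hq : 10 ^ 6 ≤ q) (hV1 : q ^ 100 ≤ Fintype.card V)
    (hV2 : Fintype.card V ≤ 2 * q ^ 100) (hab : a ≠ b) :
    Pr (LargeBadAt (2 ^ q ^ 31) b a) ≤ 400 / ((q : ℝ) ^ 2 * √q) := by
  have hqr : (10 ^ 6 : ℝ) ≤ q := by exact_mod_cast hq
  have hq1 : (1 : ℝ) ≤ q := by linarith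
  have hq0 : (0 : ℝ) < q := by linarith
  have h100 : q ^ 1 ≤ q ^ 100 := Nat.pow_le_pow_right (by omega) (by norm_num)
  have h98 : q ^ 1 ≤ q ^ 98 := Nat.pow_le_pow_right (by omega) (by norm_num)
  rw [pow_one] at h100 h98
  obtain ⟨W, hWs, hWc⟩ := exists_subset_card_eq (s := (univ : Finset V) \ {a, b})
    (n := q ^ 100 / 3 + 1) (by
      rw [card_sdiff_of_subset (subset_univ _), card_univ, card_pair hab]; omega)
  have hWd : W \ {a, b} = W := by
    rw [Finset.sdiff_eq_self_iff_disjoint, disjoint_left]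
    intro j hj
    exact (Finset.mem_sdiff.1 (hWs hj)).2
  have hW : q ^ 100 / 3 + 1 ≤ (W \ {a, b}).card := by rw [hWd, hWc]
  have hW' : q ^ 100 / 3 + 1 ≤ (Wᶜ \ {a, b}).card := by
    have h1 := le_card_sdiff ({a, b} : Finset V) Wᶜ
    rw [card_compl, card_pair hab] at h1
    omega
  have hδ : (0 : ℝ) < 1 / ((q : ℝ) ^ 73 * √q) := by positivity
  have h := Pr_largeBadAt_le hab rfl W hV2 (by omega) (kill_hB hq) (T := 2 ^ q ^ 31) (k := q ^ 71)
    (s := q ^ 98) (h := q ^ 98 / 2) (by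
      calc 3 ≤ 2 ^ 2 := by norm_num
        _ ≤ 2 ^ q ^ 31 := Nat.pow_le_pow_right (by norm_num) (by
          calc 2 ≤ q := by omega
            _ = q ^ 1 := (pow_one _).symm
            _ ≤ _ := Nat.pow_le_pow_right (by omega) (by norm_num))) (by omega) (by omega) hδ
  have t1 : Pr (fun x : Sym2 V → Bool => ¬ Conn x) ≤ 4 / (q : ℝ) ^ 196 := by
    refine Pr_not_Conn.trans ((mul_le_mul_of_nonneg_right ?_ (by positivity)).trans
      (conn_numeric hq (n := Fintype.card V - 2) (by omega)))
    exact pow_le_pow_left₀ (by positivity) (by exact_mod_cast hV2) 2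
  have t2 := sparse_swapSet hq hV1 hV2 hab Wᶜ hW' 0 (fun _ _ _ => rfl) (fun _ _ _ => rfl)
    (fun _ _ => by simp)
  have t3 := Pr_pairBad_le hq hV1 hV2 hab W hW hW'
  have t4 : 1 / (((2 ^ q ^ 31 : ℕ) : ℕ) : ℝ) + 4 / √((q ^ 98 / 2 : ℕ) : ℝ) ≤ 9 / (q : ℝ) ^ 49 := by
    have e1 : (q : ℝ) ^ 49 ≤ (((2 ^ q ^ 31 : ℕ) : ℕ) : ℝ) := by
      have : q ^ 49 ≤ 2 ^ q ^ 31 := by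
        calc q ^ 49 ≤ (2 ^ q) ^ 49 := by gcongr; exact Nat.lt_two_pow_self.le
          _ = 2 ^ (q * 49) := by rw [pow_mul]
          _ ≤ _ := Nat.pow_le_pow_right (by norm_num) (by
            calc q * 49 ≤ q * q := by gcongr; omega
              _ = q ^ 2 := by ring
              _ ≤ _ := Nat.pow_le_pow_right (by omega) (by norm_num))
      exact_mod_cast this
    have e2 : (q : ℝ) ^ 49 / 2 ≤ √((q ^ 98 / 2 : ℕ) : ℝ) := by
      refine Real.le_sqrt_of_sq_le ?_
      have : q ^ 98 ≤ 4 * (q ^ 98 / 2) := by omega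
      have : (q : ℝ) ^ 98 ≤ 4 * ((q ^ 98 / 2 : ℕ) : ℝ) := by exact_mod_cast this
      calc _ = (q : ℝ) ^ 98 / 4 := by ring
        _ ≤ _ := by linarith
    calc _ ≤ 1 / (q : ℝ) ^ 49 + 4 / ((q : ℝ) ^ 49 / 2) := by gcongr
      _ = _ := by field_simp; norm_num
  have hsq : √(q : ℝ) ^ 2 = q := Real.sq_sqrt hq0.le
  have hsq1 : √(q : ℝ) ≤ q := by rw [Real.sqrt_le_left (by linarith)]; nlinarith
  have hs0 : 0 < √(q : ℝ) := Real.sqrt_pos.2 hq0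
  have h196 : 16 / (q : ℝ) ^ 196 ≤ 16 / (q : ℝ) ^ 147 := by
    refine div_le_div_of_nonneg_left (by norm_num) (by positivity) ?_
    exact pow_le_pow_right₀ hq1 (by norm_num)
  have h196' : 16 / (q : ℝ) ^ 196 ≤ 16 / ((q : ℝ) ^ 2 * √q) := by
    refine div_le_div_of_nonneg_left (by norm_num) (by positivity) ?_
    calc _ ≤ (q : ℝ) ^ 2 * q := by gcongr
      _ = (q : ℝ) ^ 3 := by ring
      _ ≤ _ := pow_le_pow_right₀ hq1 (by norm_num)
  refine h.trans ?_
  have t5 : (1 / (((2 ^ q ^ 31 : ℕ) : ℕ) : ℝ) + 4 / √((q ^ 98 / 2 : ℕ) : ℝ)) ^ 3 +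
      𝔼 x, 𝔼 z : V → Bool, Pr (PairBad (2 ^ q ^ 31) (q ^ 98) {a, b} W a b x z) ≤
      745 / (q : ℝ) ^ 147 := by
    calc _ ≤ (9 / (q : ℝ) ^ 49) ^ 3 + 16 / (q : ℝ) ^ 147 :=
          add_le_add (pow_le_pow_left₀ (by positivity) t4 3) (t3.trans h196)
      _ = _ := by rw [div_pow, ← pow_mul]; ring
  have t6 : (745 / (q : ℝ) ^ 147) / (2 * (1 / ((q : ℝ) ^ 73 * √q))) =
      (745 / 2) * (1 / ((q : ℝ) ^ 73 * √q)) := by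
    rw [show (q : ℝ) ^ 147 = ((q : ℝ) ^ 73 * √q) ^ 2 by rw [mul_pow, hsq]; ring]
    field_simp
  have t7 : ((q ^ 71 : ℕ) : ℝ) * (373 * (1 / ((q : ℝ) ^ 73 * √q))) = 373 / ((q : ℝ) ^ 2 * √q) := by
    push_cast
    field_simp
  have t8 := div_le_div_of_nonneg_right t5 (c := 2 * (1 / ((q : ℝ) ^ 73 * √q))) (by positivity)
  rw [t6] at t8
  have t9 : ((q ^ 71 : ℕ) : ℝ) * (1 / ((q : ℝ) ^ 73 * √q) / 2 +
      ((1 / (((2 ^ q ^ 31 : ℕ) : ℕ) : ℝ) + 4 / √((q ^ 98 / 2 : ℕ) : ℝ)) ^ 3 +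
      𝔼 x, 𝔼 z : V → Bool, Pr (PairBad (2 ^ q ^ 31) (q ^ 98) {a, b} W a b x z)) /
        (2 * (1 / ((q : ℝ) ^ 73 * √q)))) ≤ 373 / ((q : ℝ) ^ 2 * √q) := by
    rw [← t7]
    refine mul_le_mul_of_nonneg_left ?_ (by positivity)
    linarith
  have t10 : (373 : ℝ) / ((q : ℝ) ^ 2 * √q) + 16 / ((q : ℝ) ^ 2 * √q) ≤
      400 / ((q : ℝ) ^ 2 * √q) := by
    rw [← add_div]; gcongr; norm_num
  have t11 : (4 : ℝ) / (q : ℝ) ^ 196 + 12 / (q : ℝ) ^ 196 = 16 / (q : ℝ) ^ 196 := by ring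
  linarith

/-- Primes beyond `2 ^ q ^ 31` are unlikely to have corank two or more: a kernel vector has many
nonzero entries, and at each of them `Pr_largeBadAt_numeric` applies. -/
theorem Pr_large_le {q : ℕ} (hq : 10 ^ 6 ≤ q) (hV1 : q ^ 100 ≤ Fintype.card V)
    (hV2 : Fintype.card V ≤ 2 * q ^ 100) (b : V) :
    Pr (fun x : Sym2 V → Bool => ∃ p : ℕ, ∃ _ : Fact p.Prime, 2 ^ q ^ 31 ≤ p ∧
      2 ≤ Module.finrank (ZMod p) (KerK (ZMod p) x {b})) ≤ 812 / √q := by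
  have hqr : (10 ^ 6 : ℝ) ≤ q := by exact_mod_cast hq
  have hq1 : (1 : ℝ) ≤ q := by linarith
  have hq0 : (0 : ℝ) < q := by linarith
  have h100 : q ^ 1 ≤ q ^ 100 := Nat.pow_le_pow_right (by omega) (by norm_num)
  rw [pow_one] at h100
  have h1 := sparse_numeric hq hV1 hV2 (K := {b}) (by simp) (I := fun _ => univ.erase b)
    (F := 0) (fun _ _ _ => ⟨rfl, rfl⟩) (fun _ i hi => by simpa using hi) (fun _ _ _ => rfl)
    (fun _ _ => by simp) (by
      refine le_trans (le_of_eq (Pr_eq_zero fun x hx => ?_)) (Real.exp_pos _).le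
      rw [card_erase_of_mem (mem_univ _), card_univ] at hx
      omega)
  have h2 := Pr_markov (f := fun x : Sym2 V → Bool => ∑ a ∈ univ.erase b,
    if LargeBadAt (2 ^ q ^ 31) b a x then (1 : ℝ) else 0)
    (fun x => sum_nonneg fun a _ => by split_ifs <;> norm_num) (c := (q : ℝ) ^ 98) (by positivity)
  refine (Pr_mono ?_).trans ((Pr_or _ _).trans (add_le_add h1 h2) |>.trans ?_)
  · rintro x ⟨p, hp, hTp, h2⟩
    rw [or_iff_not_imp_left]
    intro hs
    obtain ⟨v, hv, hv0⟩ := (Submodule.ne_bot_iff _).1 (show KerK (ZMod p) x {b} ≠ ⊥ from fun h => by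
      rw [h, finrank_bot] at h2; omega)
    have h3 : q ^ 98 ≤ ((univ.erase b).filter fun i => v i ≠ 0).card := by
      by_contra hlt
      exact hs ⟨p, hp.out, hTp, v, 0, hv0, hv.1, fun i hi => by rw [hv.2 i hi]; simp, not_le.1 hlt⟩
    calc (q : ℝ) ^ 98 ≤ (((univ.erase b).filter fun i => v i ≠ 0).card : ℝ) := by exact_mod_cast h3
      _ = ∑ a ∈ univ.erase b, if v a ≠ 0 then (1 : ℝ) else 0 := by rw [Finset.sum_boole]
      _ ≤ _ := sum_le_sum fun a _ => by
        by_cases ha : v a = 0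
        · rw [if_neg (not_not.2 ha)]; split_ifs <;> norm_num
        · rw [if_pos ha, if_pos ⟨p, hp, hTp, h2, v, hv, ha⟩]
  · have h3 : 𝔼 x : Sym2 V → Bool, ∑ a ∈ univ.erase b,
        (if LargeBadAt (2 ^ q ^ 31) b a x then (1 : ℝ) else 0) ≤
        2 * (q : ℝ) ^ 100 * (400 / ((q : ℝ) ^ 2 * √q)) := by
      rw [expect_sum_comm]
      calc _ ≤ ∑ a ∈ univ.erase b, 400 / ((q : ℝ) ^ 2 * √q) := sum_le_sum fun a ha => by
              rw [← Pr_def]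
              exact Pr_largeBadAt_numeric hq hV1 hV2 (ne_of_mem_erase ha)
        _ = ((univ.erase b).card : ℝ) * (400 / ((q : ℝ) ^ 2 * √q)) := by
              rw [sum_const, nsmul_eq_mul]
        _ ≤ _ := by
              refine mul_le_mul_of_nonneg_right ?_ (by positivity)
              exact_mod_cast (card_le_univ _).trans hV2
    have hs0 : 0 < √(q : ℝ) := Real.sqrt_pos.2 hq0
    have h4 : 12 / (q : ℝ) ^ 196 ≤ 12 / √q := by
      refine div_le_div_of_nonneg_left (by norm_num) hs0 ?_
      calc √(q : ℝ) ≤ q := by rw [Real.sqrt_le_left (by linarith)]; nlinarith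
        _ = (q : ℝ) ^ 1 := (pow_one _).symm
        _ ≤ _ := pow_le_pow_right₀ hq1 (by norm_num)
    have h5 : 2 * (q : ℝ) ^ 100 * (400 / ((q : ℝ) ^ 2 * √q)) / (q : ℝ) ^ 98 = 800 / √q := by
      field_simp; norm_num
    calc _ ≤ 12 / √(q : ℝ) + 800 / √q := by
          rw [← h5]
          exact add_le_add h4 (div_le_div_of_nonneg_right h3 (by positivity))
      _ = _ := by ring

end large

/-! ### Cyclic groups and homomorphisms to prime fields -/

/-- A finitely generated abelian group is a finite product of groups `ZMod a`, with `a = 0` for the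
infinite cyclic factors. -/
lemma exists_pi_zmod (G : Type) [AddCommGroup G] [AddGroup.FG G] :
    ∃ (ι : Type) (_ : Fintype ι) (a : ι → ℕ) (π : G →+ ∀ i, ZMod (a i)), Function.Bijective π := by
  obtain ⟨n, ι, hι, p, -, e, ⟨E⟩⟩ := AddCommGroup.equiv_free_prod_directSum_zmod G
  refine ⟨Fin n ⊕ ι, inferInstance, Sum.elim (fun _ => 0) fun i => p i ^ e i,
    AddMonoidHom.mk' (fun g k => match k with
      | Sum.inl i => ((E g).1 i : ℤ)
      | Sum.inr i => (E g).2 i) ?_, ?_, ?_⟩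
  · intro g h
    ext k
    rcases k with i | i <;> simp <;> rfl
  · intro g h hgh
    refine E.injective (Prod.ext (Finsupp.ext fun i => ?_) (DFinsupp.ext fun i => ?_))
    · exact congrFun hgh (Sum.inl i)
    · exact congrFun hgh (Sum.inr i)
  · intro f
    refine ⟨E.symm (Finsupp.equivFunOnFinite.symm fun i => f (Sum.inl i),
      DFinsupp.equivFunOnFintype.symm fun i => f (Sum.inr i)), ?_⟩
    ext k
    rcases k with i | i <;> simp <;> rfl

/-- A finitely generated abelian group is cyclic iff for every prime `p` any two homomorphisms to
`ZMod p` are linearly dependent. -/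
lemma isAddCyclic_iff_hom (G : Type) [AddCommGroup G] [AddGroup.FG G] :
    IsAddCyclic G ↔ ∀ p : ℕ, p.Prime → ∀ f g : G →+ ZMod p, ∃ a b : ZMod p,
      (a ≠ 0 ∨ b ≠ 0) ∧ ∀ x, a * f x + b * g x = 0 := by
  constructor
  · rintro ⟨γ, hγ⟩ p hp f g
    have := Fact.mk hp
    have h : ∀ (a b : ZMod p), a * f γ + b * g γ = 0 → ∀ x, a * f x + b * g x = 0 := by
      intro a b h x
      obtain ⟨k, rfl⟩ := AddSubgroup.mem_zmultiples_iff.1 (hγ x)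
      simp only [map_zsmul, mul_smul_comm, ← smul_add, h, smul_zero]
    by_cases h1 : f γ = 0
    · exact ⟨1, 0, Or.inl one_ne_zero, h _ _ (by rw [h1]; ring)⟩
    · exact ⟨g γ, -f γ, Or.inr (neg_ne_zero.2 h1), h _ _ (by ring)⟩
  · intro H
    obtain ⟨ι, _, a, π, hπ⟩ := exists_pi_zmod G
    have hco : Pairwise (Function.onFun Nat.Coprime a) := by
      intro i j hij
      by_contra hc
      obtain ⟨p, hp, hi, hj⟩ := Nat.Prime.not_coprime_iff_dvd.1 hc
      have := Fact.mk hp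
      let c (k : ι) (hk : p ∣ a k) : G →+ ZMod p :=
        ((ZMod.castHom hk (ZMod p)).toAddMonoidHom.comp (Pi.evalAddMonoidHom _ k)).comp π
      obtain ⟨s, t, hst, h⟩ := H p hp (c i hi) (c j hj)
      have key : ∀ k : ι, ∃ x, π x = Pi.single k 1 := fun k => hπ.2 _
      obtain ⟨x, hx⟩ := key i
      obtain ⟨y, hy⟩ := key j
      have h1 := h x
      have h2 := h y
      have c1 : ∀ k hk z, c k hk z = ZMod.castHom hk (ZMod p) (π z k) := fun _ _ _ => rfl
      rw [c1, c1, hx, Pi.single_eq_same, Pi.single_eq_of_ne hij.symm, map_one, map_zero] at h1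
      rw [c1, c1, hy, Pi.single_eq_same, Pi.single_eq_of_ne hij, map_one, map_zero] at h2
      rcases hst with h3 | h3
      · exact h3 (by simpa using h1)
      · exact h3 (by simpa using h2)
    have : IsAddCyclic (∀ i, ZMod (a i)) :=
      isAddCyclic_of_surjective (ZMod.prodEquivPi a hco).toAddEquiv (ZMod.prodEquivPi a hco).surjective
    exact isAddCyclic_of_injective π hπ.1

lemma finrank_le_one_iff_dep {F V : Type*} [Field F] [AddCommGroup V] [Module F V]
    [FiniteDimensional F V] (U : Submodule F V) :
    Module.finrank F U ≤ 1 ↔ ∀ u ∈ U, ∀ v ∈ U, ∃ a b : F, (a ≠ 0 ∨ b ≠ 0) ∧ a • u + b • v = 0 := by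
  constructor
  · intro h u hu v hv
    by_contra! hc
    have : LinearIndependent F ![(⟨u, hu⟩ : U), ⟨v, hv⟩] := by
      refine LinearIndependent.pair_iff.2 fun s t hst => ?_
      by_contra hne
      exact hc s t (by tauto) (congrArg Subtype.val hst)
    have := this.fintype_card_le_finrank
    simp at this
    omega
  · intro h
    by_contra hc
    obtain ⟨f, hf⟩ := exists_linearIndependent_of_le_finrank (R := F) (M := U) (n := 2) (by omega)
    obtain ⟨a, b, hab, h0⟩ := h _ (f 0).2 _ (f 1).2
    have hf' : LinearIndependent F ![f 0, f 1] := by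
      convert hf using 1; ext i; fin_cases i <;> rfl
    have := LinearIndependent.pair_iff.1 hf' a b (Subtype.ext h0)
    tauto

/-! ### The sandpile group and kernels of the Laplacian -/

/-- The index of the bit used by `edgeInd` for an unordered pair. -/
def pairIx {n : ℕ} (e : Sym2 (Fin n)) : Fin n × Fin n := (e.inf, e.sup)

lemma pairIx_injective {n : ℕ} : Function.Injective (pairIx (n := n)) := by
  intro e f h
  exact Sym2.inf_eq_inf_and_sup_eq_sup.1 (Prod.mk.inj h)

lemma edgeInd_eq {n : ℕ} (x : Fin n × Fin n → Bool) {i j : Fin n} (h : i ≠ j) :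
    edgeInd x i j = bt ((x ∘ pairIx) s(j, i)) := by
  rcases lt_or_gt_of_ne h with h1 | h1
  · simp [edgeInd, bt, pairIx, h1, h1.le]
  · simp [edgeInd, bt, pairIx, h1, h1.le, h1.not_gt]

lemma sum_mul_redLap {n p : ℕ} (x : Fin (n + 1) × Fin (n + 1) → Bool) (v : Fin (n + 1) → ZMod p)
    (hv : v (Fin.last n) = 0) (j : Fin n) :
    ∑ i : Fin n, v i.castSucc * (redLap n x i j : ZMod p) = lap (x ∘ pairIx) v j.castSucc := by
  have h0 : ∀ i : Fin (n + 1), edgeInd x i i = 0 := fun i => by simp [edgeInd]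
  have h1 : ∀ i, (redLap n x i j : ZMod p) = (edgeInd x i.castSucc j.castSucc : ZMod p) +
      if i = j then -∑ k, (edgeInd x k j.castSucc : ZMod p) else 0 := by
    intro i
    by_cases h : i = j
    · subst h; simp [redLap, h0]
    · simp [redLap, h]
  have h2 : lap (x ∘ pairIx) v j.castSucc =
      ∑ k, (edgeInd x k j.castSucc : ZMod p) * (v k - v j.castSucc) := by
    refine sum_congr rfl fun k _ => ?_
    by_cases h : k = j.castSucc
    · rw [h, sub_self, mul_zero, mul_zero]
    · rw [edgeInd_eq x h]; cases (x ∘ pairIx) s(j.castSucc, k) <;> simp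
  rw [h2]
  simp only [h1, mul_add, mul_sub, sum_add_distrib, sum_sub_distrib, mul_ite, mul_zero,
    Finset.sum_ite_eq', mem_univ, if_true, ← sum_mul]
  rw [Fin.sum_univ_castSucc (f := fun k => (edgeInd x k j.castSucc : ZMod p) * v k), hv]
  simp only [mul_comm (v _)]
  ring

/-- Homomorphisms from the sandpile group to `ZMod p` are kernel vectors of the Laplacian modulo `p`
vanishing at the last vertex, so the group is cyclic iff every such kernel is at most a line. -/
lemma isAddCyclic_cok_iff {n : ℕ} (x : Fin (n + 1) × Fin (n + 1) → Bool) :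
    IsAddCyclic (cok n (redLap n x)) ↔ ∀ p : ℕ, ∀ _ : Fact p.Prime,
      Module.finrank (ZMod p) (KerK (ZMod p) (x ∘ pairIx) {Fin.last n}) ≤ 1 := by
  have : AddGroup.FG (cok n (redLap n x)) := by
    rw [← Module.Finite.iff_addGroup_fg]; infer_instance
  rw [isAddCyclic_iff_hom]
  refine forall_congr' fun p => ⟨fun H hp => ?_, fun H hp f g => ?_⟩
  · rw [finrank_le_one_iff_dep]
    have key : ∀ u ∈ KerK (ZMod p) (x ∘ pairIx) {Fin.last n}, ∃ f : cok n (redLap n x) →+ ZMod p,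
        ∀ i, f (Submodule.Quotient.mk (Pi.single i 1)) = u i.castSucc := by
      intro u hu
      let f₀ : (Fin n → ℤ) →+ ZMod p := AddMonoidHom.mk' (fun w => ∑ i, u i.castSucc * (w i : ZMod p))
        fun w w' => by simp [mul_add, sum_add_distrib]
      have hf₀ : ∀ w ∈ LinearMap.range (Matrix.toLin' (redLap n x)), f₀ w = 0 := by
        rintro _ ⟨w, rfl⟩
        have e1 : f₀ (Matrix.toLin' (redLap n x) w) =
            ∑ i, u i.castSucc * ((∑ j, redLap n x i j * w j : ℤ) : ZMod p) := rfl
        rw [e1]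
        push_cast
        simp only [mul_sum, ← mul_assoc]
        rw [sum_comm]
        simp only [← sum_mul]
        refine sum_eq_zero fun j _ => ?_
        rw [sum_mul_redLap x u (hu.1 _ (by simp)), hu.2 _ (by simp [(Fin.castSucc_lt_last j).ne]),
          zero_mul]
      refine ⟨QuotientAddGroup.lift _ f₀ hf₀, fun i => ?_⟩
      change f₀ (Pi.single i 1) = _
      simp [f₀, Pi.single_apply]
    intro u hu v hv
    obtain ⟨f, hf⟩ := key u hu
    obtain ⟨g, hg⟩ := key v hv
    obtain ⟨a, b, hab, h⟩ := H hp.out f g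
    refine ⟨a, b, hab, funext fun k => ?_⟩
    refine Fin.lastCases ?_ (fun i => ?_) k
    · simp [hu.1 _ (mem_singleton_self _), hv.1 _ (mem_singleton_self _)]
    · have := h (Submodule.Quotient.mk (Pi.single i 1))
      rw [hf, hg] at this
      exact this
  · have := Fact.mk hp
    have hF := (finrank_le_one_iff_dep _).1 (H this)
    let V (f : cok n (redLap n x) →+ ZMod p) : Fin (n + 1) → ZMod p :=
      Fin.snoc (fun i => f (Submodule.Quotient.mk (Pi.single i 1))) 0
    have hV : ∀ f i, V f (Fin.castSucc i) = f (Submodule.Quotient.mk (Pi.single i 1)) :=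
      fun f i => Fin.snoc_castSucc ..
    have hfw : ∀ f (w : Fin n → ℤ), f (Submodule.Quotient.mk w) =
        ∑ i, V f i.castSucc * (w i : ZMod p) := by
      intro f w
      have e1 : w = ∑ i, w i • (Pi.single i 1 : Fin n → ℤ) := by
        ext j; simp [Finset.sum_apply, Pi.single_apply]
      conv_lhs => rw [e1, ← Submodule.mkQ_apply, map_sum, map_sum]
      refine sum_congr rfl fun i _ => ?_
      rw [map_zsmul, map_zsmul, hV, zsmul_eq_mul, mul_comm, Submodule.mkQ_apply]
    have hVK : ∀ f, V f ∈ KerK (ZMod p) (x ∘ pairIx) {Fin.last n} := by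
      intro f
      have hl : V f (Fin.last n) = 0 := Fin.snoc_last ..
      refine ⟨fun i hi => by rw [mem_singleton.1 hi, hl], fun k => ?_⟩
      refine Fin.lastCases (fun h => absurd (mem_singleton_self _) h) (fun j _ => ?_) k
      rw [← sum_mul_redLap x _ hl j, ← hfw f fun i => redLap n x i j,
        (Submodule.Quotient.mk_eq_zero _).2, map_zero]
      exact ⟨Pi.single j 1, by ext i; simp⟩
    obtain ⟨a, b, hab, h⟩ := hF _ (hVK f) _ (hVK g)
    refine ⟨a, b, hab, fun y => ?_⟩
    obtain ⟨w, rfl⟩ := Submodule.Quotient.mk_surjective _ y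
    rw [hfw, hfw, mul_sum, mul_sum, ← sum_add_distrib]
    refine sum_eq_zero fun i _ => ?_
    have := congrFun h i.castSucc
    simp only [Pi.add_apply, Pi.smul_apply, smul_eq_mul, Pi.zero_apply] at this
    rw [← mul_assoc, ← mul_assoc, ← add_mul, this, zero_mul]

lemma graphMeasure_toReal (n : ℕ) :
    ((graphMeasure n) {x | IsAddCyclic (cok n (redLap n x))}).toReal =
      Pr (fun y : Sym2 (Fin (n + 1)) → Bool => ∀ p : ℕ, ∀ _ : Fact p.Prime,
        Module.finrank (ZMod p) (KerK (ZMod p) y {Fin.last n}) ≤ 1) := by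
  rw [← Pr_comp_inj pairIx pairIx_injective]
  simp only [← isAddCyclic_cok_iff]
  rw [Pr_eq_card, graphMeasure, PMF.toMeasure_uniformOfFintype_apply _ (MeasurableSet.of_discrete),
    ENNReal.toReal_div]
  simp [Fintype.card_subtype]

/-! ### Euler products and the limit -/

lemma summable_inv_pow (i : ℕ) : Summable fun m : ℕ => ((m : ℝ)⁻¹) ^ (2 * i + 3) := by
  simp only [inv_pow]
  exact Real.summable_nat_pow_inv.2 (by omega)

lemma euler_zetaReal (i : ℕ) :
    Tendsto (fun B : ℕ => ∏ p ∈ B.primesBelow, (1 - (p : ℝ)⁻¹ ^ (2 * i + 3))) atTop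
      (nhds (zetaReal (2 * (i : ℝ) + 3))⁻¹) := by
  let f : ℕ →*₀ ℝ := ⟨⟨fun m => (m : ℝ)⁻¹ ^ (2 * i + 3), by simp⟩, by simp, fun a b => by
    simp [mul_pow, mul_comm]⟩
  have hf : ∀ m, f m = (m : ℝ)⁻¹ ^ (2 * i + 3) := fun _ => rfl
  have hs := summable_inv_pow i
  have h := EulerProduct.eulerProduct_completely_multiplicative (f := f)
    (hs.congr fun m => by rw [hf, Real.norm_of_nonneg (by positivity)])
  have h1 : ∑' m, f m = zetaReal (2 * (i : ℝ) + 3) := by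
    rw [zetaReal, Summable.tsum_eq_zero_add (f := fun m => f m) hs, map_zero, zero_add]
    refine tsum_congr fun m => ?_
    rw [hf, Real.rpow_neg (by positivity), inv_pow, show 2 * (i : ℝ) + 3 = ((2 * i + 3 : ℕ) : ℝ) by
      push_cast; ring, Real.rpow_natCast]
    push_cast; rfl
  have h2 : zetaReal (2 * (i : ℝ) + 3) ≠ 0 := by
    have : f 1 ≤ ∑' m, f m := Summable.le_tsum hs 1 fun m _ => by positivity
    rw [h1, map_one] at this
    linarith
  rw [h1] at h
  refine (h.inv₀ h2).congr fun B => ?_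
  rw [prod_inv_distrib, inv_inv]
  rfl

/-- The Euler products of the zeta values assemble to the product of the local limits. -/
lemma tendsto_prod_limP : Tendsto (fun B : ℕ => ∏ p ∈ B.primesBelow, limP p) atTop
    (nhds (∏' i : ℕ, (zetaReal (2 * (i : ℝ) + 3))⁻¹)) := by
  have h1 : ∀ B : ℕ, ∏ p ∈ B.primesBelow, limP p =
      ∏' i : ℕ, (1 + (∏ p ∈ B.primesBelow, (1 - (p : ℝ)⁻¹ ^ (2 * i + 3)) - 1)) := by
    intro B
    simp only [add_sub_cancel]
    refine ((hasProd_prod fun p hp => ?_).tprod_eq).symm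
    exact (multipliable_limP (Nat.prime_of_mem_primesBelow hp)).hasProd
  simp only [h1]
  set C : ℝ := ∑' m : ℕ, (m : ℝ)⁻¹ ^ 3
  have := tendsto_tprod_one_add_of_dominated_convergence (𝓕 := atTop)
    (f := fun (B : ℕ) (i : ℕ) => ∏ p ∈ B.primesBelow, (1 - (p : ℝ)⁻¹ ^ (2 * i + 3)) - 1)
    (g := fun i : ℕ => (zetaReal (2 * (i : ℝ) + 3))⁻¹ - 1)
    (bound := fun i => (1 / 4 : ℝ) ^ i * C)
    ((summable_geometric_of_lt_one (by norm_num) (by norm_num)).mul_right _)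
    (fun i => (euler_zetaReal i).sub_const 1) (Eventually.of_forall fun B i => ?_)
  · simpa only [add_sub_cancel] using this
  · have hp : ∀ p ∈ B.primesBelow, 0 ≤ (p : ℝ)⁻¹ ^ (2 * i + 3) ∧ (p : ℝ)⁻¹ ^ (2 * i + 3) ≤ 1 :=
      fun p hp => by
        obtain ⟨a, b⟩ := prime_inv_le (Nat.prime_of_mem_primesBelow hp)
        exact ⟨by positivity, pow_le_one₀ a (by linarith)⟩
    have e1 := one_sub_sum_le_prod _ _ (fun p h => (hp p h).1) fun p h => (hp p h).2
    have e2 : ∏ p ∈ B.primesBelow, (1 - (p : ℝ)⁻¹ ^ (2 * i + 3)) ≤ 1 :=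
      prod_le_one (fun p h => by linarith [(hp p h).2]) fun p h => by linarith [(hp p h).1]
    rw [Real.norm_eq_abs, abs_sub_comm, abs_of_nonneg (by linarith)]
    calc _ ≤ ∑ p ∈ B.primesBelow, (p : ℝ)⁻¹ ^ (2 * i + 3) := by linarith
      _ ≤ ∑ p ∈ B.primesBelow, (1 / 4 : ℝ) ^ i * (p : ℝ)⁻¹ ^ 3 := sum_le_sum fun p h => by
          obtain ⟨a, b⟩ := prime_inv_le (Nat.prime_of_mem_primesBelow h)
          rw [pow_add, pow_mul]
          gcongr
          nlinarith
      _ ≤ (1 / 4 : ℝ) ^ i * C := by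
          rw [← mul_sum]
          gcongr
          exact Summable.sum_le_tsum _ (fun _ _ => by positivity) (summable_inv_pow 0)

lemma tendsto_union_err : Tendsto (fun q : ℕ => (2 : ℝ) ^ q ^ 31 *
    ((1 / 2 : ℝ) ^ q ^ 32 + ((2 * q ^ 20 : ℕ) : ℝ) * stepErr 1 2 q)) atTop (nhds 0) := by
  have h1 := (tendsto_pow_atTop_nhds_zero_of_lt_one (r := (1 / 2 : ℝ)) (by norm_num)
    (by norm_num)).add ((tendsto_pow_exp (c := 1 / 2) (by norm_num)).const_mul 30)
  rw [mul_zero, add_zero] at h1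
  refine squeeze_zero' (Eventually.of_forall fun q => by
    have := stepErr_nonneg 1 2 q; positivity) ?_ h1
  filter_upwards [eventually_ge_atTop 2] with q hq
  have hq' : (2 : ℝ) ≤ q := by exact_mod_cast hq
  set Q : ℝ := (q : ℝ) ^ 40
  have hQ : 0 ≤ Q := by positivity
  have a1 : (2 : ℝ) ^ q ^ 31 * (1 / 2 : ℝ) ^ q ^ 32 ≤ (1 / 2) ^ q := by
    have e1 : q ^ 31 + q ≤ q ^ 32 := by
      have : q ≤ q ^ 31 := Nat.le_self_pow (by norm_num) q
      calc q ^ 31 + q ≤ q ^ 31 * 2 := by omega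
        _ ≤ q ^ 31 * q := Nat.mul_le_mul_left _ hq
        _ = q ^ 32 := by ring
    calc _ ≤ (2 : ℝ) ^ q ^ 31 * (1 / 2 : ℝ) ^ (q ^ 31 + q) :=
          mul_le_mul_of_nonneg_left (pow_le_pow_of_le_one (by norm_num) (by norm_num) e1)
            (by positivity)
      _ = _ := by rw [pow_add, ← mul_assoc, ← mul_pow]; norm_num
  have a2 : stepErr 1 2 q ≤ 15 * Real.exp (-Q) := by
    have e1 : Real.exp (-(2 * Q)) = Real.exp (-Q) ^ 2 := by rw [← Real.exp_nat_mul]; push_cast; ring_nf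
    have e2 : Real.exp (-Q) ≤ 1 := Real.exp_le_one_iff.2 (by linarith)
    have e3 : √(3 * Real.exp (-Q) ^ 2) ≤ 2 * Real.exp (-Q) := by
      rw [Real.sqrt_le_left (by positivity)]
      nlinarith [Real.exp_pos (-Q)]
    unfold stepErr
    rw [show -(2 * (q : ℝ) ^ 40) = -(2 * Q) from rfl, e1]
    push_cast
    nlinarith [Real.exp_pos (-Q)]
  have a3 : (2 : ℝ) ^ q ^ 31 ≤ Real.exp (1 / 2 * Q) := by
    have e1 : (2 : ℝ) ≤ Real.exp 1 := by linarith [Real.exp_one_gt_d9]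
    calc _ ≤ Real.exp 1 ^ q ^ 31 := pow_le_pow_left₀ (by norm_num) e1 _
      _ = Real.exp ((q : ℝ) ^ 31) := by rw [← Real.exp_nat_mul]; push_cast; ring_nf
      _ ≤ _ := by
        refine Real.exp_le_exp.2 ?_
        have e2 : (2 : ℝ) ≤ (q : ℝ) ^ 9 := hq'.trans (le_self_pow₀ (by linarith) (by norm_num))
        have e3 : Q = (q : ℝ) ^ 31 * (q : ℝ) ^ 9 := by simp only [Q]; ring
        rw [e3]
        nlinarith [pow_nonneg (by linarith : (0 : ℝ) ≤ q) 31]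
  rw [mul_add]
  refine add_le_add a1 ?_
  calc _ ≤ Real.exp (1 / 2 * Q) * (((2 * q ^ 20 : ℕ) : ℝ) * (15 * Real.exp (-Q))) := by
        gcongr
        exact mul_nonneg (by positivity) (stepErr_nonneg _ _ _)
    _ = 30 * ((q : ℝ) ^ 20 * (Real.exp (1 / 2 * Q) * Real.exp (-Q))) := by push_cast; ring
    _ = _ := by rw [← Real.exp_add]; ring_nf

/-- The corank is at most one at all primes simultaneously with probability close to the limit. -/
lemma all_corank {ε : ℝ} (hε : 0 < ε) :
    ∀ᶠ q : ℕ in atTop, ∀ (V : Type) [Fintype V] [DecidableEq V], q ^ 100 ≤ Fintype.card V →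
      Fintype.card V ≤ 2 * q ^ 100 → ∀ b : V,
      |Pr (fun x : Sym2 V → Bool => ∀ p : ℕ, ∀ _ : Fact p.Prime,
          Module.finrank (ZMod p) (KerK (ZMod p) x {b}) ≤ 1) -
        ∏' i : ℕ, (zetaReal (2 * (i : ℝ) + 3))⁻¹| ≤ ε := by
  set L := ∏' i : ℕ, (zetaReal (2 * (i : ℝ) + 3))⁻¹
  obtain ⟨B, hB1, hB2⟩ := ((Metric.tendsto_nhds.1 tendsto_prod_limP (ε / 8) (by positivity)).and
    ((eventually_gt_atTop (⌈64 / ε⌉₊)))).exists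
  have hB0 : (64 : ℝ) / ε ≤ B := (Nat.le_ceil _).trans (by exact_mod_cast hB2.le)
  have hBp : (0 : ℝ) < B := lt_of_lt_of_le (by positivity) hB0
  rw [Real.dist_eq] at hB1
  have : ∀ i : B.primesBelow, Fact (i : ℕ).Prime := fun i => ⟨Nat.prime_of_mem_primesBelow i.2⟩
  have t1 := corank_fixed (p := fun i : B.primesBelow => (i : ℕ)) Subtype.val_injective
    (ε := ε / 8) (by positivity)
  have t2 : Tendsto (fun q : ℕ => 812 / √(q : ℝ)) atTop (nhds 0) :=
    Tendsto.const_div_atTop (Real.tendsto_sqrt_atTop.comp tendsto_natCast_atTop_atTop) _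
  filter_upwards [t1, eventually_ge_atTop (10 ^ 6),
    tendsto_union_err.eventually_le_const (show 0 < ε / 8 by positivity),
    t2.eventually_le_const (show 0 < ε / 8 by positivity)] with q h1 hq h3 h4 V _ _ hV1 hV2 b
  have h1' := h1 V hV1 hV2 b
  rw [prod_coe_sort B.primesBelow limP] at h1'
  set A := Pr (fun x : Sym2 V → Bool => ∀ p : ℕ, ∀ _ : Fact p.Prime,
    Module.finrank (ZMod p) (KerK (ZMod p) x {b}) ≤ 1)
  set A' := Pr (fun x : Sym2 V → Bool => ∀ i : B.primesBelow,
    Module.finrank (ZMod (i : ℕ)) (KerK (ZMod (i : ℕ)) x {b}) ≤ 1)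
  have u1 : A ≤ A' := Pr_mono fun x hx i => hx _ inferInstance
  set S := (Finset.Ico B (2 ^ q ^ 31))
  have u2 : Pr (fun x : Sym2 V → Bool => ∃ p ∈ S, ∃ _ : Fact p.Prime,
      2 ≤ Module.finrank (ZMod p) (KerK (ZMod p) x {b})) ≤ ε / 4 := by
    set δ := (1 / 2 : ℝ) ^ q ^ 32 + ((2 * q ^ 20 : ℕ) : ℝ) * stepErr 1 2 q
    have hδ : 0 ≤ δ := by have := stepErr_nonneg 1 2 q; positivity
    refine (Pr_exists_le S _).trans ?_
    calc _ ≤ ∑ p ∈ S, (4 * ((p : ℝ) ^ 2)⁻¹ + δ) := sum_le_sum fun p hp => by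
          by_cases hpp : p.Prime
          · have := Fact.mk hpp
            refine (Pr_mono fun x hx => hx.2).trans ((corank_two_le hq hV1 hV2 b
              (mem_Ico.1 hp).2.le).trans ?_)
            obtain ⟨a, b⟩ := prime_inv_le hpp
            rw [← inv_pow]
            have : (p : ℝ)⁻¹ ^ 3 ≤ (p : ℝ)⁻¹ ^ 2 := pow_le_pow_of_le_one a (by linarith) (by norm_num)
            linarith
          · rw [Pr_eq_zero fun x hx => hpp hx.1.out]; positivity
      _ = 4 * ∑ p ∈ S, ((p : ℝ) ^ 2)⁻¹ + S.card * δ := by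
          rw [sum_add_distrib, mul_sum, sum_const, nsmul_eq_mul]
      _ ≤ 4 * (2 / B) + 2 ^ q ^ 31 * δ := by
          refine add_le_add (mul_le_mul_of_nonneg_left ?_ (by norm_num))
            (mul_le_mul_of_nonneg_right ?_ hδ)
          · have := sum_Ioo_inv_sq_le (α := ℝ) (B - 1) (2 ^ q ^ 31)
            have hB' : 1 ≤ B := by omega
            have e : Finset.Ioo (B - 1) (2 ^ q ^ 31) = S := by
              ext j; simp only [S, mem_Ioo, mem_Ico]; omega
            rw [e, Nat.cast_sub hB', Nat.cast_one, sub_add_cancel] at this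
            exact this
          · rw [Nat.card_Ico]
            exact_mod_cast Nat.sub_le _ _
      _ ≤ ε / 8 + ε / 8 := by
          refine add_le_add ?_ h3
          rw [div_le_iff₀ hε] at hB0
          rw [← mul_div_assoc, div_le_iff₀ hBp]
          nlinarith
      _ = ε / 4 := by ring
  have u3 := (Pr_large_le hq hV1 hV2 b).trans h4
  have u4 : A' ≤ A + (ε / 4 + ε / 8) := by
    refine le_trans (Pr_mono fun x hx => ?_) ((Pr_or _ _).trans
      (add_le_add le_rfl ((Pr_or _ _).trans (add_le_add u2 u3))))
    by_contra hc
    push Not at hc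
    obtain ⟨⟨p, hp, hp2⟩, hc1, hc2⟩ := hc
    have hpB : B ≤ p := by
      by_contra hlt
      have : Module.finrank (ZMod p) (KerK (ZMod p) x {b}) ≤ 1 :=
        hx ⟨p, Nat.mem_primesBelow.2 ⟨not_le.1 hlt, hp.out⟩⟩
      omega
    rcases lt_or_ge p (2 ^ q ^ 31) with h | h
    · have := hc1 p (mem_Ico.2 ⟨hpB, h⟩) hp
      omega
    · have := hc2 p hp h
      omega
  rw [abs_le] at h1' ⊢
  rw [abs_lt] at hB1
  constructor <;> linarith

lemma succ_pow_le {q k : ℕ} (h : 2 * k ≤ q) : (q + 1) ^ k ≤ 2 * q ^ k := by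
  have hq : (2 : ℝ) * k ≤ q := by exact_mod_cast h
  have e0 : (0 : ℝ) < (q : ℝ) + 1 := by positivity
  have e1 := one_add_mul_le_pow (a := -(1 / ((q : ℝ) + 1))) (by
    have : 1 / ((q : ℝ) + 1) ≤ 1 := by rw [div_le_one e0]; linarith
    linarith) k
  have e3 : 1 + -(1 / ((q : ℝ) + 1)) = q / (q + 1) := by field_simp; ring
  have e2 : (1 : ℝ) / 2 ≤ 1 + k * -(1 / ((q : ℝ) + 1)) := by
    have : (k : ℝ) * (1 / (q + 1)) ≤ 1 / 2 := by
      rw [mul_one_div, div_le_iff₀ e0]; linarith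
    linarith
  have e4 := e2.trans e1
  rw [e3, div_pow, le_div_iff₀ (pow_pos e0 k)] at e4
  have e5 : ((q : ℝ) + 1) ^ k ≤ 2 * (q : ℝ) ^ k := by linarith
  exact_mod_cast e5

lemma exists_scale (Q k : ℕ) (hk : k ≠ 0) :
    ∀ᶠ n : ℕ in atTop, ∃ q, Q ≤ q ∧ q ^ k ≤ n + 1 ∧ n + 1 ≤ 2 * q ^ k := by
  set Q' := max Q (2 * k)
  filter_upwards [eventually_ge_atTop (Q' ^ k)] with n hn
  have hQn : Q' ≤ n + 1 := (Nat.le_self_pow hk Q').trans (by omega)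
  set q := Nat.findGreatest (fun q => q ^ k ≤ n + 1) (n + 1)
  have h1 : Q' ≤ q := Nat.le_findGreatest hQn (by omega)
  have h2 : q ^ k ≤ n + 1 := Nat.findGreatest_spec (P := fun q => q ^ k ≤ n + 1) hQn (by omega)
  refine ⟨q, (le_max_left _ _).trans h1, h2, ?_⟩
  have h3 : n + 1 < (q + 1) ^ k := by
    by_contra hc
    have hc' : (q + 1) ^ k ≤ n + 1 := not_lt.1 hc
    have := Nat.le_findGreatest (P := fun q => q ^ k ≤ n + 1)
      ((Nat.le_self_pow hk (q + 1)).trans hc') hc'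
    omega
  have h4 := succ_pow_le ((le_max_right _ _).trans h1)
  omega

end Sandpile

theorem sandpile_cyclic_prob :
    Tendsto
      (fun n : ℕ =>
        ((graphMeasure n) {x | IsAddCyclic (cok n (redLap n x))}).toReal)
      atTop
      (nhds (∏' i : ℕ, (zetaReal (2 * (i : ℝ) + 3))⁻¹)) := by
  rw [Metric.tendsto_nhds]
  intro ε hε
  obtain ⟨Q, hQ⟩ := eventually_atTop.1 (Sandpile.all_corank (half_pos hε))
  filter_upwards [Sandpile.exists_scale Q 100 (by norm_num)] with n ⟨q, hq, h1, h2⟩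
  rw [Sandpile.graphMeasure_toReal, Real.dist_eq]
  have := hQ q hq (Fin (n + 1)) (by simpa using h1) (by simpa using h2) (Fin.last n)
  refine lt_of_le_of_lt ?_ (half_lt_self hε)
  convert this
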